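/- Let k be odd with 1 < k < 2n and k < 2(r−1)(n−1) − 1. Then π_k(X_r(U(n))^{irr}) ≅ ℤ^r, the free abelian group of rank r. The same holds with SU(n) in place of U(n). -/

import Mathlib

/-!
Let `Γ` be `U(n)` or `SU(n)`, let `E ⊆ Γ^r` be the set of irreducible tuples, `X` its image in the
character variety, and `k = 2j + 1`. The theorem follows from the three isomorphisms
`π_k(X) ≅ π_k(E) ≅ π_k(Γ^r) ≅ ℤ^r`.

* `π_k(Γ) ≅ ℤ`. Homotopy groups of topological groups are computed with pointwise products (`Pi`,
  `hg_equiv_pi`). The groups `π_i(GL_m(ℂ))` with `i < 2m` do not depend on `m` (`stab_equiv`, a general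
  position argument), and Bott periodicity (`bott`) shifts `i` by two. The latter compares the
  extension of the Wiener algebra of absolutely convergent Fourier series by the ℓ¹ Toeplitz algebra
  (the completion of the algebra of the bicyclic monoid) with loops in `GL_m(ℂ)`. Paths of invertible
  Toeplitz matrices starting at `1`, with symbol `1` at the base point of the circle and invertible
  symbols ending at `1`, map onto the homotopy classes of double loops (`bott_loop_surj`), and their
  endpoints onto the classes of maps into the kernel of the symbol map, hence, by approximation by
  finite blocks (`corner_bij`), into `GL_m(ℂ)` (`bott_fin_surj`); both maps have the same kernel
  (`bott_ker`). The nontrivial inclusion of kernels is Cuntz's: a loop of symbols which lifts to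
  invertible Toeplitz matrices is null homotopic, because two representations of the Toeplitz
  algebra, which differ in a corner by the evaluation at a point of the circle, are joined by a path of
  representations that are constant modulo compact operators (`loop_null`). Polar decomposition and the
  determinant pass to `U(n)` and `SU(n)`.
* `π_k(E) ≅ π_k(Γ^r)`. A tuple with an invariant subspace is parametrized rationally by countably many
  smooth maps from real vector spaces whose dimension is smaller than that of the space of all
  matrix tuples by at least `2 (r - 1) (n - 1)` (`red_thin`), so by an elementary general position
  argument a family with fewer parameters can be moved off the reducible tuples (`transv`, `avoid_bij`).
* `π_k(X) ≅ π_k(E)`. In both cases `PG n = SU(n) / centre` acts freely on `E` with orbit space `X`. The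
  action has continuous difference maps, since `PG n` is compact, and local sections, built from
  words which approximate matrix units by Burnside's theorem (`principalU`, `principalS`); so cubes lift
  from `X` to `E`. Surjectivity in degree `k` uses `π_{k-1}(PG n) = 0` (`bundle_surj`, `pi_pg_even`).
  For injectivity, the image of `π_k(PG n)` in `π_k(E) ≅ π_k(Γ^r)` vanishes, because `PG n` fixes the
  trivial tuple, which is joined to any other tuple by a path in `Γ^r` (`bundle_inj`).
-/

/-- The unitary group `U(n)` of `n × n` complex unitary matrices. -/
abbrev Un (n : ℕ) : Type := ↥(Matrix.unitaryGroup (Fin n) ℂ)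

/-- The character variety `X_r(U(n))`: the quotient topological space of `U(n)^r`
by the diagonal conjugation action `g • (A₁, …, A_r) = (g A₁ g⁻¹, …, g A_r g⁻¹)`. -/
abbrev CharVarU (n r : ℕ) : Type :=
  Quotient (MulAction.orbitRel (ConjAct (Un n)) (Fin r → Un n))

/-- A tuple `(A₁, …, A_r)` of `n × n` unitary matrices is irreducible if no subspace of `ℂⁿ`
other than `{0}` and `ℂⁿ` is invariant under all the `Aᵢ`. -/
def IsIrreducibleTupleU {n r : ℕ} (A : Fin r → Un n) : Prop :=
  ∀ p : Submodule ℂ (Fin n → ℂ),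
    (∀ i, ∀ v ∈ p, (A i : Matrix (Fin n) (Fin n) ℂ).mulVec v ∈ p) → p = ⊥ ∨ p = ⊤

/-- The irreducible locus `X_r(U(n))^{irr}`: the subspace of classes of irreducible tuples. -/
def irrLocusU (n r : ℕ) : Set (CharVarU n r) :=
  {x | ∃ A : Fin r → Un n, IsIrreducibleTupleU A ∧
    Quotient.mk (MulAction.orbitRel (ConjAct (Un n)) (Fin r → Un n)) A = x}

/-- The special unitary group `SU(n)`, as the subgroup of the unitary group `U(n)`
consisting of the unitary matrices of determinant `1`. -/
def SUsubgroup (n : ℕ) : Subgroup (Un n) :=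
  MonoidHom.ker (Matrix.detMonoidHom.comp (Matrix.unitaryGroup (Fin n) ℂ).subtype)

/-- The special unitary group `SU(n)`. -/
abbrev SUn (n : ℕ) : Type := ↥(SUsubgroup n)

/-- The character variety `X_r(SU(n))`: the quotient topological space of `SU(n)^r`
by the diagonal conjugation action. -/
abbrev CharVarSU (n r : ℕ) : Type :=
  Quotient (MulAction.orbitRel (ConjAct (SUn n)) (Fin r → SUn n))

/-- A tuple `(A₁, …, A_r)` of special unitary matrices is irreducible if no subspace of `ℂⁿ`
other than `{0}` and `ℂⁿ` is invariant under all the `Aᵢ`. -/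
def IsIrreducibleTupleSU {n r : ℕ} (A : Fin r → SUn n) : Prop :=
  ∀ p : Submodule ℂ (Fin n → ℂ),
    (∀ i, ∀ v ∈ p, ((A i : Un n) : Matrix (Fin n) (Fin n) ℂ).mulVec v ∈ p) → p = ⊥ ∨ p = ⊤

/-- The irreducible locus `X_r(SU(n))^{irr}`: the subspace of classes of irreducible tuples. -/
def irrLocusSU (n r : ℕ) : Set (CharVarSU n r) :=
  {x | ∃ A : Fin r → SUn n, IsIrreducibleTupleSU A ∧
    Quotient.mk (MulAction.orbitRel (ConjAct (SUn n)) (Fin r → SUn n)) A = x}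

namespace IrrLoc
open Set Filter Topology unitInterval
open scoped Matrix BigOperators

noncomputable section

/-! ### Pointwise groups of maps into a topological group, modulo relative homotopy -/

section Om
variable {X : Type*} [TopologicalSpace X] {Γ : Type*} [Group Γ] [TopologicalSpace Γ]
  [IsTopologicalGroup Γ]

/-- The group, under pointwise multiplication, of continuous maps `X → Γ` equal to `1` on `A`. -/
def Om (A : Set X) (Γ : Type*) [Group Γ] [TopologicalSpace Γ] [IsTopologicalGroup Γ] :
    Subgroup C(X, Γ) where
  carrier := {f | ∀ a ∈ A, f a = 1}
  mul_mem' hf hg a ha := by simp [hf a ha, hg a ha]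
  one_mem' a _ := rfl
  inv_mem' hf a ha := by simp [hf a ha]

theorem Om.one_of_mem {A : Set X} (f : Om A Γ) {a : X} (ha : a ∈ A) : f.1 a = 1 := f.2 a ha

/-- A relative homotopy from raw data. -/
theorem htpy_of {Y : Type*} [TopologicalSpace Y] {A : Set X} {f g : C(X, Y)} (H : I × X → Y)
    (hH : Continuous H) (h0 : ∀ x, H (0, x) = f x) (h1 : ∀ x, H (1, x) = g x)
    (hA : ∀ t, ∀ a ∈ A, H (t, a) = f a) : f.HomotopicRel g A :=
  ⟨⟨⟨⟨H, hH⟩, h0, h1⟩, hA⟩⟩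

theorem htpy_data {Y : Type*} [TopologicalSpace Y] {A : Set X} {f g : C(X, Y)}
    (h : f.HomotopicRel g A) : ∃ H : C(I × X, Y), (∀ x, H (0, x) = f x) ∧ (∀ x, H (1, x) = g x) ∧
      ∀ t, ∀ a ∈ A, H (t, a) = f a := by
  obtain ⟨H⟩ := h
  exact ⟨H.toHomotopy.toContinuousMap, fun x => H.apply_zero x, fun x => H.apply_one x,
    fun t a ha => H.prop' t a ha⟩

theorem htpy_mul {A : Set X} {f f' g g' : C(X, Γ)} (h : f.HomotopicRel f' A)
    (h' : g.HomotopicRel g' A) : (f * g).HomotopicRel (f' * g') A := by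
  obtain ⟨H, h0, h1, hA⟩ := htpy_data h
  obtain ⟨H', h0', h1', hA'⟩ := htpy_data h'
  exact htpy_of (fun p => H p * H' p) (by fun_prop) (by simp [h0, h0']) (by simp [h1, h1'])
    (fun t a ha => by simp [hA t a ha, hA' t a ha])

theorem htpy_inv {A : Set X} {f f' : C(X, Γ)} (h : f.HomotopicRel f' A) :
    (f⁻¹).HomotopicRel (f'⁻¹) A := by
  obtain ⟨H, h0, h1, hA⟩ := htpy_data h
  exact htpy_of (fun p => (H p)⁻¹) (by fun_prop) (by simp [h0]) (by simp [h1])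
    (fun t a ha => by simp [hA t a ha])

/-- The subgroup of maps that are homotopic to the constant map `1` relative to `A`. -/
def Null (A : Set X) (Γ : Type*) [Group Γ] [TopologicalSpace Γ] [IsTopologicalGroup Γ] :
    Subgroup (Om A Γ) where
  carrier := {f | (1 : C(X, Γ)).HomotopicRel f.1 A}
  mul_mem' hf hg := by simpa using htpy_mul hf hg
  one_mem' := ContinuousMap.HomotopicRel.refl _
  inv_mem' hf := by simpa using htpy_inv hf

theorem mem_null {A : Set X} {f : Om A Γ} : f ∈ Null A Γ ↔ (1 : C(X, Γ)).HomotopicRel f.1 A :=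
  Iff.rfl

instance (A : Set X) : (Null A Γ).Normal where
  conj_mem f hf g := by
    have := htpy_mul (htpy_mul (ContinuousMap.HomotopicRel.refl (S := A) g.1) hf)
      (ContinuousMap.HomotopicRel.refl (S := A) g.1⁻¹)
    simpa [mem_null] using this

theorem inv_mul_mem_null {A : Set X} {f g : Om A Γ} :
    f⁻¹ * g ∈ Null A Γ ↔ f.1.HomotopicRel g.1 A := by
  constructor
  · intro h
    simpa using htpy_mul (ContinuousMap.HomotopicRel.refl (S := A) f.1) h
  · intro h
    simpa [mem_null] using htpy_mul (ContinuousMap.HomotopicRel.refl (S := A) f.1⁻¹) h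

/-- Homotopy classes, relative to `A`, of maps `(X, A) → (Γ, 1)`, under pointwise
multiplication. -/
abbrev Pi (A : Set X) (Γ : Type*) [Group Γ] [TopologicalSpace Γ] [IsTopologicalGroup Γ] : Type _ :=
  Om A Γ ⧸ Null A Γ

/-- The class of a map. -/
abbrev Pi.mk (A : Set X) : Om A Γ →* Pi A Γ := QuotientGroup.mk' _

theorem Pi.mk_surj (A : Set X) : Function.Surjective (Pi.mk A (Γ := Γ)) :=
  QuotientGroup.mk'_surjective _

theorem Pi.mk_eq {A : Set X} {f g : Om A Γ} : Pi.mk A f = Pi.mk A g ↔ f.1.HomotopicRel g.1 A := by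
  rw [← inv_mul_mem_null]; exact QuotientGroup.eq

theorem Pi.mk_eq_one {A : Set X} {f : Om A Γ} :
    Pi.mk A f = 1 ↔ (1 : C(X, Γ)).HomotopicRel f.1 A := by
  rw [← (Pi.mk A).map_one, eq_comm, Pi.mk_eq]; rfl

theorem Pi.ker_mk (A : Set X) : (Pi.mk A (Γ := Γ)).ker = Null A Γ := QuotientGroup.ker_mk' _

variable {Γt : Type*} [Group Γt] [TopologicalSpace Γt] [IsTopologicalGroup Γt]

/-- Postcomposition with a continuous homomorphism. -/
def Om.map (A : Set X) (φ : Γ →ₜ* Γt) : Om A Γ →* Om A Γt where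
  toFun f := ⟨⟨fun x => φ (f.1 x), φ.continuous_toFun.comp f.1.continuous⟩,
    fun a ha => by simp [f.2 a ha]⟩
  map_one' := by ext; simp
  map_mul' f g := by ext; simp

@[simp] theorem Om.map_apply {A : Set X} (φ : Γ →ₜ* Γt) (f : Om A Γ) (x : X) :
    (Om.map A φ f).1 x = φ (f.1 x) := rfl

theorem htpy_postcomp {Y Z : Type*} [TopologicalSpace Y] [TopologicalSpace Z] {A : Set X}
    {f g : C(X, Y)} (h : f.HomotopicRel g A) (φ : C(Y, Z)) :
    (φ.comp f).HomotopicRel (φ.comp g) A := h.comp_continuousMap φ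

/-- The homomorphism induced by a continuous homomorphism. -/
def Pi.map (A : Set X) (φ : Γ →ₜ* Γt) : Pi A Γ →* Pi A Γt :=
  QuotientGroup.map _ _ (Om.map A φ) fun f hf => by
    have := htpy_postcomp (mem_null.1 hf) (⟨φ, φ.continuous_toFun⟩ : C(Γ, Γt))
    have h1 : (⟨φ, φ.continuous_toFun⟩ : C(Γ, Γt)).comp (1 : C(X, Γ)) = 1 := by ext; simp
    rw [h1] at this
    exact this

theorem Pi.map_mk (A : Set X) (φ : Γ →ₜ* Γt) (f : Om A Γ) :
    Pi.map A φ (Pi.mk A f) = Pi.mk A (Om.map A φ f) := rfl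

/-- Two surjective homomorphisms with the same kernel have isomorphic targets. -/
theorem equiv_of_ker_eq {G H K : Type*} [Group G] [Group H] [Group K] (φ : G →* H) (ψ : G →* K)
    (hφ : Function.Surjective φ) (hψ : Function.Surjective ψ)
    (h : ∀ g, φ g = 1 ↔ ψ g = 1) : Nonempty (H ≃* K) := by
  have hk : φ.ker = ψ.ker := by ext g; simpa [MonoidHom.mem_ker] using h g
  exact ⟨(QuotientGroup.quotientKerEquivOfSurjective φ hφ).symm.trans
    ((QuotientGroup.quotientMulEquivOfEq hk).trans
      (QuotientGroup.quotientKerEquivOfSurjective ψ hψ))⟩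

theorem Pi.map_bijective {A : Set X} (φ : Γ →ₜ* Γt)
    (hs : ∀ g : Om A Γt, ∃ f : Om A Γ, g.1.HomotopicRel (Om.map A φ f).1 A)
    (hi : ∀ f : Om A Γ, (1 : C(X, Γt)).HomotopicRel (Om.map A φ f).1 A →
      (1 : C(X, Γ)).HomotopicRel f.1 A) : Function.Bijective (Pi.map A φ) := by
  constructor
  · rw [injective_iff_map_eq_one]
    intro a
    obtain ⟨f, rfl⟩ := Pi.mk_surj A a
    rw [Pi.map_mk, Pi.mk_eq_one, Pi.mk_eq_one]
    exact hi f
  · intro b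
    obtain ⟨g, rfl⟩ := Pi.mk_surj A b
    obtain ⟨f, hf⟩ := hs g
    exact ⟨Pi.mk A f, by rw [Pi.map_mk, Pi.mk_eq]; exact hf.symm⟩

variable {Xt : Type*} [TopologicalSpace Xt]

/-- Transport along a homeomorphism of pairs. -/
theorem Pi.equiv_of_homeo {A : Set X} {A' : Set Xt} (e : X ≃ₜ Xt) (he : ∀ x, e x ∈ A' ↔ x ∈ A) :
    Nonempty (Pi A Γ ≃* Pi A' Γ) := by
  let φ : Om A' Γ →* Om A Γ :=
    { toFun := fun f => ⟨f.1.comp e, fun a ha => f.2 _ ((he a).2 ha)⟩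
      map_one' := by ext; simp
      map_mul' := fun f g => by ext; simp }
  refine equiv_of_ker_eq ((Pi.mk A).comp φ) (Pi.mk A') ?_ (Pi.mk_surj _) ?_
  · refine (Pi.mk_surj _).comp ?_
    intro f
    refine ⟨⟨f.1.comp e.symm, fun a ha => f.2 _ ((he _).1 (by simpa using ha))⟩, ?_⟩
    ext x; simp [φ]
  · intro f
    simp only [MonoidHom.comp_apply, Pi.mk_eq_one]
    constructor
    · intro h
      obtain ⟨H, h0, h1, hA⟩ := htpy_data h
      refine htpy_of (fun p => H (p.1, e.symm p.2)) (by fun_prop) (by simp [h0])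
        (by simp [h1, φ]) (fun t a ha => ?_)
      simpa using hA t (e.symm a) ((he _).1 (by simpa using ha))
    · intro h
      obtain ⟨H, h0, h1, hA⟩ := htpy_data h
      refine htpy_of (fun p => H (p.1, e p.2)) (by fun_prop) (by simp [h0])
        (by simp [h1, φ]) (fun t a ha => ?_)
      simpa using hA t (e a) ((he _).2 (by simpa using ha))

/-- The boundary of `I × X` relative to the boundary `A` of `X`. -/
def dI (A : Set X) : Set (I × X) := {p | p.1 = 0 ∨ p.1 = 1 ∨ p.2 ∈ A}

/-- A null homotopy, as a map on `I × X` with prescribed values on the boundary. -/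
theorem null_iff {A : Set X} {f : Om A Γ} : (1 : C(X, Γ)).HomotopicRel f.1 A ↔
    ∃ H : C(I × X, Γ), (∀ x, H (0, x) = 1) ∧ (∀ x, H (1, x) = f.1 x) ∧
      ∀ t, ∀ a ∈ A, H (t, a) = 1 := by
  constructor
  · intro h
    obtain ⟨H, h0, h1, hA⟩ := htpy_data h
    exact ⟨H, h0, h1, hA⟩
  · rintro ⟨H, h0, h1, hA⟩
    exact htpy_of H H.continuous h0 h1 hA

end Om

/-- `X` is a retract of `ℝ^m`. Cubes have this property; it is the way their dimension enters. -/
def Retr (X : Type*) [TopologicalSpace X] (m : ℕ) : Prop :=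
  ∃ (e : X → (Fin m → ℝ)) (r : (Fin m → ℝ) → X), Continuous e ∧ Continuous r ∧ ∀ x, r (e x) = x

theorem Retr.cube (m : ℕ) : Retr (Fin m → I) m :=
  ⟨fun x i => x i, fun v i => projIcc 0 1 zero_le_one (v i), by fun_prop,
    continuous_pi fun i => continuous_projIcc.comp (continuous_apply i),
    fun x => by ext i; simp⟩

theorem Retr.prodI {X : Type*} [TopologicalSpace X] {m : ℕ} (h : Retr X m) : Retr (I × X) (m + 1) := by
  obtain ⟨e, r, he, hr, h⟩ := h
  refine ⟨fun p => Fin.cons (p.1 : ℝ) (e p.2), fun v => (projIcc 0 1 zero_le_one (v 0),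
    r (fun i => v i.succ)), ?_, ?_, ?_⟩
  · refine continuous_pi fun i => ?_
    refine Fin.cases ?_ (fun j => ?_) i
    · simp only [Fin.cons_zero]; fun_prop
    · simp only [Fin.cons_succ]; fun_prop
  · exact (continuous_projIcc.comp (continuous_apply 0)).prodMk (hr.comp (by fun_prop))
  · rintro ⟨t, x⟩; simp [h]

/-- The cube `I^(m+1)` as a product. -/
def consHomeo (m : ℕ) : (I × (Fin m → I)) ≃ₜ (Fin (m + 1) → I) where
  toFun p := Fin.cons p.1 p.2
  invFun v := (v 0, fun i => v i.succ)
  left_inv p := by simp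
  right_inv v := by ext i; refine Fin.cases ?_ (fun j => ?_) i <;> simp
  continuous_toFun := by
    refine continuous_pi fun i => ?_
    refine Fin.cases ?_ (fun j => ?_) i
    · simp only [Fin.cons_zero]; fun_prop
    · simp only [Fin.cons_succ]; fun_prop
  continuous_invFun := by fun_prop

theorem consHomeo_mem {m : ℕ} (p : I × (Fin m → I)) :
    consHomeo m p ∈ Cube.boundary (Fin (m + 1)) ↔ p ∈ dI (Cube.boundary (Fin m)) := by
  simp only [Cube.boundary, consHomeo, dI, Set.mem_ofPred_eq, Homeomorph.homeomorph_mk_coe,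
    Equiv.coe_fn_mk, Fin.exists_fin_succ, Fin.cons_zero, Fin.cons_succ, or_assoc]

/-! ### Homotopy groups: induced maps, and the comparison with pointwise products -/

section HG
set_option linter.unusedSectionVars false
variable {N : Type} [DecidableEq N] [Nonempty N]
variable {X Y : Type*} [TopologicalSpace X] [TopologicalSpace Y]

theorem transAt_apply (i : N) {x : X} (f g : GenLoop N X x) (t : N → I) :
    GenLoop.transAt i f g t = if (t i : ℝ) ≤ 1 / 2
      then f (Function.update t i <| Set.projIcc 0 1 zero_le_one (2 * t i))
      else g (Function.update t i <| Set.projIcc 0 1 zero_le_one (2 * t i - 1)) := by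
  rw [GenLoop.transAt, GenLoop.coe_copy]

/-- Postcomposition of a generalized loop with a continuous map. -/
def glMap (f : C(X, Y)) {x : X} (p : GenLoop N X x) : GenLoop N Y (f x) :=
  ⟨f.comp p.1, fun y hy => by
    have := p.2 y hy
    simp only [ContinuousMap.comp_apply]
    rw [this]⟩

/-- The homomorphism of homotopy groups induced by a continuous map. -/
def hgMap (N : Type) [DecidableEq N] [Nonempty N] (f : C(X, Y)) (x : X) :
    HomotopyGroup N X x →* HomotopyGroup N Y (f x) :=
  MonoidHom.mk' (Quotient.map (glMap f) fun _ _ h => htpy_postcomp h f) (by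
    intro a b
    induction a using Quotient.inductionOn with | _ p
    induction b using Quotient.inductionOn with | _ q
    have i : N := Classical.arbitrary N
    have e1 := HomotopyGroup.mul_spec (i := i) (p := p) (q := q)
    have e2 := HomotopyGroup.mul_spec (i := i) (p := glMap f p) (q := glMap f q)
    simp only at e1 e2
    rw [e1]
    refine Eq.trans ?_ e2.symm
    refine congrArg (Quotient.mk _) ?_
    ext t
    rw [transAt_apply]
    change f (GenLoop.transAt i q p t) = _
    rw [transAt_apply, apply_ite f]
    rfl)

theorem hgMap_bijective (f : C(X, Y)) (x : X)
    (hs : ∀ g : GenLoop N Y (f x), ∃ p : GenLoop N X x,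
      g.1.HomotopicRel (f.comp p.1) (Cube.boundary N))
    (hi : ∀ p : GenLoop N X x,
      (ContinuousMap.const (N → I) (f x)).HomotopicRel (f.comp p.1) (Cube.boundary N) →
      (ContinuousMap.const (N → I) x).HomotopicRel p.1 (Cube.boundary N)) :
    Function.Bijective (hgMap N f x) := by
  constructor
  · rw [injective_iff_map_eq_one]
    intro a
    induction a using Quotient.inductionOn with | _ p
    intro h
    have h' : (⟦glMap f p⟧ : HomotopyGroup N Y (f x)) = ⟦GenLoop.const⟧ := h
    have := hi p (Quotient.exact h').symm
    exact (Quotient.sound this.symm : ⟦p⟧ = ⟦GenLoop.const⟧)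
  · intro b
    induction b using Quotient.inductionOn with | _ g
    obtain ⟨p, hp⟩ := hs g
    exact ⟨⟦p⟧, Quotient.sound hp.symm⟩

variable {Γ : Type*} [Group Γ] [TopologicalSpace Γ] [IsTopologicalGroup Γ]

/-- The left translate to `1` of a generalized loop based at `a`. -/
def glTrans (a : Γ) (p : GenLoop N Γ a) : Om (Cube.boundary N) Γ :=
  ⟨⟨fun t => a⁻¹ * p t, by fun_prop⟩, fun t ht => by
    simp [GenLoop.boundary p t ht]⟩

/-- Reparametrization of one coordinate does not change the class. -/
theorem reparam_homotopic (i : N) (f : Om (Cube.boundary N) Γ) (c : ℝ → ℝ) (hc : Continuous c)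
    (h0 : c 0 ≤ 0) (h1 : 1 ≤ c 1) : f.1.HomotopicRel (f.1.comp
      ⟨fun t : N → I => Function.update t i (projIcc 0 1 zero_le_one (c (t i))), by
        refine Continuous.update continuous_id i (continuous_projIcc.comp (by fun_prop))⟩)
      (Cube.boundary N) := by
  refine htpy_of (fun p => f.1 (Function.update p.2 i
    (projIcc 0 1 zero_le_one ((1 - p.1) * (p.2 i) + p.1 * c (p.2 i))))) ?_ ?_ ?_ ?_
  · refine f.1.continuous.comp (Continuous.update continuous_snd i
      (continuous_projIcc.comp (by fun_prop)))
  · intro x; simp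
  · intro x; simp
  · rintro t a ⟨j, hj⟩
    have ht := t.2
    have e0 : ∀ b ∈ Cube.boundary N, f.1 b = 1 := f.2
    rw [e0 a ⟨j, hj⟩]
    apply e0
    refine ⟨j, ?_⟩
    by_cases hji : j = i
    · subst hji
      rcases hj with hj | hj
      · left
        simp only [Function.update_self, hj]
        refine projIcc_of_le_left _ ?_
        have := mul_nonneg ht.1 (neg_nonneg.2 h0)
        simp only [Icc.coe_zero]; linarith
      · right
        simp only [Function.update_self, hj]
        refine projIcc_of_right_le _ ?_
        have := mul_nonneg ht.1 (sub_nonneg.2 h1)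
        simp only [Icc.coe_one]; linarith
    · simpa [Function.update_of_ne hji] using hj

/-- Concatenation of loops agrees with the pointwise product up to homotopy. -/
theorem glTrans_transAt (i : N) (a : Γ) (p q : GenLoop N Γ a) :
    (glTrans a (GenLoop.transAt i q p)).1.HomotopicRel (glTrans a p * glTrans a q).1
      (Cube.boundary N) := by
  have hp := reparam_homotopic i (glTrans a p) (fun s => 2 * s - 1) (by fun_prop)
    (by norm_num) (by norm_num)
  have hq := reparam_homotopic i (glTrans a q) (fun s => 2 * s) (by fun_prop)
    (by norm_num) (by norm_num)
  have h := (htpy_mul hp hq).symm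
  refine Eq.mp (congrArg₂ (fun u v => ContinuousMap.HomotopicRel u v (Cube.boundary N)) ?_ rfl) h
  symm
  ext t
  have key : ∀ b ∈ Cube.boundary N, ∀ p : GenLoop N Γ a, a⁻¹ * p b = 1 := fun b hb p => by
    rw [GenLoop.boundary p b hb]; simp
  change a⁻¹ * GenLoop.transAt i q p t = (a⁻¹ * p (Function.update t i _)) *
    (a⁻¹ * q (Function.update t i _))
  rw [transAt_apply]
  split_ifs with hle
  · have hb : Function.update t i (projIcc 0 1 zero_le_one (2 * (t i : ℝ) - 1))
        ∈ Cube.boundary N := by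
      refine ⟨i, Or.inl ?_⟩
      simp only [Function.update_self]
      exact projIcc_of_le_left _ (by linarith)
    rw [key _ hb p, one_mul]
  · have hb : Function.update t i (projIcc 0 1 zero_le_one (2 * (t i : ℝ)))
        ∈ Cube.boundary N := by
      refine ⟨i, Or.inr ?_⟩
      simp only [Function.update_self]
      exact projIcc_of_right_le _ (by linarith)
    rw [key _ hb q, mul_one]

/-- The homotopy group of a topological group at any base point is the group of pointwise
products of maps `(Iᴺ, ∂Iᴺ) → (Γ, 1)` up to homotopy. -/
theorem hg_equiv_pi (a : Γ) :
    Nonempty (HomotopyGroup N Γ a ≃* Pi (Cube.boundary N) Γ) := by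
  let φ : HomotopyGroup N Γ a →* Pi (Cube.boundary N) Γ :=
    MonoidHom.mk' (Quotient.lift (fun p => Pi.mk _ (glTrans a p)) (by
        intro p q h
        rw [Pi.mk_eq]
        exact htpy_postcomp h (⟨fun g => a⁻¹ * g, by fun_prop⟩ : C(Γ, Γ)))) (by
      intro x y
      induction x using Quotient.inductionOn with | _ p
      induction y using Quotient.inductionOn with | _ q
      have i : N := Classical.arbitrary N
      have e1 := HomotopyGroup.mul_spec (i := i) (p := p) (q := q)
      simp only at e1
      rw [e1, Quotient.lift_mk, Quotient.lift_mk, Quotient.lift_mk, ← map_mul, Pi.mk_eq]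
      exact glTrans_transAt i a p q)
  refine ⟨MulEquiv.ofBijective φ ⟨?_, ?_⟩⟩
  · rw [injective_iff_map_eq_one]
    intro x
    induction x using Quotient.inductionOn with | _ p
    intro h
    have h' : Pi.mk (Cube.boundary N) (glTrans a p) = 1 := h
    rw [Pi.mk_eq_one] at h'
    have := htpy_postcomp h' (⟨fun g => a * g, by fun_prop⟩ : C(Γ, Γ))
    refine Quotient.sound (b := GenLoop.const) ?_
    refine ContinuousMap.HomotopicRel.symm ?_
    convert this using 1
    · ext t; simp [GenLoop.const]
    · ext t; simp [glTrans]
  · intro y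
    obtain ⟨f, rfl⟩ := Pi.mk_surj _ y
    refine ⟨⟦⟨⟨fun t => a * f.1 t, by fun_prop⟩, fun t ht => by simp [f.2 t ht]⟩⟧, ?_⟩
    change Pi.mk _ _ = Pi.mk _ _
    congr 1
    ext t
    change a⁻¹ * (a * f.1 t) = f.1 t
    simp

/-- Relative homotopy classes of maps into a power. -/
theorem pi_pow_equiv (A : Set X) (r : ℕ) :
    Nonempty (Pi A (Fin r → Γ) ≃* (Fin r → Pi A Γ)) := by
  let ev : Fin r → Om A (Fin r → Γ) →* Om A Γ := fun i => Om.map A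
    ⟨Pi.evalMonoidHom (fun _ : Fin r => Γ) i, continuous_apply i⟩
  refine equiv_of_ker_eq (Pi.mk A)
    (MonoidHom.pi fun i => (Pi.mk A).comp (ev i)) (Pi.mk_surj A) ?_ ?_
  · intro y
    choose f hf using fun i => Pi.mk_surj A (y i)
    refine ⟨⟨⟨fun x i => (f i).1 x, by fun_prop⟩, fun a ha => ?_⟩, ?_⟩
    · ext i; exact (f i).2 a ha
    · ext i
      exact hf i
  · intro f
    rw [Pi.mk_eq_one]
    constructor
    · intro h
      ext i
      change Pi.mk A (ev i f) = 1
      rw [Pi.mk_eq_one]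
      exact htpy_postcomp h (⟨fun v => v i, by fun_prop⟩ : C(Fin r → Γ, Γ))
    · intro h
      have h' : ∀ i, (1 : C(X, Γ)).HomotopicRel (ev i f).1 A := fun i => by
        rw [← Pi.mk_eq_one]; exact congrFun h i
      choose H h0 h1 hA using fun i => htpy_data (h' i)
      refine htpy_of (fun p i => H i p) (by fun_prop) ?_ ?_ ?_
      · intro x; ext i; simp [h0]
      · intro x; ext i; simp only [h1]; rfl
      · intro t a ha; ext i; simp [hA _ t a ha]

end HG

/-! ### Two approximation lemmas: general position, and finite-dimensional approximation -/

section Approx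
set_option linter.unusedSectionVars false

/-- A set in a finite-dimensional space which a generic translate of a `C¹` family with `m`
parameters misses, for reasons of Hausdorff dimension. -/
def Thin {V : Type*} [NormedAddCommGroup V] [NormedSpace ℝ V] (m : ℕ) (Z : Set V) : Prop :=
  ∀ P : (Fin m → ℝ) → V, ContDiff ℝ 1 P →
    dimH {h : V | ∃ x, h + P x ∈ Z} ≤ ((Module.finrank ℝ V - 1 : ℕ) : ENNReal)

variable {V : Type*} [NormedAddCommGroup V] [NormedSpace ℝ V] [FiniteDimensional ℝ V] {m : ℕ}

theorem Thin.range {E : Type*} [NormedAddCommGroup E] [NormedSpace ℝ E] [FiniteDimensional ℝ E]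
    (ψ : E → V) (hψ : ContDiff ℝ 1 ψ)
    (hd : Module.finrank ℝ E + m < Module.finrank ℝ V) : Thin m (Set.range ψ) := by
  intro P hP
  have hsub : {h : V | ∃ x, h + P x ∈ Set.range ψ} ⊆
      Set.range (fun q : E × (Fin m → ℝ) => ψ q.1 - P q.2) := by
    rintro h ⟨x, p, hp⟩
    exact ⟨(p, x), by simp [hp]⟩
  have hc : ContDiff ℝ 1 (fun q : E × (Fin m → ℝ) => ψ q.1 - P q.2) :=
    (hψ.comp contDiff_fst).sub (hP.comp contDiff_snd)
  refine (dimH_mono hsub).trans (hc.dimH_range_le.trans ?_)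
  norm_cast
  rw [Module.finrank_prod, Module.finrank_fin_fun]
  omega

theorem Thin.iUnion {ι : Type*} [Countable ι] {Z : ι → Set V} (h : ∀ i, Thin m (Z i)) :
    Thin m (⋃ i, Z i) := by
  intro P hP
  have : {h : V | ∃ x, h + P x ∈ ⋃ i, Z i} = ⋃ i, {h : V | ∃ x, h + P x ∈ Z i} := by
    ext h; simp only [Set.mem_iUnion, Set.mem_ofPred_eq]; exact exists_comm
  rw [this, dimH_iUnion]
  exact iSup_le fun i => h i P hP

theorem Thin.mono {Z Z' : Set V} (h : Thin m Z') (hs : Z ⊆ Z') : Thin m Z := by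
  intro P hP
  refine (dimH_mono ?_).trans (h P hP)
  rintro v ⟨x, hx⟩
  exact ⟨x, hs hx⟩

/-- General position: a map from an `m`-dimensional parameter space can be moved off a thin set. -/
theorem Thin.avoid {X : Type*} [TopologicalSpace X] (hX : Retr X m) {Z : Set V} (hZ : Thin m Z)
    (hV : 0 < Module.finrank ℝ V) (f : C(X, V)) {ε : ℝ} (hε : 0 < ε) :
    ∃ g : C(X, V), (∀ x, ‖g x - f x‖ < ε) ∧ ∀ x, g x ∉ Z := by
  obtain ⟨e, r, he, hr, hre⟩ := hX
  obtain ⟨P, hP, hPf, -⟩ := Continuous.exists_contDiff_approx (f := fun v => f (r v))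
    (ε := fun _ => ε / 2) 1 (f.continuous.comp hr) continuous_const (fun _ => half_pos hε)
  have hdim := hZ P hP
  have hlt : dimH {h : V | ∃ x, h + P x ∈ Z} < Module.finrank ℝ V := by
    refine hdim.trans_lt ?_
    norm_cast
    omega
  obtain ⟨h, hh1, hh2⟩ := (dense_compl_of_dimH_lt_finrank hlt).exists_mem_open
    (Metric.isOpen_ball (x := (0 : V)) (ε := ε / 2)) ⟨0, Metric.mem_ball_self (half_pos hε)⟩
  refine ⟨⟨fun x => h + P (e x), by have := hP.continuous; fun_prop⟩, fun x => ?_, fun x hx => ?_⟩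
  · have h1 := hPf (e x)
    rw [hre, dist_eq_norm] at h1
    have h2 : ‖h‖ < ε / 2 := mem_ball_zero_iff.1 hh2
    change ‖h + P (e x) - f x‖ < ε
    calc ‖h + P (e x) - f x‖ = ‖h + (P (e x) - f x)‖ := by rw [add_sub_assoc]
      _ ≤ ‖h‖ + ‖P (e x) - f x‖ := norm_add_le _ _
      _ < ε := by linarith
  · exact hh1 ⟨e x, hx⟩

end Approx

/-- A continuous map from a compact space into a normed space, with values in the closure of `D`,
is approximated by finite combinations of elements of `D` whose coefficients vanish wherever the
map does. -/
theorem palais {X V : Type*} [TopologicalSpace X] [CompactSpace X] [NormedAddCommGroup V]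
    [NormedSpace ℝ V] (h : C(X, V)) (D : Set V) (hD : ∀ x, h x ∈ closure D) {ε : ℝ} (hε : 0 < ε) :
    ∃ (n : ℕ) (d : Fin n → V) (χ : Fin n → C(X, ℝ)), (∀ i, d i ∈ D) ∧
      (∀ x, h x = 0 → ∀ i, χ i x = 0) ∧ ∀ x, ‖(∑ i, χ i x • d i) - h x‖ < ε := by
  have hε2 : 0 < ε / 2 := half_pos hε
  have hcov : ∀ x, ∃ d ∈ D, dist (h x) d < ε / 2 := fun x => Metric.mem_closure_iff.1 (hD x) _ hε2
  choose d hdD hdd using hcov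
  obtain ⟨t, ht⟩ := isCompact_univ.elim_finite_subcover
    (fun y : X => {x | dist (h x) (d y) < ε / 2})
    (fun y => isOpen_lt (by fun_prop) continuous_const)
    (fun x _ => Set.mem_iUnion.2 ⟨x, hdd x⟩)
  let e := t.equivFin.symm
  let d' : Fin t.card → V := fun i => d (e i)
  let ψ : Fin t.card → X → ℝ := fun i x => max 0 (ε / 2 - dist (h x) (d' i))
  have hψc : ∀ i, Continuous (ψ i) := fun i => by fun_prop
  have hψ0 : ∀ i x, 0 ≤ ψ i x := fun i x => le_max_left _ _
  have hψs : ∀ x, 0 < ∑ i, ψ i x := by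
    intro x
    obtain ⟨y, hyt, hy⟩ := Set.mem_iUnion₂.1 (ht (Set.mem_univ x))
    have hy' : dist (h x) (d y) < ε / 2 := hy
    refine Finset.sum_pos' (fun i _ => hψ0 i x) ⟨t.equivFin ⟨y, hyt⟩, Finset.mem_univ _, ?_⟩
    refine lt_max_of_lt_right ?_
    simp only [d', e, Equiv.symm_apply_apply]
    linarith
  let c : X → ℝ := fun x => min 1 (‖h x‖ / (ε / 2))
  have hcc : Continuous c := by fun_prop
  have hc1 : ∀ x, c x ≤ 1 := fun x => min_le_left _ _
  have hc0 : ∀ x, 0 ≤ c x := fun x => le_min zero_le_one (by positivity)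
  refine ⟨t.card, d', fun i => ⟨fun x => c x * (ψ i x / ∑ j, ψ j x), ?_⟩, fun i => hdD _, ?_, ?_⟩
  · exact hcc.mul ((hψc i).div (continuous_finsetSum _ fun j _ => hψc j) fun x => (hψs x).ne')
  · intro x hx i
    simp [c, hx]
  · intro x
    simp only [ContinuousMap.coe_mk]
    set s := ∑ j, ψ j x with hs
    have hs0 := hψs x
    have hid : (∑ i, (c x * (ψ i x / s)) • d' i) - h x =
        (c x / s) • (∑ i, ψ i x • (d' i - h x)) - (1 - c x) • h x := by
      simp only [smul_sub, Finset.sum_sub_distrib, ← Finset.sum_smul, ← hs, Finset.smul_sum,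
        smul_smul]
      rw [div_mul_cancel₀ _ hs0.ne', sub_smul, one_smul]
      have : ∀ i, c x * (ψ i x / s) = c x / s * ψ i x := fun i => by ring
      simp only [this]
      abel
    have h1 : ‖∑ i, ψ i x • (d' i - h x)‖ ≤ s * (ε / 2) := by
      refine (norm_sum_le _ _).trans ?_
      rw [hs, Finset.sum_mul]
      refine Finset.sum_le_sum fun i _ => ?_
      rw [norm_smul, Real.norm_of_nonneg (hψ0 i x)]
      rcases eq_or_lt_of_le (hψ0 i x) with h0 | h0
      · rw [← h0]; simp
      · refine mul_le_mul_of_nonneg_left ?_ h0.le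
        have : 0 < ε / 2 - dist (h x) (d' i) := by
          by_contra hcon
          rw [not_lt] at hcon
          have : ψ i x = 0 := max_eq_left hcon
          linarith
        rw [← dist_eq_norm, dist_comm]
        linarith
    have h2 : (1 - c x) * ‖h x‖ < ε / 2 := by
      rcases lt_or_ge ‖h x‖ (ε / 2) with hl | hl
      · have := mul_nonneg (hc0 x) (norm_nonneg (h x))
        nlinarith
      · have : c x = 1 := min_eq_left ((one_le_div hε2).2 hl)
        rw [this]; simpa using hε
    rw [hid]
    calc _ ≤ ‖(c x / s) • (∑ i, ψ i x • (d' i - h x))‖ + ‖(1 - c x) • h x‖ := norm_sub_le _ _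
      _ ≤ (c x / s) * (s * (ε / 2)) + (1 - c x) * ‖h x‖ := by
        rw [norm_smul, norm_smul, Real.norm_of_nonneg (div_nonneg (hc0 x) hs0.le),
          Real.norm_of_nonneg (sub_nonneg.2 (hc1 x))]
        gcongr
      _ = c x * (ε / 2) + (1 - c x) * ‖h x‖ := by
        have hs1 : s ≠ 0 := hs0.ne'
        rw [← mul_assoc, div_mul_cancel₀ _ hs1]
      _ < ε := by nlinarith [hc1 x]

/-! ### Stability for complex general linear groups -/

/-- The complex general linear group on an index type. -/
abbrev GLC (ι : Type) [Fintype ι] [DecidableEq ι] : Type := (Matrix ι ι ℂ)ˣ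

section GLC
variable {ι κ : Type} [Fintype ι] [DecidableEq ι] [Fintype κ] [DecidableEq κ]
variable {X : Type*} [TopologicalSpace X]

theorem glc_det_ne_zero (g : GLC ι) : (g : Matrix ι ι ℂ).det ≠ 0 :=
  ((Matrix.isUnit_iff_isUnit_det _).1 g.isUnit).ne_zero

/-- A continuous family of matrices with nonzero determinant, as a map to the general linear
group. -/
def glMk (M : X → Matrix ι ι ℂ) (hM : Continuous M) (hd : ∀ x, (M x).det ≠ 0) : C(X, GLC ι) where
  toFun x := ⟨M x, (M x)⁻¹, Matrix.mul_nonsing_inv _ (hd x).isUnit,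
    Matrix.nonsing_inv_mul _ (hd x).isUnit⟩
  continuous_toFun := by
    rw [Units.continuous_iff]
    refine ⟨hM, ?_⟩
    change Continuous fun x => (M x)⁻¹
    simp only [Matrix.inv_def, Ring.inverse_eq_inv']
    exact (hM.matrix_det.inv₀ hd).smul hM.matrix_adjugate

@[simp] theorem glMk_val (M : X → Matrix ι ι ℂ) (hM : Continuous M) (hd : ∀ x, (M x).det ≠ 0)
    (x : X) : ((glMk M hM hd x : GLC ι) : Matrix ι ι ℂ) = M x := rfl

theorem gl_htpy {A : Set X} {f g : C(X, GLC ι)} (M : I × X → Matrix ι ι ℂ) (hM : Continuous M)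
    (hd : ∀ x, (M x).det ≠ 0) (h0 : ∀ x, M (0, x) = f x) (h1 : ∀ x, M (1, x) = g x)
    (hA : ∀ t, ∀ a ∈ A, M (t, a) = f a) : f.HomotopicRel g A :=
  htpy_of (glMk M hM hd) (glMk M hM hd).continuous (fun x => Units.ext (h0 x))
    (fun x => Units.ext (h1 x)) (fun t a ha => Units.ext (hA t a ha))

variable (ι κ) in
/-- The stabilization `g ↦ g ⊕ 1`. -/
def stab : GLC ι →ₜ* GLC (ι ⊕ κ) where
  toMonoidHom := Units.map
    { toFun := fun M => Matrix.fromBlocks M 0 0 1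
      map_one' := Matrix.fromBlocks_one
      map_mul' := fun M N => by simp [Matrix.fromBlocks_multiply] }
  continuous_toFun := by
    refine Continuous.units_map _ ?_
    exact Continuous.matrix_fromBlocks continuous_id continuous_const continuous_const
      continuous_const

@[simp] theorem stab_val (g : GLC ι) :
    (stab ι κ g).1 = Matrix.fromBlocks (g : Matrix ι ι ℂ) 0 0 1 := rfl

theorem stab_injective : Function.Injective (stab ι κ) := by
  intro g h hgh
  have := congrArg (fun u : GLC (ι ⊕ κ) => u.1.toBlocks₁₁) hgh
  ext1
  simpa using this

/-- Moving the last column to the last basis vector. -/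
theorem stab_col [CompactSpace X] {m : ℕ} (hX : Retr X m) (hm : m ≤ 2 * Fintype.card ι)
    (H : C(X, GLC (ι ⊕ Unit))) :
    ∃ w : C(X, ι ⊕ Unit → ℂ),
      (∀ x, (H x).1.col (Sum.inr ()) = Pi.single (Sum.inr ()) 1 →
        w x = Pi.single (Sum.inr ()) 1) ∧
      (∀ (t : I) x, ((H x).1.updateCol (Sum.inr ())
        ((1 - (t : ℂ)) • (H x).1.col (Sum.inr ()) + (t : ℂ) • w x)).det ≠ 0) ∧
      ∀ x (s : ℝ), s ≤ 0 → w x ≠ Pi.single (Sum.inr ()) (s : ℂ) := by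
  set e : ι ⊕ Unit → ℂ := Pi.single (Sum.inr ()) 1 with he
  let v : C(X, ι ⊕ Unit → ℂ) := ⟨fun x => (H x).1.col (Sum.inr ()), by
    refine continuous_pi fun i => ?_
    exact (Units.continuous_val.comp H.continuous).matrix_elem i _⟩
  let F : X × (ι ⊕ Unit → ℂ) → ℂ := fun p =>
    ((H p.1).1.updateCol (Sum.inr ()) (v p.1 + p.2)).det
  have hF : Continuous F := by
    refine Continuous.matrix_det ?_
    refine Continuous.matrix_updateCol _ ?_ ?_
    · exact Units.continuous_val.comp (H.continuous.comp continuous_fst)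
    · fun_prop
  have hop : IsOpen {p | F p ≠ 0} := isOpen_ne_fun hF continuous_const
  have hsub : (univ : Set X) ×ˢ ({0} : Set (ι ⊕ Unit → ℂ)) ⊆ {p | F p ≠ 0} := by
    rintro ⟨x, u⟩ ⟨-, hu⟩
    rw [Set.mem_singleton_iff] at hu
    change F _ ≠ 0
    simp only at hu
    simp only [F, hu, add_zero]
    have : (H x).1.updateCol (Sum.inr ()) (v x) = H x :=
      Matrix.updateCol_eq_self _ _
    rw [this]
    exact glc_det_ne_zero _
  obtain ⟨U, W, -, hW, hUu, hW0, hUW⟩ := generalized_tube_lemma isCompact_univ isCompact_singleton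
    hop hsub
  obtain ⟨ε, hε, hεW⟩ := Metric.isOpen_iff.1 hW 0 (hW0 rfl)
  have hline : Thin m (Set.range fun s : ℝ => (s : ℂ) • e) := by
    refine Thin.range _ ?_ ?_
    · exact (Complex.ofRealCLM.contDiff).smul contDiff_const
    · have : Module.finrank ℝ (ι ⊕ Unit → ℂ) = 2 * (Fintype.card ι + 1) := by
        rw [Module.finrank_pi_fintype]
        simp [Complex.finrank_real_complex, mul_comm, Fintype.card_sum]
      rw [this, Module.finrank_self]
      omega
  have hpos : 0 < Module.finrank ℝ (ι ⊕ Unit → ℂ) := Module.finrank_pos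
  obtain ⟨v', hv', hv'Z⟩ := hline.avoid hX hpos v (ε := min ε (1 / 4)) (by positivity)
  let χ : X → ℝ := fun x => min 1 (2 * ‖v x - e‖)
  have hχ0 : ∀ x, 0 ≤ χ x := fun x => le_min zero_le_one (by positivity)
  have hχ1 : ∀ x, χ x ≤ 1 := fun x => min_le_left _ _
  let w : C(X, ι ⊕ Unit → ℂ) := ⟨fun x => v x + χ x • (v' x - v x), by fun_prop⟩
  have hwv : ∀ x, ‖w x - v x‖ < min ε (1 / 4) := by
    intro x
    have : w x - v x = χ x • (v' x - v x) := by simp [w]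
    rw [this, norm_smul, Real.norm_of_nonneg (hχ0 x)]
    calc χ x * ‖v' x - v x‖ ≤ 1 * ‖v' x - v x‖ := by gcongr; exact hχ1 x
      _ < _ := by rw [one_mul]; exact hv' x
  refine ⟨w, ?_, ?_, ?_⟩
  · intro x hx
    have hx' : v x = e := hx
    simp [w, χ, hx']
  · intro t x
    have hmem : (x, (t : ℂ) • (w x - v x)) ∈ {p | F p ≠ 0} := by
      refine hUW ⟨hUu (Set.mem_univ x), hεW ?_⟩
      rw [mem_ball_zero_iff, norm_smul]
      have h1 : ‖((t : ℝ) : ℂ)‖ ≤ 1 := by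
        rw [Complex.norm_real, Real.norm_of_nonneg t.2.1]; exact t.2.2
      calc _ ≤ 1 * ‖w x - v x‖ := by gcongr
        _ < ε := by rw [one_mul]; exact (hwv x).trans_le (min_le_left _ _)
    have h2 : F (x, (t : ℂ) • (w x - v x)) ≠ 0 := hmem
    have h3 : v x + (t : ℂ) • (w x - v x) = (1 - (t : ℂ)) • v x + (t : ℂ) • w x := by
      simp only [sub_smul, one_smul, smul_sub]
      abel
    simp only [F] at h2
    rw [h3] at h2
    exact h2
  · intro x s hs hws
    have hse : (Pi.single (Sum.inr ()) (s : ℂ) : ι ⊕ Unit → ℂ) = (s : ℂ) • e := by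
      rw [he, ← Pi.single_smul, smul_eq_mul, mul_one]
    rcases lt_or_ge ‖v x - e‖ (1 / 2) with hlt | hge
    · have h1 : ‖w x - e‖ < 3 / 4 := by
        calc ‖w x - e‖ = ‖(w x - v x) + (v x - e)‖ := by rw [sub_add_sub_cancel]
          _ ≤ ‖w x - v x‖ + ‖v x - e‖ := norm_add_le _ _
          _ < 3 / 4 := by have := (hwv x).trans_le (min_le_right _ _); linarith
      have h2 := (norm_le_pi_norm (w x - e) (Sum.inr ())).trans_lt h1
      rw [hws] at h2
      simp only [Pi.sub_apply, he, Pi.single_eq_same] at h2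
      have h3 : ((s : ℂ) - 1) = ((s - 1 : ℝ) : ℂ) := by push_cast; ring
      rw [h3, Complex.norm_real, Real.norm_eq_abs, abs_of_nonpos (by linarith)] at h2
      linarith
    · have hχ : χ x = 1 := min_eq_left (by linarith)
      apply hv'Z x
      refine ⟨s, ?_⟩
      simp only
      rw [← hse, ← hws]
      simp [w, hχ]

/-- One stabilization step, relative to a set on which the map is already stabilized. -/
theorem stab_step [CompactSpace X] {m : ℕ} (hX : Retr X m) (hm : m ≤ 2 * Fintype.card ι)
    (A : Set X) (H : C(X, GLC (ι ⊕ Unit))) (hA : ∀ a ∈ A, ∃ B, H a = stab ι Unit B) :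
    ∃ K : C(X, GLC ι), H.HomotopicRel ((⟨stab ι Unit, (stab ι Unit).continuous_toFun⟩ :
      C(GLC ι, GLC (ι ⊕ Unit))).comp K) A := by
  set e : ι ⊕ Unit → ℂ := Pi.single (Sum.inr ()) 1 with he
  obtain ⟨w, hw1, hw2, hw3⟩ := stab_col hX hm H
  have hHc : Continuous fun x => (H x : Matrix (ι ⊕ Unit) (ι ⊕ Unit) ℂ) :=
    Units.continuous_val.comp H.continuous
  have hcol : ∀ a ∈ A, (H a).1.col (Sum.inr ()) = e := by
    intro a ha
    obtain ⟨B, hB⟩ := hA a ha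
    rw [hB]
    ext i
    rcases i with i | i <;> simp [Matrix.col, he]
  -- the last column becomes `w`
  let M1 : I × X → Matrix (ι ⊕ Unit) (ι ⊕ Unit) ℂ := fun p =>
    (H p.2).1.updateCol (Sum.inr ())
        ((1 - (p.1 : ℂ)) • (H p.2).1.col (Sum.inr ()) + (p.1 : ℂ) • w p.2)
  have hcolc : Continuous fun x => (H x).1.col (Sum.inr ()) :=
    continuous_pi fun i => hHc.matrix_elem i _
  have hI : Continuous fun p : I × X => ((p.1 : ℝ) : ℂ) :=
    Complex.continuous_ofReal.comp (continuous_subtype_val.comp continuous_fst)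
  have hM1 : Continuous M1 := by
    refine Continuous.matrix_updateCol _ (hHc.comp continuous_snd) ?_
    refine Continuous.add (Continuous.smul (continuous_const.sub hI) (hcolc.comp continuous_snd)) ?_
    exact hI.smul (w.continuous.comp continuous_snd)
  have hM1d : ∀ p, (M1 p).det ≠ 0 := fun p => hw2 p.1 p.2
  have hM1A : ∀ t, ∀ a ∈ A, M1 (t, a) = H a := by
    intro t a ha
    have : (1 - (t : ℂ)) • (H a).1.col (Sum.inr ()) + (t : ℂ) • w a =
        (H a).1.col (Sum.inr ()) := by
      rw [hw1 a (hcol a ha), hcol a ha, ← add_smul]; simp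
    simp only [M1, this]
    exact Matrix.updateCol_eq_self _ _
  let H1 : C(X, GLC (ι ⊕ Unit)) := glMk (fun x => M1 (1, x)) (by fun_prop) (fun x => hM1d _)
  have s1 : H.HomotopicRel H1 A := by
    refine gl_htpy M1 hM1 hM1d ?_ (fun x => rfl) hM1A
    intro x
    simp only [M1, Icc.coe_zero, Complex.ofReal_zero, sub_zero, one_smul, zero_smul, add_zero]
    exact Matrix.updateCol_eq_self _ _
  have hH1col : ∀ x, (H1 x).1 *ᵥ e = w x := by
    intro x
    rw [he, Matrix.mulVec_single_one]
    change (M1 (1, x)).col _ = _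
    ext i
    simp [M1, Matrix.col]
  -- the last column is rotated to `e`
  let Nw : X → ℝ := fun x => Real.sqrt (∑ i, Complex.normSq (w x i))
  have hNw : Continuous Nw := by
    refine Real.continuous_sqrt.comp (continuous_finsetSum _ fun i _ => ?_)
    exact Complex.continuous_normSq.comp (by fun_prop)
  have hNsq : ∀ x, Nw x ^ 2 = ∑ i, Complex.normSq (w x i) := fun x =>
    Real.sq_sqrt (Finset.sum_nonneg fun i _ => Complex.normSq_nonneg _)
  have hN0 : ∀ x, 0 ≤ Nw x := fun x => Real.sqrt_nonneg _
  have hNre : ∀ x, 0 < Nw x + (w x (Sum.inr ())).re := by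
    intro x
    by_contra hcon
    rw [not_lt] at hcon
    set u := w x (Sum.inr ()) with hu
    have hsum := hNsq x
    rw [Fintype.sum_sum_type] at hsum
    simp only [Finset.univ_unique, PUnit.default_eq_unit, Finset.sum_singleton] at hsum
    rw [← hu, Complex.normSq_apply] at hsum
    have hs0 : 0 ≤ ∑ i, Complex.normSq (w x (Sum.inl i)) :=
      Finset.sum_nonneg fun i _ => Complex.normSq_nonneg _
    have hre : Nw x ^ 2 ≤ u.re * u.re := by nlinarith [hN0 x]
    have him : u.im = 0 := by nlinarith [mul_self_nonneg u.im]
    have hz : ∑ i, Complex.normSq (w x (Sum.inl i)) = 0 := by nlinarith [mul_self_nonneg u.im]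
    rw [Finset.sum_eq_zero_iff_of_nonneg fun i _ => Complex.normSq_nonneg _] at hz
    refine hw3 x u.re (by linarith [hN0 x]) ?_
    ext i
    rcases i with i | i
    · simpa using Complex.normSq_eq_zero.1 (hz i (Finset.mem_univ i))
    · simp only [Pi.single_eq_same]
      exact Complex.ext rfl (by simpa using him)
  have hNpos : ∀ x, 0 < Nw x := by
    intro x
    rcases (hN0 x).lt_or_eq with h | h
    · exact h
    · exfalso
      have h1 := hNsq x
      have h2 := hNre x
      rw [← h] at h1 h2
      have h3 : Complex.normSq (w x (Sum.inr ())) = 0 :=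
        (Finset.sum_eq_zero_iff_of_nonneg fun i _ => Complex.normSq_nonneg _).1
          (by rw [← h1]; ring) _ (Finset.mem_univ _)
      rw [Complex.normSq_eq_zero] at h3
      rw [h3] at h2
      simp at h2
  let c : X → ι ⊕ Unit → ℂ := fun x => star (w x) + ((Nw x : ℝ) : ℂ) • e
  have hc : Continuous c := by
    have h1 : Continuous fun x => ((Nw x : ℝ) : ℂ) := Complex.continuous_ofReal.comp hNw
    have h2 : Continuous fun x => star (w x) := by fun_prop
    exact h2.add (h1.smul continuous_const)
  have hcw : ∀ x, 0 < (c x ⬝ᵥ w x).re := by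
    intro x
    have h1 : (c x ⬝ᵥ w x) = ((Nw x ^ 2 : ℝ) : ℂ) + (Nw x : ℂ) * w x (Sum.inr ()) := by
      simp only [c, add_dotProduct, smul_dotProduct, he, single_one_dotProduct, smul_eq_mul]
      congr 1
      rw [hNsq x]
      push_cast
      simp only [dotProduct, Pi.star_apply, RCLike.star_def]
      refine Finset.sum_congr rfl fun i _ => ?_
      rw [mul_comm, Complex.mul_conj]
    rw [h1]
    simp only [Complex.add_re, Complex.ofReal_re, Complex.mul_re, Complex.ofReal_im, zero_mul,
      sub_zero]
    nlinarith [hNre x, hNpos x, mul_pos (hNpos x) (hNre x)]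
  have hce : ∀ x, 0 < (c x ⬝ᵥ e).re := by
    intro x
    have h1 : (c x ⬝ᵥ e) = star (w x (Sum.inr ())) + (Nw x : ℂ) := by
      simp only [c, he, dotProduct_single_one, Pi.add_apply, Pi.star_apply, Pi.smul_apply,
        Pi.single_eq_same, smul_eq_mul, mul_one]
    rw [h1]
    simp only [Complex.add_re, Complex.ofReal_re, RCLike.star_def, Complex.conj_re]
    linarith [hNre x]
  let R : I × X → Matrix (ι ⊕ Unit) (ι ⊕ Unit) ℂ := fun p =>
    1 + Matrix.vecMulVec ((p.1 : ℂ) • (e - w p.2)) ((c p.2 ⬝ᵥ w p.2)⁻¹ • c p.2)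
  have hcwne : ∀ x, c x ⬝ᵥ w x ≠ 0 := fun x h => by
    have := hcw x; rw [h] at this; simp at this
  have hR : Continuous R := by
    refine continuous_const.add (Continuous.matrix_vecMulVec ?_ ?_)
    · exact hI.smul (by fun_prop)
    · refine Continuous.smul (Continuous.inv₀ ?_ fun p => hcwne _) (hc.comp continuous_snd)
      exact (hc.comp continuous_snd).dotProduct (w.continuous.comp continuous_snd)
  have hRd : ∀ p, (R p).det ≠ 0 := by
    rintro ⟨t, x⟩ h0
    have h1 : (R (t, x)).det = 1 + ((c x ⬝ᵥ w x)⁻¹ • c x) ⬝ᵥ ((t : ℂ) • (e - w x)) := by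
      simp only [R]
      rw [Matrix.vecMulVec_eq Unit, Matrix.det_one_add_replicateCol_mul_replicateRow]
    rw [h1] at h0
    have h2 : (c x ⬝ᵥ w x) * (1 + ((c x ⬝ᵥ w x)⁻¹ • c x) ⬝ᵥ ((t : ℂ) • (e - w x))) =
        (1 - (t : ℂ)) * (c x ⬝ᵥ w x) + t * (c x ⬝ᵥ e) := by
      simp only [smul_dotProduct, dotProduct_smul, dotProduct_sub, smul_eq_mul]
      field_simp [hcwne x]
      ring
    rw [h0, mul_zero] at h2
    have h3 := congrArg Complex.re h2
    have h4 : (1 - (t : ℂ)) = ((1 - t : ℝ) : ℂ) := by push_cast; ring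
    rw [h4, Complex.add_re, Complex.re_ofReal_mul, Complex.re_ofReal_mul, Complex.zero_re] at h3
    have ht := t.2
    rcases ht.1.lt_or_eq with h | h
    · have := mul_pos h (hce x)
      have := mul_nonneg (sub_nonneg.2 ht.2) (hcw x).le
      linarith
    · rw [← h] at h3
      simp only [sub_zero, one_mul, zero_mul, add_zero] at h3
      linarith [hcw x]
  let M2 : I × X → Matrix (ι ⊕ Unit) (ι ⊕ Unit) ℂ := fun p => R p * H1 p.2
  have hM2 : Continuous M2 :=
    hR.mul (Units.continuous_val.comp (H1.continuous.comp continuous_snd))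
  have hM2d : ∀ p, (M2 p).det ≠ 0 := fun p => by
    simp only [M2, Matrix.det_mul]
    exact mul_ne_zero (hRd p) (glc_det_ne_zero _)
  let H2 : C(X, GLC (ι ⊕ Unit)) := glMk (fun x => M2 (1, x)) (by fun_prop) (fun x => hM2d _)
  have s2 : H1.HomotopicRel H2 A := by
    refine gl_htpy M2 hM2 hM2d ?_ (fun x => rfl) ?_
    · intro x; simp [M2, R]
    · intro t a ha
      have : w a = e := hw1 a (hcol a ha)
      simp [M2, R, this]
  have hH2col : ∀ x, (H2 x).1 *ᵥ e = e := by
    intro x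
    change (R (1, x) * (H1 x).1) *ᵥ e = e
    rw [← Matrix.mulVec_mulVec, hH1col]
    simp only [R, Matrix.add_mulVec, Matrix.one_mulVec, Matrix.vecMulVec_mulVec, smul_dotProduct,
      smul_eq_mul, inv_mul_cancel₀ (hcwne x)]
    simp
  have hH2A : ∀ a ∈ A, H2 a = H a := fun a ha => by
    rw [← (s1.trans s2).fst_eq_snd ha]
  -- the last row is contracted
  let Bl : X → Matrix ι ι ℂ := fun x => (H2 x).1.toBlocks₁₁
  let Cl : X → Matrix Unit ι ℂ := fun x => (H2 x).1.toBlocks₂₁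
  have hH2c : Continuous fun x => (H2 x : Matrix (ι ⊕ Unit) (ι ⊕ Unit) ℂ) :=
    Units.continuous_val.comp H2.continuous
  have hBl : Continuous Bl := continuous_matrix fun i j => hH2c.matrix_elem _ _
  have hCl : Continuous Cl := continuous_matrix fun i j => hH2c.matrix_elem _ _
  have hH2b : ∀ x, (H2 x).1 = Matrix.fromBlocks (Bl x) 0 (Cl x) 1 := by
    intro x
    conv_lhs => rw [← Matrix.fromBlocks_toBlocks (H2 x).1]
    have h1 := hH2col x
    rw [he, Matrix.mulVec_single_one] at h1
    congr 1
    · ext i j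
      have := congrFun h1 (Sum.inl i)
      simpa [Matrix.col, Matrix.toBlocks₁₂] using this
    · ext i j
      have := congrFun h1 (Sum.inr i)
      simpa [Matrix.col, Matrix.toBlocks₂₂] using this
  have hBd : ∀ x, (Bl x).det ≠ 0 := fun x => by
    have := glc_det_ne_zero (H2 x)
    rwa [hH2b, Matrix.det_fromBlocks_zero₁₂, Matrix.det_one, mul_one] at this
  let M3 : I × X → Matrix (ι ⊕ Unit) (ι ⊕ Unit) ℂ := fun p =>
    Matrix.fromBlocks (Bl p.2) 0 ((1 - (p.1 : ℂ)) • Cl p.2) 1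
  have hM3 : Continuous M3 := by
    refine Continuous.matrix_fromBlocks (hBl.comp continuous_snd) continuous_const ?_
      continuous_const
    exact Continuous.smul (continuous_const.sub hI) (hCl.comp continuous_snd)
  refine ⟨glMk Bl hBl hBd, s1.trans (s2.trans ?_)⟩
  refine gl_htpy M3 hM3 ?_ ?_ ?_ ?_
  · intro p
    simp only [M3]
    rw [Matrix.det_fromBlocks_zero₁₂, Matrix.det_one, mul_one]
    exact hBd _
  · intro x
    rw [hH2b]; simp [M3]
  · intro x
    simp [M3]
  · intro t a ha
    obtain ⟨B, hB⟩ := hA a ha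
    have hC : Cl a = 0 := by
      simp only [Cl]
      rw [hH2A a ha, hB]
      simp
    rw [hH2b]
    simp [M3, hC]

end GLC

section
variable {X : Type*} [TopologicalSpace X]
variable {Γ Γ' Γ'' : Type*} [Group Γ] [TopologicalSpace Γ] [IsTopologicalGroup Γ]
  [Group Γ'] [TopologicalSpace Γ'] [IsTopologicalGroup Γ']
  [Group Γ''] [TopologicalSpace Γ''] [IsTopologicalGroup Γ'']

theorem Pi.map_comp (A : Set X) (ψ : Γ' →ₜ* Γ'') (φ : Γ →ₜ* Γ') (χ : Γ →ₜ* Γ'')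
    (h : ∀ g, χ g = ψ (φ g)) (x : Pi A Γ) : Pi.map A χ x = Pi.map A ψ (Pi.map A φ x) := by
  obtain ⟨f, rfl⟩ := Pi.mk_surj A x
  rw [Pi.map_mk, Pi.map_mk, Pi.map_mk]
  congr 1
  ext a
  simp [h]

theorem Pi.map_bij_of_inverse (A : Set X) (φ : Γ →ₜ* Γ') (ψ : Γ' →ₜ* Γ) (h : ∀ g, ψ (φ g) = g)
    (h' : ∀ g, φ (ψ g) = g) : Function.Bijective (Pi.map A φ) := by
  refine Function.bijective_iff_has_inverse.2 ⟨Pi.map A ψ, fun x => ?_, fun x => ?_⟩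
  · obtain ⟨f, rfl⟩ := Pi.mk_surj A x
    rw [Pi.map_mk, Pi.map_mk]
    congr 1
    ext a
    simp [h]
  · obtain ⟨f, rfl⟩ := Pi.mk_surj A x
    rw [Pi.map_mk, Pi.map_mk]
    congr 1
    ext a
    simp [h']
end

section GLC
variable {ι κ : Type} [Fintype ι] [DecidableEq ι] [Fintype κ] [DecidableEq κ]
variable {X : Type*} [TopologicalSpace X]

/-- Reindexing of matrices, for general linear groups. -/
def reix (e : ι ≃ κ) : GLC ι →ₜ* GLC κ where
  toMonoidHom := Units.map (Matrix.reindexAlgEquiv ℂ ℂ e : Matrix ι ι ℂ →* Matrix κ κ ℂ)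
  continuous_toFun := by
    refine Continuous.units_map _ ?_
    change Continuous fun M : Matrix ι ι ℂ => M.submatrix e.symm e.symm
    exact continuous_id.matrix_submatrix _ _

@[simp] theorem reix_val (e : ι ≃ κ) (g : GLC ι) : (reix e g).1 = g.1.submatrix e.symm e.symm := rfl

theorem reix_bij (A : Set X) (e : ι ≃ κ) : Function.Bijective (Pi.map A (reix e)) := by
  refine Pi.map_bij_of_inverse A _ (reix e.symm) (fun g => ?_) fun g => ?_ <;>
  · ext i j; simp

theorem stab_unit_surj [CompactSpace X] {k : ℕ} (hX : Retr X k) (hk : k ≤ 2 * Fintype.card ι)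
    (A : Set X) (g : Om A (GLC (ι ⊕ Unit))) :
    ∃ f : Om A (GLC ι), g.1.HomotopicRel (Om.map A (stab ι Unit) f).1 A := by
  obtain ⟨K, hK⟩ := stab_step hX hk A g.1 fun a ha => ⟨1, by rw [g.2 a ha, map_one]⟩
  refine ⟨⟨K, fun a ha => ?_⟩, hK⟩
  apply stab_injective (κ := Unit)
  have := hK.fst_eq_snd ha
  rw [g.2 a ha] at this
  rw [map_one]
  exact this.symm

theorem stab_unit_bij [CompactSpace X] {k : ℕ} (hX : Retr X k) (hk : k < 2 * Fintype.card ι)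
    (A : Set X) : Function.Bijective (Pi.map A (stab ι Unit)) := by
  refine Pi.map_bijective _ (stab_unit_surj hX hk.le A) fun f hf => ?_
  obtain ⟨H, h0, h1, hA⟩ := null_iff.1 hf
  have hst : ∀ p ∈ dI A, ∃ B, H p = stab ι Unit B := by
    rintro ⟨t, x⟩ (h | h | h)
    · exact ⟨1, by simp only at h; rw [h, h0, map_one]⟩
    · exact ⟨f.1 x, by simp only at h; rw [h, h1]; rfl⟩
    · exact ⟨1, by rw [hA t x h, map_one]⟩
  obtain ⟨K, hK⟩ := stab_step hX.prodI hk (dI A) H hst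
  have hKp : ∀ p ∈ dI A, H p = stab ι Unit (K p) := fun p hp => hK.fst_eq_snd hp
  refine null_iff.2 ⟨K, fun x => ?_, fun x => ?_, fun t a ha => ?_⟩ <;>
    apply stab_injective (κ := Unit)
  · rw [← hKp _ (Or.inl rfl), h0, map_one]
  · rw [← hKp _ (Or.inr (Or.inl rfl)), h1]; rfl
  · rw [← hKp _ (Or.inr (Or.inr ha)), hA t a ha, map_one]

/-- Stability: `g ↦ g ⊕ 1` is bijective on homotopy groups of degree less than twice the
size. -/
theorem stab_bij [CompactSpace X] {k : ℕ} (hX : Retr X k) (hk : k < 2 * Fintype.card ι)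
    (A : Set X) : Function.Bijective (Pi.map A (stab ι κ)) := by
  suffices H : ∀ (κ : Type) [Fintype κ], ∀ [DecidableEq κ],
      Function.Bijective (Pi.map A (stab ι κ)) from H κ
  intro κ _
  refine Fintype.induction_empty_option (P := fun κ _ => ∀ [DecidableEq κ],
      Function.Bijective (Pi.map A (stab ι κ))) ?_ ?_ ?_ κ
  · intro α β _ e h _
    letI := Fintype.ofEquiv β e.symm
    classical
    have hc : ⇑(Pi.map A (stab ι β)) =
        Pi.map A (reix ((Equiv.refl ι).sumCongr e)) ∘ Pi.map A (stab ι α) := by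
      funext x
      refine Pi.map_comp A _ _ _ (fun g => ?_) x
      ext i j
      rcases i with i | i <;> rcases j with j | j <;> simp [Matrix.one_apply]
    rw [hc]
    exact (reix_bij A _).comp h
  · intro _
    have hc : ⇑(Pi.map A (stab ι PEmpty)) = Pi.map A (reix (Equiv.sumEmpty ι PEmpty).symm) := by
      congr 2
      ext g i j
      rcases i with i | i
      · rcases j with j | j
        · simp
        · exact j.elim
      · exact i.elim
    rw [hc]
    exact reix_bij A _
  · intro α _ h _
    classical
    let e : (ι ⊕ α) ⊕ Unit ≃ ι ⊕ Option α :=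
      (Equiv.sumAssoc ι α Unit).trans ((Equiv.refl ι).sumCongr (Equiv.optionEquivSumPUnit α).symm)
    have hc : ⇑(Pi.map A (stab ι (Option α))) =
        Pi.map A (reix e) ∘ (Pi.map A (stab (ι ⊕ α) Unit) ∘ Pi.map A (stab ι α)) := by
      funext x
      have h1 := Pi.map_comp A (reix e) ((stab (ι ⊕ α) Unit).comp (stab ι α))
        (stab ι (Option α)) (fun g => ?_) x
      · rw [h1, Pi.map_comp A (stab (ι ⊕ α) Unit) (stab ι α) _ (fun g => rfl) x]
        rfl
      · ext i j
        rcases i with i | _ | i <;> rcases j with j | _ | j <;> simp [e, Matrix.one_apply]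
    rw [hc]
    refine (reix_bij A _).comp ((stab_unit_bij hX ?_ A).comp h)
    rw [Fintype.card_sum]; omega

/-- The homotopy groups of general linear groups in the stable range do not depend on the size. -/
theorem stab_equiv [CompactSpace X] {k : ℕ} (hX : Retr X k) (hι : k < 2 * Fintype.card ι)
    (hκ : k < 2 * Fintype.card κ) (A : Set X) : Nonempty (Pi A (GLC ι) ≃* Pi A (GLC κ)) := by
  refine ⟨(MulEquiv.ofBijective _ (stab_bij (κ := κ) hX hι A)).trans
    ((MulEquiv.ofBijective _ (reix_bij A (Equiv.sumComm ι κ))).trans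
      (MulEquiv.ofBijective _ (stab_bij (κ := ι) hX hκ A)).symm)⟩

end GLC

/-! ### Lifting paths through homomorphisms with local sections -/

section Lift
variable {X : Type*} [TopologicalSpace X]
variable {Γ C : Type*} [Group Γ] [TopologicalSpace Γ] [IsTopologicalGroup Γ]
  [Group C] [TopologicalSpace C] [IsTopologicalGroup C]

/-- A homomorphism has a continuous section, sending `1` to `1`, on a neighbourhood of `1`. -/
def LocSec (p : Γ →ₜ* C) : Prop :=
  ∃ (U : Set C) (sc : C → Γ), IsOpen U ∧ (1 : C) ∈ U ∧ ContinuousOn sc U ∧ sc 1 = 1 ∧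
    ∀ u ∈ U, p (sc u) = u

/-- Families of paths starting at `1` lift; the lift is constant where the path is. The lift is
the product of the local lifts of small increments. -/
theorem path_lift [CompactSpace X] {p : Γ →ₜ* C} (hp : LocSec p) (A : Set X) (f : C(I × X, C))
    (h0 : ∀ x, f (0, x) = 1) (hA : ∀ t, ∀ a ∈ A, f (t, a) = 1) :
    ∃ F : C(I × X, Γ), (∀ x, F (0, x) = 1) ∧ (∀ t, ∀ a ∈ A, F (t, a) = 1) ∧
      ∀ q, p (F q) = f q := by
  obtain ⟨U, sc, hU, h1U, hs, hs1, hps⟩ := hp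
  let O : Set (I × I) := {q | ∀ x, (f (q.1, x))⁻¹ * f (q.2, x) ∈ U}
  have hO : IsOpen O := by
    have hc : IsClosed {q : (I × I) × X | (f (q.1.1, q.2))⁻¹ * f (q.1.2, q.2) ∈ Uᶜ} :=
      hU.isClosed_compl.preimage (by fun_prop)
    have := isClosedMap_fst_of_compactSpace _ hc
    rw [← isClosed_compl_iff]
    convert this using 1
    ext q
    simp [O]
  have hdiag : Set.range (fun t : I => (t, t)) ⊆ O := by
    rintro _ ⟨t, rfl⟩ x
    simpa using h1U
  obtain ⟨δ, hδ, hδO⟩ := (isCompact_range (by fun_prop : Continuous fun t : I => (t, t))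
    ).exists_thickening_subset_open hO hdiag
  obtain ⟨N, hN⟩ := exists_nat_one_div_lt hδ
  let pt : ℕ → I := fun i => projIcc 0 1 zero_le_one ((i : ℝ) / (N + 1))
  have hpt : ∀ i, dist (pt (i + 1)) (pt i) < δ := by
    intro i
    have hl : dist (pt (i + 1)) (pt i) ≤ dist (((i + 1 : ℕ) : ℝ) / (N + 1)) ((i : ℝ) / (N + 1)) := by
      have := (LipschitzWith.projIcc (zero_le_one (α := ℝ))).dist_le_mul
        (((i + 1 : ℕ) : ℝ) / (N + 1)) ((i : ℝ) / (N + 1))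
      simpa [pt] using this
    refine hl.trans_lt (lt_of_le_of_lt (le_of_eq ?_) hN)
    rw [Real.dist_eq, ← sub_div]
    push_cast
    rw [add_sub_cancel_left, abs_of_nonneg (by positivity)]
  have hinc : ∀ i (t : I) x, (f (min t (pt i), x))⁻¹ * f (min t (pt (i + 1)), x) ∈ U := by
    intro i t x
    have hd : dist (min t (pt i)) (min t (pt (i + 1))) < δ := by
      refine lt_of_le_of_lt ?_ (hpt i)
      rw [dist_comm (pt (i + 1)), Subtype.dist_eq, Subtype.dist_eq, Real.dist_eq, Real.dist_eq]
      have := abs_min_sub_min_le_max (t : ℝ) (pt i) t (pt (i + 1))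
      rw [sub_self, abs_zero, max_eq_right (abs_nonneg _)] at this
      exact this
    have : (min t (pt i), min t (pt (i + 1))) ∈ O := by
      refine hδO (Metric.mem_thickening_iff.2 ⟨_, ⟨min t (pt i), rfl⟩, ?_⟩)
      rw [Prod.dist_eq, dist_self, dist_comm]
      exact max_lt hδ hd
    exact this x
  have key : ∀ n : ℕ, ∃ F : C(I × X, Γ), (∀ x, F (0, x) = 1) ∧ (∀ t, ∀ a ∈ A, F (t, a) = 1) ∧
      ∀ q, p (F q) = f (min q.1 (pt n), q.2) := by
    intro n
    induction n with
    | zero =>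
      refine ⟨1, fun x => rfl, fun t a ha => rfl, fun q => ?_⟩
      have : min q.1 (pt 0) = 0 := by
        have h : pt 0 = 0 := by simp only [pt, Nat.cast_zero, zero_div]; exact projIcc_left _
        rw [h]; exact min_eq_right (unitInterval.nonneg' )
      rw [this, h0]; simp
    | succ n ih =>
      obtain ⟨F, hF0, hFA, hF⟩ := ih
      have hcont : Continuous fun q : I × X =>
          sc ((f (min q.1 (pt n), q.2))⁻¹ * f (min q.1 (pt (n + 1)), q.2)) :=
        hs.comp_continuous (by fun_prop) fun q => hinc n q.1 q.2
      refine ⟨⟨fun q => F q * sc ((f (min q.1 (pt n), q.2))⁻¹ * f (min q.1 (pt (n + 1)), q.2)),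
        F.continuous.mul hcont⟩, fun x => ?_, fun t a ha => ?_, fun q => ?_⟩
      · have _ := 0
        simp [hF0, h0, hs1]
      · simp [hFA t a ha, hA _ a ha, hs1]
      · simp only [ContinuousMap.coe_mk, map_mul, hF, hps _ (hinc n q.1 q.2)]
        group
  obtain ⟨F, hF0, hFA, hF⟩ := key (N + 1)
  refine ⟨F, hF0, hFA, fun q => ?_⟩
  have h : pt (N + 1) = 1 := by
    simp only [pt]
    rw [show (((N + 1 : ℕ) : ℝ) / (N + 1)) = 1 by push_cast; field_simp]
    exact projIcc_right _
  rw [hF, h, min_eq_left (unitInterval.le_one' )]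

variable (p : Γ →ₜ* C)

/-- The kernel of a continuous homomorphism. -/
abbrev kerp : Subgroup Γ := p.toMonoidHom.ker

theorem mem_kerp {p : Γ →ₜ* C} {g : Γ} : g ∈ kerp p ↔ p g = 1 := Iff.rfl

/-- Families of paths in `Γ` starting at `1`, constant on `A`, ending in the kernel of `p`. -/
def Pth (A : Set X) : Subgroup C(I × X, Γ) where
  carrier := {F | (∀ x, F (0, x) = 1) ∧ (∀ t, ∀ a ∈ A, F (t, a) = 1) ∧ ∀ x, p (F (1, x)) = 1}
  mul_mem' {F G} hF hG :=
    ⟨fun x => by simp [hF.1, hG.1], fun t a ha => by simp [hF.2.1 t a ha, hG.2.1 t a ha],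
      fun x => by simp [hF.2.2, hG.2.2]⟩
  one_mem' := ⟨fun _ => rfl, fun _ _ _ => rfl, fun _ => map_one p⟩
  inv_mem' {F} hF := ⟨fun x => by simp [hF.1], fun t a ha => by simp [hF.2.1 t a ha],
      fun x => by simp [hF.2.2]⟩

/-- The loops in the base of a family of paths. -/
def Pth.base (A : Set X) : Pth p A →* Om (dI A) C where
  toFun F := ⟨⟨fun q => p (F.1 q), p.continuous_toFun.comp F.1.continuous⟩, by
    rintro ⟨t, x⟩ (h | h | h)
    · simp only at h; simp [h, F.2.1]
    · simp only at h; simp [h, F.2.2.2]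
    · simp only at h; simp [F.2.2.1 t x h]⟩
  map_one' := by ext; simp
  map_mul' F G := by ext; simp

/-- The end points of a family of paths. -/
def Pth.fin (A : Set X) : Pth p A →* Om A (kerp p) where
  toFun F := ⟨⟨fun x => ⟨F.1 (1, x), F.2.2.2 x⟩, by fun_prop⟩, fun a ha => by
    ext; simp [F.2.2.1 1 a ha]⟩
  map_one' := by ext; simp
  map_mul' F G := by ext; simp

variable {p} {A : Set X}

@[simp] theorem Pth.base_apply (F : Pth p A) (q : I × X) : (Pth.base p A F).1 q = p (F.1 q) := rfl

@[simp] theorem Pth.fin_apply (F : Pth p A) (x : X) :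
    (((Pth.fin p A F).1 x : kerp p) : Γ) = F.1 (1, x) := rfl

theorem Pth.base_surj [CompactSpace X] (hp : LocSec p) : Function.Surjective (Pth.base p A) := by
  intro f
  obtain ⟨F, h0, hA, hF⟩ := path_lift hp A f.1 (fun x => f.2 _ (Or.inl rfl))
    (fun t a ha => f.2 _ (Or.inr (Or.inr ha)))
  refine ⟨⟨F, h0, hA, fun x => by rw [hF]; exact f.2 _ (Or.inr (Or.inl rfl))⟩, ?_⟩
  ext q
  exact hF q

/-- A family of paths whose base loops are null homotopic ends in the identity component. -/
theorem Pth.fin_null [CompactSpace X] (hp : LocSec p) (F : Pth p A)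
    (h : (1 : C(I × X, C)).HomotopicRel (Pth.base p A F).1 (dI A)) :
    (1 : C(X, kerp p)).HomotopicRel (Pth.fin p A F).1 A := by
  obtain ⟨H, h0, h1, hA⟩ := htpy_data h
  -- lift the null homotopy in the path direction, the homotopy direction being a parameter
  obtain ⟨G, hG0, hGA, hG⟩ := path_lift (X := I × X) hp {q | q.1 = 0 ∨ q.2 ∈ A}
    ⟨fun q : I × (I × X) => H (q.2.1, (q.1, q.2.2)), by fun_prop⟩
    (fun x => hA _ _ (Or.inl rfl)) (by
      rintro t ⟨s, x⟩ (hs | hx)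
      · simp only at hs; simp [hs, h0]
      · exact hA _ _ (Or.inr (Or.inr hx)))
  have hG1 : ∀ s x, G (1, (s, x)) ∈ kerp p := fun s x => by
    rw [mem_kerp, hG]; exact hA _ _ (Or.inr (Or.inl rfl))
  have hk : ∀ t x, (G (t, (1, x)))⁻¹ * F.1 (t, x) ∈ kerp p := fun t x => by
    rw [mem_kerp, map_mul, map_inv, hG]
    simp [h1]
  refine htpy_of (fun q : I × X => (⟨G (1, (q.1, q.2)), hG1 _ _⟩ : kerp p) *
    (⟨(G (q.1, (1, q.2)))⁻¹ * F.1 (q.1, q.2), hk _ _⟩ : kerp p)) ?_ ?_ ?_ ?_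
  · refine Continuous.mul ?_ ?_ <;> fun_prop
  · intro x
    ext
    simp [hG0, F.2.1, hGA 1 (0, x) (Or.inl rfl)]
  · intro x
    ext
    simp
  · intro t a ha
    ext
    simp [F.2.2.1 _ a ha, hGA 1 (t, a) (Or.inr ha), hGA t (1, a) (Or.inr ha)]

/-- If the end points are null homotopic, the paths can be closed up without changing the base. -/
theorem Pth.exists_loop (F : Pth p A)
    (h : (1 : C(X, kerp p)).HomotopicRel (Pth.fin p A F).1 A) :
    ∃ F' : Om (dI A) Γ, ∀ q, p (F'.1 q) = p (F.1 q) := by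
  obtain ⟨H, h0, h1, hA⟩ := htpy_data h
  refine ⟨⟨⟨fun q => F.1 q * ((H q : kerp p) : Γ)⁻¹, by fun_prop⟩, ?_⟩, fun q => ?_⟩
  · rintro ⟨t, x⟩ (ht | ht | hx)
    · simp only at ht; simp [ht, h0, F.2.1]
    · simp only at ht; simp [ht, h1]
    · simp only at hx; simp [hA t x hx, F.2.2.1 t x hx]
  · have : p ((H q : kerp p) : Γ) = 1 := (H q).2
    simp [this]

end Lift

/-! ### The Banach algebra of summable functions on a monoid -/

section L1
variable {M : Type} [Monoid M]

/-- The `ℓ¹` norm on finitely supported functions. -/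
def l1Norm (M : Type) : AddGroupNorm (MonoidAlgebra ℂ M) where
  toFun f := f.coeff.sum fun _ c => ‖c‖
  map_zero' := by simp
  add_le' f g := by
    classical
    rw [MonoidAlgebra.coeff_add, Finsupp.sum_of_support_subset (s := f.coeff.support ∪ g.coeff.support) _
        (Finsupp.support_add (g₁ := f.coeff) (g₂ := g.coeff)) _ (by simp),
      Finsupp.sum_of_support_subset (s := f.coeff.support ∪ g.coeff.support) f.coeff
        Finset.subset_union_left _ (by simp),
      Finsupp.sum_of_support_subset (s := f.coeff.support ∪ g.coeff.support) g.coeff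
        Finset.subset_union_right _ (by simp), ← Finset.sum_add_distrib]
    exact Finset.sum_le_sum fun m _ => norm_add_le _ _
  neg' f := by simp [Finsupp.sum]
  eq_zero_of_map_eq_zero' f h := by
    simp only [Finsupp.sum] at h
    rw [Finset.sum_eq_zero_iff_of_nonneg fun _ _ => norm_nonneg _] at h
    rw [← MonoidAlgebra.coeff_eq_zero]
    ext m
    by_contra hm
    exact hm (norm_eq_zero.1 (h m (Finsupp.mem_support_iff.2 hm)))

instance : NormedAddCommGroup (MonoidAlgebra ℂ M) := (l1Norm M).toNormedAddCommGroup

theorem l1_norm_def (f : MonoidAlgebra ℂ M) : ‖f‖ = f.coeff.sum fun _ c => ‖c‖ := rfl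

theorem l1_norm_single (m : M) (c : ℂ) : ‖MonoidAlgebra.single m c‖ = ‖c‖ := by
  rw [l1_norm_def, MonoidAlgebra.coeff_single, Finsupp.sum_single_index (by simp)]

instance : NormedRing (MonoidAlgebra ℂ M) where
  __ := (inferInstance : NormedAddCommGroup (MonoidAlgebra ℂ M))
  __ := (inferInstance : Ring (MonoidAlgebra ℂ M))
  norm_mul_le f g := by
    rw [MonoidAlgebra.mul_def]
    refine (norm_sum_le _ _).trans ?_
    rw [l1_norm_def f, l1_norm_def g, Finsupp.sum, Finset.sum_mul]
    refine Finset.sum_le_sum fun m _ => ?_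
    refine (norm_sum_le _ _).trans ?_
    rw [Finsupp.sum, Finset.mul_sum]
    refine Finset.sum_le_sum fun n _ => ?_
    rw [l1_norm_single, norm_mul]

instance {M : Type} [CommMonoid M] : NormedCommRing (MonoidAlgebra ℂ M) where
  __ := (inferInstance : NormedRing (MonoidAlgebra ℂ M))
  mul_comm := mul_comm

instance {𝕜 : Type*} [NormedField 𝕜] [NormedSpace 𝕜 ℂ] : NormedSpace 𝕜 (MonoidAlgebra ℂ M) where
  norm_smul_le a f := by
    rw [l1_norm_def, l1_norm_def, Finsupp.sum, Finsupp.sum, Finset.mul_sum]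
    have hs : (a • f).coeff.support ⊆ f.coeff.support := Finsupp.support_smul
    calc _ ≤ ∑ m ∈ f.coeff.support, ‖(a • f).coeff m‖ :=
          Finset.sum_le_sum_of_subset_of_nonneg hs fun _ _ _ => norm_nonneg _
      _ ≤ _ := Finset.sum_le_sum fun m _ => by
          rw [MonoidAlgebra.coeff_smul_apply]; exact norm_smul_le _ _

instance : NormedAlgebra ℂ (MonoidAlgebra ℂ M) where
  norm_smul_le := norm_smul_le

/-- The Banach algebra of summable functions on a monoid, under convolution. -/
abbrev L1 (M : Type) [Monoid M] : Type := UniformSpace.Completion (MonoidAlgebra ℂ M)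

/-- The function with value `c` at `m` and `0` elsewhere. -/
def L1.of (m : M) (c : ℂ) : L1 M := ((MonoidAlgebra.single m c : MonoidAlgebra ℂ M) : L1 M)

theorem L1.norm_of (m : M) (c : ℂ) : ‖L1.of m c‖ = ‖c‖ := by
  rw [L1.of, UniformSpace.Completion.norm_coe, l1_norm_single]

theorem L1.of_mul (m n : M) (c d : ℂ) : L1.of m c * L1.of n d = L1.of (m * n) (c * d) := by
  rw [L1.of, L1.of, ← UniformSpace.Completion.coe_mul, MonoidAlgebra.single_mul_single]; rfl

theorem L1.of_add (m : M) (c d : ℂ) : L1.of m (c + d) = L1.of m c + L1.of m d := by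
  rw [L1.of, L1.of, L1.of, ← UniformSpace.Completion.coe_add, MonoidAlgebra.single_add]

theorem L1.of_zero (m : M) : L1.of m 0 = 0 := by
  rw [L1.of, MonoidAlgebra.single_zero]; rfl

theorem L1.of_one_one : L1.of (1 : M) 1 = 1 := rfl

theorem L1.smul_of (a : ℂ) (m : M) (c : ℂ) : a • L1.of m c = L1.of m (a * c) := by
  rw [L1.of, ← UniformSpace.Completion.coe_smul, MonoidAlgebra.smul_single]; rfl

theorem L1.smul_eq (a : ℂ) (x : L1 M) : a • x = L1.of 1 a * x := by
  induction x using UniformSpace.Completion.induction_on with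
  | hp => exact isClosed_eq (continuous_const_smul a) (continuous_const.mul continuous_id)
  | ih x =>
    rw [L1.of, ← UniformSpace.Completion.coe_smul, ← UniformSpace.Completion.coe_mul]
    congr 1
    ext m
    rw [MonoidAlgebra.coeff_single_one_mul]
    simp

/-- Closed additive properties are checked on functions supported at one point. -/
theorem L1.ind {P : L1 M → Prop} (hc : IsClosed {a | P a}) (h0 : P 0)
    (ha : ∀ a b, P a → P b → P (a + b)) (hs : ∀ m c, P (L1.of m c)) (a : L1 M) : P a := by
  induction a using UniformSpace.Completion.induction_on with
  | hp => exact hc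
  | ih x =>
    induction x using MonoidAlgebra.induction_linear with
    | zero => exact h0
    | add f g hf hg => rw [UniformSpace.Completion.coe_add]; exact ha _ _ hf hg
    | single m c => exact hs m c

theorem L1.ind_eq {V : Type*} [AddCommGroup V] [TopologicalSpace V] [T2Space V] (f g : L1 M →+ V)
    (hf : Continuous f) (hg : Continuous g) (h : ∀ m c, f (L1.of m c) = g (L1.of m c)) (a : L1 M) :
    f a = g a :=
  L1.ind (P := fun a => f a = g a) (isClosed_eq hf hg) (by simp)
    (fun a b ha hb => by simp [ha, hb]) h a

section lin
variable {V : Type*} [NormedAddCommGroup V] [NormedSpace ℂ V]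

/-- The linear extension of a function on a monoid, on finitely supported functions. -/
def l1lin (G : M → V) : MonoidAlgebra ℂ M →+ V where
  toFun f := f.coeff.sum fun m c => c • G m
  map_zero' := by simp
  map_add' f g := by
    rw [MonoidAlgebra.coeff_add]
    exact Finsupp.sum_add_index' (by simp) (by simp [add_smul])

theorem l1lin_norm {G : M → V} {B : ℝ} (hG : ∀ m, ‖G m‖ ≤ B) (f : MonoidAlgebra ℂ M) :
    ‖l1lin G f‖ ≤ B * ‖f‖ := by
  change ‖f.coeff.sum fun m c => c • G m‖ ≤ _
  rw [l1_norm_def, Finsupp.sum, Finsupp.sum, Finset.mul_sum]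
  refine (norm_sum_le _ _).trans (Finset.sum_le_sum fun m _ => ?_)
  rw [norm_smul, mul_comm]
  exact mul_le_mul_of_nonneg_right (hG m) (norm_nonneg _)

theorem l1lin_cont {G : M → V} {B : ℝ} (hG : ∀ m, ‖G m‖ ≤ B) : Continuous (l1lin G) :=
  AddMonoidHomClass.continuous_of_bound (l1lin G) B (l1lin_norm hG)

variable [CompleteSpace V]

/-- The continuous linear extension of a bounded function on a monoid. -/
def L1.lin (G : M → V) {B : ℝ} (hG : ∀ m, ‖G m‖ ≤ B) : L1 M →+ V :=
  (l1lin G).extension (l1lin_cont hG)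

theorem L1.lin_cont (G : M → V) {B : ℝ} (hG : ∀ m, ‖G m‖ ≤ B) : Continuous (L1.lin G hG) :=
  (l1lin G).continuous_extension (l1lin_cont hG)

@[simp] theorem L1.lin_of (G : M → V) {B : ℝ} (hG : ∀ m, ‖G m‖ ≤ B) (m : M) (c : ℂ) :
    L1.lin G hG (L1.of m c) = c • G m := by
  have := (l1lin G).extension_coe (l1lin_cont hG) (MonoidAlgebra.single m c)
  refine this.trans ?_
  change (MonoidAlgebra.single m c).coeff.sum (fun m c => c • G m) = _
  rw [MonoidAlgebra.coeff_single, Finsupp.sum_single_index (by simp)]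

theorem L1.lin_norm (G : M → V) {B : ℝ} (hG : ∀ m, ‖G m‖ ≤ B) (a : L1 M) :
    ‖L1.lin G hG a‖ ≤ B * ‖a‖ := by
  induction a using UniformSpace.Completion.induction_on with
  | hp => exact isClosed_le ((L1.lin_cont G hG).norm) (by fun_prop)
  | ih x =>
    have := (l1lin G).extension_coe (l1lin_cont hG) x
    rw [UniformSpace.Completion.norm_coe]
    exact (congrArg norm this).le.trans (l1lin_norm hG x)
end lin

section lift
variable {R : Type*} [NormedRing R] [NormedAlgebra ℂ R] [CompleteSpace R]

/-- The ring homomorphism extending a homomorphism to the unit ball of a Banach algebra. -/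
def L1.lift (ρ : M →* R) {B : ℝ} (hρ : ∀ m, ‖ρ m‖ ≤ B) : L1 M →+* R where
  __ := L1.lin ρ hρ
  map_one' := by
    change L1.lin ρ hρ 1 = 1
    rw [← L1.of_one_one, L1.lin_of, map_one, one_smul]
  map_mul' a b := by
    change L1.lin ρ hρ (a * b) = L1.lin ρ hρ a * L1.lin ρ hρ b
    have hc := L1.lin_cont (⇑ρ) hρ
    refine L1.ind_eq ((L1.lin ρ hρ).comp (AddMonoidHom.mulRight b))
      ((AddMonoidHom.mulRight (L1.lin ρ hρ b)).comp (L1.lin ρ hρ)) ?_ ?_ ?_ a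
    · exact hc.comp (by simp only [AddMonoidHom.coe_mulRight]; fun_prop)
    · exact (by simp only [AddMonoidHom.coe_mulRight]; fun_prop :
        Continuous (AddMonoidHom.mulRight (L1.lin ρ hρ b))).comp hc
    · intro m c
      refine L1.ind_eq ((L1.lin ρ hρ).comp (AddMonoidHom.mulLeft (L1.of m c)))
        ((AddMonoidHom.mulLeft (L1.lin ρ hρ (L1.of m c))).comp (L1.lin ρ hρ)) ?_ ?_ ?_ b
      · exact hc.comp (by simp only [AddMonoidHom.coe_mulLeft]; fun_prop)
      · exact (by simp only [AddMonoidHom.coe_mulLeft]; fun_prop :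
          Continuous (AddMonoidHom.mulLeft (L1.lin ρ hρ (L1.of m c)))).comp hc
      · intro n d
        simp [L1.of_mul, smul_smul, mul_comm]

theorem L1.lift_cont (ρ : M →* R) {B : ℝ} (hρ : ∀ m, ‖ρ m‖ ≤ B) : Continuous (L1.lift ρ hρ) :=
  L1.lin_cont ρ hρ

@[simp] theorem L1.lift_of (ρ : M →* R) {B : ℝ} (hρ : ∀ m, ‖ρ m‖ ≤ B) (m : M) (c : ℂ) :
    L1.lift ρ hρ (L1.of m c) = c • ρ m := L1.lin_of (⇑ρ) hρ m c

theorem L1.lift_norm (ρ : M →* R) {B : ℝ} (hρ : ∀ m, ‖ρ m‖ ≤ B) (a : L1 M) :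
    ‖L1.lift ρ hρ a‖ ≤ B * ‖a‖ := L1.lin_norm (⇑ρ) hρ a

/-- A family of homomorphisms that is continuous on generators is jointly continuous. -/
theorem L1.lift_joint {Y : Type*} [TopologicalSpace Y] (ρ : Y → M →* R) {B : ℝ}
    (hρ : ∀ y m, ‖ρ y m‖ ≤ B) (hc : ∀ m, Continuous fun y => ρ y m) :
    Continuous fun p : Y × L1 M => L1.lift (ρ p.1) (hρ p.1) p.2 := by
  have hB : 0 ≤ B ∨ IsEmpty Y := by
    by_cases h : Nonempty Y
    · obtain ⟨y⟩ := h
      exact Or.inl ((norm_nonneg _).trans (hρ y 1))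
    · exact Or.inr (not_nonempty_iff.1 h)
  rcases hB with hB | hB
  swap
  · exact continuous_iff_continuousAt.2 fun p => hB.elim p.1
  -- the set of elements with continuous orbit is closed, by equicontinuity
  have key : ∀ a : L1 M, Continuous fun y => L1.lift (ρ y) (hρ y) a := by
    refine L1.ind ?_ ?_ ?_ ?_
    · rw [← isSeqClosed_iff_isClosed]
      intro u a hu hua
      refine continuous_of_uniform_approx_of_continuous (f := fun y => L1.lift (ρ y) (hρ y) a) ?_
      intro s hs
      obtain ⟨ε, hε, hεs⟩ := Metric.mem_uniformity_dist.1 hs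
      obtain ⟨n, hn⟩ := (Metric.tendsto_atTop.1 hua (ε / (B + 1)) (by positivity))
      refine ⟨_, hu n, fun y => hεs ?_⟩
      rw [dist_eq_norm, ← map_sub]
      refine (L1.lift_norm _ _ _).trans_lt ?_
      have := hn n le_rfl
      rw [dist_comm, dist_eq_norm, lt_div_iff₀ (by positivity)] at this
      nlinarith [norm_nonneg (a - u n)]
    · simp only [map_zero]; fun_prop
    · intro a b ha hb
      simp only [map_add]
      exact ha.add hb
    · intro m c
      simp only [L1.lift_of]
      exact (hc m).const_smul c
  rw [continuous_iff_continuousAt]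
  rintro ⟨y, a⟩
  rw [Metric.continuousAt_iff']
  intro ε hε
  have h1 : ∀ᶠ p : Y × L1 M in 𝓝 (y, a),
      dist (L1.lift (ρ p.1) (hρ p.1) a) (L1.lift (ρ y) (hρ y) a) < ε / 2 :=
    (continuous_fst.continuousAt (x := (y, a))).eventually
      (Metric.continuousAt_iff'.1 ((key a).continuousAt (x := y)) _ (half_pos hε))
  have h2 : ∀ᶠ p : Y × L1 M in 𝓝 (y, a), dist p.2 a < ε / (2 * (B + 1)) :=
    (Metric.ball_mem_nhds a (by positivity : 0 < ε / (2 * (B + 1)))) |>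
      (continuous_snd.continuousAt (x := (y, a))).eventually
  filter_upwards [h1, h2] with p hp1 hp2
  have h3 : dist (L1.lift (ρ p.1) (hρ p.1) p.2) (L1.lift (ρ p.1) (hρ p.1) a) ≤ B * dist p.2 a := by
    rw [dist_eq_norm, ← map_sub, dist_eq_norm]
    exact L1.lift_norm _ _ _
  have h4 : B * dist p.2 a ≤ ε / 2 := by
    rw [lt_div_iff₀ (by positivity)] at hp2
    nlinarith [dist_nonneg (x := p.2) (y := a)]
  calc _ ≤ _ := dist_triangle _ (L1.lift (ρ p.1) (hρ p.1) a) _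
    _ < ε := by linarith

end lift
end L1

/-! ### General linear groups over Banach algebras; the Toeplitz extension -/

section Units
variable {ι : Type} [Fintype ι] [DecidableEq ι]
variable {R R' : Type*} [NormedRing R] [NormedRing R']

section
attribute [local instance] Matrix.linftyOpNormedRing

theorem matrix_summable [CompleteSpace R] : HasSummableGeomSeries (Matrix ι ι R) := by
  have h : @CompleteSpace (Matrix ι ι R)
      (Matrix.linftyOpNormedRing (n := ι) (α := R)).toNonUnitalNormedRing.toMetricSpace.toPseudoMetricSpace.toUniformSpace :=
    (inferInstance : CompleteSpace (ι → ι → R))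
  exact @instHasSummableGeomSeriesOfCompleteSpace _ _ h

theorem gl_isOpenEmbedding [CompleteSpace R] :
    IsOpenEmbedding (Units.val : (Matrix ι ι R)ˣ → Matrix ι ι R) :=
  haveI := matrix_summable (ι := ι) (R := R)
  Units.isOpenEmbedding_val

theorem gl_isOpen [CompleteSpace R] : IsOpen {x : Matrix ι ι R | IsUnit x} :=
  haveI := matrix_summable (ι := ι) (R := R)
  Units.isOpen

theorem gl_near [CompleteSpace R] {x : Matrix ι ι R} (h : ‖x - 1‖ < 1) : IsUnit x := by
  haveI := matrix_summable (ι := ι) (R := R)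
  have := (Units.oneSub (1 - x) (by rwa [norm_sub_rev])).isUnit
  simpa using this

end

variable {X : Type*} [TopologicalSpace X]

/-- A continuous family of invertible matrices. -/
def bMk [CompleteSpace R] (M : X → Matrix ι ι R) (hM : Continuous M) (hu : ∀ x, IsUnit (M x)) :
    C(X, (Matrix ι ι R)ˣ) where
  toFun x := (hu x).unit
  continuous_toFun := by
    rw [gl_isOpenEmbedding.isInducing.continuous_iff]
    exact hM

@[simp] theorem bMk_val [CompleteSpace R] (M : X → Matrix ι ι R) (hM : Continuous M)
    (hu : ∀ x, IsUnit (M x)) (x : X) : (bMk M hM hu x).1 = M x := rfl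

theorem b_htpy [CompleteSpace R] {A : Set X} {f g : C(X, (Matrix ι ι R)ˣ)}
    (M : I × X → Matrix ι ι R) (hM : Continuous M)
    (hd : ∀ x, IsUnit (M x)) (h0 : ∀ x, M (0, x) = f x) (h1 : ∀ x, M (1, x) = g x)
    (hA : ∀ t, ∀ a ∈ A, M (t, a) = f a) : f.HomotopicRel g A :=
  htpy_of (bMk M hM hd) (bMk M hM hd).continuous (fun x => Units.ext (h0 x))
    (fun x => Units.ext (h1 x)) (fun t a ha => Units.ext (hA t a ha))

variable (ι) in
/-- The map of general linear groups induced by a homomorphism of Banach algebras. -/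
def gmap (φ : R →+* R') (hφ : Continuous φ) : (Matrix ι ι R)ˣ →ₜ* (Matrix ι ι R')ˣ where
  toMonoidHom := Units.map (RingHom.mapMatrix (m := ι) φ).toMonoidHom
  continuous_toFun := by
    refine Continuous.units_map _ ?_
    change Continuous fun M : Matrix ι ι R => M.map φ
    exact continuous_id.matrix_map hφ

@[simp] theorem gmap_val (φ : R →+* R') (hφ : Continuous φ) (g : (Matrix ι ι R)ˣ) :
    (gmap ι φ hφ g).1 = g.1.map φ := rfl

theorem gmap_locSec [CompleteSpace R] (φ : R →+* R') (hφ : Continuous φ) (s : R' →+ R)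
    (hs : Continuous s) (hs1 : s 1 = 1) (hφs : ∀ a, φ (s a) = a) : LocSec (gmap ι φ hφ) := by
  classical
  have hone : (1 : Matrix ι ι R').map s = 1 := by
    ext i j
    by_cases h : i = j
    · subst h
      simp [Matrix.map_apply, hs1]
    · simp [Matrix.map_apply, h]
  have hc : Continuous fun C : (Matrix ι ι R')ˣ => C.1.map s :=
    Units.continuous_val.matrix_map hs
  refine ⟨{C | IsUnit (C.1.map s)}, fun C => if h : IsUnit (C.1.map s) then h.unit else 1,
    gl_isOpen.preimage hc, ?_, ?_, ?_, ?_⟩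
  · simp [hone]
  · rw [continuousOn_iff_continuous_domRestrict, gl_isOpenEmbedding.isInducing.continuous_iff]
    refine (hc.comp continuous_subtype_val).congr ?_
    rintro ⟨C, hC⟩
    have hC' : IsUnit (C.1.map s) := hC
    simp [Set.domRestrict, hC']
  · have : IsUnit ((1 : (Matrix ι ι R')ˣ).1.map s) := by rw [Units.val_one, hone]; exact isUnit_one
    simp only [this, dif_pos]
    ext1
    simp [hone]
  · intro C hC
    have hC' : IsUnit (C.1.map s) := hC
    simp only [hC', dif_pos]
    ext i j
    simp [hφs]

end Units

/-- The bicyclic monoid: `⟨a, b⟩` stands for `S ^ a * S' ^ b`, where `S' * S = 1`. -/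
@[ext] structure Bic where
  /-- The exponent of `S`. -/
  fst : ℕ
  /-- The exponent of `S'`. -/
  snd : ℕ

namespace Bic
instance : Monoid Bic where
  mul x y := ⟨x.1 + (y.1 - x.2), y.2 + (x.2 - y.1)⟩
  one := ⟨0, 0⟩
  mul_assoc x y z := by
    change Bic.mk _ _ = Bic.mk _ _
    ext
    · change x.1 + (y.1 - x.2) + (z.1 - (y.2 + (x.2 - y.1))) =
        x.1 + (y.1 + (z.1 - y.2) - x.2)
      omega
    · change z.2 + (y.2 + (x.2 - y.1) - z.1) = z.2 + (y.2 - z.1) + (x.2 - (y.1 + (z.1 - y.2)))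
      omega
  one_mul x := by
    change Bic.mk (0 + (x.1 - 0)) (x.2 + (0 - x.1)) = x
    ext <;> simp
  mul_one x := by
    change Bic.mk (x.1 + (0 - x.2)) (0 + (x.2 - 0)) = x
    ext <;> simp

theorem mul_def (a b c d : ℕ) : (⟨a, b⟩ * ⟨c, d⟩ : Bic) = ⟨a + (c - b), d + (b - c)⟩ := rfl
theorem one_def : (1 : Bic) = ⟨0, 0⟩ := rfl

/-- The degree homomorphism to the integers. -/
def deg : Bic →* Multiplicative ℤ where
  toFun x := Multiplicative.ofAdd ((x.1 : ℤ) - x.2)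
  map_one' := by simp [one_def]
  map_mul' x y := by
    rcases x with ⟨a, b⟩
    rcases y with ⟨c, d⟩
    rw [mul_def, ← ofAdd_add]
    congr 1
    simp only
    omega

/-- The section of the degree map. -/
def sec (n : Multiplicative ℤ) : Bic := ⟨(Multiplicative.toAdd n).toNat,
  (-Multiplicative.toAdd n).toNat⟩

theorem deg_sec (n : Multiplicative ℤ) : deg (sec n) = n := by
  change Multiplicative.ofAdd _ = n
  rw [← ofAdd_toAdd n]
  congr 1
  simp only [sec, toAdd_ofAdd]
  omega

theorem sec_one : sec 1 = 1 := by simp [sec, one_def]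

/-- The homomorphism defined by two elements with `w' * w = 1`. -/
def lift {R : Type*} [Monoid R] (w w' : R) (h : w' * w = 1) : Bic →* R where
  toFun x := w ^ x.1 * w' ^ x.2
  map_one' := by simp [one_def]
  map_mul' x y := by
    have hpow : ∀ n, w' ^ n * w ^ n = 1 := by
      intro n
      induction n with
      | zero => simp
      | succ n ih => rw [pow_succ, pow_succ', mul_assoc, ← mul_assoc w' w, h, one_mul, ih]
    rcases x with ⟨a, b⟩
    rcases y with ⟨c, d⟩
    rw [mul_def]
    simp only
    rcases le_total b c with hbc | hbc
    · obtain ⟨e, rfl⟩ := Nat.exists_eq_add_of_le hbc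
      rw [Nat.add_sub_cancel_left, Nat.sub_eq_zero_of_le (Nat.le_add_right b e), add_zero, pow_add,
        pow_add, mul_assoc (w ^ a) (w' ^ b), ← mul_assoc (w' ^ b), ← mul_assoc (w' ^ b), hpow,
        one_mul, mul_assoc]
    · obtain ⟨e, rfl⟩ := Nat.exists_eq_add_of_le hbc
      rw [Nat.add_sub_cancel_left, Nat.sub_eq_zero_of_le (Nat.le_add_right c e), add_zero,
        add_comm d e, pow_add w' e d, add_comm c e, pow_add w' e c, mul_assoc (w ^ a),
        mul_assoc (w' ^ e), ← mul_assoc (w' ^ c), hpow, one_mul]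

theorem lift_apply {R : Type*} [Monoid R] (w w' : R) (h : w' * w = 1) (x : Bic) :
    lift w w' h x = w ^ x.1 * w' ^ x.2 := rfl

theorem lift_norm {R : Type*} [NormedRing R] [NormOneClass R] (w w' : R) (h : w' * w = 1)
    (hw : ‖w‖ ≤ 1) (hw' : ‖w'‖ ≤ 1) (x : Bic) : ‖lift w w' h x‖ ≤ 1 := by
  rw [lift_apply]
  refine (norm_mul_le _ _).trans (mul_le_one₀ ?_ (norm_nonneg _) ?_)
  · exact (norm_pow_le _ _).trans (pow_le_one₀ (norm_nonneg _) hw)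
  · exact (norm_pow_le _ _).trans (pow_le_one₀ (norm_nonneg _) hw')

end Bic

/-- The `ℓ¹` Toeplitz algebra. -/
abbrev TT : Type := L1 Bic
/-- The `ℓ¹` Wiener algebra of Laurent series. -/
abbrev WW : Type := L1 (Multiplicative ℤ)

/-- The homomorphism `m ↦ deg m` as a map to the Wiener algebra. -/
def degW : Bic →* WW where
  toFun m := L1.of (Bic.deg m) 1
  map_one' := by rw [map_one, L1.of_one_one]
  map_mul' x y := by rw [map_mul, L1.of_mul, one_mul]

theorem degW_norm (m : Bic) : ‖degW m‖ ≤ 1 := by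
  change ‖L1.of (Bic.deg m) 1‖ ≤ 1
  rw [L1.norm_of]; simp

/-- The symbol map. -/
def qq : TT →+* WW := L1.lift degW degW_norm

theorem qq_cont : Continuous qq := L1.lift_cont _ _

theorem qq_of (m : Bic) (c : ℂ) : qq (L1.of m c) = L1.of (Bic.deg m) c := by
  rw [qq, L1.lift_of]
  change c • L1.of _ 1 = _
  rw [L1.smul_of, mul_one]

/-- The linear section of the symbol map. -/
def ss : WW →+ TT := L1.lin (B := 1) (fun n => L1.of (Bic.sec n) 1) fun n => by
  rw [L1.norm_of]; simp

theorem ss_cont : Continuous ss := L1.lin_cont _ _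

theorem ss_of (n : Multiplicative ℤ) (c : ℂ) : ss (L1.of n c) = L1.of (Bic.sec n) c := by
  rw [ss, L1.lin_of, L1.smul_of, mul_one]

theorem ss_one : ss 1 = 1 := by rw [← L1.of_one_one, ss_of, Bic.sec_one, L1.of_one_one]

theorem qq_ss (a : WW) : qq (ss a) = a := by
  refine L1.ind_eq (qq.toAddMonoidHom.comp ss) (AddMonoidHom.id _) (qq_cont.comp ss_cont)
    continuous_id (fun m c => ?_) a
  change qq (ss _) = L1.of m c
  rw [ss_of, qq_of, Bic.deg_sec]

theorem qq_locSec (ι : Type) [Fintype ι] [DecidableEq ι] : LocSec (gmap ι qq qq_cont) :=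
  gmap_locSec qq qq_cont ss ss_cont ss_one qq_ss

/-- The powers of a point of the circle. -/
def zpowC (z : Circle) : Multiplicative ℤ →* ℂ where
  toFun n := ((z ^ (Multiplicative.toAdd n) : Circle) : ℂ)
  map_one' := by simp
  map_mul' m n := by simp [zpow_add]

theorem zpowC_norm (z : Circle) (n : Multiplicative ℤ) : ‖zpowC z n‖ ≤ 1 :=
  (Circle.norm_coe _).le

/-- Evaluation of a Laurent series at a point of the circle. -/
def ev (z : Circle) : WW →+* ℂ := L1.lift (zpowC z) (zpowC_norm z)

theorem ev_of (z : Circle) (n : Multiplicative ℤ) (c : ℂ) :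
    ev z (L1.of n c) = c * ((z ^ (Multiplicative.toAdd n) : Circle) : ℂ) := L1.lift_of _ _ _ _

theorem ev_joint : Continuous fun p : Circle × WW => ev p.1 p.2 :=
  L1.lift_joint zpowC zpowC_norm fun n =>
    continuous_subtype_val.comp (continuous_zpow (Multiplicative.toAdd n))

theorem ev_cont (z : Circle) : Continuous (ev z) := L1.lift_cont _ _

/-- Wiener's lemma: every character of the algebra of absolutely convergent Laurent series is the
evaluation at a point of the circle. -/
theorem wiener {ι : Type} [Fintype ι] [DecidableEq ι] (g : Matrix ι ι WW)
    (h : ∀ z : Circle, (g.map (ev z)).det ≠ 0) : IsUnit g := by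
  rw [Matrix.isUnit_iff_isUnit_det]
  by_contra hu
  haveI : Nontrivial WW := ⟨1, 0, by
    rw [← norm_ne_zero_iff, ← L1.of_one_one, L1.norm_of]; simp⟩
  obtain ⟨χ, hχ⟩ := WeakDual.CharacterSpace.exists_apply_eq_zero hu
  let φ : WW →ₐ[ℂ] ℂ := WeakDual.CharacterSpace.toAlgHom χ
  have hφ : ∀ a, ‖φ a‖ ≤ ‖a‖ := by
    intro a
    have h1 := AlgHom.norm_apply_le_self_mul_norm_one φ a
    rwa [← L1.of_one_one, L1.norm_of, norm_one, mul_one] at h1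
  let x : Multiplicative ℤ := Multiplicative.ofAdd 1
  have h1 : φ (L1.of x 1) * φ (L1.of x⁻¹ 1) = 1 := by
    rw [← map_mul, L1.of_mul, mul_inv_cancel, one_mul, L1.of_one_one, map_one]
  have hx : ‖φ (L1.of x 1)‖ ≤ 1 := (hφ _).trans (by rw [L1.norm_of]; simp)
  have hx' : ‖φ (L1.of x⁻¹ 1)‖ ≤ 1 := (hφ _).trans (by rw [L1.norm_of]; simp)
  have hn : ‖φ (L1.of x 1)‖ = 1 := by
    have h2 := congrArg norm h1
    rw [norm_mul, norm_one] at h2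
    nlinarith [norm_nonneg (φ (L1.of x 1)), norm_nonneg (φ (L1.of x⁻¹ 1))]
  let z : Circle := ⟨φ (L1.of x 1), mem_sphere_zero_iff_norm.2 hn⟩
  have hz : ∀ a, φ a = ev z a := by
    intro a
    have hc : Continuous φ := AddMonoidHomClass.continuous_of_bound φ 1 (by simpa using hφ)
    refine L1.ind_eq (φ : WW →+* ℂ).toAddMonoidHom (ev z).toAddMonoidHom hc (ev_cont z) ?_ a
    intro m c
    change φ (L1.of m c) = ev z (L1.of m c)
    rw [ev_of]
    let ψ : Multiplicative ℤ →* ℂ :=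
      { toFun := fun m => φ (L1.of m 1)
        map_one' := by rw [L1.of_one_one, map_one]
        map_mul' := fun m n => by rw [← map_mul, L1.of_mul, one_mul] }
    have hψ : ψ = zpowC z := by
      refine MonoidHom.ext_mint ?_
      change φ (L1.of x 1) = ((z ^ (1 : ℤ) : Circle) : ℂ)
      rw [zpow_one]
    have h3 : φ (L1.of m 1) = ((z ^ (Multiplicative.toAdd m) : Circle) : ℂ) :=
      DFunLike.congr_fun hψ m
    rw [← h3, ← smul_eq_mul, ← map_smul, L1.smul_of, mul_one]
  refine h z ?_
  have h4 : ev z g.det = 0 := by rw [← hz]; exact hχ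
  rw [RingHom.map_det] at h4
  exact h4

/-! ### Matrix units and approximation by finite blocks -/

section Approx
variable {Y : Type*} [TopologicalSpace Y] [CompactSpace Y]
variable {Q : Type*} [NormedRing Q] [NormedAlgebra ℂ Q] [HasSummableGeomSeries Q]

/-- A family `1 + h` of units of a Banach algebra can be deformed so that `h` becomes a finite
combination of elements of a set whose closure contains the values of `h`. -/
theorem approx_unit (h : C(Y, Q)) (D : Set Q) (hD : ∀ y, h y ∈ closure D)
    (hu : ∀ y, IsUnit (1 + h y)) :
    ∃ (n : ℕ) (d : Fin n → Q) (χ : Fin n → C(Y, ℝ)), (∀ i, d i ∈ D) ∧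
      (∀ y, h y = 0 → ∀ i, χ i y = 0) ∧
      ∀ (t : I) y, IsUnit (1 + ((1 - ((t : ℝ) : ℂ)) • h y +
        ((t : ℝ) : ℂ) • ∑ i, ((χ i y : ℝ) : ℂ) • d i)) := by
  letI : NormedSpace ℝ Q := NormedSpace.complexToReal
  let K : Set Q := range fun y => 1 + h y
  have hK : IsCompact K := isCompact_range (continuous_const.add h.continuous)
  obtain ⟨ε, hε, hKε⟩ := hK.exists_thickening_subset_open (Units.isOpen (R := Q))
    (by rintro _ ⟨y, rfl⟩; exact hu y)
  obtain ⟨n, d, χ, hd, hχ, happ⟩ := palais h D hD hε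
  refine ⟨n, d, χ, hd, hχ, fun t y => hKε ?_⟩
  rw [Metric.mem_thickening_iff]
  refine ⟨1 + h y, ⟨y, rfl⟩, ?_⟩
  have e1 : (1 + ((1 - ((t : ℝ) : ℂ)) • h y + ((t : ℝ) : ℂ) • ∑ i, ((χ i y : ℝ) : ℂ) • d i)) -
      (1 + h y) = ((t : ℝ) : ℂ) • ((∑ i, χ i y • d i) - h y) := by
    simp only [Complex.coe_smul, sub_smul, one_smul, smul_sub]
    abel
  rw [dist_eq_norm, e1, norm_smul, Complex.norm_real, Real.norm_eq_abs, abs_of_nonneg t.2.1]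
  calc (t : ℝ) * ‖(∑ i, χ i y • d i) - h y‖ ≤ 1 * ‖(∑ i, χ i y • d i) - h y‖ :=
        mul_le_mul_of_nonneg_right t.2.2 (norm_nonneg _)
    _ < ε := by rw [one_mul]; exact happ y

end Approx

section Mu
variable {Q : Type*} [Ring Q] [Algebra ℂ Q] {κ : Type} [Fintype κ] [DecidableEq κ]

/-- The combination of a system of matrix units prescribed by a complex matrix. -/
def mu (u : κ → κ → Q) : Matrix κ κ ℂ →ₗ[ℂ] Q where
  toFun N := ∑ i, ∑ j, N i j • u i j
  map_add' N N' := by simp [add_smul, Finset.sum_add_distrib]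
  map_smul' c N := by simp [mul_smul, Finset.smul_sum]

theorem mu_apply (u : κ → κ → Q) (N : Matrix κ κ ℂ) : mu u N = ∑ i, ∑ j, N i j • u i j := rfl

theorem mu_single (u : κ → κ → Q) (i j : κ) : mu u (Matrix.single i j 1) = u i j := by
  rw [mu_apply, Finset.sum_eq_single i, Finset.sum_eq_single j]
  · simp
  · intro b _ hb
    rw [Matrix.single_apply_of_col_ne _ _ (Ne.symm hb), zero_smul]
  · simp
  · intro b _ hb
    refine Finset.sum_eq_zero fun c _ => ?_
    rw [Matrix.single_apply_of_row_ne (Ne.symm hb), zero_smul]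
  · simp

/-- The relations of matrix units. -/
def MUnits (u : κ → κ → Q) : Prop :=
  (∀ i j k l, u i j * u k l = if j = k then u i l else 0) ∧ ∀ i j, u i j ≠ 0

variable {u : κ → κ → Q}

theorem mu_mul (hu : MUnits u) (N N' : Matrix κ κ ℂ) : mu u N * mu u N' = mu u (N * N') := by
  induction N using Matrix.induction_on' with
  | h_zero => simp
  | h_add p q hp hq => rw [map_add, add_mul, hp, hq, ← map_add, add_mul]
  | h_std_basis i j x =>
    induction N' using Matrix.induction_on' with
    | h_zero => simp
    | h_add p q hp hq => rw [map_add, mul_add, hp, hq, ← map_add, mul_add]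
    | h_std_basis k l y =>
      have h1 : ∀ (i j : κ) (x : ℂ), Matrix.single i j x = x • Matrix.single i j 1 := by
        intro i j x; simp
      rw [h1 i j x, h1 k l y, map_smul, map_smul, smul_mul_smul_comm, mu_single, mu_single,
        hu.1, smul_mul_smul_comm, map_smul]
      congr 1
      by_cases hjk : j = k
      · subst hjk; simp [mu_single]
      · simp [hjk]

theorem mu_injective (hu : MUnits u) {N : Matrix κ κ ℂ} (h : mu u N = 0) : N = 0 := by
  ext i j
  have h1 : mu u (Matrix.single i i 1 * N * Matrix.single j j 1) = 0 := by
    rw [← mu_mul hu, ← mu_mul hu, h, mul_zero, zero_mul]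
  have h2 : Matrix.single i i 1 * N * Matrix.single j j 1 = N i j • Matrix.single i j (1 : ℂ) := by
    rw [Matrix.single_mul_mul_single]; simp
  rw [h2, map_smul, mu_single] at h1
  exact (smul_eq_zero.1 h1).resolve_right (hu.2 i j)

theorem mu_det (hu : MUnits u) {N : Matrix κ κ ℂ} (h : IsUnit (1 + mu u N)) :
    (1 + N).det ≠ 0 := by
  intro h0
  obtain ⟨v, hv, hv0⟩ := Matrix.exists_mulVec_eq_zero_iff.2 h0
  have h1 : (1 + N) * (Matrix.of fun i _ => v i : Matrix κ κ ℂ) = 0 := by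
    ext i j
    exact congrFun hv0 i
  have h2 : (1 + mu u N) * mu u (Matrix.of fun i _ => v i) = 0 := by
    rw [add_mul, one_mul, mu_mul hu, ← map_add]
    rw [add_mul, one_mul] at h1
    rw [h1, map_zero]
  have h3 := mu_injective hu ((h.mul_right_eq_zero).1 h2)
  exact hv (funext fun i => congrFun (congrFun h3 i) i)

variable (u) in
/-- The unital multiplicative map `N ↦ 1 + mu (N - 1)`. -/
def muHom (hu : MUnits u) : Matrix κ κ ℂ →* Q where
  toFun N := 1 + mu u (N - 1)
  map_one' := by simp
  map_mul' N N' := by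
    have h : N * N' - 1 = (N - 1) + (N' - 1) + (N - 1) * (N' - 1) := by noncomm_ring
    rw [h, map_add, map_add, ← mu_mul hu]
    noncomm_ring

theorem mem_span_mu {d : Q} (h : d ∈ Submodule.span ℂ (range fun p : κ × κ => u p.1 p.2)) :
    ∃ N, d = mu u N := by
  have hle : Submodule.span ℂ (range fun p : κ × κ => u p.1 p.2) ≤ LinearMap.range (mu u) := by
    rw [Submodule.span_le]
    rintro _ ⟨p, rfl⟩
    exact ⟨Matrix.single p.1 p.2 1, mu_single u _ _⟩
  obtain ⟨N, hN⟩ := hle h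
  exact ⟨N, hN.symm⟩

end Mu

section Block
variable {Y : Type*} [TopologicalSpace Y] [CompactSpace Y]
variable {Q : Type*} [NormedRing Q] [NormedAlgebra ℂ Q] [HasSummableGeomSeries Q]
variable {κ : ℕ → Type} [∀ m, Fintype (κ m)] [∀ m, DecidableEq (κ m)]

/-- Approximation by finite blocks, for an increasing sequence of systems of matrix units. -/
theorem block_approx (u : ∀ m, κ m → κ m → Q)
    (hmono : ∀ m i j, ∃ i' j', u m i j = u (m + 1) i' j') (h : C(Y, Q))
    (hh : ∀ y, h y ∈ closure ((⨆ m, Submodule.span ℂ (range fun p : κ m × κ m => u m p.1 p.2) :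
      Submodule ℂ Q) : Set Q))
    (hunit : ∀ y, IsUnit (1 + h y)) :
    ∃ (m : ℕ) (N : Y → Matrix (κ m) (κ m) ℂ), Continuous N ∧ (∀ y, h y = 0 → N y = 0) ∧
      ∀ (t : I) y, IsUnit (1 + ((1 - ((t : ℝ) : ℂ)) • h y + ((t : ℝ) : ℂ) • mu (u m) (N y))) := by
  let S : ℕ → Submodule ℂ Q := fun m => Submodule.span ℂ (range fun p : κ m × κ m => u m p.1 p.2)
  have hS : Monotone S := by
    refine monotone_nat_of_le_succ fun m => Submodule.span_mono ?_
    rintro _ ⟨p, rfl⟩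
    obtain ⟨i', j', h'⟩ := hmono m p.1 p.2
    exact ⟨(i', j'), h'.symm⟩
  obtain ⟨n, d, χ, hd, hχ, hU⟩ := approx_unit h _ hh hunit
  have hd' : ∀ i, ∃ m, d i ∈ S m := fun i =>
    (Submodule.mem_iSup_of_directed S hS.directed_le).1 (hd i)
  choose mm hmm using hd'
  have hN : ∀ i, ∃ N, d i = mu (u (Finset.univ.sup mm)) N := fun i =>
    mem_span_mu (hS (Finset.le_sup (Finset.mem_univ i)) (hmm i))
  choose N hN using hN
  refine ⟨Finset.univ.sup mm, fun y => ∑ i, ((χ i y : ℝ) : ℂ) • N i, ?_, ?_, ?_⟩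
  · refine continuous_finsetSum _ fun i _ => ?_
    exact (Complex.continuous_ofReal.comp (χ i).continuous).smul continuous_const
  · intro y hy
    simp [hχ y hy]
  · intro t y
    have := hU t y
    simp only [hN, ← map_smul, ← map_sum] at this
    simpa only [map_smul] using this

end Block

/-! ### The group of invertible compact perturbations of the identity -/

section Corner
variable {ι : Type} [Fintype ι] [DecidableEq ι]
variable {R : Type} [NormedRing R] [NormedAlgebra ℂ R] [CompleteSpace R]

/-- The index set of the `m`-th block: `m + 1` copies of `ι`, the first one singled out. -/
abbrev BI (ι : Type) (m : ℕ) : Type := ι ⊕ (Fin m × ι)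

/-- The position of an index of a block in `ℕ × ι`. -/
def BI.pos {m : ℕ} : BI ι m → ℕ × ι
  | Sum.inl a => (0, a)
  | Sum.inr (i, a) => (i + 1, a)

theorem BI.pos_inj {m : ℕ} : Function.Injective (BI.pos : BI ι m → ℕ × ι) := by
  rintro (a | ⟨i, a⟩) (b | ⟨j, b⟩) h
  · simpa [BI.pos] using h
  · simp [BI.pos] at h
  · simp [BI.pos] at h
  · simp only [BI.pos, Prod.mk.injEq, Nat.add_right_cancel_iff] at h
    obtain ⟨h1, rfl⟩ := h
    rw [Fin.ext h1]

/-- The matrix units of `Matrix ι ι R` belonging to the `m`-th block. -/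
def uu (e : ℕ → ℕ → R) (m : ℕ) (k l : BI ι m) : Matrix ι ι R :=
  Matrix.single k.pos.2 l.pos.2 (e k.pos.1 l.pos.1)

/-- The relations of an infinite system of matrix units. -/
def EUnits (e : ℕ → ℕ → R) : Prop :=
  (∀ i j k l, e i j * e k l = if j = k then e i l else 0) ∧ ∀ i j, e i j ≠ 0

theorem uu_munits {e : ℕ → ℕ → R} (he : EUnits e) (m : ℕ) : MUnits (uu (ι := ι) e m) := by
  constructor
  · intro i j k l
    unfold uu
    by_cases h : j = k
    · subst h
      rw [Matrix.single_mul_single_same, he.1, if_pos rfl, if_pos rfl]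
    · rw [if_neg h]
      by_cases h2 : j.pos.2 = k.pos.2
      · have h1 : j.pos.1 ≠ k.pos.1 := fun h1 => h (BI.pos_inj (Prod.ext h1 h2))
        rw [h2, Matrix.single_mul_single_same, he.1, if_neg h1, Matrix.single_zero]
      · exact Matrix.single_mul_single_of_ne _ _ _ _ h2 _
  · intro i j h
    have := congrFun (congrFun h i.pos.2) j.pos.2
    simp only [uu, Matrix.single_apply_same, Matrix.zero_apply] at this
    exact he.2 _ _ this

theorem uu_mono (e : ℕ → ℕ → R) (m : ℕ) (i j : BI ι m) :
    ∃ i' j', uu e m i j = uu e (m + 1) i' j' := by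
  have h : ∀ i : BI ι m, ∃ i' : BI ι (m + 1), i'.pos = i.pos := by
    rintro (a | ⟨i, a⟩)
    · exact ⟨Sum.inl a, rfl⟩
    · exact ⟨Sum.inr (Fin.castSucc i, a), rfl⟩
  obtain ⟨i', hi⟩ := h i
  obtain ⟨j', hj⟩ := h j
  exact ⟨i', j', by simp [uu, hi, hj]⟩

/-- The closed span of a system of matrix units. -/
def KK (e : ℕ → ℕ → R) : Submodule ℂ R :=
  (Submodule.span ℂ (range fun p : ℕ × ℕ => e p.1 p.2)).topologicalClosure

theorem mem_KK (e : ℕ → ℕ → R) (i j : ℕ) : e i j ∈ KK e :=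
  subset_closure (Submodule.subset_span ⟨(i, j), rfl⟩)

theorem KK_closed (e : ℕ → ℕ → R) : IsClosed (KK e : Set R) :=
  Submodule.isClosed_topologicalClosure _

theorem uu_dense (e : ℕ → ℕ → R) {M : Matrix ι ι R} (hM : ∀ a b, M a b ∈ KK e) :
    M ∈ closure ((⨆ m, Submodule.span ℂ (range fun p : BI ι m × BI ι m => uu e m p.1 p.2) :
      Submodule ℂ (Matrix ι ι R)) : Set (Matrix ι ι R)) := by
  set D : Submodule ℂ (Matrix ι ι R) :=
    ⨆ m, Submodule.span ℂ (range fun p : BI ι m × BI ι m => uu e m p.1 p.2)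
  have hsing : ∀ (a b : ι) (x : R), x ∈ KK e → Matrix.single a b x ∈ D.topologicalClosure := by
    intro a b x hx
    have hc : Continuous fun x : R => Matrix.single a b x := by
      refine continuous_matrix fun i j => ?_
      by_cases h : a = i ∧ b = j
      · obtain ⟨rfl, rfl⟩ := h
        simpa using continuous_id'
      · simp only [Matrix.single_apply, h, if_false]
        exact continuous_const
    have hmaps : ∀ x ∈ Submodule.span ℂ (range fun p : ℕ × ℕ => e p.1 p.2),
        Matrix.single a b x ∈ D := by
      intro x hx
      induction hx using Submodule.span_induction with
      | mem x hx =>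
        obtain ⟨⟨i, j⟩, rfl⟩ := hx
        have hp : ∀ (i m : ℕ) (a : ι), i ≤ m → ∃ k : BI ι m, k.pos = (i, a) := by
          intro i m a him
          cases i with
          | zero => exact ⟨Sum.inl a, rfl⟩
          | succ i => exact ⟨Sum.inr (⟨i, him⟩, a), rfl⟩
        obtain ⟨k, hk⟩ := hp i (max i j) a (le_max_left _ _)
        obtain ⟨l, hl⟩ := hp j (max i j) b (le_max_right _ _)
        refine Submodule.mem_iSup_of_mem (max i j) (Submodule.subset_span ⟨(k, l), ?_⟩)
        simp [uu, hk, hl]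
      | zero => rw [Matrix.single_zero]; exact D.zero_mem
      | add x y _ _ hx hy => rw [Matrix.single_add]; exact D.add_mem hx hy
      | smul c x _ hx => rw [← Matrix.smul_single]; exact D.smul_mem c hx
    exact map_mem_closure hc hx hmaps
  have h1 : M ∈ D.topologicalClosure := by
    rw [Matrix.matrix_eq_sum_single M]
    exact Submodule.sum_mem _ fun a _ => Submodule.sum_mem _ fun b _ => hsing a b _ (hM a b)
  exact h1

theorem mu_uu_mem (e : ℕ → ℕ → R) (m : ℕ) (N : Matrix (BI ι m) (BI ι m) ℂ) (a b : ι) :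
    mu (uu e m) N a b ∈ KK e := by
  rw [mu_apply]
  simp only [Matrix.sum_apply, Matrix.smul_apply]
  refine Submodule.sum_mem _ fun k _ => Submodule.sum_mem _ fun l _ => Submodule.smul_mem _ _ ?_
  rw [uu, Matrix.single_apply]
  split_ifs
  · exact mem_KK e _ _
  · exact Submodule.zero_mem _

theorem mu_cont (e : ℕ → ℕ → R) (m : ℕ) :
    Continuous fun N : Matrix (BI ι m) (BI ι m) ℂ => mu (uu e m) N := by
  simp only [mu_apply]
  refine continuous_finsetSum _ fun k _ => continuous_finsetSum _ fun l _ => ?_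
  refine continuous_matrix fun a b => ?_
  simp only [Matrix.smul_apply]
  exact (continuous_id.matrix_elem k l).smul continuous_const

/-- The embedding of the general linear group of a block. -/
def blk {e : ℕ → ℕ → R} (he : EUnits e) (m : ℕ) : GLC (BI ι m) →ₜ* (Matrix ι ι R)ˣ where
  toMonoidHom := Units.map (muHom (uu e m) (uu_munits he m))
  continuous_toFun := by
    refine Continuous.units_map _ ?_
    change Continuous fun N : Matrix (BI ι m) (BI ι m) ℂ => 1 + mu (uu e m) (N - 1)
    exact continuous_const.add ((mu_cont e m).comp (continuous_id.sub continuous_const))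

theorem blk_val {e : ℕ → ℕ → R} (he : EUnits e) (m : ℕ) (g : GLC (BI ι m)) :
    (blk he m g).1 = 1 + mu (uu e m) (g.1 - 1) := rfl

theorem blk_stab_val {e : ℕ → ℕ → R} (he : EUnits e) (m : ℕ) (g : GLC ι) :
    (blk he m (stab ι (Fin m × ι) g)).1 = 1 + (g.1 - 1).map (fun z => z • e 0 0) := by
  rw [blk_val, stab_val]
  congr 1
  rw [← Matrix.fromBlocks_one, mu_apply]
  simp only [Fintype.sum_sum_type, Matrix.sub_apply, Matrix.fromBlocks_apply₁₁,
    Matrix.fromBlocks_apply₁₂, Matrix.fromBlocks_apply₂₁, Matrix.fromBlocks_apply₂₂, sub_self,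
    Matrix.zero_apply, zero_smul, Finset.sum_const_zero, add_zero]
  rw [Matrix.matrix_eq_sum_single (Matrix.map _ _)]
  refine Finset.sum_congr rfl fun a _ => Finset.sum_congr rfl fun b _ => ?_
  simp [uu, BI.pos]

/-- The embedding of the general linear group in the corner cut out by the idempotent `e 0 0`. -/
def corner {e : ℕ → ℕ → R} (he : EUnits e) : GLC ι →ₜ* (Matrix ι ι R)ˣ :=
  (blk he 0).comp (stab ι (Fin 0 × ι))

theorem corner_val {e : ℕ → ℕ → R} (he : EUnits e) (g : GLC ι) :
    (corner he g).1 = 1 + (g.1 - 1).map (fun z => z • e 0 0) := blk_stab_val he 0 g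

theorem blk_stab {e : ℕ → ℕ → R} (he : EUnits e) (m : ℕ) (g : GLC ι) :
    blk he m (stab ι (Fin m × ι) g) = corner he g :=
  Units.ext ((blk_stab_val he m g).trans (corner_val he g).symm)

variable {X : Type*} [TopologicalSpace X] [CompactSpace X]

section
attribute [local instance] Matrix.linftyOpNormedRing Matrix.linftyOpNormedAlgebra

theorem block_approx' {e : ℕ → ℕ → R} (h : C(X, Matrix ι ι R))
    (hh : ∀ x a b, h x a b ∈ KK e) (hu : ∀ x, IsUnit (1 + h x)) :
    ∃ (m : ℕ) (N : X → Matrix (BI ι m) (BI ι m) ℂ), Continuous N ∧ (∀ x, h x = 0 → N x = 0) ∧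
      ∀ (t : I) x, IsUnit (1 + ((1 - ((t : ℝ) : ℂ)) • h x +
        ((t : ℝ) : ℂ) • mu (uu e m) (N x))) := by
  haveI := matrix_summable (ι := ι) (R := R)
  exact block_approx (fun m => uu e m) (uu_mono e) h (fun x => uu_dense e (hh x)) hu

end

/-- If the corner embedding of a family is null homotopic among invertible matrices congruent to `1`
modulo `KK e`, then the family is null homotopic: approximate by finite blocks and use stability. -/
theorem corner_inj {e : ℕ → ℕ → R} (he : EUnits e) {k : ℕ} (hX : Retr X k)
    (hk : k < 2 * Fintype.card ι) {A : Set X} (v : Om A (GLC ι))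
    (H : C(I × X, (Matrix ι ι R)ˣ)) (h0 : ∀ x, H (0, x) = 1) (h1 : ∀ x, H (1, x) = corner he (v.1 x))
    (hA : ∀ t, ∀ a ∈ A, H (t, a) = 1) (hK : ∀ q a b, ((H q).1 - 1) a b ∈ KK e) :
    (1 : C(X, GLC ι)).HomotopicRel v.1 A := by
  let h : C(I × X, Matrix ι ι R) := ⟨fun q => (H q).1 - 1,
    (Units.continuous_val.comp H.continuous).sub continuous_const⟩
  have hval : ∀ q, h q = (H q).1 - 1 := fun q => rfl
  obtain ⟨m, N, hN, hN0, hU⟩ := block_approx' (e := e) h hK (fun q => by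
    rw [hval]; simp)
  have hmu := uu_munits (ι := ι) he m
  have hz : ∀ q, H q = 1 → N q = 0 := fun q hq => hN0 q (by rw [hval, hq]; simp)
  have hd : ∀ q, (1 + N q).det ≠ 0 := fun q => mu_det hmu (by simpa using hU 1 q)
  -- the block perturbation of the given null homotopy
  let g : C(X, GLC (BI ι m)) := glMk (fun x => 1 + N (1, x)) (by fun_prop) fun x => hd _
  have hg1 : (1 : C(X, GLC (BI ι m))).HomotopicRel g A := by
    refine gl_htpy (fun q => 1 + N q) (by fun_prop) hd ?_ ?_ ?_
    · intro x; simp [hz _ (h0 x)]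
    · intro x; rfl
    · intro t a ha; simp [hz _ (hA t a ha)]
  have hg2 : g.HomotopicRel (Om.map A (stab ι (Fin m × ι)) v).1 A := by
    refine gl_htpy (fun q : I × X => 1 + ((((q.1 : ℝ) : ℂ)) • ((stab ι (Fin m × ι) (v.1 q.2)).1 - 1) +
      (1 - ((q.1 : ℝ) : ℂ)) • N (1, q.2))) ?_ ?_ ?_ ?_ ?_
    · have h2 : Continuous fun q : I × X => (stab ι (Fin m × ι) (v.1 q.2)).1 :=
        Units.continuous_val.comp ((stab ι (Fin m × ι)).continuous_toFun.comp
          (v.1.continuous.comp continuous_snd))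
      fun_prop
    · intro q
      refine mu_det hmu ?_
      have := hU (unitInterval.symm q.1) (1, q.2)
      rw [hval, h1, ← blk_stab he m, blk_val] at this
      simp only [add_sub_cancel_left, unitInterval.coe_symm_eq, Complex.ofReal_sub,
        Complex.ofReal_one, sub_sub_cancel] at this
      rw [map_add, map_smul, map_smul]
      exact this
    · intro x; simp [g]
    · intro x; simp
    · intro t a ha
      have h3 : v.1 a = 1 := v.2 a ha
      simp [g, h3, hz _ (hA 1 a ha)]
  have := (stab_bij (κ := Fin m × ι) hX hk A).1
  rw [← Pi.mk_eq_one]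
  apply this
  rw [map_one, Pi.map_mk, Pi.mk_eq_one]
  exact hg1.trans hg2

/-- The corner embedding, with values in a subgroup containing its image. -/
def cornerL {e : ℕ → ℕ → R} (he : EUnits e) (L : Subgroup (Matrix ι ι R)ˣ)
    (hL : ∀ g, g ∈ L ↔ ∀ a b, (g.1 - 1) a b ∈ KK e) : GLC ι →ₜ* L where
  toMonoidHom := (corner he).toMonoidHom.codRestrict L fun g => (hL _).2 fun a b => by
    change ((corner he g).1 - 1) a b ∈ _
    rw [corner, ContinuousMonoidHom.comp_toFun, blk_val, add_sub_cancel_left]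
    exact mu_uu_mem e _ _ _ _
  continuous_toFun := (corner he).continuous_toFun.subtype_mk _

@[simp] theorem cornerL_val {e : ℕ → ℕ → R} (he : EUnits e) (L : Subgroup (Matrix ι ι R)ˣ)
    (hL : ∀ g, g ∈ L ↔ ∀ a b, (g.1 - 1) a b ∈ KK e) (g : GLC ι) :
    (cornerL he L hL g : (Matrix ι ι R)ˣ) = corner he g := rfl

/-- Every family of invertible matrices congruent to `1` modulo `KK e` is homotopic to one coming
from the corner. -/
theorem corner_surj {e : ℕ → ℕ → R} (he : EUnits e) (L : Subgroup (Matrix ι ι R)ˣ)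
    (hL : ∀ g, g ∈ L ↔ ∀ a b, (g.1 - 1) a b ∈ KK e) {k : ℕ} (hX : Retr X k)
    (hk : k < 2 * Fintype.card ι) {A : Set X} (f : Om A L) :
    ∃ v : Om A (GLC ι), f.1.HomotopicRel (Om.map A (cornerL he L hL) v).1 A := by
  let h : C(X, Matrix ι ι R) := ⟨fun q => (f.1 q).1.1 - 1,
    (Units.continuous_val.comp (continuous_subtype_val.comp f.1.continuous)).sub continuous_const⟩
  have hval : ∀ q, h q = (f.1 q).1.1 - 1 := fun q => rfl
  have hK : ∀ q a b, h q a b ∈ KK e := fun q => (hL _).1 (f.1 q).2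
  obtain ⟨m, N, hN, hN0, hU⟩ := block_approx' (e := e) h hK (fun q => by rw [hval]; simp)
  have hmu := uu_munits (ι := ι) he m
  have hz : ∀ a ∈ A, N a = 0 := fun q hq => hN0 q (by
    have : f.1 q = 1 := f.2 q hq
    rw [hval, this]; simp)
  let g : Om A (GLC (BI ι m)) := ⟨glMk (fun x => 1 + N x) (by fun_prop)
    fun x => mu_det hmu (by simpa using hU 1 x), fun a ha => Units.ext (by simp [hz a ha])⟩
  obtain ⟨v', hv⟩ := (stab_bij (κ := Fin m × ι) hX hk A).2 (Pi.mk A g)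
  obtain ⟨v, rfl⟩ := Pi.mk_surj A v'
  rw [Pi.map_mk, Pi.mk_eq] at hv
  let bL : C(GLC (BI ι m), L) := ⟨fun g => ⟨blk he m g, (hL _).2 fun a b => by
    rw [blk_val, add_sub_cancel_left]; exact mu_uu_mem e _ _ _ _⟩,
    (blk he m).continuous_toFun.subtype_mk _⟩
  refine ⟨v, ?_⟩
  have h1 : (bL.comp (Om.map A (stab ι (Fin m × ι)) v).1) = (Om.map A (cornerL he L hL) v).1 := by
    ext1 x
    exact Subtype.ext (blk_stab he m _)
  rw [← h1]
  refine ContinuousMap.HomotopicRel.trans ?_ (htpy_postcomp hv.symm bL)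
  have hcont : Continuous fun q : I × X => (1 + ((1 - ((q.1 : ℝ) : ℂ)) • h q.2 +
      ((q.1 : ℝ) : ℂ) • mu (uu e m) (N q.2)) : Matrix ι ι R) := by
    have h3 : Continuous fun q : I × X => mu (uu e m) (N q.2) :=
      (mu_cont e m).comp (hN.comp continuous_snd)
    have h4 : Continuous fun q : I × X => h q.2 := h.continuous.comp continuous_snd
    fun_prop
  refine htpy_of (fun q => ⟨bMk _ hcont (fun q => hU q.1 q.2) q, (hL _).2 fun a b => ?_⟩) ?_ ?_ ?_ ?_
  · rw [bMk_val, add_sub_cancel_left]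
    exact Submodule.add_mem _ (Submodule.smul_mem _ _ (hK _ _ _))
      (Submodule.smul_mem _ _ (mu_uu_mem e _ _ _ _))
  · exact (bMk _ hcont (fun q => hU q.1 q.2)).continuous.subtype_mk _
  · intro x
    refine Subtype.ext (Units.ext ?_)
    simp [hval]
  · intro x
    refine Subtype.ext (Units.ext ?_)
    simp [bL, blk_val, g]
  · intro t a ha
    have h5 : f.1 a = 1 := f.2 a ha
    refine Subtype.ext (Units.ext ?_)
    simp [hval, h5, hz a ha]

/-- The corner embedding induces isomorphisms. -/
theorem corner_bij {e : ℕ → ℕ → R} (he : EUnits e) (L : Subgroup (Matrix ι ι R)ˣ)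
    (hL : ∀ g, g ∈ L ↔ ∀ a b, (g.1 - 1) a b ∈ KK e) {k : ℕ} (hX : Retr X k)
    (hk : k < 2 * Fintype.card ι) (A : Set X) :
    Function.Bijective (Pi.map A (cornerL he L hL)) := by
  refine Pi.map_bijective _ (corner_surj he L hL hX hk) fun f hf => ?_
  obtain ⟨H, h0, h1, hA⟩ := null_iff.1 hf
  refine corner_inj he hX hk f ⟨fun q => (H q).1, continuous_subtype_val.comp H.continuous⟩ ?_ ?_ ?_ ?_
  · intro x; simp [h0]
  · intro x; simp [h1]
  · intro t a ha; simp [hA t a ha]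
  · intro q; exact (hL _).1 (H q).2

end Corner

instance {M : Type} [Monoid M] : NormedAlgebra ℂ (L1 M) where
  __ := (inferInstance : Algebra ℂ (L1 M))
  norm_smul_le c x := norm_smul_le c x

/-! ### The kernel of the symbol map -/

/-- The matrix units `S ^ i * (1 - S * S') * S' ^ j` of the Toeplitz algebra. -/
def eT (i j : ℕ) : TT := L1.of ⟨i, j⟩ 1 - L1.of ⟨i + 1, j + 1⟩ 1

theorem eT_units : EUnits eT := by
  constructor
  · intro i j k l
    simp only [eT, sub_mul, mul_sub, L1.of_mul, Bic.mul_def, mul_one]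
    rcases lt_trichotomy j k with h | h | h
    · rw [if_neg h.ne]
      have e1 : k + 1 - j = k - j + 1 := by omega
      have e2 : j - (k + 1) = 0 := by omega
      have e3 : j - k = 0 := by omega
      have e4 : k + 1 - (j + 1) = k - j := by omega
      have e5 : j + 1 - (k + 1) = 0 := by omega
      have e6 : j + 1 - k = 0 := by omega
      have e7 : i + 1 + (k - (j + 1)) = i + (k - j) := by omega
      have e8 : i + (k - j + 1) = i + 1 + (k - j) := by omega
      rw [e1, e2, e3, e4, e5, e6, e7, e8]
      abel
    · subst h
      have e1 : j + 1 - j = 1 := by omega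
      have e2 : j - (j + 1) = 0 := by omega
      simp only [if_pos, e1, e2, Nat.sub_self, add_zero]
      abel
    · rw [if_neg h.ne']
      have e1 : k + 1 - j = 0 := by omega
      have e3 : k - j = 0 := by omega
      have e4 : k + 1 - (j + 1) = 0 := by omega
      have e5 : j + 1 - (k + 1) = j - k := by omega
      have e6 : k - (j + 1) = 0 := by omega
      have e7 : l + 1 + (j - (k + 1)) = l + (j - k) := by omega
      have e8 : l + (j + 1 - k) = l + 1 + (j - k) := by omega
      rw [e1, e3, e4, e5, e6, e7, e8]
      simp only [add_zero]
      abel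
  · intro i j h
    classical
    let G : Bic → ℂ := fun m => if m = ⟨i, j⟩ then 1 else 0
    have hG : ∀ m, ‖G m‖ ≤ 1 := by
      intro m; simp only [G]; split_ifs <;> simp
    have h1 := congrArg (L1.lin G hG) h
    rw [eT, map_sub, map_zero, L1.lin_of, L1.lin_of] at h1
    simp [G] at h1

theorem qq_eT (i j : ℕ) : qq (eT i j) = 0 := by
  rw [eT, map_sub, qq_of, qq_of, sub_eq_zero]
  congr 1
  change Multiplicative.ofAdd _ = Multiplicative.ofAdd _
  congr 1
  push_cast
  ring

theorem qq_smul (c : ℂ) (a : TT) : qq (c • a) = c • qq a := by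
  rw [L1.smul_eq, L1.smul_eq, map_mul, qq_of, map_one]

theorem mem_KK_eT (a : TT) : a ∈ KK eT ↔ qq a = 0 := by
  constructor
  · intro ha
    have hcl : IsClosed {a : TT | qq a = 0} := isClosed_eq qq_cont continuous_const
    refine closure_minimal ?_ hcl ha
    intro x hx
    refine Submodule.span_induction (p := fun x _ => qq x = 0) ?_ (map_zero _) ?_ ?_ hx
    · rintro _ ⟨p, rfl⟩; exact qq_eT _ _
    · intro x y _ _ hx hy; rw [map_add, hx, hy, add_zero]
    · intro c x _ hx; rw [qq_smul, hx, smul_zero]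
  · intro ha
    have key : ∀ a : TT, a - ss (qq a) ∈ KK eT := by
      intro a
      refine L1.ind (P := fun a => a - ss (qq a) ∈ KK eT) ?_ ?_ ?_ ?_ a
      · exact (KK_closed eT).preimage (continuous_id.sub (ss_cont.comp qq_cont))
      · simp
      · intro a b ha hb
        rw [map_add, map_add, add_sub_add_comm]
        exact Submodule.add_mem _ ha hb
      · rintro ⟨i, j⟩ c
        rw [qq_of, ss_of]
        have tel : ∀ (d a b : ℕ), L1.of (⟨a + d, b + d⟩ : Bic) c - L1.of ⟨a, b⟩ c ∈ KK eT := by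
          intro d a b
          induction d with
          | zero => simp
          | succ d ih =>
            have h1 := Submodule.smul_mem _ (-c) (mem_KK eT (a + d) (b + d))
            rw [eT, smul_sub, L1.smul_of, L1.smul_of, mul_one] at h1
            have h2 := Submodule.add_mem _ h1 ih
            have h3 : ∀ m : Bic, L1.of m (-c) = - L1.of m c := by
              intro m
              rw [eq_neg_iff_add_eq_zero, ← L1.of_add, neg_add_cancel, L1.of_zero]
            rw [h3, h3] at h2
            convert h2 using 1
            rw [← add_assoc, ← add_assoc]
            abel
        have hs : Bic.sec (Bic.deg ⟨i, j⟩) = ⟨i - j, j - i⟩ := by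
          have e1 : ((i : ℤ) - j).toNat = i - j := by omega
          have e2 : (-((i : ℤ) - j)).toNat = j - i := by omega
          change Bic.mk ((i : ℤ) - j).toNat (-((i : ℤ) - j)).toNat = _
          rw [e1, e2]
        rw [hs]
        have := tel (min i j) (i - j) (j - i)
        rwa [show i - j + min i j = i by omega, show j - i + min i j = j by omega] at this
    have := key a
    rwa [ha, map_zero, sub_zero] at this

theorem mem_kerp_qq {ι : Type} [Fintype ι] [DecidableEq ι] (g : (Matrix ι ι TT)ˣ) :
    g ∈ kerp (gmap ι qq qq_cont) ↔ ∀ a b, (g.1 - 1) a b ∈ KK eT := by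
  simp only [mem_KK_eT, Matrix.sub_apply, map_sub, sub_eq_zero]
  rw [mem_kerp, Units.ext_iff, ← Matrix.ext_iff]
  refine forall_congr' fun a => forall_congr' fun b => ?_
  rw [gmap_val, Matrix.map_apply, Units.val_one]
  by_cases h : a = b
  · subst h; simp
  · simp [h]

/-! ### A path of representations of the Toeplitz algebra -/

/-- Bounded operators on the space of bounded sequences. -/
def BB : Type := (BoundedContinuousFunction ℕ ℂ) →L[ℂ] (BoundedContinuousFunction ℕ ℂ)

instance : NormedRing BB := inferInstanceAs
  (NormedRing ((BoundedContinuousFunction ℕ ℂ) →L[ℂ] (BoundedContinuousFunction ℕ ℂ)))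

instance : NormedAlgebra ℂ BB := inferInstanceAs
  (NormedAlgebra ℂ ((BoundedContinuousFunction ℕ ℂ) →L[ℂ] (BoundedContinuousFunction ℕ ℂ)))

instance : CompleteSpace BB := inferInstanceAs
  (CompleteSpace ((BoundedContinuousFunction ℕ ℂ) →L[ℂ] (BoundedContinuousFunction ℕ ℂ)))

instance : Nontrivial (BoundedContinuousFunction ℕ ℂ) :=
  ⟨0, BoundedContinuousFunction.const ℕ 1, fun h => zero_ne_one (congrArg (fun f => f 0) h)⟩

instance : NormOneClass BB := inferInstanceAs
  (NormOneClass ((BoundedContinuousFunction ℕ ℂ) →L[ℂ] (BoundedContinuousFunction ℕ ℂ)))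

/-- The value of an operator at a bounded sequence. -/
def BB.ap (S : BB) : (BoundedContinuousFunction ℕ ℂ) →L[ℂ] (BoundedContinuousFunction ℕ ℂ) := S

theorem BB.ap_mul (S T : BB) (x) : (S * T).ap x = S.ap (T.ap x) := rfl
theorem BB.ap_zero (x) (i : ℕ) : (0 : BB).ap x i = 0 := rfl
theorem BB.ap_one (x) : (1 : BB).ap x = x := rfl
theorem BB.ap_add (S T : BB) (x) (i : ℕ) : (S + T).ap x i = S.ap x i + T.ap x i := rfl
theorem BB.ap_smul (c : ℂ) (S : BB) (x) (i : ℕ) : (c • S).ap x i = c * S.ap x i := rfl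

/-- The operator defined by a linear map which does not increase the supremum norm. -/
def opB (F : (ℕ → ℂ) →ₗ[ℂ] (ℕ → ℂ))
    (h : ∀ (x : ℕ → ℂ) (M : ℝ), 0 ≤ M → (∀ i, ‖x i‖ ≤ M) → ∀ i, ‖F x i‖ ≤ M) : BB :=
  LinearMap.mkContinuous
    { toFun := fun x => BoundedContinuousFunction.ofNormedAddCommGroupDiscrete (F x) ‖x‖
        (h x ‖x‖ (norm_nonneg _) fun i => x.norm_coe_le_norm i)
      map_add' := fun x y => by
        ext i
        exact congrFun (F.map_add x y) i
      map_smul' := fun c x => by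
        ext i
        exact congrFun (F.map_smul c x) i }
    1 fun x => by
      rw [one_mul]
      exact (BoundedContinuousFunction.norm_le (norm_nonneg _)).2
        (h x ‖x‖ (norm_nonneg _) fun i => x.norm_coe_le_norm i)

theorem opB_apply (F : (ℕ → ℂ) →ₗ[ℂ] (ℕ → ℂ)) (h) (x : BoundedContinuousFunction ℕ ℂ) (i : ℕ) :
    (opB F h).ap x i = F x i := rfl

theorem opB_norm (F : (ℕ → ℂ) →ₗ[ℂ] (ℕ → ℂ)) (h) : ‖opB F h‖ ≤ 1 :=
  LinearMap.mkContinuous_norm_le _ zero_le_one _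

theorem BB_ext {S T : BB} (h : ∀ x i, S.ap x i = T.ap x i) : S = T := by
  refine ContinuousLinearMap.ext fun x => ?_
  exact BoundedContinuousFunction.ext fun i => h x i

/-- The standard matrix units. -/
def eB (i j : ℕ) : BB := opB (LinearMap.single ℂ (fun _ : ℕ => ℂ) i ∘ₗ LinearMap.proj j) (by
  intro x M hM hx k
  change ‖(Pi.single i (x j) : ℕ → ℂ) k‖ ≤ M
  by_cases h : k = i
  · subst h; simpa using hx j
  · simpa [h] using hM)

theorem eB_apply (i j k : ℕ) (x : BoundedContinuousFunction ℕ ℂ) :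
    (eB i j).ap x k = if k = i then x j else 0 := by
  rw [eB, opB_apply]
  change (Pi.single i (x j) : ℕ → ℂ) k = _
  rw [Pi.single_apply]

theorem eB_units : EUnits eB := by
  constructor
  · intro i j k l
    refine BB_ext fun x a => ?_
    rw [BB.ap_mul, eB_apply, eB_apply]
    by_cases h : j = k
    · simp [h, eB_apply]
    · simp [h, BB.ap_zero]
  · intro i j h
    have := congrArg (fun S : BB => S.ap (BoundedContinuousFunction.const ℕ 1) i) h
    simp only [eB_apply, BB.ap_zero, if_true] at this
    exact one_ne_zero this

/-- The parameters of the path of representations: `b`, `μ`, `ν = 1 - μ`, `l` lie in `[0, 1]`, and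
`ν * l + b * μ = 1`. -/
structure Par where
  /-- The coefficient of `x 0` in the coordinate `0` of the image of `S`. -/
  l : ℝ
  /-- The coefficient of `x 0` in the coordinate `1` of the image of `S`. -/
  b : ℝ
  /-- The coefficient of `x 1` in the coordinate `0` of the image of `S'`. -/
  m : ℝ
  l_mem : l ∈ Icc (0 : ℝ) 1
  b_mem : b ∈ Icc (0 : ℝ) 1
  m_mem : m ∈ Icc (0 : ℝ) 1
  rel : (1 - m) * l + b * m = 1

/-- The image of the isometry `S`. -/
def opW (p : Par) (z : Circle) : BB := opB
  { toFun := fun x i => match i with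
      | 0 => p.l * z * x 0
      | 1 => p.b * x 0
      | (i + 2) => x (i + 1)
    map_add' := fun x y => by
      ext i
      rcases i with _ | _ | i <;> simp [mul_add]
    map_smul' := fun c x => by
      ext i
      rcases i with _ | _ | i <;> simp [mul_left_comm] } (by
  intro x M hM hx i
  rcases i with _ | _ | i
  · change ‖(p.l : ℂ) * z * x 0‖ ≤ M
    rw [norm_mul, norm_mul, Circle.norm_coe, mul_one, Complex.norm_real, Real.norm_of_nonneg p.l_mem.1]
    exact (mul_le_mul p.l_mem.2 (hx 0) (norm_nonneg _) zero_le_one).trans (one_mul M).le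
  · change ‖(p.b : ℂ) * x 0‖ ≤ M
    rw [norm_mul, Complex.norm_real, Real.norm_of_nonneg p.b_mem.1]
    exact (mul_le_mul p.b_mem.2 (hx 0) (norm_nonneg _) zero_le_one).trans (one_mul M).le
  · exact hx (i + 1))

/-- The image of the left inverse `S'`. -/
def opW' (p : Par) (z : Circle) : BB := opB
  { toFun := fun x i => match i with
      | 0 => (1 - p.m) * ((z⁻¹ : Circle) : ℂ) * x 0 + p.m * x 1
      | (i + 1) => x (i + 2)
    map_add' := fun x y => by
      ext i
      rcases i with _ | i
      · simp only [Pi.add_apply]; ring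
      · simp
    map_smul' := fun c x => by
      ext i
      rcases i with _ | i
      · simp only [Pi.smul_apply, smul_eq_mul, RingHom.id_apply]; ring
      · simp } (by
  intro x M hM hx i
  rcases i with _ | i
  · change ‖(1 - (p.m : ℂ)) * ((z⁻¹ : Circle) : ℂ) * x 0 + p.m * x 1‖ ≤ M
    have h1 : ‖(1 - (p.m : ℂ))‖ = 1 - p.m := by
      rw [← Complex.ofReal_one, ← Complex.ofReal_sub, Complex.norm_real,
        Real.norm_of_nonneg (sub_nonneg.2 p.m_mem.2)]
    refine (norm_add_le _ _).trans ?_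
    rw [norm_mul, norm_mul, norm_mul, Circle.norm_coe, mul_one, h1, Complex.norm_real,
      Real.norm_of_nonneg p.m_mem.1]
    nlinarith [mul_le_mul_of_nonneg_left (hx 0) (sub_nonneg.2 p.m_mem.2),
      mul_le_mul_of_nonneg_left (hx 1) p.m_mem.1]
  · exact hx (i + 2))

theorem opW_zero (p : Par) (z : Circle) (x) : (opW p z).ap x 0 = p.l * z * x 0 := rfl
theorem opW_one (p : Par) (z : Circle) (x) : (opW p z).ap x 1 = p.b * x 0 := rfl
theorem opW_succ (p : Par) (z : Circle) (x) (i : ℕ) : (opW p z).ap x (i + 2) = x (i + 1) := rfl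
theorem opW'_zero (p : Par) (z : Circle) (x) : (opW' p z).ap x 0 =
    (1 - p.m) * ((z⁻¹ : Circle) : ℂ) * x 0 + p.m * x 1 := rfl
theorem opW'_succ (p : Par) (z : Circle) (x) (i : ℕ) : (opW' p z).ap x (i + 1) = x (i + 2) := rfl

theorem opW'_mul_opW (p : Par) (z : Circle) : opW' p z * opW p z = 1 := by
  refine BB_ext fun x i => ?_
  rw [BB.ap_mul, BB.ap_one]
  rcases i with _ | i
  · rw [opW'_zero, opW_zero, opW_one]
    have h1 : ((z⁻¹ : Circle) : ℂ) * z = 1 := by simp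
    have h2 : (1 - (p.m : ℂ)) * p.l + p.b * p.m = 1 := by exact_mod_cast p.rel
    linear_combination ((1 - p.m) * p.l * x 0 : ℂ) * h1 + x 0 * h2
  · rw [opW'_succ, opW_succ]

theorem opW_eq (p p' : Par) (z z' : Circle) : opW p z = opW p' z' +
    ((p.l * z - p'.l * z' : ℂ) • eB 0 0 + (p.b - p'.b : ℂ) • eB 1 0) := by
  refine BB_ext fun x i => ?_
  simp only [BB.ap_add, BB.ap_smul, eB_apply]
  rcases i with _ | _ | i
  · rw [opW_zero, opW_zero]; simp; ring
  · rw [zero_add, opW_one, opW_one]; simp; ring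
  · rw [opW_succ, opW_succ]; simp

theorem opW'_eq (p p' : Par) (z z' : Circle) : opW' p z = opW' p' z' +
    (((1 - p.m) * (z⁻¹ : Circle) - (1 - p'.m) * (z'⁻¹ : Circle) : ℂ) • eB 0 0 +
      (p.m - p'.m : ℂ) • eB 0 1) := by
  refine BB_ext fun x i => ?_
  simp only [BB.ap_add, BB.ap_smul, eB_apply]
  rcases i with _ | i
  · rw [opW'_zero, opW'_zero]; simp; ring
  · rw [opW'_succ, opW'_succ]; simp

/-- The representation of the bicyclic monoid. -/
def rep (p : Par) (z : Circle) : Bic →* BB := Bic.lift (opW p z) (opW' p z) (opW'_mul_opW p z)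

theorem rep_norm (p : Par) (z : Circle) (m : Bic) : ‖rep p z m‖ ≤ 1 :=
  Bic.lift_norm _ _ _ (opB_norm _ _) (opB_norm _ _) m

/-- The representation of the Toeplitz algebra. -/
def Rep (p : Par) (z : Circle) : TT →+* BB := L1.lift (rep p z) (rep_norm p z)

theorem Rep_cont (p : Par) (z : Circle) : Continuous (Rep p z) := L1.lift_cont _ _

theorem Rep_of (p : Par) (z : Circle) (m : Bic) (c : ℂ) : Rep p z (L1.of m c) = c • rep p z m :=
  L1.lift_of _ _ _ _

theorem Rep_joint {Y : Type*} [TopologicalSpace Y] (p : Y → Par) (z : Y → Circle)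
    (hl : Continuous fun y => (p y).l) (hb : Continuous fun y => (p y).b)
    (hm : Continuous fun y => (p y).m) (hz : Continuous z) :
    Continuous fun q : Y × TT => Rep (p q.1) (z q.1) q.2 := by
  refine L1.lift_joint (fun y => rep (p y) (z y)) (fun y m => rep_norm _ _ m) fun m => ?_
  rcases isEmpty_or_nonempty Y with hY | ⟨⟨y0⟩⟩
  · exact continuous_of_const fun y => (hY.false y).elim
  have hz' : Continuous fun y => ((z y : Circle) : ℂ) := continuous_subtype_val.comp hz
  have hz'' : Continuous fun y => (((z y)⁻¹ : Circle) : ℂ) :=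
    continuous_subtype_val.comp hz.inv
  have hl' := Complex.continuous_ofReal.comp hl
  have hb' := Complex.continuous_ofReal.comp hb
  have hm' := Complex.continuous_ofReal.comp hm
  simp only [Function.comp_def] at hl' hb' hm'
  have h1 : Continuous fun y => opW (p y) (z y) := by
    rw [funext fun y => opW_eq (p y) (p y0) (z y) (z y0)]
    fun_prop
  have h2 : Continuous fun y => opW' (p y) (z y) := by
    rw [funext fun y => opW'_eq (p y) (p y0) (z y) (z y0)]
    fun_prop
  exact (h1.pow _).mul (h2.pow _)

/-! ### Loops of symbols which lift to the Toeplitz algebra -/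

/-- The operators which multiply `KK eB` into itself on both sides. -/
def NN : Subring BB where
  carrier := {T | ∀ k ∈ KK eB, T * k ∈ KK eB ∧ k * T ∈ KK eB}
  mul_mem' {S T} hS hT k hk := by
    rw [mul_assoc, ← mul_assoc k]
    exact ⟨(hS _ (hT k hk).1).1, (hT _ (hS k hk).2).2⟩
  one_mem' k hk := by simpa using hk
  add_mem' {S T} hS hT k hk := by
    rw [add_mul, mul_add]
    exact ⟨Submodule.add_mem _ (hS k hk).1 (hT k hk).1, Submodule.add_mem _ (hS k hk).2 (hT k hk).2⟩
  zero_mem' k hk := by simp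
  neg_mem' {S} hS k hk := by
    rw [neg_mul, mul_neg]
    exact ⟨Submodule.neg_mem _ (hS k hk).1, Submodule.neg_mem _ (hS k hk).2⟩

theorem mem_NN {T : BB} (h : ∀ i j, T * eB i j ∈ KK eB ∧ eB i j * T ∈ KK eB) : T ∈ NN := by
  have hcl : IsClosed {k : BB | T * k ∈ KK eB ∧ k * T ∈ KK eB} :=
    ((KK_closed eB).preimage (continuous_const.mul continuous_id)).inter
      ((KK_closed eB).preimage (continuous_id.mul continuous_const))
  intro k hk
  refine closure_minimal (t := {k : BB | T * k ∈ KK eB ∧ k * T ∈ KK eB}) ?_ hcl hk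
  intro x hx
  refine Submodule.span_induction (p := fun x _ => T * x ∈ KK eB ∧ x * T ∈ KK eB) ?_ ?_ ?_ ?_ hx
  · rintro _ ⟨p, rfl⟩; exact h _ _
  · simp
  · intro x y _ _ hx hy
    rw [mul_add, add_mul]
    exact ⟨Submodule.add_mem _ hx.1 hy.1, Submodule.add_mem _ hx.2 hy.2⟩
  · intro c x _ hx
    rw [mul_smul_comm, smul_mul_assoc]
    exact ⟨Submodule.smul_mem _ _ hx.1, Submodule.smul_mem _ _ hx.2⟩

theorem NN_closed : IsClosed (NN : Set BB) := by
  have : (NN : Set BB) = ⋂ k ∈ KK eB, {T : BB | T * k ∈ KK eB ∧ k * T ∈ KK eB} := by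
    ext T; simp only [mem_iInter]; rfl
  rw [this]
  refine isClosed_biInter fun k _ => ?_
  exact ((KK_closed eB).preimage (continuous_id.mul continuous_const)).inter
      ((KK_closed eB).preimage (continuous_const.mul continuous_id))

theorem NN_smul {T : BB} (h : T ∈ NN) (c : ℂ) : c • T ∈ NN := by
  intro k hk
  rw [smul_mul_assoc, mul_smul_comm]
  exact ⟨Submodule.smul_mem _ _ (h k hk).1, Submodule.smul_mem _ _ (h k hk).2⟩

theorem opW_mul_eB_zero (p : Par) (z : Circle) (j : ℕ) :
    opW p z * eB 0 j = (p.l * z : ℂ) • eB 0 j + (p.b : ℂ) • eB 1 j := by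
  refine BB_ext fun x i => ?_
  rw [BB.ap_mul, BB.ap_add, BB.ap_smul, BB.ap_smul]
  rcases i with _ | _ | i
  · rw [opW_zero]; simp [eB_apply]
  · rw [zero_add, opW_one]; simp [eB_apply]
  · rw [opW_succ]; simp [eB_apply]

theorem eB_mul_opW_zero (p : Par) (z : Circle) (i : ℕ) :
    eB i 0 * opW p z = (p.l * z : ℂ) • eB i 0 := by
  refine BB_ext fun x k => ?_
  rw [BB.ap_mul, BB.ap_smul, eB_apply, eB_apply, opW_zero]
  simp

theorem opW'_mul_eB_zero (p : Par) (z : Circle) (j : ℕ) :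
    opW' p z * eB 0 j = ((1 - p.m) * (z⁻¹ : Circle) : ℂ) • eB 0 j := by
  refine BB_ext fun x i => ?_
  rw [BB.ap_mul, BB.ap_smul]
  rcases i with _ | i
  · rw [opW'_zero]; simp [eB_apply]
  · rw [opW'_succ]; simp [eB_apply]

theorem eB_mul_opW'_zero (p : Par) (z : Circle) (i : ℕ) :
    eB i 0 * opW' p z = ((1 - p.m) * (z⁻¹ : Circle) : ℂ) • eB i 0 + (p.m : ℂ) • eB i 1 := by
  refine BB_ext fun x k => ?_
  rw [BB.ap_mul, BB.ap_add, BB.ap_smul, BB.ap_smul, eB_apply, eB_apply, eB_apply, opW'_zero]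
  split_ifs <;> simp

theorem opW_mem (p : Par) (z : Circle) : opW p z ∈ NN := by
  refine mem_NN fun i j => ⟨?_, ?_⟩
  · rcases i with _ | i
    · rw [opW_mul_eB_zero]
      exact Submodule.add_mem _ (Submodule.smul_mem _ _ (mem_KK _ _ _))
        (Submodule.smul_mem _ _ (mem_KK _ _ _))
    · have : opW p z * eB (i + 1) j = eB (i + 2) j := by
        refine BB_ext fun x k => ?_
        rw [BB.ap_mul]
        rcases k with _ | _ | k
        · rw [opW_zero]; simp [eB_apply]
        · rw [zero_add, opW_one]; simp [eB_apply]
        · rw [opW_succ]; simp [eB_apply]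
      rw [this]
      exact mem_KK _ _ _
  · rcases j with _ | _ | j
    · rw [eB_mul_opW_zero]
      exact Submodule.smul_mem _ _ (mem_KK _ _ _)
    · have : eB i (0 + 1) * opW p z = (p.b : ℂ) • eB i 0 := by
        refine BB_ext fun x k => ?_
        rw [BB.ap_mul, BB.ap_smul, eB_apply, eB_apply, zero_add, opW_one]
        simp
      rw [this]
      exact Submodule.smul_mem _ _ (mem_KK _ _ _)
    · have : eB i (j + 2) * opW p z = eB i (j + 1) := by
        refine BB_ext fun x k => ?_
        rw [BB.ap_mul, eB_apply, eB_apply, opW_succ]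
      rw [this]
      exact mem_KK _ _ _

theorem opW'_mem (p : Par) (z : Circle) : opW' p z ∈ NN := by
  refine mem_NN fun i j => ⟨?_, ?_⟩
  · rcases i with _ | _ | i
    · rw [opW'_mul_eB_zero]
      exact Submodule.smul_mem _ _ (mem_KK _ _ _)
    · have : opW' p z * eB (0 + 1) j = (p.m : ℂ) • eB 0 j := by
        refine BB_ext fun x k => ?_
        rw [BB.ap_mul, BB.ap_smul]
        rcases k with _ | k
        · rw [opW'_zero]; simp [eB_apply]
        · rw [opW'_succ]; simp [eB_apply]
      rw [this]
      exact Submodule.smul_mem _ _ (mem_KK _ _ _)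
    · have : opW' p z * eB (i + 2) j = eB (i + 1) j := by
        refine BB_ext fun x k => ?_
        rw [BB.ap_mul]
        rcases k with _ | k
        · rw [opW'_zero]; simp [eB_apply]
        · rw [opW'_succ]; simp [eB_apply]
      rw [this]
      exact mem_KK _ _ _
  · rcases j with _ | j
    · rw [eB_mul_opW'_zero]
      exact Submodule.add_mem _ (Submodule.smul_mem _ _ (mem_KK _ _ _))
        (Submodule.smul_mem _ _ (mem_KK _ _ _))
    · have : eB i (j + 1) * opW' p z = eB i (j + 2) := by
        refine BB_ext fun x k => ?_
        rw [BB.ap_mul, eB_apply, eB_apply, opW'_succ]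
      rw [this]
      exact mem_KK _ _ _

theorem rep_mem (p : Par) (z : Circle) (m : Bic) : rep p z m ∈ NN := by
  rw [rep, Bic.lift_apply]
  exact NN.mul_mem (NN.pow_mem (opW_mem p z) _) (NN.pow_mem (opW'_mem p z) _)

theorem Rep_mem (p : Par) (z : Circle) (a : TT) : Rep p z a ∈ NN := by
  refine L1.ind (P := fun a => Rep p z a ∈ NN) (NN_closed.preimage (Rep_cont p z)) ?_ ?_ ?_ a
  · rw [map_zero]; exact NN.zero_mem
  · intro a b ha hb; rw [map_add]; exact NN.add_mem ha hb
  · intro m c; rw [Rep_of]; exact NN_smul (rep_mem p z m) c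

theorem mul_sub_mul_mem {S S' T T' : BB} (hS : S ∈ NN) (hT' : T' ∈ NN) (h : S - S' ∈ KK eB)
    (h' : T - T' ∈ KK eB) : S * T - S' * T' ∈ KK eB := by
  rw [show S * T - S' * T' = S * (T - T') + (S - S') * T' by noncomm_ring]
  exact Submodule.add_mem _ (hS _ h').1 (hT' _ h).2

theorem pow_sub_pow_mem {S S' : BB} (hS : S ∈ NN) (hS' : S' ∈ NN) (h : S - S' ∈ KK eB) (n : ℕ) :
    S ^ n - S' ^ n ∈ KK eB := by
  induction n with
  | zero => simp
  | succ n ih =>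
    rw [pow_succ, pow_succ]
    have h1 := mul_sub_mul_mem (NN.pow_mem hS n) hS' ih h
    exact h1

/-- All representations of the path agree modulo `KK eB`. -/
theorem Rep_sub_mem (p p' : Par) (z z' : Circle) (a : TT) :
    Rep p z a - Rep p' z' a ∈ KK eB := by
  refine L1.ind (P := fun a => Rep p z a - Rep p' z' a ∈ KK eB)
    ((KK_closed eB).preimage ((Rep_cont p z).sub (Rep_cont p' z'))) ?_ ?_ ?_ a
  · simp
  · intro a b ha hb
    rw [map_add, map_add, add_sub_add_comm]
    exact Submodule.add_mem _ ha hb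
  · intro m c
    rw [Rep_of, Rep_of, ← smul_sub]
    refine Submodule.smul_mem _ _ ?_
    rw [rep, rep, Bic.lift_apply, Bic.lift_apply]
    refine mul_sub_mul_mem (NN.pow_mem (opW_mem p z) _) (NN.pow_mem (opW'_mem p' z') _)
      (pow_sub_pow_mem (opW_mem p z) (opW_mem p' z') ?_ _)
      (pow_sub_pow_mem (opW'_mem p z) (opW'_mem p' z') ?_ _)
    · rw [opW_eq p p' z z', add_sub_cancel_left]
      exact Submodule.add_mem _ (Submodule.smul_mem _ _ (mem_KK _ _ _))
        (Submodule.smul_mem _ _ (mem_KK _ _ _))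
    · rw [opW'_eq p p' z z', add_sub_cancel_left]
      exact Submodule.add_mem _ (Submodule.smul_mem _ _ (mem_KK _ _ _))
        (Submodule.smul_mem _ _ (mem_KK _ _ _))

/-- `T` is the perturbation of `T'` whose restriction to the summand spanned by the first basis
vector is multiplied by `c`; here `T'` is the identity on this summand. -/
def Pert (c : ℂ) (T T' : BB) : Prop :=
  T = T' + (c - 1) • eB 0 0 ∧ T' * eB 0 0 = eB 0 0 ∧ eB 0 0 * T' = eB 0 0

theorem eB_sq : eB 0 0 * eB 0 0 = eB 0 0 := by rw [eB_units.1, if_pos rfl]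

theorem Pert.mul {c d : ℂ} {S S' T T' : BB} (h : Pert c S S') (h' : Pert d T T') :
    Pert (c * d) (S * T) (S' * T') := by
  refine ⟨?_, ?_, ?_⟩
  · rw [h.1, h'.1, mul_add, add_mul, add_mul, mul_smul_comm, smul_mul_assoc, h.2.1, h'.2.2,
      mul_smul_comm, smul_mul_assoc, eB_sq, smul_smul, add_assoc, ← add_smul, ← add_smul]
    congr 2
    ring
  · rw [mul_assoc, h'.2.1, h.2.1]
  · rw [← mul_assoc, h.2.2, h'.2.2]

theorem Pert.one : Pert 1 1 1 := by simp [Pert]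

theorem Pert.pow {c : ℂ} {S S' : BB} (h : Pert c S S') (n : ℕ) : Pert (c ^ n) (S ^ n) (S' ^ n) := by
  induction n with
  | zero => simpa using Pert.one
  | succ n ih => rw [pow_succ, pow_succ, pow_succ]; exact ih.mul h

theorem rep_pert (p : Par) (hl : p.l = 1) (hb : p.b = 0) (hm : p.m = 0) (z : Circle) (m : Bic) :
    Pert (ev z (qq (L1.of m 1))) (rep p z m) (rep p 1 m) := by
  have h1 : Pert z (opW p z) (opW p 1) := by
    refine ⟨?_, ?_, ?_⟩
    · rw [opW_eq p p z 1, hl, hb]; simp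
    · rw [opW_mul_eB_zero, hl, hb]; simp
    · rw [eB_mul_opW_zero, hl]; simp
  have h2 : Pert ((z⁻¹ : Circle) : ℂ) (opW' p z) (opW' p 1) := by
    refine ⟨?_, ?_, ?_⟩
    · rw [opW'_eq p p z 1, hm]; simp
    · rw [opW'_mul_eB_zero, hm]; simp
    · rw [eB_mul_opW'_zero, hm]; simp
  have h3 := (h1.pow m.fst).mul (h2.pow m.snd)
  rw [rep, rep, Bic.lift_apply, Bic.lift_apply]
  convert h3 using 1
  rw [qq_of, ev_of, one_mul]
  change ((z ^ ((m.fst : ℤ) - m.snd) : Circle) : ℂ) = _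
  rw [zpow_sub, zpow_natCast, zpow_natCast]
  simp

theorem Rep_pert (p : Par) (hl : p.l = 1) (hb : p.b = 0) (hm : p.m = 0) (z : Circle) (a : TT) :
    Rep p z a = Rep p 1 a + (ev z (qq a) - ev 1 (qq a)) • eB 0 0 := by
  refine L1.ind (P := fun a => Rep p z a = Rep p 1 a + (ev z (qq a) - ev 1 (qq a)) • eB 0 0)
    (isClosed_eq (Rep_cont p z) ((Rep_cont p 1).add
      ((((ev_cont z).comp qq_cont).sub ((ev_cont 1).comp qq_cont)).smul continuous_const)))
    (by simp) ?_ ?_ a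
  · intro a b ha hb
    simp only [map_add, ha, hb, add_smul, sub_smul]
    abel
  · intro m c
    rw [Rep_of, Rep_of, (rep_pert p hl hb hm z m).1, smul_add, smul_smul]
    congr 2
    simp only [qq_of, ev_of]
    simp [mul_sub]

theorem eB_mul_Rep (p : Par) (hl : p.l = 1) (hb : p.b = 0) (hm : p.m = 0) (a : TT) :
    eB 0 0 * Rep p 1 a = ev 1 (qq a) • eB 0 0 := by
  refine L1.ind (P := fun a => eB 0 0 * Rep p 1 a = ev 1 (qq a) • eB 0 0)
    (isClosed_eq (continuous_const.mul (Rep_cont p 1))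
      (((ev_cont 1).comp qq_cont).smul continuous_const)) (by simp) ?_ ?_ a
  · intro a b ha hb
    simp only [map_add, mul_add, ha, hb, add_smul]
  · intro m c
    rw [Rep_of, mul_smul_comm, (rep_pert p hl hb hm 1 m).2.2]
    congr 1
    simp only [qq_of, ev_of]
    simp

/-- Truncation to the unit interval. -/
def clamp (x : ℝ) : ℝ := max 0 (min 1 x)

theorem clamp_mem (x : ℝ) : clamp x ∈ Icc (0 : ℝ) 1 :=
  ⟨le_max_left _ _, max_le zero_le_one (min_le_left _ _)⟩

theorem clamp_cont : Continuous clamp := by unfold clamp; fun_prop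

theorem clamp_of_le {x : ℝ} (h : x ≤ 0) : clamp x = 0 :=
  max_eq_left ((min_le_right _ _).trans h)

theorem clamp_of_ge {x : ℝ} (h : 1 ≤ x) : clamp x = 1 := by
  rw [clamp, min_eq_left h, max_eq_right zero_le_one]

/-- The path of parameters, for `t` in `[0, 3]`. -/
def par (t : ℝ) : Par where
  l := clamp (3 - t)
  b := clamp t
  m := clamp (t - 1)
  l_mem := clamp_mem _
  b_mem := clamp_mem _
  m_mem := clamp_mem _
  rel := by
    rcases le_total t 1 with h | h
    · rw [clamp_of_le (x := t - 1) (by linarith), clamp_of_ge (x := 3 - t) (by linarith)]; ring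
    · rw [clamp_of_ge h]
      rcases le_total t 2 with h' | h'
      · rw [clamp_of_ge (x := 3 - t) (by linarith)]; ring
      · rw [clamp_of_ge (x := t - 1) (by linarith)]; ring

theorem Rep_end (z : Circle) : Rep (par 3) z = Rep (par 3) 1 := by
  have h1 : opW (par 3) z = opW (par 3) 1 := by
    rw [opW_eq (par 3) (par 3) z 1]
    simp [par, clamp]
  have h2 : opW' (par 3) z = opW' (par 3) 1 := by
    rw [opW'_eq (par 3) (par 3) z 1]
    simp [par, clamp_of_ge (x := (3 - 1 : ℝ)) (by norm_num)]
  have h3 : rep (par 3) z = rep (par 3) 1 := by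
    ext m
    rw [rep, rep, Bic.lift_apply, Bic.lift_apply, h1, h2]
  refine RingHom.ext fun a => L1.ind_eq (Rep (par 3) z).toAddMonoidHom
    (Rep (par 3) 1).toAddMonoidHom (Rep_cont _ _) (Rep_cont _ _) (fun m c => ?_) a
  change Rep _ _ _ = Rep _ _ _
  rw [Rep_of, Rep_of, h3]

theorem gmap_joint {ι : Type} [Fintype ι] [DecidableEq ι] {R R' : Type*} [NormedRing R]
    [NormedRing R'] {Y : Type*} [TopologicalSpace Y] (φ : Y → R →+* R')
    (hφ : ∀ y, Continuous (φ y)) (hj : Continuous fun q : Y × R => φ q.1 q.2)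
    (F : Y → (Matrix ι ι R)ˣ) (hF : Continuous F) :
    Continuous fun y => gmap ι (φ y) (hφ y) (F y) := by
  have h : ∀ G : Y → Matrix ι ι R, Continuous G → Continuous fun q => (G q).map (φ q) := by
    intro G hG
    refine continuous_matrix fun a b => ?_
    exact hj.comp (continuous_id.prodMk (hG.matrix_elem a b))
  refine Units.continuous_iff.2 ⟨?_, ?_⟩
  · exact h _ (Units.continuous_val.comp hF)
  · exact h _ (Units.continuous_val.comp hF.inv)

theorem Rep_gmap_cont {ι : Type} [Fintype ι] [DecidableEq ι] {Y : Type*} [TopologicalSpace Y]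
    (p : Y → Par) (z : Y → Circle)
    (hl : Continuous fun y => (p y).l) (hb : Continuous fun y => (p y).b)
    (hm : Continuous fun y => (p y).m) (hz : Continuous z)
    (F : Y → (Matrix ι ι TT)ˣ) (hF : Continuous F) :
    Continuous fun y => gmap ι (Rep (p y) (z y)) (Rep_cont _ _) (F y) :=
  gmap_joint (fun y => Rep (p y) (z y)) (fun _ => Rep_cont _ _) (Rep_joint p z hl hb hm hz) F hF

/-- The standard parametrization of the circle. -/
def eC (s : I) : Circle := Circle.exp (2 * Real.pi * s)

theorem eC_cont : Continuous eC := by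
  unfold eC
  exact Circle.exp.continuous.comp (by fun_prop)

theorem eC_zero : eC 0 = 1 := by simp [eC]

theorem eC_one : eC 1 = 1 := by simp [eC]

/-- A family of loops of symbols which lifts to the Toeplitz algebra is null homotopic. -/
theorem loop_null {ι : Type} [Fintype ι] [DecidableEq ι] {Y : Type*} [TopologicalSpace Y]
    [CompactSpace Y] {k : ℕ} (hY : Retr (I × Y) k) (hk : k < 2 * Fintype.card ι) {B : Set Y}
    (F : C(Y, (Matrix ι ι TT)ˣ)) (hF : ∀ y ∈ B, F y = 1)
    (h1 : ∀ y, gmap ι (ev 1) (ev_cont 1) (gmap ι qq qq_cont (F y)) = 1)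
    (v : Om (dI B) (GLC ι))
    (hv : ∀ s y, v.1 (s, y) = gmap ι (ev (eC s)) (ev_cont _) (gmap ι qq qq_cont (F y))) :
    (1 : C(I × Y, GLC ι)).HomotopicRel v.1 (dI B) := by
  let p : I × (I × Y) → Par := fun q => par (3 * (1 - (q.1 : ℝ)))
  let z : I × (I × Y) → Circle := fun q => eC q.2.1
  have hl : Continuous fun q => (p q).l := clamp_cont.comp (by fun_prop)
  have hb : Continuous fun q => (p q).b := clamp_cont.comp (by fun_prop)
  have hm : Continuous fun q => (p q).m := clamp_cont.comp (by fun_prop)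
  have hz : Continuous z := eC_cont.comp (by fun_prop)
  have hFc : Continuous fun q : I × (I × Y) => F q.2.2 := by fun_prop
  let H1 : I × (I × Y) → (Matrix ι ι BB)ˣ := fun q => gmap ι (Rep (p q) (z q)) (Rep_cont _ _) (F q.2.2)
  let H2 : I × (I × Y) → (Matrix ι ι BB)ˣ := fun q => gmap ι (Rep (p q) 1) (Rep_cont _ _) (F q.2.2)
  have hH1 : Continuous H1 := Rep_gmap_cont p z hl hb hm hz _ hFc
  have hH2 : Continuous H2 := Rep_gmap_cont p (fun _ => 1) hl hb hm continuous_const _ hFc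
  refine corner_inj eB_units hY hk v ⟨fun q => H1 q * (H2 q)⁻¹, hH1.mul hH2.inv⟩ ?_ ?_ ?_ ?_
  · intro x
    change H1 _ * (H2 _)⁻¹ = 1
    rw [mul_inv_eq_one]
    refine Units.ext ?_
    simp only [H1, H2, gmap_val]
    have : p (0, x) = par 3 := by simp [p]
    rw [this, Rep_end]
  · rintro ⟨s, y⟩
    change H1 _ * (H2 _)⁻¹ = _
    rw [mul_inv_eq_iff_eq_mul]
    refine Units.ext ?_
    have e1 : p (1, (s, y)) = par 0 := by simp [p]
    have e2 : z (1, (s, y)) = eC s := rfl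
    have hl0 : (par 0).l = 1 := clamp_of_ge (by norm_num)
    have hb0 : (par 0).b = 0 := clamp_of_le le_rfl
    have hm0 : (par 0).m = 0 := clamp_of_le (by norm_num)
    rw [Units.val_mul, corner_val]
    simp only [H1, H2, gmap_val, e1, e2]
    have hv' : (v.1 (s, y)).1 = ((F y).1.map qq).map (ev (eC s)) := by rw [hv]; rfl
    have h1' : ((F y).1.map qq).map (ev 1) = 1 := congrArg Units.val (h1 y)
    rw [add_mul, one_mul]
    ext1 a b
    rw [Matrix.add_apply, Matrix.map_apply, Rep_pert _ hl0 hb0 hm0]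
    congr 1
    rw [Matrix.mul_apply]
    have : ∀ c, ((v.1 (s, y)).1 - 1).map (fun w => w • eB 0 0) a c * ((F y).1.map (Rep (par 0) 1)) c b
        = (((v.1 (s, y)).1 - 1) a c * (1 : Matrix ι ι ℂ) c b) • eB 0 0 := by
      intro c
      rw [Matrix.map_apply, Matrix.map_apply, smul_mul_assoc, eB_mul_Rep _ hl0 hb0 hm0, smul_smul,
        ← h1']
      rfl
    rw [Finset.sum_congr rfl fun c _ => this c, ← Finset.sum_smul, ← Matrix.mul_apply, mul_one, hv',
      ← h1']
    rfl
  · intro t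
    rintro ⟨s, y⟩ ha
    change H1 _ * (H2 _)⁻¹ = 1
    rw [mul_inv_eq_one]
    refine Units.ext ?_
    simp only [H1, H2, gmap_val]
    rcases ha with ha | ha | ha
    · have : z (t, (s, y)) = 1 := by
        change s = 0 at ha
        simp only [z, ha, eC_zero]
      rw [this]
    · have : z (t, (s, y)) = 1 := by
        change s = 1 at ha
        simp only [z, ha, eC_one]
      rw [this]
    · change y ∈ B at ha
      rw [hF y ha]
      simp
  · intro q a b
    change ((H1 q * (H2 q)⁻¹).1 - 1) a b ∈ _
    have : (H1 q * (H2 q)⁻¹).1 - 1 = ((H1 q).1 - (H2 q).1) * ((H2 q)⁻¹).1 := by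
      rw [sub_mul, ← Units.val_mul, ← Units.val_mul, mul_inv_cancel, Units.val_one]
    rw [this, Matrix.mul_apply]
    refine Submodule.sum_mem _ fun c _ => ?_
    have hn : ((H2 q)⁻¹).1 c b ∈ NN := by
      simp only [H2, ← map_inv]
      rw [gmap_val]
      exact Rep_mem _ _ _
    exact (hn _ (Rep_sub_mem _ _ _ _ _)).2

/-! ### Approximation of loops by absolutely convergent Fourier series -/

theorem ev_smul (z : Circle) (c : ℂ) (a : WW) : ev z (c • a) = c * ev z a := by
  rw [L1.smul_eq, map_mul, ev_of]
  simp

theorem eC_surj (z : Circle) : ∃ s, eC s = z := by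
  refine ⟨⟨Int.fract (Complex.arg z / (2 * Real.pi)), Int.fract_nonneg _, (Int.fract_lt_one _).le⟩, ?_⟩
  have h : 2 * Real.pi * Int.fract (Complex.arg z / (2 * Real.pi)) =
      Complex.arg z - ⌊Complex.arg z / (2 * Real.pi)⌋ * (2 * Real.pi) := by
    rw [Int.fract]
    field_simp
  change Circle.exp (2 * Real.pi * Int.fract (Complex.arg z / (2 * Real.pi))) = z
  rw [h, Circle.periodic_exp.sub_int_mul_eq, Circle.exp_arg]

/-- Uniform approximation of based loops by Fourier polynomials vanishing at the base point. -/
theorem fourier_approx (f : C(I, ℂ)) (h0 : f 0 = 0) (h1 : f 1 = 0) {ε : ℝ} (hε : 0 < ε) :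
    ∃ a : WW, ev 1 a = 0 ∧ ∀ s, ‖ev (eC s) a - f s‖ < ε := by
  have : Fact ((0 : ℝ) < 1) := ⟨one_pos⟩
  let f' : ℝ → ℂ := Set.IccExtend zero_le_one f
  have hf' : Continuous f' := f.continuous.Icc_extend'
  have hf0 : f' 0 = 0 := (Set.IccExtend_left _ _).trans h0
  have hf1 : f' 1 = 0 := (Set.IccExtend_right _ _).trans h1
  let g : C(AddCircle (1 : ℝ), ℂ) := ⟨AddCircle.liftIco 1 0 f',
    AddCircle.liftIco_continuous (by rw [zero_add, hf0, hf1]) hf'.continuousOn⟩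
  have hg : ∀ s : I, g ((s : ℝ) : AddCircle (1 : ℝ)) = f s := by
    intro s
    rcases eq_or_lt_of_le s.2.2 with h | h
    · have e : s = 1 := Subtype.ext h
      subst e
      have e2 : (((1 : I) : ℝ) : AddCircle (1 : ℝ)) = ((0 : ℝ) : AddCircle (1 : ℝ)) := by
        rw [Set.Icc.coe_one]
        simp
      rw [e2, h1]
      have e3 : AddCircle.liftIco (1 : ℝ) 0 f' ((0 : ℝ) : AddCircle (1 : ℝ)) = f' 0 :=
        AddCircle.liftIco_coe_apply (by simp)
      exact e3.trans hf0
    · have e : AddCircle.liftIco (1 : ℝ) 0 f' ((s : ℝ) : AddCircle (1 : ℝ)) = f' s :=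
        AddCircle.liftIco_coe_apply ⟨s.2.1, by rw [zero_add]; exact h⟩
      exact e.trans (Set.IccExtend_val _ _ _)
  have hmem : g ∈ (Submodule.span ℂ (Set.range (fourier (T := 1)))).topologicalClosure := by
    rw [span_fourier_closure_eq_top]; trivial
  obtain ⟨P, hP, hPg⟩ := Metric.mem_closure_iff.1 hmem (ε / 2) (half_pos hε)
  have key : ∀ P ∈ Submodule.span ℂ (Set.range (fourier (T := 1))),
      ∃ a : WW, ∀ s : I, P ((s : ℝ) : AddCircle (1 : ℝ)) = ev (eC s) a := by
    intro P hP
    refine Submodule.span_induction (p := fun P _ =>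
      ∃ a : WW, ∀ s : I, P ((s : ℝ) : AddCircle (1 : ℝ)) = ev (eC s) a) ?_ ?_ ?_ ?_ hP
    · rintro _ ⟨n, rfl⟩
      refine ⟨L1.of (Multiplicative.ofAdd n) 1, fun s => ?_⟩
      rw [fourier_apply, ev_of, one_mul, AddCircle.toCircle_zsmul, AddCircle.toCircle_apply_mk,
        div_one]
      rfl
    · exact ⟨0, fun s => by simp⟩
    · rintro P Q _ _ ⟨a, ha⟩ ⟨b, hb⟩
      exact ⟨a + b, fun s => by rw [map_add, ← ha, ← hb]; rfl⟩
    · rintro c P _ ⟨a, ha⟩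
      exact ⟨c • a, fun s => by rw [ev_smul, ← ha]; rfl⟩
  obtain ⟨a, ha⟩ := key P hP
  have hd : ∀ s : I, ‖ev (eC s) a - f s‖ < ε / 2 := by
    intro s
    rw [← ha, ← hg, ← dist_eq_norm, dist_comm]
    exact (ContinuousMap.dist_apply_le_dist _).trans_lt hPg
  have h10 : ‖ev 1 a‖ < ε / 2 := by
    have := hd 0
    rwa [eC_zero, h0, sub_zero] at this
  refine ⟨a - L1.of 1 (ev 1 a), ?_, fun s => ?_⟩
  · rw [map_sub, ev_of]; simp
  · rw [map_sub, ev_of]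
    have := hd s
    simp only [toAdd_one, zpow_zero, Circle.coe_one, mul_one]
    calc ‖ev (eC s) a - ev 1 a - f s‖ = ‖(ev (eC s) a - f s) - ev 1 a‖ := by congr 1; ring
      _ ≤ _ := norm_sub_le _ _
      _ < ε := by linarith

theorem fourier_dense (f : C(I, ℂ)) (h0 : f 0 = 0) (h1 : f 1 = 0) :
    f ∈ closure {f : C(I, ℂ) | ∃ a : WW, ev 1 a = 0 ∧ ∀ s, f s = ev (eC s) a} := by
  refine Metric.mem_closure_iff.2 fun ε hε => ?_
  obtain ⟨a, ha, has⟩ := fourier_approx f h0 h1 (half_pos hε)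
  have hc : Continuous fun s => ev (eC s) a := by
    have h := ev_joint.comp (eC_cont.prodMk (continuous_const (y := a)))
    exact h
  refine ⟨⟨fun s => ev (eC s) a, hc⟩, ⟨a, ha, fun _ => rfl⟩, ?_⟩
  refine lt_of_le_of_lt ((ContinuousMap.dist_le (half_pos hε).le).2 fun s => ?_) (half_lt_self hε)
  rw [dist_comm, dist_eq_norm]
  exact (has s).le

/-- Evaluation of continuous functions on the interval. -/
def evI (s : I) : C(I, ℂ) →+* ℂ where
  toFun f := f s
  map_one' := rfl
  map_zero' := rfl
  map_mul' _ _ := rfl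
  map_add' _ _ := rfl

section
variable {ι : Type} [Fintype ι] [DecidableEq ι]

section
attribute [local instance] Matrix.linftyOpNormedRing Matrix.linftyOpNormedAlgebra

theorem matrix_approx_unit {Y : Type*} [TopologicalSpace Y] [CompactSpace Y]
    {R : Type*} [NormedCommRing R] [NormedAlgebra ℂ R] [CompleteSpace R]
    (h : C(Y, Matrix ι ι R)) (D : Set (Matrix ι ι R)) (hD : ∀ y, h y ∈ closure D)
    (hu : ∀ y, IsUnit (1 + h y)) :
    ∃ (n : ℕ) (d : Fin n → Matrix ι ι R) (χ : Fin n → C(Y, ℝ)), (∀ i, d i ∈ D) ∧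
      (∀ y, h y = 0 → ∀ i, χ i y = 0) ∧
      ∀ (t : I) y, IsUnit (1 + ((1 - ((t : ℝ) : ℂ)) • h y +
        ((t : ℝ) : ℂ) • ∑ i, ((χ i y : ℝ) : ℂ) • d i)) := by
  haveI := matrix_summable (ι := ι) (R := R)
  exact approx_unit h D hD hu

end

/-- The based loops of matrices given by absolutely convergent Fourier series. -/
def wienerLoops (ι : Type) [Fintype ι] [DecidableEq ι] : AddSubgroup (Matrix ι ι C(I, ℂ)) where
  carrier := {d | ∃ a : Matrix ι ι WW, a.map (ev 1) = 0 ∧ ∀ s i j, d i j s = ev (eC s) (a i j)}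
  zero_mem' := ⟨0, by ext; simp, fun s i j => by simp⟩
  add_mem' := by
    rintro d d' ⟨a, ha, had⟩ ⟨b, hb, hbd⟩
    refine ⟨a + b, ?_, fun s i j => ?_⟩
    · rw [Matrix.map_add _ (map_add _), ha, hb, add_zero]
    · change d i j s + d' i j s = ev _ (a i j + b i j)
      rw [map_add, had, hbd]
  neg_mem' := by
    rintro d ⟨a, ha, had⟩
    refine ⟨-a, ?_, fun s i j => ?_⟩
    · ext i j
      have := congrFun (congrFun ha i) j
      simp only [Matrix.map_apply, Matrix.zero_apply] at this
      simp [this]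
    · simp [had]

theorem wienerLoops_dense (h : Matrix ι ι C(I, ℂ)) (h0 : ∀ i j, h i j 0 = 0)
    (h1 : ∀ i j, h i j 1 = 0) : h ∈ closure (wienerLoops ι : Set (Matrix ι ι C(I, ℂ))) := by
  have hcl : ∀ i j, Matrix.single i j (h i j) ∈ (wienerLoops ι).topologicalClosure := by
    intro i j
    have hmem : h i j ∈ closure {f : C(I, ℂ) | ∃ a : WW, ev 1 a = 0 ∧ ∀ s, f s = ev (eC s) a} :=
      fourier_dense _ (h0 i j) (h1 i j)
    have hc : Continuous fun f : C(I, ℂ) => Matrix.single i j f := by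
      refine continuous_matrix fun a b => ?_
      simp only [Matrix.single_apply]
      split_ifs
      · exact continuous_id
      · exact continuous_const
    refine map_mem_closure hc hmem ?_
    rintro f ⟨a, ha, haf⟩
    refine ⟨Matrix.single i j a, ?_, fun s k l => ?_⟩
    · ext k l
      rw [Matrix.map_apply, Matrix.single_apply]
      split_ifs <;> simp [ha]
    · rw [Matrix.single_apply, Matrix.single_apply]
      split_ifs <;> simp [haf]
  change h ∈ (wienerLoops ι).topologicalClosure
  rw [Matrix.matrix_eq_sum_single h]
  exact sum_mem fun i _ => sum_mem fun j _ => hcl i j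

/-- Families of based loops are approximated by families of invertible matrices over the Wiener
algebra. -/
theorem wiener_approx {Y : Type*} [TopologicalSpace Y] [CompactSpace Y] (g : C(I × Y, GLC ι))
    (h0 : ∀ y, g (0, y) = 1) (h1 : ∀ y, g (1, y) = 1) :
    ∃ g' : C(Y, (Matrix ι ι WW)ˣ), (∀ y, gmap ι (ev 1) (ev_cont 1) (g' y) = 1) ∧
      (∀ y, (∀ s, g (s, y) = 1) → g' y = 1) ∧
      ∀ (t : I) s y, ((1 - ((t : ℝ) : ℂ)) • (g (s, y)).1 +
        ((t : ℝ) : ℂ) • (gmap ι (ev (eC s)) (ev_cont _) (g' y)).1).det ≠ 0 := by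
  let e (i j : ι) : C(Y × I, ℂ) := ⟨fun q => ((g (q.2, q.1)).1 - 1) i j,
    ((Units.continuous_val.comp (g.continuous.comp continuous_swap)).sub
      continuous_const).matrix_elem i j⟩
  let h : C(Y, Matrix ι ι C(I, ℂ)) := ⟨fun y => Matrix.of fun i j => (e i j).curry y,
    continuous_matrix fun i j => (e i j).curry.continuous⟩
  have hh : ∀ y i j s, h y i j s = ((g (s, y)).1 - 1) i j := fun y i j s => rfl
  obtain ⟨n, d, χ, hd, hχ, hu⟩ := matrix_approx_unit h (wienerLoops ι : Set _)
    (fun y => wienerLoops_dense _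
      (fun i j => by rw [hh, h0, Units.val_one, sub_self]; rfl)
      (fun i j => by rw [hh, h1, Units.val_one, sub_self]; rfl)) (fun y => by
      rw [Matrix.isUnit_iff_isUnit_det, ContinuousMap.isUnit_iff_forall_isUnit]
      intro s
      have e1 : (1 + h y).det s = ((1 + h y).map (evI s)).det :=
        (evI s).map_det _
      have e2 : (1 + h y).map (evI s) = (g (s, y)).1 := by
        change (evI s).mapMatrix (1 + h y) = _
        rw [map_add, map_one]
        have : (evI s).mapMatrix (h y) = (g (s, y)).1 - 1 := rfl
        rw [this, add_sub_cancel]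
      rw [e1, e2, ← Matrix.isUnit_iff_isUnit_det]
      exact (g (s, y)).isUnit)
  choose a ha had using hd
  let M : Y → Matrix ι ι WW := fun y => 1 + ∑ i, ((χ i y : ℝ) : ℂ) • a i
  have hM : Continuous M := by
    refine continuous_const.add (continuous_finsetSum _ fun i _ => ?_)
    exact (Complex.continuous_ofReal.comp (χ i).continuous).smul continuous_const
  have hMev : ∀ z y, (M y).map (ev z) = 1 + ∑ i, ((χ i y : ℝ) : ℂ) • (a i).map (ev z) := by
    intro z y
    change (ev z).mapMatrix (M y) = _
    simp only [M]
    rw [map_add, map_one, map_sum]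
    congr 1
    refine Finset.sum_congr rfl fun i _ => ?_
    ext k l
    exact ev_smul _ _ _
  have hval : ∀ (t : I) s y, ((1 - ((t : ℝ) : ℂ)) • (g (s, y)).1 +
        ((t : ℝ) : ℂ) • (M y).map (ev (eC s))).det ≠ 0 := by
    intro t s y
    have h1 := (hu t y).map (evI s).mapMatrix
    rw [← isUnit_iff_ne_zero, ← Matrix.isUnit_iff_isUnit_det]
    convert h1 using 1
    have e2 : (evI s).mapMatrix (h y) = (g (s, y)).1 - 1 := rfl
    have e3 : ∀ (c : ℂ) (d : Matrix ι ι C(I, ℂ)), (evI s).mapMatrix (c • d)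
      = c • (evI s).mapMatrix d := fun _ _ => rfl
    have e4 : ∀ i, (evI s).mapMatrix (d i) = (a i).map (ev (eC s)) := by
      intro i
      ext k l
      exact had i s k l
    rw [map_add, map_add, map_one, e3, e3, map_sum, e2, hMev]
    simp only [e3, e4]
    module
  have hMu : ∀ y, IsUnit (M y) := by
    intro y
    refine wiener _ fun z => ?_
    obtain ⟨s, rfl⟩ := eC_surj z
    simpa using hval 1 s y
  refine ⟨bMk M hM hMu, fun y => ?_, fun y hy => ?_, fun t s y => ?_⟩
  · refine Units.ext ?_
    rw [gmap_val, bMk_val, hMev]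
    simp [ha]
  · refine Units.ext ?_
    rw [bMk_val]
    have : h y = 0 := by
      ext i j s
      rw [hh, hy, Units.val_one, sub_self]; rfl
    simp [M, hχ y this]
  · rw [gmap_val, bMk_val]
    exact hval t s y
end

/-! ### Bott periodicity -/

theorem gmap_joint_comp {ι : Type} [Fintype ι] [DecidableEq ι] {R R' : Type*} [NormedRing R]
    [NormedRing R'] {Z Y : Type*} [TopologicalSpace Z] [TopologicalSpace Y] (φ : Z → R →+* R')
    (hφ : ∀ z, Continuous (φ z)) (hj : Continuous fun q : Z × R => φ q.1 q.2) (z : Y → Z)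
    (hz : Continuous z) (F : Y → (Matrix ι ι R)ˣ) (hF : Continuous F) :
    Continuous fun y => gmap ι (φ (z y)) (hφ (z y)) (F y) :=
  gmap_joint (fun y => φ (z y)) (fun y => hφ (z y))
    (hj.comp ((hz.comp continuous_fst).prodMk continuous_snd)) F hF

section Loops
variable {ι : Type} [Fintype ι] [DecidableEq ι] {Y : Type*} [TopologicalSpace Y]

/-- Evaluation of an invertible matrix over the Wiener algebra at a point of the circle. -/
abbrev evG (ι : Type) [Fintype ι] [DecidableEq ι] (z : Circle) : (Matrix ι ι WW)ˣ →ₜ* GLC ι :=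
  gmap ι (ev z) (ev_cont z)

/-- Relative maps into the invertible matrices over the Wiener algebra that are `1` at the
basepoint of the circle. -/
def OmE (ι : Type) [Fintype ι] [DecidableEq ι] (B : Set Y) : Subgroup (Om B (Matrix ι ι WW)ˣ) where
  carrier := {b | ∀ y, evG ι 1 (b.1 y) = 1}
  mul_mem' {a b} ha hb y := by
    change evG ι 1 (a.1 y * b.1 y) = 1
    rw [map_mul, ha, hb, one_mul]
  one_mem' y := map_one _
  inv_mem' {a} ha y := by
    change evG ι 1 (a.1 y)⁻¹ = 1
    rw [map_inv, ha, inv_one]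

theorem evG_joint (b : C(Y, (Matrix ι ι WW)ˣ)) :
    Continuous fun q : I × Y => evG ι (eC q.1) (b q.2) := by
  exact gmap_joint_comp ev ev_cont ev_joint (fun q : I × Y => eC q.1)
    (eC_cont.comp continuous_fst) (fun q => b q.2) (b.continuous.comp continuous_snd)

/-- A family of matrices over the Wiener algebra as a family of loops. -/
def loopHom (B : Set Y) : OmE ι B →* Om (dI B) (GLC ι) where
  toFun b := ⟨⟨fun q => evG ι (eC q.1) (b.1.1 q.2), evG_joint _⟩, by
    rintro ⟨s, y⟩ (h | h | h)
    · simp only at h; subst h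
      change evG ι (eC 0) (b.1.1 y) = 1
      rw [eC_zero]; exact b.2 y
    · simp only at h; subst h
      change evG ι (eC 1) (b.1.1 y) = 1
      rw [eC_one]; exact b.2 y
    · change evG ι (eC s) (b.1.1 y) = 1
      rw [b.1.2 y h, map_one]⟩
  map_one' := by
    refine Subtype.ext (ContinuousMap.ext fun q => ?_)
    exact map_one (evG ι (eC q.1))
  map_mul' a b := by
    refine Subtype.ext (ContinuousMap.ext fun q => ?_)
    exact map_mul (evG ι (eC q.1)) (a.1.1 q.2) (b.1.1 q.2)

theorem loopHom_apply (B : Set Y) (b : OmE ι B) (s : I) (y : Y) :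
    (loopHom B b).1 (s, y) = evG ι (eC s) (b.1.1 y) := rfl

/-- Every loop of matrices is homotopic to one with absolutely convergent Fourier series. -/
theorem loop_surj [CompactSpace Y] (B : Set Y) (g : Om (dI B) (GLC ι)) :
    ∃ b : OmE ι B, g.1.HomotopicRel (loopHom B b).1 (dI B) := by
  obtain ⟨g', he, h1, hd⟩ := wiener_approx g.1 (fun y => g.2 _ (Or.inl rfl))
    (fun y => g.2 _ (Or.inr (Or.inl rfl)))
  let b : OmE ι B := ⟨⟨g', fun y hy => h1 y fun s => g.2 _ (Or.inr (Or.inr hy))⟩, he⟩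
  have hb : ∀ s y, (loopHom B b).1 (s, y) = evG ι (eC s) (g' y) := fun s y => rfl
  refine ⟨b, gl_htpy (fun q => (1 - ((q.1 : ℝ) : ℂ)) • (g.1 q.2).1 +
    ((q.1 : ℝ) : ℂ) • ((loopHom B b).1 q.2).1) ?_ (fun q => hd _ _ _) ?_ ?_ ?_⟩
  · have hg := Units.continuous_val.comp (g.1.continuous.comp (continuous_snd (X := I)))
    have hl := Units.continuous_val.comp ((loopHom B b).1.continuous.comp (continuous_snd (X := I)))
    have ht : Continuous fun q : I × (I × Y) => ((q.1 : ℝ) : ℂ) := by fun_prop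
    exact ((continuous_const.sub ht).smul hg).add (ht.smul hl)
  · intro x; simp
  · intro x; simp
  · intro t a ha
    rw [g.2 a ha, (loopHom B b).2 a ha, ← add_smul]; simp

/-- A family over the Wiener algebra whose family of loops is null homotopic is null homotopic over
the Wiener algebra. -/
theorem loop_inj [CompactSpace Y] (B : Set Y) (b : OmE ι B)
    (h : (1 : C(I × Y, GLC ι)).HomotopicRel (loopHom B b).1 (dI B)) :
    (1 : C(Y, (Matrix ι ι WW)ˣ)).HomotopicRel b.1.1 B := by
  obtain ⟨H, h0, h1, hA⟩ := null_iff.1 h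
  let g : C(I × (I × Y), GLC ι) := ⟨fun q => H (q.2.1, (q.1, q.2.2)), by fun_prop⟩
  obtain ⟨g', he, hg1, hd⟩ := wiener_approx g (fun y => hA _ _ (Or.inl rfl))
    (fun y => hA _ _ (Or.inr (Or.inl rfl)))
  have hB : ∀ u, ∀ y ∈ B, g' (u, y) = 1 := fun u y hy => hg1 _ fun s => hA _ _ (Or.inr (Or.inr hy))
  let m : C(Y, (Matrix ι ι WW)ˣ) := ⟨fun y => g' (1, y), by fun_prop⟩
  have hm1 : (1 : C(Y, (Matrix ι ι WW)ˣ)).HomotopicRel m B := by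
    refine htpy_of g' g'.continuous (fun x => hg1 _ fun s => h0 _) (fun x => rfl) hB
  refine hm1.trans (b_htpy (fun q => ((q.1 : ℝ) : ℂ) • (b.1.1 q.2).1 +
    (1 - ((q.1 : ℝ) : ℂ)) • (m q.2).1) ?_ ?_ ?_ ?_ ?_)
  · have hg := Units.continuous_val.comp (b.1.1.continuous.comp (continuous_snd (X := I)))
    have hl := Units.continuous_val.comp (m.continuous.comp (continuous_snd (X := I)))
    have ht : Continuous fun q : I × Y => ((q.1 : ℝ) : ℂ) := by fun_prop
    exact (ht.smul hg).add ((continuous_const.sub ht).smul hl)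
  · rintro ⟨t, y⟩
    refine wiener _ fun z => ?_
    obtain ⟨s, rfl⟩ := eC_surj z
    have := hd (unitInterval.symm t) s (1, y)
    have hgs : g (s, (1, y)) = evG ι (eC s) (b.1.1 y) := h1 _
    rw [hgs] at this
    convert this using 2
    ext k l
    simp [m, ev_smul, -Complex.coe_smul]
  · intro x; simp
  · intro x; simp
  · intro t a ha
    have h2 : m a = 1 := hB 1 a ha
    simp only
    rw [h2, b.1.2 a ha, ← add_smul]; simp

end Loops

section Rotation
variable {η : Type} [Fintype η] [DecidableEq η]

theorem idem_mul {Q : Type*} [Ring Q] {E a b : Q} (hE : E * E = E) (ha : a * E = E * a) :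
    (1 + E * (a - 1)) * (1 + E * (b - 1)) = 1 + E * (a * b - 1) := by
  have h : E * (a - 1) * (E * (b - 1)) = E * ((a - 1) * (b - 1)) := by
    calc E * (a - 1) * (E * (b - 1)) = E * (a * E - E) * (b - 1) := by noncomm_ring
      _ = E * E * ((a - 1) * (b - 1)) - 0 := by rw [ha]; noncomm_ring
      _ = _ := by rw [hE, sub_zero]
  calc (1 + E * (a - 1)) * (1 + E * (b - 1))
      = 1 + E * (a - 1) + E * (b - 1) + E * (a - 1) * (E * (b - 1)) := by noncomm_ring
    _ = _ := by rw [h]; noncomm_ring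

/-- Compression of a unit to the range of an idempotent commuting with it. -/
def idemU {Q : Type*} [Ring Q] {E : Q} (hE : E * E = E) (a : Qˣ) (ha : a.1 * E = E * a.1) : Qˣ where
  val := 1 + E * (a.1 - 1)
  inv := 1 + E * (a⁻¹.1 - 1)
  val_inv := by rw [idem_mul hE ha]; simp
  inv_val := by
    rw [idem_mul hE ?_]
    · simp
    · exact (Commute.units_inv_left (u := a) (a := E) ha).eq

/-- If `S' * S = 1`, then `1 + ((stab v) - 1) (1 - S S')` is joined to `1` by invertible matrices
which `φ` sends to `1`. The path rotates the range of `S` against the second summand. -/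
theorem rotation {R : Type} [NormedRing R] [NormedAlgebra ℂ R] {S S' : R} (hS : S' * S = 1)
    (φ : R →+* ℂ) (hφ : Continuous φ) (hφj : ∀ z, φ (algebraMap ℂ R z) = z)
    {X : Type*} [TopologicalSpace X] (v : C(X, GLC η)) :
    ∃ F : C(I × X, (Matrix (η ⊕ η) (η ⊕ η) R)ˣ), (∀ x, F (0, x) = 1) ∧
      (∀ t x, v x = 1 → F (t, x) = 1) ∧ (∀ q, gmap (η ⊕ η) φ hφ (F q) = 1) ∧
      ∀ x, (F (1, x)).1 = 1 + ((stab η η (v x)).1 - 1).map (fun z => z • (1 - S * S')) := by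
  have hjc : Continuous (algebraMap ℂ R) := continuous_algebraMap ℂ R
  let j : ℂ →+* R := algebraMap ℂ R
  let D : GLC η →ₜ* GLC (η ⊕ η) :=
    { toFun := fun g => ⟨Matrix.fromBlocks g.1 0 0 g.1, Matrix.fromBlocks g⁻¹.1 0 0 g⁻¹.1,
        by simp [Matrix.fromBlocks_multiply], by simp [Matrix.fromBlocks_multiply]⟩
      map_one' := Units.ext (by simp)
      map_mul' := fun a b => Units.ext (by simp [Matrix.fromBlocks_multiply])
      continuous_toFun := by
        rw [Units.continuous_iff]
        exact ⟨Continuous.matrix_fromBlocks Units.continuous_val continuous_const continuous_const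
          Units.continuous_val, Continuous.matrix_fromBlocks Units.continuous_coe_inv
          continuous_const continuous_const Units.continuous_coe_inv⟩ }
  let τ : GLC η →ₜ* (Matrix (η ⊕ η) (η ⊕ η) R)ˣ := (gmap (η ⊕ η) j hjc).comp D
  have hτ : ∀ g, (τ g).1 = Matrix.fromBlocks (g.1.map j) 0 0 (g.1.map j) := fun g => by
    change (Matrix.fromBlocks g.1 0 0 g.1).map j = _
    simp [Matrix.fromBlocks_map]
  let x0 : Matrix (η ⊕ η) η R := Matrix.fromRows (Matrix.diagonal fun _ => S) 0
  let x1 : Matrix (η ⊕ η) η R := Matrix.fromRows 0 1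
  let y0 : Matrix η (η ⊕ η) R := Matrix.fromCols (Matrix.diagonal fun _ => S') 0
  let y1 : Matrix η (η ⊕ η) R := Matrix.fromCols 0 1
  have h00 : y0 * x0 = 1 := by
    simp [y0, x0, Matrix.fromCols_mul_fromRows, Matrix.diagonal_mul_diagonal, hS]
  have h01 : y0 * x1 = 0 := by simp [y0, x1, Matrix.fromCols_mul_fromRows]
  have h10 : y1 * x0 = 0 := by simp [y1, x0, Matrix.fromCols_mul_fromRows]
  have h11 : y1 * x1 = 1 := by simp [y1, x1, Matrix.fromCols_mul_fromRows]
  have hcomm : ∀ (g : Matrix η η ℂ) (a : R), g.map j * Matrix.diagonal (fun _ => a) =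
      Matrix.diagonal (fun _ => a) * g.map j := by
    intro g a
    ext k l
    simp only [Matrix.mul_diagonal, Matrix.diagonal_mul, Matrix.map_apply]
    exact Algebra.commutes _ _
  let c : I → ℂ := fun t => ((Real.sin (Real.pi * t / 2) : ℝ) : ℂ)
  let s : I → ℂ := fun t => ((Real.cos (Real.pi * t / 2) : ℝ) : ℂ)
  have hcs : ∀ t, c t * c t + s t * s t = 1 := by
    intro t
    have := Real.sin_sq_add_cos_sq (Real.pi * t / 2)
    simp only [c, s]
    rw [← pow_two, ← pow_two]
    exact_mod_cast this
  have hc : Continuous c := by fun_prop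
  have hs : Continuous s := by fun_prop
  let x : I → Matrix (η ⊕ η) η R := fun t => c t • x0 + s t • x1
  let y : I → Matrix η (η ⊕ η) R := fun t => c t • y0 + s t • y1
  have hyx : ∀ t, y t * x t = 1 := by
    intro t
    simp only [x, y, Matrix.add_mul, Matrix.mul_add, Matrix.smul_mul, Matrix.mul_smul, h00, h01,
      h10, h11, smul_zero, add_zero, zero_add, smul_smul]
    rw [← add_smul, hcs, one_smul]
  let E : I → Matrix (η ⊕ η) (η ⊕ η) R := fun t => 1 - x t * y t
  have hE : ∀ t, E t * E t = E t := by
    intro t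
    have h2 : x t * y t * (x t * y t) = x t * y t := by
      rw [Matrix.mul_assoc, ← Matrix.mul_assoc (y t), hyx, Matrix.one_mul]
    simp only [E]
    rw [sub_mul, mul_sub, mul_sub, one_mul, one_mul, mul_one, h2, sub_self, sub_zero]
  have hx : ∀ t g, (τ g).1 * x t = x t * g.1.map j := by
    intro t g
    rw [hτ]
    simp only [x, x0, x1, Matrix.mul_add, Matrix.add_mul, Matrix.mul_smul, Matrix.smul_mul,
      Matrix.fromBlocks_mul_fromRows, Matrix.fromRows_mul, hcomm]
    simp
  have hy : ∀ t g, y t * (τ g).1 = g.1.map j * y t := by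
    intro t g
    rw [hτ]
    simp only [y, y0, y1, Matrix.mul_add, Matrix.add_mul, Matrix.mul_smul, Matrix.smul_mul,
      Matrix.fromCols_mul_fromBlocks, Matrix.mul_fromCols, hcomm]
    simp
  have hτE : ∀ t g, (τ g).1 * E t = E t * (τ g).1 := by
    intro t g
    simp only [E, mul_sub, sub_mul, one_mul, mul_one]
    rw [← Matrix.mul_assoc, hx, Matrix.mul_assoc, ← hy, Matrix.mul_assoc]
  have hEc : Continuous E := by
    refine continuous_const.sub (Continuous.matrix_mul ?_ ?_)
    · exact (hc.smul continuous_const).add (hs.smul continuous_const)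
    · exact (hc.smul continuous_const).add (hs.smul continuous_const)
  let P : I × X → (Matrix (η ⊕ η) (η ⊕ η) R)ˣ := fun q => idemU (hE q.1) (τ (v q.2)) (hτE _ _)
  have hτc : Continuous fun q : I × X => τ (v q.2) :=
    τ.continuous_toFun.comp (v.continuous.comp continuous_snd)
  have hPc : Continuous P := by
    rw [Units.continuous_iff]
    constructor
    · exact continuous_const.add ((hEc.comp continuous_fst).mul
        ((Units.continuous_val.comp hτc).sub continuous_const))
    · exact continuous_const.add ((hEc.comp continuous_fst).mul
        ((Units.continuous_coe_inv.comp hτc).sub continuous_const))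
  have hP : ∀ q, (P q).1 = 1 + E q.1 * ((τ (v q.2)).1 - 1) := fun q => rfl
  let Gj := gmap (η ⊕ η) j hjc
  let Gφ := gmap (η ⊕ η) φ hφ
  have hφGj : ∀ g, Gφ (Gj g) = g := fun g => Units.ext (by ext k l; exact hφj _)
  have hexp : ∀ Z T : Matrix (η ⊕ η) (η ⊕ η) R, 1 + (1 - Z) * (T - 1) = T + Z - Z * T := by
    intro Z T; noncomm_ring
  have hP0 : ∀ p, P (0, p) = Gj (stab η η (v p)) := by
    intro p
    refine Units.ext ?_
    rw [hP, hτ]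
    change _ = (stab η η (v p)).1.map j
    rw [stab_val, Matrix.fromBlocks_map]
    have e : E 0 = 1 - Matrix.fromBlocks 0 0 0 1 := by
      rw [show E 0 = 1 - x1 * y1 by simp [E, x, y, c, s], Matrix.fromRows_mul_fromCols]; simp
    rw [e, hexp, sub_eq_iff_eq_add, Matrix.fromBlocks_multiply, Matrix.fromBlocks_add,
      Matrix.fromBlocks_add]
    simp [add_comm]
  have hP1 : ∀ p, (P (1, p)).1 = Matrix.fromBlocks
      (1 + ((v p).1 - 1).map (fun z => z • (1 - S * S'))) 0 0 ((v p).1.map j) := by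
    intro p
    rw [hP, hτ]
    have e : E 1 = 1 - Matrix.fromBlocks (Matrix.diagonal fun _ => S * S') 0 0 0 := by
      rw [show E 1 = 1 - x0 * y0 by simp [E, x, y, c, s], Matrix.fromRows_mul_fromCols]; simp
    rw [e, hexp, sub_eq_iff_eq_add, Matrix.fromBlocks_multiply, Matrix.fromBlocks_add,
      Matrix.fromBlocks_add]
    simp only [Matrix.zero_mul, Matrix.mul_zero, add_zero]
    congr 1
    ext k l
    simp only [Matrix.add_apply, Matrix.map_apply, Matrix.sub_apply, Matrix.diagonal_mul,
      Matrix.diagonal_apply, Matrix.one_apply, j, Algebra.algebraMap_eq_smul_one]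
    split_ifs
    · simp only [mul_smul_comm, mul_one]; module
    · simp only [mul_smul_comm, mul_one]; module
  let F : C(I × X, (Matrix (η ⊕ η) (η ⊕ η) R)ˣ) := ⟨fun q => P q * (Gj (Gφ (P q)))⁻¹,
    hPc.mul ((Gj.continuous_toFun.comp (Gφ.continuous_toFun.comp hPc)).inv)⟩
  have hF : ∀ q, F q = P q * (Gj (Gφ (P q)))⁻¹ := fun q => rfl
  refine ⟨F, fun x => ?_, fun t x hx => ?_, fun q => ?_, fun x => ?_⟩
  · rw [hF, hP0, hφGj, mul_inv_cancel]
  · have : P (t, x) = 1 := Units.ext (by rw [hP, hx, map_one]; simp)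
    rw [hF, this]; simp
  · rw [hF, map_mul, map_inv]
    change Gφ (P q) * (Gφ (Gj (Gφ (P q))))⁻¹ = 1
    rw [hφGj, mul_inv_cancel]
  · have hφz : ∀ z : ℂ, φ (z • (1 - S * S')) = 0 := by
      intro z
      rw [Algebra.smul_def, map_mul, map_sub, map_one, map_mul, mul_comm (φ S), ← map_mul, hS,
        map_one, sub_self, mul_zero]
    have h1 : (Gj (Gφ (P (1, x)))).1 = Matrix.fromBlocks 1 0 0 ((v x).1.map j) := by
      change ((P (1, x)).1.map φ).map j = _
      rw [hP1, Matrix.fromBlocks_map, Matrix.fromBlocks_map]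
      congr 1
      · ext k l
        simp only [Matrix.map_apply, Matrix.add_apply, map_add, hφz, add_zero, Matrix.one_apply]
        split_ifs <;> simp
      · simp
      · simp
      · ext k l
        exact congrArg j (hφj _)
    rw [hF, Units.val_mul, Units.mul_inv_eq_iff_eq_mul, h1, hP1, stab_val]
    have h2 : (1 : Matrix (η ⊕ η) (η ⊕ η) R) +
        (Matrix.fromBlocks (v x).1 0 0 1 - 1).map (fun z => z • (1 - S * S')) =
        Matrix.fromBlocks (1 + ((v x).1 - 1).map (fun z => z • (1 - S * S'))) 0 0 1 := by
      ext (k | k) (l | l) <;> simp [Matrix.one_apply]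
    rw [h2, Matrix.fromBlocks_multiply]
    simp

end Rotation

section Bott
variable {ι : Type} [Fintype ι] [DecidableEq ι] {X : Type*} [TopologicalSpace X]

/-- The quotient map from matrices over the Toeplitz algebra to matrices over the Wiener algebra. -/
abbrev qG (ι : Type) [Fintype ι] [DecidableEq ι] : (Matrix ι ι TT)ˣ →ₜ* (Matrix ι ι WW)ˣ :=
  gmap ι qq qq_cont

/-- The paths of matrices over the Toeplitz algebra whose image is `1` at the basepoint of the
circle. -/
def PthE (ι : Type) [Fintype ι] [DecidableEq ι] (A : Set X) : Subgroup (Pth (qG ι) A) where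
  carrier := {F | ∀ q, evG ι 1 (qG ι (F.1 q)) = 1}
  mul_mem' {a b} ha hb q := by
    change evG ι 1 (qG ι (a.1 q * b.1 q)) = 1
    rw [map_mul, map_mul, ha, hb, one_mul]
  one_mem' q := by
    change evG ι 1 (qG ι 1) = 1
    rw [map_one, map_one]
  inv_mem' {a} ha q := by
    change evG ι 1 (qG ι (a.1 q)⁻¹) = 1
    rw [map_inv, map_inv, ha, inv_one]

def PthE.base (A : Set X) : PthE ι A →* OmE ι (dI A) :=
  ((Pth.base (qG ι) A).comp (PthE ι A).subtype).codRestrict (OmE ι (dI A)) fun F => F.2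

theorem PthE.base_apply (A : Set X) (F : PthE ι A) :
    (PthE.base A F).1 = Pth.base (qG ι) A F.1 := rfl

/-- Up to homotopy, every double loop in `GL(ℂ)` is the symbol of a path over the Toeplitz algebra. -/
theorem bott_loop_surj [CompactSpace X] (A : Set X) :
    Function.Surjective ((Pi.mk (dI (dI A))).comp ((loopHom (dI A)).comp (PthE.base (ι := ι) A))) := by
  intro g
  obtain ⟨g, rfl⟩ := Pi.mk_surj _ g
  obtain ⟨b, hb⟩ := loop_surj (dI A) g
  obtain ⟨F, hF⟩ := Pth.base_surj (qq_locSec ι) b.1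
  refine ⟨⟨F, fun q => ?_⟩, ?_⟩
  · have h1 := b.2 q
    rw [← hF] at h1
    exact h1
  · have : PthE.base A ⟨F, fun q => by
        have h1 := b.2 q
        rw [← hF] at h1
        exact h1⟩ = b := Subtype.ext hF
    change Pi.mk _ (loopHom (dI A) (PthE.base A _)) = _
    rw [this]
    exact (Pi.mk_eq.2 hb).symm

/-- The endpoint of a path over the Toeplitz algebra is trivial exactly when its symbol is: a path
with trivial endpoint is a loop, and loops which lift to the Toeplitz algebra are null homotopic. -/
theorem bott_ker [CompactSpace X] {k : ℕ} (hX : Retr X k) (hk : k + 2 < 2 * Fintype.card ι)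
    (A : Set X) (F : PthE ι A) :
    Pi.mk A (Pth.fin (qG ι) A F.1) = 1 ↔ Pi.mk _ (loopHom (dI A) (PthE.base A F)) = 1 := by
  rw [Pi.mk_eq_one, Pi.mk_eq_one]
  constructor
  · intro h
    obtain ⟨F', hF'⟩ := Pth.exists_loop F.1 h
    refine loop_null (hX.prodI.prodI) hk F'.1 (fun y hy => F'.2 y hy) (fun y => ?_) _ fun s y => ?_
    · exact (congrArg (evG ι 1) (hF' y)).trans (F.2 y)
    · exact (congrArg (evG ι (eC s)) (hF' y)).symm
  · intro h
    exact Pth.fin_null (qq_locSec ι) F.1 (loop_inj (dI A) (PthE.base A F) h)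

end Bott

section Bott2
variable {η : Type} [Fintype η] [DecidableEq η] {X : Type*} [TopologicalSpace X]

theorem ev_qq_algebraMap (z : ℂ) : ev 1 (qq (algebraMap ℂ TT z)) = z := by
  rw [Algebra.algebraMap_eq_smul_one, qq_smul, map_one, ev_smul, map_one, mul_one]

/-- Up to homotopy, every map into the kernel of the symbol map is the endpoint of a path: compress it
to the corner, where the rotation of `rotation` contracts it over the Toeplitz algebra. -/
theorem bott_fin_surj [CompactSpace X] {k : ℕ} (hX : Retr X k) (hk : k < 2 * Fintype.card η)
    (A : Set X) :
    Function.Surjective ((Pi.mk A).comp ((Pth.fin (qG (η ⊕ η)) A).comp (PthE (η ⊕ η) A).subtype)) := by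
  intro u
  have hk2 : k < 2 * Fintype.card (η ⊕ η) := by rw [Fintype.card_sum]; omega
  obtain ⟨u, rfl⟩ := (corner_bij eT_units (kerp (qG (η ⊕ η))) mem_kerp_qq hX hk2 A).2 u
  obtain ⟨v, rfl⟩ := (stab_bij (ι := η) (κ := η) hX hk A).2 u
  obtain ⟨v, rfl⟩ := Pi.mk_surj _ v
  have hS : (L1.of (⟨0, 1⟩ : Bic) 1 : TT) * L1.of ⟨1, 0⟩ 1 = 1 := by
    rw [L1.of_mul, ← L1.of_one_one, Bic.mul_def, mul_one]
    rfl
  obtain ⟨F, h0, hA, h1, hend⟩ := rotation (η := η) hS ((ev 1).comp qq) ((ev_cont 1).comp qq_cont)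
    ev_qq_algebraMap v.1
  have heT : (1 : TT) - L1.of ⟨1, 0⟩ 1 * L1.of (⟨0, 1⟩ : Bic) 1 = eT 0 0 := by
    rw [L1.of_mul, eT, ← L1.of_one_one, Bic.mul_def, mul_one]
    rfl
  have hfin : ∀ x, F (1, x) = corner eT_units (stab η η (v.1 x)) := fun x => by
    refine Units.ext ?_
    rw [hend, corner_val, heT]
  let P : Pth (qG (η ⊕ η)) A := ⟨F, h0, fun t a ha => hA t a (v.2 a ha), fun x => by
    have : corner eT_units (stab η η (v.1 x)) ∈ kerp (qG (η ⊕ η)) :=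
      (cornerL eT_units (kerp (qG (η ⊕ η))) mem_kerp_qq (stab η η (v.1 x))).2
    rw [hfin]; exact this⟩
  refine ⟨⟨P, h1⟩, ?_⟩
  change Pi.mk A (Pth.fin (qG (η ⊕ η)) A P) = _
  rw [Pi.map_mk, Pi.map_mk]
  congr 1
  refine Subtype.ext (ContinuousMap.ext fun x => Subtype.ext ?_)
  exact hfin x

/-- Bott periodicity in the stable range. -/
theorem bott [CompactSpace X] {k : ℕ} (hX : Retr X k) (hk : k < 2 * Fintype.card η)
    (A : Set X) : Nonempty (Pi (dI (dI A)) (GLC (η ⊕ η)) ≃* Pi A (GLC η)) := by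
  have hk2 : k < 2 * Fintype.card (η ⊕ η) := by rw [Fintype.card_sum]; omega
  have hk3 : k + 2 < 2 * Fintype.card (η ⊕ η) := by rw [Fintype.card_sum]; omega
  obtain ⟨e1⟩ := equiv_of_ker_eq _ _ (bott_loop_surj (ι := η ⊕ η) A) (bott_fin_surj hX hk A)
    (fun F => (bott_ker hX hk3 A F).symm)
  let e2 := MulEquiv.ofBijective _
    (corner_bij eT_units (kerp (qG (η ⊕ η))) mem_kerp_qq hX hk2 A)
  let e3 := MulEquiv.ofBijective _ (stab_bij (ι := η) (κ := η) hX hk A)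
  exact ⟨e1.trans (e2.symm.trans e3.symm)⟩

end Bott2

/-! ### Homotopy groups of the stable general linear groups -/

section Cover
variable {V : Type*} [AddCommGroup V] [Module ℝ V] [TopologicalSpace V] [IsTopologicalAddGroup V]
  [ContinuousSMul ℝ V]
variable {C : Type*} [Group C] [TopologicalSpace C] [IsTopologicalGroup C]
variable {X : Type*} [TopologicalSpace X]

/-- Scaling in a vector space written multiplicatively. -/
def scal (t : ℝ) (v : Multiplicative V) : Multiplicative V :=
  Multiplicative.ofAdd (t • Multiplicative.toAdd v)

theorem scal_cont {Y : Type*} [TopologicalSpace Y] {t : Y → ℝ} {v : Y → Multiplicative V}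
    (ht : Continuous t) (hv : Continuous v) : Continuous fun y => scal (t y) (v y) :=
  continuous_ofAdd.comp (ht.smul (continuous_toAdd.comp hv))

@[simp] theorem scal_zero (v : Multiplicative V) : scal 0 v = 1 := by simp [scal]
@[simp] theorem scal_one (v : Multiplicative V) : scal 1 v = v := by simp [scal]
@[simp] theorem scal_id (t : ℝ) : scal t (1 : Multiplicative V) = 1 := by simp [scal]

theorem cover_equiv [CompactSpace X] (p : Multiplicative V →ₜ* C) (hp : LocSec p) (A : Set X) :
    Nonempty (Pi (dI A) C ≃* Pi A (kerp p)) := by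
  refine equiv_of_ker_eq ((Pi.mk _).comp (Pth.base p A)) ((Pi.mk _).comp (Pth.fin p A)) ?_ ?_ ?_
  · exact (Pi.mk_surj _).comp (Pth.base_surj hp)
  · refine (Pi.mk_surj _).comp fun f => ?_
    refine ⟨⟨⟨fun q => scal (q.1 : ℝ) (f.1 q.2).1, scal_cont (by fun_prop) (by fun_prop)⟩,
      fun x => ?_, fun t a ha => ?_, fun x => ?_⟩, ?_⟩
    · exact scal_zero _
    · change scal (t : ℝ) (f.1 a).1 = 1
      rw [f.2 a ha]; exact scal_id _
    · change p (scal 1 (f.1 x).1) = 1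
      rw [scal_one]; exact (f.1 x).2
    · refine Subtype.ext (ContinuousMap.ext fun x => Subtype.ext ?_)
      exact scal_one _
  · intro F
    change Pi.mk _ (Pth.base p A F) = 1 ↔ Pi.mk _ (Pth.fin p A F) = 1
    rw [Pi.mk_eq_one, Pi.mk_eq_one]
    refine ⟨Pth.fin_null hp F, fun h => ?_⟩
    obtain ⟨F', hF'⟩ := Pth.exists_loop F h
    refine null_iff.2 ⟨⟨fun q => p (scal (q.1 : ℝ) (F'.1 q.2)),
      p.continuous_toFun.comp (scal_cont (by fun_prop) (by fun_prop))⟩, fun x => ?_, fun x => ?_,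
      fun t a ha => ?_⟩
    · change p (scal 0 _) = 1
      rw [scal_zero, map_one]
    · change p (scal 1 _) = _
      rw [scal_one, hF', Pth.base_apply]
    · change p (scal (t : ℝ) (F'.1 a)) = 1
      rw [F'.2 a ha, scal_id, map_one]

theorem pi_point [Subsingleton X] (p : Multiplicative V →ₜ* C) (hp : Function.Surjective p) :
    Subsingleton (Pi (∅ : Set X) C) := by
  refine ⟨fun a b => ?_⟩
  have key : ∀ a : Pi (∅ : Set X) C, a = 1 := by
    intro a
    obtain ⟨f, rfl⟩ := Pi.mk_surj _ a
    rw [Pi.mk_eq_one, null_iff]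
    rcases isEmpty_or_nonempty X with hX | ⟨⟨x⟩⟩
    · exact ⟨1, fun x => rfl, fun x => isEmptyElim x, fun _ _ _ => rfl⟩
    obtain ⟨w, hw⟩ := hp (f.1 x)
    refine ⟨⟨fun q => p (scal (q.1 : ℝ) w), p.continuous_toFun.comp
      (scal_cont (by fun_prop) continuous_const)⟩, fun y => ?_, fun y => ?_, fun _ _ h => h.elim⟩
    · change p (scal 0 _) = 1
      rw [scal_zero, map_one]
    · change p (scal 1 _) = _
      rw [scal_one, hw, Subsingleton.elim x y]
  rw [key a, key b]

theorem pi_discrete [PreconnectedSpace X] [DiscreteTopology C] {A : Set X} (hA : A.Nonempty) :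
    Subsingleton (Pi A C) := by
  obtain ⟨a, ha⟩ := hA
  refine ⟨fun u v => ?_⟩
  obtain ⟨f, rfl⟩ := Pi.mk_surj _ u
  obtain ⟨g, rfl⟩ := Pi.mk_surj _ v
  congr 1
  refine Subtype.ext (ContinuousMap.ext fun x => ?_)
  rw [PreconnectedSpace.constant ‹_› f.1.continuous (y := a),
    PreconnectedSpace.constant ‹_› g.1.continuous (y := a), f.2 a ha, g.2 a ha]

theorem pi_discrete_point [Unique X] [DiscreteTopology C] : Nonempty (Pi (∅ : Set X) C ≃* C) := by
  let φ : Om (∅ : Set X) C →* C :=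
    { toFun := fun f => f.1 default
      map_one' := rfl
      map_mul' := fun f g => rfl }
  refine equiv_of_ker_eq (Pi.mk _) φ (Pi.mk_surj _) (fun c => ⟨⟨ContinuousMap.const _ c,
    fun _ h => h.elim⟩, rfl⟩) fun f => ?_
  rw [Pi.mk_eq_one, null_iff]
  constructor
  · rintro ⟨H, h0, h1, -⟩
    change f.1 default = 1
    rw [← h1, ← h0 default]
    exact PreconnectedSpace.constant (α := I) inferInstance
      (f := fun t => H (t, default)) (by fun_prop)
  · intro h
    refine ⟨1, fun _ => rfl, fun x => ?_, fun _ _ h => h.elim⟩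
    rw [Subsingleton.elim x default]; exact h.symm

end Cover

/-- The boundary of the cube. -/
abbrev Bd (k : ℕ) : Set (Fin k → I) := Cube.boundary (Fin k)

theorem Bd_zero : Bd 0 = ∅ := by
  ext x; simp [Bd, Cube.boundary]

theorem Bd_nonempty (k : ℕ) : (Bd (k + 1)).Nonempty := ⟨0, 0, Or.inl rfl⟩

section
variable {C : Type*} [Group C] [TopologicalSpace C] [IsTopologicalGroup C]

theorem pi_succ (k : ℕ) : Nonempty (Pi (dI (Bd k)) C ≃* Pi (Bd (k + 1)) C) :=
  Pi.equiv_of_homeo (consHomeo k) consHomeo_mem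

theorem pi_succ_succ (k : ℕ) : Nonempty (Pi (dI (dI (Bd k))) C ≃* Pi (Bd (k + 2)) C) := by
  obtain ⟨e1⟩ := Pi.equiv_of_homeo (Γ := C) (A := dI (dI (Bd k))) (A' := dI (Bd (k + 1)))
    ((Homeomorph.refl I).prodCongr (consHomeo k)) (fun x => by
      simp only [dI, Set.mem_ofPred_eq, Homeomorph.coe_prodCongr, Prod.map_fst, Prod.map_snd,
        Homeomorph.refl_apply, id]
      rw [consHomeo_mem]; rfl)
  obtain ⟨e2⟩ := pi_succ (C := C) (k + 1)
  exact ⟨e1.trans e2⟩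

end

/-! The exponential covering of `GL₁(ℂ)`. -/

theorem glc_unit_det (w : ℂ) : Complex.exp w * Complex.exp (-w) = 1 := by
  rw [← Complex.exp_add, add_neg_cancel, Complex.exp_zero]

/-- The exponential map onto `GL₁(ℂ)`. -/
def expG : Multiplicative ℂ →ₜ* GLC Unit where
  toFun w := ⟨Matrix.of fun _ _ => Complex.exp w.toAdd, Matrix.of fun _ _ => Complex.exp (-w.toAdd),
    by ext; simp [Matrix.mul_apply, glc_unit_det],
    by ext; simp [Matrix.mul_apply, mul_comm, glc_unit_det]⟩
  map_one' := Units.ext (by ext; simp)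
  map_mul' a b := Units.ext (by ext; simp [Matrix.mul_apply, Complex.exp_add])
  continuous_toFun := by
    rw [Units.continuous_iff]
    constructor
    · exact continuous_matrix fun _ _ => Complex.continuous_exp.comp continuous_toAdd
    · exact continuous_matrix fun _ _ => Complex.continuous_exp.comp continuous_toAdd.neg

theorem expG_val (w : Multiplicative ℂ) : (expG w).1 () () = Complex.exp w.toAdd := rfl

theorem expG_eq {w : Multiplicative ℂ} {g : GLC Unit} :
    expG w = g ↔ Complex.exp w.toAdd = g.1 () () := by
  constructor
  · rintro rfl; rfl
  · intro h
    refine Units.ext ?_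
    ext
    exact h

theorem glc_unit_ne (g : GLC Unit) : g.1 () () ≠ 0 := by
  have := glc_det_ne_zero g
  rwa [Matrix.det_unique] at this

theorem expG_surj : Function.Surjective expG := fun g =>
  ⟨Multiplicative.ofAdd (Complex.log (g.1 () ())), expG_eq.2 (Complex.exp_log (glc_unit_ne g))⟩

theorem expG_locSec : LocSec expG := by
  have hc : Continuous fun g : GLC Unit => g.1 () () := Units.continuous_val.matrix_elem () ()
  refine ⟨{g | g.1 () () ∈ Complex.slitPlane}, fun g => Multiplicative.ofAdd (Complex.log (g.1 () ())),
    Complex.isOpen_slitPlane.preimage hc, ?_, ?_, ?_, ?_⟩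
  · simp
  · exact continuous_ofAdd.comp_continuousOn (hc.continuousOn.clog fun g hg => hg)
  · simp
  · intro g _
    exact expG_eq.2 (Complex.exp_log (glc_unit_ne g))

theorem mem_ker_expG {w : Multiplicative ℂ} :
    w ∈ kerp expG ↔ ∃ n : ℤ, w.toAdd = n * (2 * Real.pi * Complex.I) := by
  rw [mem_kerp, expG_eq, ← Complex.exp_eq_one_iff]
  simp

instance : DiscreteTopology (kerp expG) := by
  refine discreteTopology_of_isOpen_singleton_one ?_
  have : ({1} : Set (kerp expG)) = (fun w : kerp expG => ‖w.1.toAdd‖) ⁻¹' Set.Iio 1 := by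
    ext w
    obtain ⟨n, hn⟩ := mem_ker_expG.1 w.2
    simp only [Set.mem_singleton_iff, Set.mem_preimage, Set.mem_Iio]
    constructor
    · rintro rfl; simp
    · intro h
      have h2 : |(n : ℝ)| * (2 * Real.pi) < 1 := by
        rw [hn] at h
        simpa [abs_of_pos Real.pi_pos] using h
      have h3 : n = 0 := by
        by_contra h0
        have h4 : (1 : ℝ) ≤ |(n : ℝ)| := by exact_mod_cast Int.one_le_abs h0
        nlinarith [Real.pi_gt_three]
      refine Subtype.ext (Multiplicative.toAdd.injective ?_)
      rw [hn, h3]; simp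
  rw [this]
  exact isOpen_Iio.preimage (continuous_toAdd.comp continuous_subtype_val).norm

theorem ker_expG_equiv : Nonempty (kerp expG ≃* Multiplicative ℤ) := by
  let g : kerp expG := ⟨Multiplicative.ofAdd (2 * Real.pi * Complex.I), mem_ker_expG.2 ⟨1, by simp⟩⟩
  have hg : ∀ n : Multiplicative ℤ, (zpowersHom _ g n).1.toAdd =
      (n.toAdd : ℂ) * (2 * Real.pi * Complex.I) := by
    intro n
    rw [zpowersHom_apply]
    simp [g]
  refine ⟨(MulEquiv.ofBijective (zpowersHom _ g) ⟨fun m n h => ?_, fun w => ?_⟩).symm⟩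
  · have h1 := hg m
    rw [h, hg n] at h1
    have h2 := mul_right_cancel₀ Complex.two_pi_I_ne_zero h1
    exact Multiplicative.toAdd.injective (by exact_mod_cast h2.symm)
  · obtain ⟨n, hn⟩ := mem_ker_expG.1 w.2
    refine ⟨Multiplicative.ofAdd n, Subtype.ext (Multiplicative.toAdd.injective ?_)⟩
    rw [hg, hn]; rfl

/-- The odd homotopy groups of the general linear groups in the stable range. -/
theorem pi_gl_odd (j : ℕ) : ∀ (ι : Type) [Fintype ι] [DecidableEq ι],
    2 * j + 1 < 2 * Fintype.card ι → Nonempty (Pi (Bd (2 * j + 1)) (GLC ι) ≃* Multiplicative ℤ) := by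
  induction j with
  | zero =>
    intro ι _ _ h
    obtain ⟨e1⟩ := stab_equiv (Retr.cube 1) h (κ := Unit) (by simp) (Bd 1)
    obtain ⟨e2⟩ := pi_succ (C := GLC Unit) 0
    obtain ⟨e3⟩ := cover_equiv expG expG_locSec (Bd 0)
    have h0 : Nonempty (Pi (Bd 0) (kerp expG) ≃* kerp expG) := by
      rw [Bd_zero]; exact pi_discrete_point
    obtain ⟨e4⟩ := h0
    obtain ⟨e5⟩ := ker_expG_equiv
    exact ⟨e1.trans (e2.symm.trans (e3.trans (e4.trans e5)))⟩
  | succ j ih =>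
    intro ι _ _ h
    obtain ⟨e0⟩ := ih (Fin (j + 1)) (by simp only [Fintype.card_fin]; omega)
    obtain ⟨e1⟩ := bott (η := Fin (j + 1)) (Retr.cube (2 * j + 1)) (by simp only [Fintype.card_fin]; omega) (Bd (2 * j + 1))
    obtain ⟨e2⟩ := pi_succ_succ (C := GLC (Fin (j + 1) ⊕ Fin (j + 1))) (2 * j + 1)
    obtain ⟨e3⟩ := stab_equiv (Retr.cube (2 * j + 3)) h (κ := Fin (j + 1) ⊕ Fin (j + 1))
      (by simp; omega) (Bd (2 * j + 3))
    exact ⟨e3.trans (e2.symm.trans (e1.trans e0))⟩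

theorem subsingleton_of_equiv {G H : Type*} [Group G] [Group H] (e : G ≃* H) [Subsingleton H] :
    Subsingleton G := e.toEquiv.subsingleton

/-- The even homotopy groups of the general linear groups in the stable range. -/
theorem pi_gl_even (j : ℕ) : ∀ (ι : Type) [Fintype ι] [DecidableEq ι],
    2 * j < 2 * Fintype.card ι → Subsingleton (Pi (Bd (2 * j)) (GLC ι)) := by
  induction j with
  | zero =>
    intro ι _ _ h
    obtain ⟨e1⟩ := stab_equiv (Retr.cube 0) h (κ := Unit) (by simp) (Bd 0)
    have : Subsingleton (Pi (Bd 0) (GLC Unit)) := by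
      rw [Bd_zero]; exact pi_point expG expG_surj
    exact subsingleton_of_equiv e1
  | succ j ih =>
    intro ι _ _ h
    have := ih (Fin (j + 1)) (by simp only [Fintype.card_fin]; omega)
    obtain ⟨e1⟩ := bott (η := Fin (j + 1)) (Retr.cube (2 * j)) (by simp only [Fintype.card_fin]; omega) (Bd (2 * j))
    obtain ⟨e2⟩ := pi_succ_succ (C := GLC (Fin (j + 1) ⊕ Fin (j + 1))) (2 * j)
    obtain ⟨e3⟩ := stab_equiv (Retr.cube (2 * j + 2)) h (κ := Fin (j + 1) ⊕ Fin (j + 1))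
      (by simp; omega) (Bd (2 * j + 2))
    exact subsingleton_of_equiv (e3.trans (e2.symm.trans e1))

/-! ### The circle and the polar decomposition -/

/-- The exponential covering of the circle. -/
def expC : Multiplicative ℝ →ₜ* Circle where
  toFun w := Circle.exp w.toAdd
  map_one' := by simp
  map_mul' a b := by simp [Circle.exp_add]
  continuous_toFun := Circle.exp.continuous.comp continuous_toAdd

theorem expC_locSec : LocSec expC := by
  refine ⟨{u | (u : ℂ) ∈ Complex.slitPlane}, fun u => Multiplicative.ofAdd (Complex.arg u),
    Complex.isOpen_slitPlane.preimage continuous_subtype_val, ?_, ?_, ?_, ?_⟩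
  · simp
  · intro u hu
    exact (continuous_ofAdd.continuousAt.comp ((Complex.continuousAt_arg hu).comp
      continuous_subtype_val.continuousAt)).continuousWithinAt
  · simp
  · intro u _
    exact Circle.exp_arg u

instance : DiscreteTopology (kerp expC) := by
  apply discreteTopology_of_isOpen_singleton_one
  rw [isOpen_induced_iff]
  refine ⟨{w | |w.toAdd| < 1}, ?_, ?_⟩
  · exact isOpen_lt (continuous_abs.comp continuous_toAdd) continuous_const
  · ext ⟨w, hw⟩
    simp only [Set.mem_preimage, Set.mem_singleton_iff]
    constructor
    · intro h
      obtain ⟨m, hm⟩ := Circle.exp_eq_one.1 (show Circle.exp w.toAdd = 1 from hw)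
      replace h : |w.toAdd| < 1 := h
      rw [hm, abs_mul] at h
      have h2 : (1 : ℝ) ≤ |2 * Real.pi| := by
        rw [abs_of_pos Real.two_pi_pos]; linarith [Real.pi_gt_three]
      have hm0 : m = 0 := by
        by_contra h0
        have : (1 : ℝ) ≤ |(m : ℝ)| := by
          rw [← Int.cast_abs]; exact_mod_cast Int.one_le_abs h0
        nlinarith
      apply Subtype.ext
      rw [hm0] at hm
      simp only [Int.cast_zero, zero_mul] at hm
      exact hm
    · intro h
      have : w = 1 := congrArg Subtype.val h
      subst this
      simp

theorem pi_circle (k : ℕ) : Subsingleton (Pi (Bd (k + 2)) Circle) := by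
  obtain ⟨e1⟩ := pi_succ (C := Circle) (k + 1)
  obtain ⟨e2⟩ := cover_equiv expC expC_locSec (Bd (k + 1))
  have : Subsingleton (Pi (Bd (k + 1)) (kerp expC)) := pi_discrete (Bd_nonempty k)
  exact subsingleton_of_equiv (e1.symm.trans e2)

theorem continuous_of_closed_graph {X Y : Type*} [TopologicalSpace X] [TopologicalSpace Y]
    [CompactSpace Y] (f : X → Y) (h : IsClosed {q : X × Y | q.2 = f q.1}) : Continuous f := by
  rw [continuous_iff_isClosed]
  intro C hC
  have : f ⁻¹' C = Prod.fst '' ({q : X × Y | q.2 = f q.1} ∩ Prod.snd ⁻¹' C) := by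
    ext x
    constructor
    · intro hx; exact ⟨(x, f x), ⟨rfl, hx⟩, rfl⟩
    · rintro ⟨⟨x', y⟩, ⟨h1, h2⟩, rfl⟩
      replace h1 : y = f x' := h1
      subst h1
      exact h2
  rw [this]
  exact isClosedMap_fst_of_compactSpace _ (h.inter (hC.preimage continuous_snd))

section Polar
open scoped ComplexOrder
variable {ι : Type} [Fintype ι] [DecidableEq ι]

instance un_compact : CompactSpace (Matrix.unitaryGroup ι ℂ) := by
  suffices h : IsCompact (Matrix.unitaryGroup ι ℂ : Set (Matrix ι ι ℂ)) from
    isCompact_iff_compactSpace.1 h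
  have hK : IsCompact (Set.univ.pi fun _ : ι => Set.univ.pi fun _ : ι => Metric.closedBall (0 : ℂ) 1) :=
    isCompact_univ_pi fun _ => isCompact_univ_pi fun _ => isCompact_closedBall 0 1
  have hcl : IsClosed {M : Matrix ι ι ℂ | M * Mᴴ = 1} :=
    isClosed_eq (continuous_id.matrix_mul continuous_id.matrix_conjTranspose) continuous_const
  have : ((Matrix.unitaryGroup ι ℂ : Set (Matrix ι ι ℂ))) = {M : Matrix ι ι ℂ | M * Mᴴ = 1} := by
    ext M; exact Matrix.mem_unitaryGroup_iff
  rw [this]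
  refine hK.of_isClosed_subset hcl ?_
  · intro M hM i _ j _
    rw [mem_closedBall_zero_iff]
    exact entry_norm_bound_of_unitary (Matrix.mem_unitaryGroup_iff.2 hM) i j

theorem isClosed_psd : IsClosed {M : Matrix ι ι ℂ | M.PosSemidef} := by
  have : {M : Matrix ι ι ℂ | M.PosSemidef} = {M | Mᴴ = M} ∩
      ⋂ x : ι → ℂ, {M | 0 ≤ star x ⬝ᵥ (M *ᵥ x)} := by
    ext M
    simp only [Set.mem_ofPred_eq, Matrix.posSemidef_iff_dotProduct_mulVec, Set.mem_inter_iff,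
      Set.mem_iInter]
    rfl
  rw [this]
  refine IsClosed.inter (isClosed_eq continuous_id.matrix_conjTranspose continuous_id)
    (isClosed_iInter fun x => ?_)
  have hc : Continuous fun M : Matrix ι ι ℂ => star x ⬝ᵥ (M *ᵥ x) := by fun_prop
  simp only [Complex.nonneg_iff]
  exact (isClosed_le continuous_const (Complex.continuous_re.comp hc)).inter
    (isClosed_eq continuous_const (Complex.continuous_im.comp hc))

open scoped MatrixOrder Matrix.Norms.L2Operator in
theorem psd_sqrt_unique {P Q : Matrix ι ι ℂ} (hP : P.PosSemidef) (hQ : Q.PosSemidef)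
    (h : P * P = Q * Q) : P = Q := by
  rw [← CFC.sqrt_mul_self P hP.nonneg, h, CFC.sqrt_mul_self Q hQ.nonneg]

open scoped MatrixOrder Matrix.Norms.L2Operator in
theorem psd_sqrt_exists {P : Matrix ι ι ℂ} (hP : P.PosSemidef) :
    ∃ Q : Matrix ι ι ℂ, Q.PosSemidef ∧ Q * Q = P :=
  ⟨CFC.sqrt P, Matrix.nonneg_iff_posSemidef.1 (CFC.sqrt_nonneg P), CFC.sqrt_mul_sqrt_self P hP.nonneg⟩

theorem polar_unique {M : Matrix ι ι ℂ} (hM : M.det ≠ 0) {V W : Matrix.unitaryGroup ι ℂ}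
    (hV : ((V : Matrix ι ι ℂ)ᴴ * M).PosSemidef) (hW : ((W : Matrix ι ι ℂ)ᴴ * M).PosSemidef) :
    V = W := by
  have key : ∀ V : Matrix.unitaryGroup ι ℂ, ((V : Matrix ι ι ℂ)ᴴ * M).PosSemidef →
      ((V : Matrix ι ι ℂ)ᴴ * M) * ((V : Matrix ι ι ℂ)ᴴ * M) = Mᴴ * M := by
    intro V h
    nth_rw 1 [← h.1.eq]
    rw [Matrix.conjTranspose_mul, Matrix.conjTranspose_conjTranspose, Matrix.mul_assoc,
      ← Matrix.mul_assoc (V : Matrix ι ι ℂ)]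
    have : (V : Matrix ι ι ℂ) * (V : Matrix ι ι ℂ)ᴴ = 1 := Matrix.mem_unitaryGroup_iff.1 V.2
    rw [this, Matrix.one_mul]
  have h := psd_sqrt_unique hV hW ((key V hV).trans (key W hW).symm)
  have h2 : (V : Matrix ι ι ℂ)ᴴ = (W : Matrix ι ι ℂ)ᴴ := by
    have := congrArg (· * M⁻¹) h
    simpa [Matrix.mul_assoc, Matrix.mul_nonsing_inv _ hM.isUnit] using this
  exact Subtype.ext (Matrix.conjTranspose_injective h2)

theorem polar_exists {M : Matrix ι ι ℂ} (hM : M.det ≠ 0) :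
    ∃ V : Matrix.unitaryGroup ι ℂ, ((V : Matrix ι ι ℂ)ᴴ * M).PosSemidef := by
  obtain ⟨P, hP, hPM⟩ := psd_sqrt_exists (Matrix.posSemidef_conjTranspose_mul_self M)
  have hPd : P.det ≠ 0 := by
    intro h
    have := congrArg Matrix.det hPM
    rw [Matrix.det_mul, Matrix.det_mul, h, Matrix.det_conjTranspose] at this
    have h3 : star M.det ≠ 0 := star_ne_zero.2 hM
    exact mul_ne_zero h3 hM (by simpa using this.symm)
  have hu := hPd.isUnit
  have hPi : (P⁻¹)ᴴ = P⁻¹ := by rw [Matrix.conjTranspose_nonsing_inv, hP.1.eq]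
  have hV : M * P⁻¹ ∈ Matrix.unitaryGroup ι ℂ := by
    rw [Matrix.mem_unitaryGroup_iff']
    change (M * P⁻¹)ᴴ * (M * P⁻¹) = 1
    rw [Matrix.conjTranspose_mul, hPi, Matrix.mul_assoc, ← Matrix.mul_assoc Mᴴ, ← hPM,
      Matrix.mul_assoc P, Matrix.mul_nonsing_inv _ hu, Matrix.mul_one,
      Matrix.nonsing_inv_mul _ hu]
  refine ⟨⟨M * P⁻¹, hV⟩, ?_⟩
  change ((M * P⁻¹)ᴴ * M).PosSemidef
  rw [Matrix.conjTranspose_mul, hPi, Matrix.mul_assoc, ← hPM, ← Matrix.mul_assoc,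
    Matrix.nonsing_inv_mul _ hu, Matrix.one_mul]
  exact hP

/-- The unitary factor of the polar decomposition of an invertible matrix (and `1` for a singular
matrix). -/
def pol (M : Matrix ι ι ℂ) : Matrix.unitaryGroup ι ℂ :=
  if h : M.det ≠ 0 then (polar_exists h).choose else 1

theorem pol_spec {M : Matrix ι ι ℂ} (hM : M.det ≠ 0) :
    ((pol M : Matrix ι ι ℂ)ᴴ * M).PosSemidef := by
  rw [pol, dif_pos hM]; exact (polar_exists hM).choose_spec

theorem pol_eq {M : Matrix ι ι ℂ} (hM : M.det ≠ 0) {V : Matrix.unitaryGroup ι ℂ}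
    (hV : ((V : Matrix ι ι ℂ)ᴴ * M).PosSemidef) : pol M = V := polar_unique hM (pol_spec hM) hV

theorem pol_mul_self (M : Matrix ι ι ℂ) :
    M = (pol M : Matrix ι ι ℂ) * ((pol M : Matrix ι ι ℂ)ᴴ * M) := by
  rw [← Matrix.mul_assoc]
  have : (pol M : Matrix ι ι ℂ) * (pol M : Matrix ι ι ℂ)ᴴ = 1 :=
    Matrix.mem_unitaryGroup_iff.1 (pol M).2
  rw [this, Matrix.one_mul]

theorem un_det_ne (V : Matrix.unitaryGroup ι ℂ) : (V : Matrix ι ι ℂ).det ≠ 0 := by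
  have := congrArg Matrix.det (Matrix.mem_unitaryGroup_iff.1 V.2)
  rw [Matrix.det_mul, Matrix.det_one] at this
  exact left_ne_zero_of_mul_eq_one this

theorem un_conj_mul (V : Matrix.unitaryGroup ι ℂ) :
    (V : Matrix ι ι ℂ)ᴴ * (V : Matrix ι ι ℂ) = 1 := Matrix.mem_unitaryGroup_iff'.1 V.2

theorem un_mul_conj (V : Matrix.unitaryGroup ι ℂ) :
    (V : Matrix ι ι ℂ) * (V : Matrix ι ι ℂ)ᴴ = 1 := Matrix.mem_unitaryGroup_iff.1 V.2

theorem pol_unitary (V : Matrix.unitaryGroup ι ℂ) : pol (V : Matrix ι ι ℂ) = V :=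
  pol_eq (un_det_ne V) (by rw [un_conj_mul]; exact Matrix.PosSemidef.one)

theorem pol_mul_left (V : Matrix.unitaryGroup ι ℂ) {M : Matrix ι ι ℂ} (hM : M.det ≠ 0) :
    pol ((V : Matrix ι ι ℂ) * M) = V * pol M := by
  refine pol_eq (by rw [Matrix.det_mul]; exact mul_ne_zero (un_det_ne V) hM) ?_
  have : ((V * pol M : Matrix.unitaryGroup ι ℂ) : Matrix ι ι ℂ) = V * pol M := rfl
  rw [this, Matrix.conjTranspose_mul, Matrix.mul_assoc, ← Matrix.mul_assoc (Vᴴ : Matrix ι ι ℂ),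
    un_conj_mul, Matrix.one_mul]
  exact pol_spec hM

theorem pol_mul_right (V : Matrix.unitaryGroup ι ℂ) {M : Matrix ι ι ℂ} (hM : M.det ≠ 0) :
    pol (M * (V : Matrix ι ι ℂ)) = pol M * V := by
  refine pol_eq (by rw [Matrix.det_mul]; exact mul_ne_zero hM (un_det_ne V)) ?_
  have : ((pol M * V : Matrix.unitaryGroup ι ℂ) : Matrix ι ι ℂ) = pol M * V := rfl
  rw [this, Matrix.conjTranspose_mul, Matrix.mul_assoc, ← Matrix.mul_assoc _ M, ← Matrix.mul_assoc]
  exact (pol_spec hM).conjTranspose_mul_mul_same _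

theorem pol_continuousOn : ContinuousOn (pol (ι := ι)) {M | M.det ≠ 0} := by
  rw [continuousOn_iff_continuous_domRestrict]
  apply continuous_of_closed_graph
  have : {q : {M : Matrix ι ι ℂ | M.det ≠ 0} × Matrix.unitaryGroup ι ℂ |
      q.2 = Set.domRestrict {M : Matrix ι ι ℂ | M.det ≠ 0} pol q.1} =
      {q | ((q.2 : Matrix ι ι ℂ)ᴴ * (q.1 : Matrix ι ι ℂ)).PosSemidef} := by
    ext ⟨M, V⟩
    constructor
    · intro h
      replace h : V = pol M.1 := h
      subst h
      exact pol_spec M.2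
    · intro h
      exact (pol_eq M.2 h).symm
  rw [this]
  exact isClosed_psd.preimage (by fun_prop)

end Polar

/-! ### Homotopy groups of the unitary and special unitary groups -/

section PiUn
open scoped ComplexOrder
variable {n : ℕ} {X : Type*} [TopologicalSpace X]

theorem psd_line_det {ι : Type} [Fintype ι] [DecidableEq ι] {P : Matrix ι ι ℂ} (hP : P.PosSemidef)
    (hd : P.det ≠ 0) (t : I) :
    ((1 - (t : ℝ) : ℝ) • P + (t : ℝ) • (1 : Matrix ι ι ℂ)).det ≠ 0 := by
  have hPd : P.PosDef := hP.posDef_iff_det_ne_zero.2 hd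
  have h1 : (1 : Matrix ι ι ℂ).PosDef := Matrix.PosDef.one
  rcases eq_or_lt_of_le t.2.1 with h | h
  · rw [← h]; simpa using hd
  · have : ((1 - (t : ℝ) : ℝ) • P + (t : ℝ) • (1 : Matrix ι ι ℂ)).PosDef :=
      Matrix.PosDef.posSemidef_add (hP.smul (sub_nonneg.2 t.2.2)) (h1.smul h)
    exact this.posSemidef.posDef_iff_det_ne_zero.1 this

/-- The inclusion of the unitary group in the general linear group. -/
def inclU (n : ℕ) : Un n →ₜ* GLC (Fin n) where
  toMonoidHom := Unitary.toUnits
  continuous_toFun := by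
    rw [Units.continuous_iff]
    exact ⟨continuous_subtype_val, continuous_subtype_val.comp continuous_inv⟩

theorem inclU_val (V : Un n) : (inclU n V : Matrix (Fin n) (Fin n) ℂ) = V := rfl

theorem pol_comp_cont {Y : Type*} [TopologicalSpace Y] {M : Y → Matrix (Fin n) (Fin n) ℂ}
    (hM : Continuous M) (hd : ∀ y, (M y).det ≠ 0) : Continuous fun y => pol (M y) :=
  pol_continuousOn.comp_continuous hM hd

theorem pol_one : pol (1 : Matrix (Fin n) (Fin n) ℂ) = 1 := pol_unitary 1

theorem inclU_bij (A : Set X) : Function.Bijective (IrrLoc.Pi.map A (inclU n)) := by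
  refine Pi.map_bijective _ (fun g => ?_) (fun f hf => ?_)
  · have hc : Continuous fun x => (g.1 x).1 := Units.continuous_val.comp g.1.continuous
    have hpc := pol_comp_cont hc fun x => glc_det_ne_zero (g.1 x)
    refine ⟨⟨⟨fun x => pol (g.1 x).1, hpc⟩, fun a ha => ?_⟩, ?_⟩
    · change pol (g.1 a).1 = 1
      rw [g.2 a ha]; exact pol_one
    · refine gl_htpy (fun q : I × X => (pol (g.1 q.2).1 : Matrix (Fin n) (Fin n) ℂ) *
        ((1 - (q.1 : ℝ) : ℝ) • ((pol (g.1 q.2).1 : Matrix (Fin n) (Fin n) ℂ)ᴴ * (g.1 q.2).1) +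
          (q.1 : ℝ) • (1 : Matrix (Fin n) (Fin n) ℂ))) ?_ ?_ ?_ ?_ ?_
      · have h1 : Continuous fun q : I × X => (pol (g.1 q.2).1 : Matrix (Fin n) (Fin n) ℂ) :=
          continuous_subtype_val.comp (hpc.comp continuous_snd)
        have h2 : Continuous fun q : I × X => (g.1 q.2).1 := hc.comp continuous_snd
        exact h1.matrix_mul (((by fun_prop : Continuous fun q : I × X => (1 - (q.1 : ℝ) : ℝ)).smul
          (h1.matrix_conjTranspose.matrix_mul h2)).add ((by fun_prop : Continuous
            fun q : I × X => (q.1 : ℝ)).smul continuous_const))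
      · intro q
        rw [Matrix.det_mul]
        have hd := glc_det_ne_zero (g.1 q.2)
        refine mul_ne_zero (un_det_ne _) (psd_line_det (pol_spec hd) ?_ _)
        rw [Matrix.det_mul, Matrix.det_conjTranspose]
        exact mul_ne_zero (star_ne_zero.2 (un_det_ne _)) hd
      · intro x
        simpa using (pol_mul_self (g.1 x).1).symm
      · intro x
        simp [inclU_val]
      · intro t a ha
        simp only [g.2 a ha, Units.val_one, pol_one, OneMemClass.coe_one, Matrix.conjTranspose_one,
          Matrix.one_mul, ← add_smul]
        simp
  · obtain ⟨H, h0, h1, hA⟩ := null_iff.1 hf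
    refine null_iff.2 ⟨⟨fun q => pol (H q).1, pol_comp_cont
      (Units.continuous_val.comp H.continuous) fun q => glc_det_ne_zero _⟩, ?_, ?_, ?_⟩
    · intro x
      change pol (H (0, x)).1 = 1
      rw [h0]; exact pol_one
    · intro x
      change pol (H (1, x)).1 = _
      rw [h1]; exact pol_unitary _
    · intro t a ha
      change pol (H (t, a)).1 = 1
      rw [hA t a ha]; exact pol_one

/-- The determinant of a unitary matrix as a point of the circle. -/
def detC (n : ℕ) : Un n →ₜ* Circle where
  toFun V := ⟨V.1.det, mem_sphere_zero_iff_norm.2 (CStarRing.norm_of_mem_unitary (Matrix.det_of_mem_unitary V.2))⟩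
  map_one' := Circle.ext Matrix.det_one
  map_mul' V W := Circle.ext (Matrix.det_mul V.1 W.1)
  continuous_toFun := Continuous.subtype_mk continuous_subtype_val.matrix_det _

theorem detC_val (V : Un n) : (detC n V : ℂ) = V.1.det := rfl

theorem mem_su_iff {V : Un n} : V ∈ SUsubgroup n ↔ detC n V = 1 := by
  rw [SUsubgroup, MonoidHom.mem_ker, ← Circle.coe_eq_one]; rfl

/-- The diagonal unitary matrix with one entry `z` and all other entries `1`. -/
def dgC (i₀ : Fin n) : Circle →ₜ* Un n where
  toFun z := ⟨Matrix.diagonal (Function.update 1 i₀ (z : ℂ)), by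
    rw [Matrix.mem_unitaryGroup_iff]
    change _ * (Matrix.diagonal _)ᴴ = 1
    rw [Matrix.diagonal_conjTranspose, Matrix.diagonal_mul_diagonal, ← Matrix.diagonal_one]
    congr 1
    ext i
    by_cases h : i = i₀
    · subst h; simp [Complex.mul_conj, Complex.normSq_eq_norm_sq, Circle.norm_coe]
    · simp [h]⟩
  map_one' := by
    apply Subtype.ext
    change Matrix.diagonal (Function.update 1 i₀ ((1 : Circle) : ℂ)) = 1
    rw [Circle.coe_one, ← Matrix.diagonal_one]
    congr 1
    exact Function.update_eq_self i₀ (1 : Fin n → ℂ)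
  map_mul' z w := by
    apply Subtype.ext
    change Matrix.diagonal (Function.update 1 i₀ ((z * w : Circle) : ℂ)) =
      Matrix.diagonal (Function.update 1 i₀ (z : ℂ)) * Matrix.diagonal (Function.update 1 i₀ (w : ℂ))
    rw [Matrix.diagonal_mul_diagonal]
    congr 1
    ext i
    by_cases h : i = i₀
    · subst h; simp
    · simp [h]
  continuous_toFun := by
    refine Continuous.subtype_mk (Continuous.matrix_diagonal ?_) _
    exact continuous_const.update i₀ (by fun_prop)

theorem detC_dgC (i₀ : Fin n) (z : Circle) : detC n (dgC i₀ z) = z := by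
  apply Circle.ext
  rw [detC_val]
  change (Matrix.diagonal (Function.update 1 i₀ (z : ℂ))).det = z
  rw [Matrix.det_diagonal, Finset.prod_update_of_mem (Finset.mem_univ i₀)]
  simp

/-- The inclusion of the special unitary group in the unitary group. -/
def inclS (n : ℕ) : SUn n →ₜ* Un n where
  toMonoidHom := (SUsubgroup n).subtype
  continuous_toFun := continuous_subtype_val

theorem inclS_apply (V : SUn n) : inclS n V = V.1 := rfl

/-- Normalization of the determinant by rescaling one coordinate. -/
def suN (i₀ : Fin n) (V : Un n) : SUn n :=
  ⟨V * dgC i₀ (detC n V)⁻¹, by rw [mem_su_iff, map_mul (detC n), detC_dgC, mul_inv_cancel]⟩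

theorem suN_cont (i₀ : Fin n) : Continuous (suN i₀) :=
  Continuous.subtype_mk (continuous_id.mul ((dgC i₀).continuous_toFun.comp
    (detC n).continuous_toFun.inv)) _

theorem suN_su (i₀ : Fin n) (V : SUn n) : suN i₀ V.1 = V := by
  apply Subtype.ext
  change V.1 * dgC i₀ (detC n V.1)⁻¹ = V.1
  rw [mem_su_iff.1 V.2, inv_one, map_one (dgC i₀), mul_one]

theorem inclS_bij (i₀ : Fin n) (A : Set X) [Subsingleton (Pi A Circle)] :
    Function.Bijective (IrrLoc.Pi.map A (inclS n)) := by
  refine Pi.map_bijective _ (fun g => ?_) (fun f hf => ?_)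
  · have hnull : (1 : C(X, Circle)).HomotopicRel (Om.map A (detC n) g).1 A :=
      Pi.mk_eq_one.1 (Subsingleton.elim _ _)
    obtain ⟨H, h0, h1, hA⟩ := null_iff.1 hnull
    refine ⟨⟨⟨fun x => suN i₀ (g.1 x), (suN_cont i₀).comp g.1.continuous⟩, fun a ha => ?_⟩, ?_⟩
    · change suN i₀ (g.1 a) = 1
      rw [g.2 a ha]; exact suN_su i₀ 1
    · refine htpy_of (fun q => g.1 q.2 * dgC i₀ (H q)⁻¹) ?_ ?_ ?_ ?_
      · exact (g.1.continuous.comp continuous_snd).mul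
          ((dgC i₀).continuous_toFun.comp H.continuous.inv)
      · intro x
        simp only [h0, inv_one, map_one (dgC i₀), mul_one]
      · intro x
        simp only [h1]
        rfl
      · intro t a ha
        simp only [hA t a ha, inv_one, map_one (dgC i₀), mul_one]
  · obtain ⟨H, h0, h1, hA⟩ := null_iff.1 hf
    refine null_iff.2 ⟨⟨fun q => suN i₀ (H q), (suN_cont i₀).comp H.continuous⟩, ?_, ?_, ?_⟩
    · intro x
      change suN i₀ (H (0, x)) = 1
      rw [h0]; exact suN_su i₀ 1
    · intro x
      change suN i₀ (H (1, x)) = _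
      rw [h1]; exact suN_su i₀ _
    · intro t a ha
      change suN i₀ (H (t, a)) = 1
      rw [hA t a ha]; exact suN_su i₀ 1

theorem pi_un_odd (n j : ℕ) (h : 2 * j + 1 < 2 * n) :
    Nonempty (Pi (Bd (2 * j + 1)) (Un n) ≃* Multiplicative ℤ) := by
  obtain ⟨e⟩ := pi_gl_odd j (Fin n) (by simpa using h)
  exact ⟨(MulEquiv.ofBijective _ (inclU_bij (Bd (2 * j + 1)))).trans e⟩

theorem pi_un_even (n j : ℕ) (h : 2 * j < 2 * n) : Subsingleton (Pi (Bd (2 * j)) (Un n)) := by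
  have := pi_gl_even j (Fin n) (by simpa using h)
  exact subsingleton_of_equiv (MulEquiv.ofBijective _ (inclU_bij (Bd (2 * j))))

theorem pi_sun_odd (n j : ℕ) (h : 2 * j + 3 < 2 * n) :
    Nonempty (Pi (Bd (2 * j + 3)) (SUn n) ≃* Multiplicative ℤ) := by
  obtain ⟨e⟩ := pi_un_odd n (j + 1) (by omega)
  have : Subsingleton (Pi (Bd (2 * j + 3)) Circle) := pi_circle (2 * j + 1)
  exact ⟨(MulEquiv.ofBijective _ (inclS_bij ⟨0, by omega⟩ (Bd (2 * j + 3)))).trans e⟩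

theorem pi_sun_even (n j : ℕ) (h : 2 * j + 2 < 2 * n) :
    Subsingleton (Pi (Bd (2 * j + 2)) (SUn n)) := by
  have := pi_un_even n (j + 1) (by omega)
  have : Subsingleton (Pi (Bd (2 * j + 2)) Circle) := pi_circle (2 * j)
  exact subsingleton_of_equiv
    (MulEquiv.ofBijective _ (inclS_bij ⟨0, by omega⟩ (Bd (2 * j + 2))))

end PiUn

/-! ### Quotients by free actions with local sections -/

section Lift
variable {E X G : Type*} [TopologicalSpace E] [TopologicalSpace X] [TopologicalSpace G]
  [Group G] [IsTopologicalGroup G] [MulAction G E] [ContinuousSMul G E]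

/-- A principal `G`-bundle `p : E → X`: `d e e'` is the element of `G` which carries `e` to `e'`,
for `e`, `e'` in one fibre, and it depends continuously on `(e, e')`. -/
structure Principal (p : C(E, X)) (d : E → E → G) : Prop where
  cont : ContinuousOn (fun q : E × E => d q.1 q.2) {q | p q.1 = p q.2}
  act : ∀ e e', p e = p e' → d e e' • e = e'
  inv : ∀ (g : G) e, p (g • e) = p e
  free : ∀ (g : G) e, d e (g • e) = g
  sec : ∀ x : X, ∃ (U : Set X) (s : X → E), IsOpen U ∧ x ∈ U ∧ ContinuousOn s U ∧
    ∀ u ∈ U, p (s u) = u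

variable {p : C(E, X)} {d : E → E → G}

theorem Principal.self (h : Principal p d) (e : E) : d e e = 1 := by
  have := h.free 1 e
  rwa [one_smul] at this

/-- The nearest-point retraction onto the box `[a, b]`. -/
def clampBox {m : ℕ} (a b : Fin m → ℝ) (y : Fin m → ℝ) : Fin m → ℝ :=
  fun i => max (a i) (min (b i) (y i))

theorem clampBox_cont {m : ℕ} (a b : Fin m → ℝ) : Continuous (clampBox a b) := by
  unfold clampBox; fun_prop

theorem clampBox_mem {m : ℕ} {a b : Fin m → ℝ} (h : a ≤ b) (y : Fin m → ℝ) :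
    clampBox a b y ∈ Set.Icc a b :=
  ⟨fun _ => le_max_left _ _, fun i => max_le (h i) (min_le_left _ _)⟩

theorem clampBox_eq {m : ℕ} {a b y : Fin m → ℝ} (h : y ∈ Set.Icc a b) : clampBox a b y = y := by
  ext i
  simp only [clampBox]
  rw [min_eq_right (h.2 i), max_eq_right (h.1 i)]

variable {m : ℕ}

/-- The map `f` lifts over the box `[a, b]`. -/
def LiftsOn (p : C(E, X)) (f : C(Fin m → ℝ, X)) (a b : Fin m → ℝ) : Prop :=
  ∃ F : C(Fin m → ℝ, E), ∀ y ∈ Set.Icc a b, p (F y) = f y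

/-- Lifts over two adjacent boxes are glued after transporting one of them by the element of `G`
which makes them agree on the common face. -/
theorem lifts_glue (h : Principal p d) (f : C(Fin m → ℝ, X)) {a b : Fin m → ℝ} (hab : a ≤ b)
    (i : Fin m) {c : ℝ} (hac : a i ≤ c) (hcb : c ≤ b i)
    (h1 : LiftsOn p f a (Function.update b i c)) (h2 : LiftsOn p f (Function.update a i c) b) :
    LiftsOn p f a b := by
  obtain ⟨F1, hF1⟩ := h1
  obtain ⟨F2, hF2⟩ := h2
  have hc := clampBox_cont a b
  set K := clampBox a b with hK
  let w : (Fin m → ℝ) → Fin m → ℝ := fun y => Function.update (K y) i c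
  have hw : Continuous w := hc.update i continuous_const
  have hm1 : ∀ y, K y i ≤ c → K y ∈ Set.Icc a (Function.update b i c) := by
    intro y hy
    refine ⟨(clampBox_mem hab y).1, fun j => ?_⟩
    by_cases hj : j = i
    · subst hj; simpa using hy
    · simpa [hj] using (clampBox_mem hab y).2 j
  have hm2 : ∀ y, c ≤ K y i → K y ∈ Set.Icc (Function.update a i c) b := by
    intro y hy
    refine ⟨fun j => ?_, (clampBox_mem hab y).2⟩
    by_cases hj : j = i
    · subst hj; simpa using hy
    · simpa [hj] using (clampBox_mem hab y).1 j
  have hwm : ∀ y, w y ∈ Set.Icc a b := by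
    intro y
    refine ⟨fun j => ?_, fun j => ?_⟩
    · by_cases hj : j = i
      · subst hj; simpa [w] using hac
      · simpa [w, hj] using (clampBox_mem hab y).1 j
    · by_cases hj : j = i
      · subst hj; simpa [w] using hcb
      · simpa [w, hj] using (clampBox_mem hab y).2 j
  have hKw : ∀ y, K (w y) = w y := fun y => clampBox_eq (hwm y)
  have hwi : ∀ y, w y i = c := fun y => by simp [w]
  have hp1 : ∀ y, p (F1 (w y)) = f (w y) := fun y => by
    have := hF1 _ (hm1 (w y) (by rw [hKw, hwi]))
    rwa [hKw] at this
  have hp2 : ∀ y, p (F2 (w y)) = f (w y) := fun y => by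
    have := hF2 _ (hm2 (w y) (by rw [hKw, hwi]))
    rwa [hKw] at this
  have hd : Continuous fun y => d (F2 (w y)) (F1 (w y)) :=
    h.cont.comp_continuous (f := fun y => (F2 (w y), F1 (w y))) (by fun_prop)
      (fun y => (hp2 y).trans (hp1 y).symm)
  refine ⟨⟨fun y => if K y i ≤ c then F1 (K y) else d (F2 (w y)) (F1 (w y)) • F2 (K y), ?_⟩, ?_⟩
  · refine Continuous.if_le (by fun_prop) (hd.smul (by fun_prop)) (by fun_prop) continuous_const ?_
    intro y hy
    have : K y = w y := by
      change K y = Function.update (K y) i c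
      rw [← show K y i = c from hy, Function.update_eq_self]
    rw [this]
    exact (h.act _ _ ((hp2 y).trans (hp1 y).symm)).symm
  · intro y hy
    have hKy : K y = y := clampBox_eq hy
    change p (if K y i ≤ c then F1 (K y) else d (F2 (w y)) (F1 (w y)) • F2 (K y)) = f y
    split_ifs with hle
    · rw [hF1 _ (hm1 y hle), hKy]
    · rw [h.inv, hF2 _ (hm2 y (not_le.1 hle).le), hKy]

theorem lifts_small (h : Principal p d) (f : C(Fin m → ℝ, X)) (a₀ b₀ : Fin m → ℝ) :
    ∃ δ > 0, ∀ a b, a₀ ≤ a → b ≤ b₀ → a ≤ b → (∀ i, b i ≤ a i + δ) → LiftsOn p f a b := by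
  choose U s hU hxU hs hps using h.sec
  have hcov : Set.Icc a₀ b₀ ⊆ ⋃ x : X, f ⁻¹' (U x) := fun y _ => Set.mem_iUnion.2 ⟨f y, hxU _⟩
  obtain ⟨δ, hδ, hL⟩ := lebesgue_number_lemma_of_metric isCompact_Icc
    (fun x => (hU x).preimage f.continuous) hcov
  refine ⟨δ / 2, by positivity, fun a b ha hb hab hw => ?_⟩
  obtain ⟨x, hx⟩ := hL a ⟨ha, hab.trans hb⟩
  have hball : ∀ y, clampBox a b y ∈ f ⁻¹' (U x) := by
    intro y
    apply hx
    have hy := clampBox_mem hab y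
    rw [Metric.mem_ball, dist_pi_lt_iff hδ]
    intro i
    rw [Real.dist_eq, abs_lt]
    constructor <;> linarith [hy.1 i, hy.2 i, hw i]
  refine ⟨⟨fun y => s x (f (clampBox a b y)), (hs x).comp_continuous
    (f.continuous.comp (clampBox_cont a b)) hball⟩, fun y hy => ?_⟩
  change p (s x (f (clampBox a b y))) = f y
  rw [hps x _ (hball y), clampBox_eq hy]

theorem lifts_box (h : Principal p d) (f : C(Fin m → ℝ, X)) (a₀ b₀ : Fin m → ℝ) (h₀ : a₀ ≤ b₀) :
    LiftsOn p f a₀ b₀ := by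
  obtain ⟨δ, hδ, hsm⟩ := lifts_small h f a₀ b₀
  have key : ∀ s : Finset (Fin m), ∀ a b, a₀ ≤ a → b ≤ b₀ → a ≤ b →
      (∀ i ∉ s, b i ≤ a i + δ) → LiftsOn p f a b := by
    intro s
    induction s using Finset.induction_on with
    | empty => exact fun a b ha hb hab hw => hsm a b ha hb hab fun i => hw i (by simp)
    | insert i s his ih =>
      have inner : ∀ k : ℕ, ∀ a b, a₀ ≤ a → b ≤ b₀ → a ≤ b → (∀ j ∉ insert i s, b j ≤ a j + δ) →
          b i ≤ a i + (k + 1) * δ → LiftsOn p f a b := by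
        intro k
        induction k with
        | zero =>
          intro a b ha hb hab hw hi
          refine ih a b ha hb hab fun j hj => ?_
          by_cases hji : j = i
          · subst hji; simpa using hi
          · exact hw j (by simp [hji, hj])
        | succ k ihk =>
          intro a b ha hb hab hw hi
          push_cast at hi
          have hac : a i ≤ max (a i) (b i - δ) := le_max_left _ _
          have hcb : max (a i) (b i - δ) ≤ b i := max_le (hab i) (by linarith)
          refine lifts_glue h f hab i hac hcb ?_ ?_
          · refine ihk a _ ha (fun j => ?_) (fun j => ?_) (fun j hj => ?_) ?_
            · by_cases hji : j = i
              · subst hji; simpa using ⟨(hab j).trans (hb j), by linarith [hb j]⟩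
              · simpa [hji] using hb j
            · by_cases hji : j = i
              · subst hji; simp
              · simpa [hji] using hab j
            · have hji : j ≠ i := fun e => hj (by simp [e])
              simpa [hji] using hw j hj
            · simp only [Function.update_self]
              refine max_le (by nlinarith [(Nat.cast_nonneg k : (0 : ℝ) ≤ k)]) (by linarith)
          · refine ih _ b (fun j => ?_) hb (fun j => ?_) (fun j hj => ?_)
            · by_cases hji : j = i
              · subst hji; simpa using Or.inl (ha j)
              · simpa [hji] using ha j
            · by_cases hji : j = i
              · subst hji; simpa using ⟨hab j, hδ.le⟩
              · simpa [hji] using hab j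
            · by_cases hji : j = i
              · subst hji
                simp only [Function.update_self]
                linarith [le_max_right (a j) (b j - δ)]
              · simpa [hji] using hw j (by simp [hji, hj])
      intro a b ha hb hab hw
      obtain ⟨k, hk⟩ := exists_nat_gt ((b i - a i) / δ)
      rw [div_lt_iff₀ hδ] at hk
      exact inner k a b ha hb hab hw (by linarith)
  exact key Finset.univ a₀ b₀ le_rfl le_rfl h₀ (by simp)

theorem lift_cube (h : Principal p d) (f : C(Fin m → I, X)) :
    ∃ F : C(Fin m → I, E), ∀ y, p (F y) = f y := by
  obtain ⟨F, hF⟩ := lifts_box h (f.comp ⟨fun v i => projIcc 0 1 zero_le_one (v i),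
    continuous_pi fun i => continuous_projIcc.comp (continuous_apply i)⟩) 0 1
    (fun _ => zero_le_one)
  refine ⟨F.comp ⟨fun y i => (y i : ℝ), by fun_prop⟩, fun y => ?_⟩
  have := hF (fun i => (y i : ℝ)) ⟨fun i => (y i).2.1, fun i => (y i).2.2⟩
  exact this.trans (congrArg f (funext fun i => projIcc_val zero_le_one (y i)))

theorem lift_prod (h : Principal p d) (f : C(I × (Fin m → I), X)) :
    ∃ F : C(I × (Fin m → I), E), ∀ y, p (F y) = f y := by
  obtain ⟨F, hF⟩ := lift_cube h (f.comp ⟨(consHomeo m).symm, (consHomeo m).symm.continuous⟩)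
  refine ⟨F.comp ⟨consHomeo m, (consHomeo m).continuous⟩, fun y => ?_⟩
  exact (hF (consHomeo m y)).trans (congrArg f ((consHomeo m).symm_apply_apply y))

/-- The cube with its open bottom face and interior removed. -/
def Jar (m : ℕ) : Set (I × (Fin m → I)) := {q | q.1 = 1 ∨ q.2 ∈ Bd m}

/-- The sup-norm distance from the centre of the cube, scaled so that the boundary is at
distance `1`. -/
def rad (y : Fin m → I) : ℝ := ‖fun i => 2 * (y i : ℝ) - 1‖

theorem rad_cont : Continuous (rad (m := m)) := by
  unfold rad; fun_prop

theorem rad_le (y : Fin m → I) : rad y ≤ 1 := by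
  refine (pi_norm_le_iff_of_nonneg zero_le_one).2 fun i => ?_
  rw [Real.norm_eq_abs, abs_le]
  constructor <;> linarith [(y i).2.1, (y i).2.2]

theorem rad_bd {y : Fin m → I} (hy : y ∈ Bd m) : rad y = 1 := by
  refine le_antisymm (rad_le y) ?_
  obtain ⟨i, hi⟩ := hy
  refine le_trans ?_ (norm_le_pi_norm (fun i => 2 * (y i : ℝ) - 1) i)
  rcases hi with hi | hi <;> rw [hi] <;> norm_num

theorem rad_attained {y : Fin m → I} (hy : 0 < rad y) : ∃ i, |2 * (y i : ℝ) - 1| = rad y := by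
  by_contra! hne
  have : rad y < rad y := by
    refine (pi_norm_lt_iff hy).2 fun i => ?_
    exact lt_of_le_of_ne (norm_le_pi_norm (fun i => 2 * (y i : ℝ) - 1) i) (hne i)
  exact lt_irrefl _ this

/-- The denominator of the radial projection from below the bottom face. -/
def jden (q : I × (Fin m → I)) : ℝ := max (((q.1 : ℝ) + 1) / 2) (rad q.2)

theorem jden_pos (q : I × (Fin m → I)) : 0 < jden q :=
  lt_max_of_lt_left (by linarith [q.1.2.1])

theorem jden_cont : Continuous (jden (m := m)) := by
  unfold jden
  exact Continuous.max (by fun_prop) (rad_cont.comp continuous_snd)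

/-- The radial retraction of the cube onto `Jar m`. -/
def jret (q : I × (Fin m → I)) : I × (Fin m → I) :=
  (projIcc 0 1 zero_le_one (((q.1 : ℝ) + 1) / jden q - 1),
    fun i => projIcc 0 1 zero_le_one (1 / 2 + ((q.2 i : ℝ) - 1 / 2) / jden q))

theorem jret_cont : Continuous (jret (m := m)) := by
  have hd : ∀ q : I × (Fin m → I), jden q ≠ 0 := fun q => (jden_pos q).ne'
  refine Continuous.prodMk (continuous_projIcc.comp ?_)
    (continuous_pi fun i => continuous_projIcc.comp ?_)
  · exact (Continuous.div (by fun_prop) jden_cont hd).sub continuous_const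
  · exact continuous_const.add (Continuous.div (by fun_prop) jden_cont hd)

theorem jret_mem (q : I × (Fin m → I)) : jret q ∈ Jar m := by
  have hp := jden_pos q
  rcases le_total (rad q.2) (((q.1 : ℝ) + 1) / 2) with h | h
  · left
    have hj : jden q = ((q.1 : ℝ) + 1) / 2 := max_eq_left h
    have : ((q.1 : ℝ) + 1) / jden q = 2 := by
      rw [div_eq_iff hp.ne', hj]; ring
    exact projIcc_of_right_le zero_le_one (by rw [this]; norm_num)
  · right
    have hj : jden q = rad q.2 := max_eq_right h
    rw [hj] at hp
    obtain ⟨i, hi⟩ := rad_attained hp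
    refine ⟨i, ?_⟩
    rw [← hj] at hp hi
    rcases abs_choice (2 * (q.2 i : ℝ) - 1) with hc | hc
    · right
      have : ((q.2 i : ℝ) - 1 / 2) / jden q = 1 / 2 := by
        rw [div_eq_iff hp.ne', ← hi, hc]; ring
      exact projIcc_of_right_le zero_le_one (by rw [this]; norm_num)
    · left
      have : ((q.2 i : ℝ) - 1 / 2) / jden q = - (1 / 2) := by
        rw [div_eq_iff hp.ne', ← hi, hc]; ring
      exact projIcc_of_le_left zero_le_one (by rw [this]; norm_num)

theorem jret_eq {q : I × (Fin m → I)} (hq : q ∈ Jar m) : jret q = q := by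
  have hj : jden q = 1 := by
    rcases hq with hq | hq
    · rw [jden, hq]; simpa using rad_le q.2
    · rw [jden, rad_bd hq]
      exact max_eq_right (by linarith [q.1.2.2])
  refine Prod.ext ?_ (funext fun i => ?_)
  · simp only [jret, hj, div_one, add_sub_cancel_right]
    exact projIcc_val zero_le_one q.1
  · simp only [jret, hj, div_one]
    rw [add_sub_cancel]
    exact projIcc_val zero_le_one (q.2 i)

theorem jar_ext {Y : Type*} [TopologicalSpace Y] {Φ : I × (Fin m → I) → Y}
    (h : ContinuousOn Φ (Jar m)) : ∃ Ψ : C(I × (Fin m → I), Y), ∀ q ∈ Jar m, Ψ q = Φ q :=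
  ⟨⟨fun q => Φ (jret q), h.comp_continuous jret_cont jret_mem⟩, fun q hq => by
    change Φ (jret q) = Φ q
    rw [jret_eq hq]⟩

/-- Based maps of a cube lift to based maps when the homotopy group of `G` one dimension lower
vanishes. -/
theorem bundle_surj (h : Principal p d) [Subsingleton (Pi (Bd m) G)] (e₀ : E)
    (f : C(I × (Fin m → I), X)) (hf : ∀ q ∈ dI (Bd m), f q = p e₀) :
    ∃ F : C(I × (Fin m → I), E), (∀ q, p (F q) = f q) ∧ ∀ q ∈ dI (Bd m), F q = e₀ := by
  obtain ⟨L, hL⟩ := lift_prod h f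
  have hJ : ∀ q ∈ Jar m, q ∈ dI (Bd m) := by
    rintro q (hq | hq)
    · exact Or.inr (Or.inl hq)
    · exact Or.inr (Or.inr hq)
  have hc : ContinuousOn (fun q => d (L q) e₀) (Jar m) :=
    h.cont.comp (f := fun q => (L q, e₀)) (by fun_prop) (fun q hq => by
      change p (L q) = p e₀
      rw [hL, hf q (hJ q hq)])
  obtain ⟨C, hC⟩ := jar_ext hc
  let L2 : C(I × (Fin m → I), E) := ⟨fun q => C q • L q, by fun_prop⟩
  have hL2p : ∀ q, p (L2 q) = f q := fun q => (h.inv _ _).trans (hL q)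
  have hL2 : ∀ q ∈ Jar m, L2 q = e₀ := by
    intro q hq
    change C q • L q = e₀
    rw [hC q hq]
    exact h.act _ _ (by rw [hL, hf q (hJ q hq)])
  have hb : ∀ y, p (L2 (0, y)) = p e₀ := fun y => (hL2p _).trans (hf _ (Or.inl rfl))
  let c : Om (Bd m) G := ⟨⟨fun y => d (L2 (0, y)) e₀, h.cont.comp_continuous
    (f := fun y => (L2 (0, y), e₀)) (by fun_prop) hb⟩, fun y hy => by
      change d (L2 (0, y)) e₀ = 1
      rw [hL2 _ (Or.inr hy), h.self]⟩
  obtain ⟨H, h0, h1, hA⟩ := null_iff.1 (Pi.mk_eq_one.1 (Subsingleton.elim (Pi.mk _ c) 1))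
  refine ⟨⟨fun q => H (σ q.1, q.2) • L2 q, by fun_prop⟩, fun q => (h.inv _ _).trans (hL2p q), ?_⟩
  intro q hq
  change H (σ q.1, q.2) • L2 q = e₀
  rcases hq with hq | hq | hq
  · obtain ⟨t, y⟩ := q
    simp only at hq
    subst hq
    rw [symm_zero, h1]
    exact h.act _ _ (hb y)
  · obtain ⟨t, y⟩ := q
    simp only at hq
    subst hq
    rw [symm_one, h0, one_smul]
    exact hL2 _ (Or.inl rfl)
  · rw [hA _ _ hq, one_smul]
    exact hL2 _ (Or.inr hq)

/-- If a based map to `E` becomes trivial in the quotient, then it is trivial in an ambient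
connected group on which `G` acts by automorphisms. -/
theorem bundle_inj {Γ : Type*} [Group Γ] [TopologicalSpace Γ] [IsTopologicalGroup Γ]
    [MulDistribMulAction G Γ] [ContinuousSMul G Γ] (h : Principal p d) (ι : C(E, Γ))
    (hι : ∀ (g : G) e, ι (g • e) = g • ι e) (e₀ : E) (hγ : Joined (1 : Γ) (ι e₀))
    (f : C(Fin m → I, E)) (hf : ∀ y ∈ Bd m, f y = e₀)
    (hn : (ContinuousMap.const _ (p e₀)).HomotopicRel (p.comp f) (Bd m)) :
    (ContinuousMap.const _ (ι e₀)).HomotopicRel (ι.comp f) (Bd m) := by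
  obtain ⟨H, h0, h1, hA⟩ := htpy_data hn.symm
  obtain ⟨L0, hL0⟩ := lift_prod h H
  have hc0 : Continuous fun y => d (L0 (0, y)) (f y) :=
    h.cont.comp_continuous (f := fun y => (L0 (0, y), f y)) (by fun_prop) (fun y => by
      change p (L0 (0, y)) = p (f y)
      rw [hL0, h0]; rfl)
  let L : C(I × (Fin m → I), E) := ⟨fun q => d (L0 (0, q.2)) (f q.2) • L0 q,
    (hc0.comp continuous_snd).smul L0.continuous⟩
  have hL : ∀ q, p (L q) = H q := fun q => (h.inv _ _).trans (hL0 q)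
  have hLf : ∀ y, L (0, y) = f y := fun y => h.act _ _ (by rw [hL0, h0]; rfl)
  have hHJ : ∀ q ∈ Jar m, H q = p e₀ := by
    rintro ⟨t, y⟩ (hq | hq)
    · simp only at hq
      subst hq
      exact h1 y
    · rw [hA t y hq]
      change p (f y) = p e₀
      rw [hf y hq]
  have hgc : ContinuousOn (fun q => d e₀ (L q)) (Jar m) :=
    h.cont.comp (f := fun q => (e₀, L q)) (by fun_prop) (fun q hq => by
      change p e₀ = p (L q)
      rw [hL, hHJ q hq])
  obtain ⟨C, hC⟩ := jar_ext hgc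
  have hLC : ∀ q ∈ Jar m, ι (L q) = C q • ι e₀ := by
    intro q hq
    rw [← hι, hC q hq, h.act e₀ (L q) (by rw [hL, hHJ q hq])]
  have hCb : ∀ y ∈ Bd m, C (0, y) = 1 := by
    intro y hy
    rw [hC _ (Or.inr hy), hLf, hf y hy, h.self]
  obtain ⟨γ⟩ := hγ
  have e1 : (ContinuousMap.const _ (ι e₀)).HomotopicRel
      (⟨fun y => ι (f y) * ((C (0, y) • ι e₀)⁻¹ * ι e₀), by fun_prop⟩ : C(Fin m → I, Γ)) (Bd m) := by
    refine htpy_of (fun q => ι (L (σ q.1, q.2)) * ((C (σ q.1, q.2) • ι e₀)⁻¹ * ι e₀))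
      (by fun_prop) ?_ ?_ ?_
    · intro y
      simp only [symm_zero]
      rw [hLC _ (Or.inl rfl)]
      simp
    · intro y
      simp only [symm_one]
      rw [hLf]
      rfl
    · intro t y hy
      simp only
      rw [hLC _ (Or.inr hy)]
      simp
  have e2 : (ι.comp f).HomotopicRel
      (⟨fun y => ι (f y) * ((C (0, y) • ι e₀)⁻¹ * ι e₀), by fun_prop⟩ : C(Fin m → I, Γ)) (Bd m) := by
    refine htpy_of (fun q => ι (f q.2) * ((C (0, q.2) • γ q.1)⁻¹ * γ q.1)) (by fun_prop) ?_ ?_ ?_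
    · intro y
      simp
    · intro y
      simp
    · intro t y hy
      simp [hCb y hy]
  exact e1.trans e2.symm

end Lift

/-! ### The projective special unitary group -/

section Disc
variable {Γ : Type*} [Group Γ] [TopologicalSpace Γ] [IsTopologicalGroup Γ]
  (D : Subgroup Γ) [D.Normal]

/-- The quotient homomorphism, as a continuous homomorphism. -/
def qmk : Γ →ₜ* Γ ⧸ D where
  toMonoidHom := QuotientGroup.mk' D
  continuous_toFun := QuotientGroup.continuous_mk

theorem qmk_apply (g : Γ) : qmk D g = (g : Γ ⧸ D) := rfl

/-- The quotient by a discrete normal subgroup is a covering. -/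
theorem qmk_locSec [DiscreteTopology D] : LocSec (qmk D) := by
  obtain ⟨O, hO, hO1⟩ := isOpen_induced_iff.1 (isOpen_discrete ({1} : Set D))
  have h1O : (1 : Γ) ∈ O := by
    have : (1 : D) ∈ Subtype.val ⁻¹' O := by rw [hO1]; rfl
    exact this
  have hnb : (fun q : Γ × Γ => q.1⁻¹ * q.2) ⁻¹' O ∈ 𝓝 ((1 : Γ), (1 : Γ)) :=
    (hO.preimage (by fun_prop)).mem_nhds (by simpa using h1O)
  rw [nhds_prod_eq, Filter.mem_prod_same_iff] at hnb
  obtain ⟨W', hW', hWO⟩ := hnb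
  obtain ⟨W, hWW', hW, h1W⟩ := mem_nhds_iff.1 hW'
  have hinj : Set.InjOn (qmk D) W := by
    intro a ha b hb hab
    have hD : a⁻¹ * b ∈ D := QuotientGroup.eq.1 hab
    have hmem : (⟨_, hD⟩ : D) ∈ (Subtype.val ⁻¹' O : Set D) :=
      hWO (Set.mk_mem_prod (hWW' ha) (hWW' hb))
    rw [hO1] at hmem
    have := congrArg Subtype.val (Set.mem_singleton_iff.1 hmem)
    exact inv_mul_eq_one.1 this
  have hop : ∀ N : Set Γ, IsOpen N → IsOpen (qmk D '' N) := fun N hN =>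
    QuotientGroup.isOpenMap_coe N hN
  have hinv : ∀ w ∈ W, Function.invFunOn (qmk D) W (qmk D w) = w := hinj.leftInvOn_invFunOn
  refine ⟨qmk D '' W, Function.invFunOn (qmk D) W, hop W hW, ⟨1, h1W, map_one (qmk D)⟩, ?_, ?_, ?_⟩
  · rintro _ ⟨w, hw, rfl⟩
    refine ContinuousAt.continuousWithinAt ?_
    intro N hN
    rw [hinv w hw] at hN
    obtain ⟨N', hN', hNo, hwN⟩ := mem_nhds_iff.1 hN
    refine Filter.mem_map.2 (Filter.mem_of_superset
      ((hop (N' ∩ W) (hNo.inter hW)).mem_nhds ⟨w, ⟨hwN, hw⟩, rfl⟩) ?_)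
    rintro _ ⟨v, hv, rfl⟩
    rw [Set.mem_preimage, hinv v hv.2]
    exact hN' hv.1
  · have := hinv 1 h1W
    rwa [map_one (qmk D)] at this
  · exact fun u hu => Function.invFunOn_eq hu

instance kerp_discrete [DiscreteTopology D] : DiscreteTopology (kerp (qmk D)) := by
  have h : ∀ g : kerp (qmk D), (g : Γ) ∈ D := fun g =>
    (QuotientGroup.eq_one_iff (g : Γ)).1 g.2
  refine DiscreteTopology.of_continuous_injective (f := fun g : kerp (qmk D) => (⟨g.1, h g⟩ : D))
    (Continuous.subtype_mk continuous_subtype_val _) fun a b hab => ?_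
  exact Subtype.ext (congrArg (fun x : D => (x : Γ)) hab)

/-- Coverings do not create homotopy in positive relative dimensions. -/
theorem pi_quot {X : Type*} [TopologicalSpace X] [CompactSpace X] [PreconnectedSpace X]
    [DiscreteTopology D] {A : Set X} (hA : A.Nonempty) [Subsingleton (Pi (dI A) Γ)] :
    Subsingleton (Pi (dI A) (Γ ⧸ D)) := by
  refine subsingleton_of_forall_eq 1 fun u => ?_
  obtain ⟨f, rfl⟩ := Pi.mk_surj _ u
  obtain ⟨F, rfl⟩ := Pth.base_surj (qmk_locSec D) f
  have := pi_discrete (C := kerp (qmk D)) hA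
  obtain ⟨F', hF'⟩ := Pth.exists_loop F (Pi.mk_eq_one.1 (Subsingleton.elim (Pi.mk A _) 1))
  have hn : Pi.mk (dI A) F' = 1 := Subsingleton.elim _ _
  have h2 : Om.map (dI A) (qmk D) F' = Pth.base (qmk D) A F := by
    ext q
    exact hF' q
  rw [← h2]
  exact Pi.mk_eq_one.2 (by
    have := htpy_postcomp (Pi.mk_eq_one.1 hn) ⟨qmk D, (qmk D).continuous_toFun⟩
    have h1 : (⟨qmk D, (qmk D).continuous_toFun⟩ : C(Γ, Γ ⧸ D)).comp
        (1 : C(I × X, Γ)) = 1 := by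
      ext q
      exact map_one (qmk D)
    rwa [h1] at this)

end Disc

/-- The scalar matrices in `SU(n)`. -/
def Zs (n : ℕ) : Subgroup (SUn n) where
  carrier := {g | ∃ c : ℂ, (g.1.1 : Matrix (Fin n) (Fin n) ℂ) = c • 1}
  mul_mem' := by
    rintro a b ⟨c, hc⟩ ⟨d, hd⟩
    refine ⟨c * d, ?_⟩
    change a.1.1 * b.1.1 = _
    rw [hc, hd]
    simp [smul_smul, mul_comm]
  one_mem' := ⟨1, by simp⟩
  inv_mem' := by
    rintro a ⟨c, hc⟩
    refine ⟨star c, ?_⟩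
    change star a.1.1 = _
    rw [hc, star_smul, star_one]

instance Zs_normal (n : ℕ) : (Zs n).Normal where
  conj_mem := by
    rintro a ⟨c, hc⟩ g
    refine ⟨c, ?_⟩
    change g.1.1 * a.1.1 * star g.1.1 = _
    rw [hc, mul_smul_comm, mul_one, smul_mul_assoc]
    congr 1
    exact Unitary.mul_star_self_of_mem g.1.2

theorem Zs_finite (n : ℕ) (hn : 0 < n) : Finite (Zs n) := by
  have hfin : {c : ℂ | c ^ n = 1}.Finite := by
    have := (Polynomial.nthRootsFinset n (1 : ℂ)).finite_toSet
    refine this.subset fun c hc => ?_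
    simpa [Polynomial.mem_nthRootsFinset hn] using hc
  choose c hc using fun g : Zs n => g.2
  have : Finite {c : ℂ | c ^ n = 1} := hfin
  refine Finite.of_injective (β := {c : ℂ | c ^ n = 1}) (fun g => ⟨c g, ?_⟩) ?_
  · have h1 := congrArg Subtype.val (mem_su_iff.1 g.1.2)
    rw [detC_val, hc g, Matrix.det_smul, Matrix.det_one] at h1
    simpa using h1
  · intro a b hab
    have : c a = c b := congrArg Subtype.val hab
    apply Subtype.ext; apply Subtype.ext; apply Subtype.ext
    rw [hc a, hc b, this]

instance un_t2 (n : ℕ) : T2Space (Un n) := inferInstance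

instance sun_compact (n : ℕ) : CompactSpace (SUn n) := by
  refine isCompact_iff_compactSpace.1 (IsClosed.isCompact ?_)
  have : (SUsubgroup n : Set (Un n)) = (detC n) ⁻¹' {1} := by
    ext V
    exact mem_su_iff
  rw [this]
  exact isClosed_singleton.preimage (detC n).continuous_toFun

/-- The group `SU(n)` modulo scalars. -/
abbrev PG (n : ℕ) : Type := SUn n ⧸ Zs n

theorem pi_pg_even (n j : ℕ) (h : 2 * j + 2 < 2 * n) : Subsingleton (Pi (Bd (2 * j + 2)) (PG n)) := by
  have hf := Zs_finite n (by omega)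
  have hd : DiscreteTopology (Zs n) := inferInstance
  have h1 := pi_sun_even n j h
  obtain ⟨e⟩ := pi_succ (C := SUn n) (2 * j + 1)
  obtain ⟨e2⟩ := pi_succ (C := PG n) (2 * j + 1)
  have h2 : Subsingleton (Pi (dI (Bd (2 * j + 1))) (SUn n)) := subsingleton_of_equiv e
  have h3 := pi_quot (Zs n) (Bd_nonempty (2 * j))
  exact subsingleton_of_equiv e2.symm

/-- The conjugation action of `SU(n)` on `U(n)`. -/
def conjHom (n : ℕ) : PG n →* MulAut (Un n) :=
  QuotientGroup.lift (Zs n) (MulAut.conj.comp (SUsubgroup n).subtype) (by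
    rintro g ⟨c, hc⟩
    ext1 V
    apply Subtype.ext
    change g.1.1 * V.1 * star g.1.1 = V.1
    have : g.1.1 * V.1 = V.1 * g.1.1 := by rw [hc]; simp
    rw [this, mul_assoc, Unitary.mul_star_self_of_mem g.1.2, mul_one])

instance pgAct (n : ℕ) : MulDistribMulAction (PG n) (Un n) :=
  MulDistribMulAction.compHom (Un n) (conjHom n)

theorem pg_smul (g : SUn n) (V : Un n) : ((g : PG n) • V) = g.1 * V * g.1⁻¹ := rfl

instance pg_cont (n : ℕ) : ContinuousSMul (PG n) (Un n) where
  continuous_smul := by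
    have hq : IsOpenQuotientMap (Prod.map (QuotientGroup.mk : SUn n → PG n) (id : Un n → Un n)) :=
      (QuotientGroup.isOpenQuotientMap_mk).prodMap IsOpenQuotientMap.id
    refine hq.isQuotientMap.continuous_iff.2 ?_
    change Continuous fun q : SUn n × Un n => q.1.1 * q.2 * q.1.1⁻¹
    fun_prop

/-! ### Irreducible tuples and equivariant words -/

section
variable {n r : ℕ}

/-- The matrix algebra generated by an irreducible tuple is everything (Burnside). -/
theorem burnside (hn : 0 < n) (A : Fin r → Matrix (Fin n) (Fin n) ℂ)
    (hA : ∀ p : Submodule ℂ (Fin n → ℂ), (∀ i, ∀ v ∈ p, (A i).mulVec v ∈ p) → p = ⊥ ∨ p = ⊤)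
    (T : Module.End ℂ (Fin n → ℂ)) :
    T ∈ Algebra.adjoin ℂ (Set.range fun i => Matrix.toLin' (A i)) := by
  set R := Algebra.adjoin ℂ (Set.range fun i => Matrix.toLin' (A i)) with hR
  have : Nontrivial (Fin n → ℂ) := by
    have : Nonempty (Fin n) := ⟨⟨0, hn⟩⟩
    infer_instance
  have hs : IsSimpleModule R (Fin n → ℂ) := by
    rw [isSimpleModule_iff, isSimpleOrder_iff]
    refine ⟨inferInstance, fun q => ?_⟩
    have := hA (q.restrictScalars ℂ) (fun i v hv => by
      have := q.smul_mem (⟨_, Algebra.subset_adjoin ⟨i, rfl⟩⟩ : R) hv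
      exact this)
    rcases this with h | h
    · left
      exact (Submodule.restrictScalars_eq_bot_iff _ _ _).1 h
    · right
      exact (Submodule.restrictScalars_eq_top_iff _ _ _).1 h
  have hsc := (IsSimpleModule.algebraMap_end_bijective_of_isAlgClosed (A := R)
    (V := Fin n → ℂ) ℂ).2
  let f : Module.End (Module.End R (Fin n → ℂ)) (Fin n → ℂ) :=
    { toFun := T
      map_add' := map_add T
      map_smul' := fun c v => by
        obtain ⟨c, rfl⟩ := hsc c
        change T (c • v) = c • T v
        exact map_smul T c v }
  obtain ⟨w, hw⟩ := jacobson_density (R := R) f (Finset.univ.image fun i => Pi.single i 1)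
  have : T = w.1 := by
    refine (Pi.basisFun ℂ (Fin n)).ext fun i => ?_
    rw [Pi.basisFun_apply]
    exact hw _ (Finset.mem_image_of_mem _ (Finset.mem_univ i))
  rw [this]
  exact w.2

/-- An element fixing an irreducible tuple under conjugation is scalar (Schur). -/
theorem schur (hn : 0 < n) (A : Fin r → Matrix (Fin n) (Fin n) ℂ)
    (hA : ∀ p : Submodule ℂ (Fin n → ℂ), (∀ i, ∀ v ∈ p, (A i).mulVec v ∈ p) → p = ⊥ ∨ p = ⊤)
    (g : Matrix (Fin n) (Fin n) ℂ) (hg : ∀ i, g * A i = A i * g) : ∃ c : ℂ, g = c • 1 := by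
  have : Nonempty (Fin n) := ⟨⟨0, hn⟩⟩
  obtain ⟨c, hc⟩ := Module.End.exists_eigenvalue (Matrix.toLin' g)
  refine ⟨c, ?_⟩
  rcases hA (Module.End.eigenspace (Matrix.toLin' g) c) (fun i v hv => by
    rw [Module.End.mem_eigenspace_iff, Matrix.toLin'_apply] at hv ⊢
    rw [Matrix.mulVec_mulVec, hg, ← Matrix.mulVec_mulVec, hv, Matrix.mulVec_smul]) with h | h
  · exact absurd h hc
  · apply Matrix.toLin'.injective
    refine LinearMap.ext fun v => ?_
    have hv : v ∈ Module.End.eigenspace (Matrix.toLin' g) c := by rw [h]; trivial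
    rw [Module.End.mem_eigenspace_iff.1 hv]
    simp

/-- The simultaneous conjugate of a tuple. -/
def cj (g : Un n) (A : Fin r → Un n) : Fin r → Un n := fun i => g * A i * g⁻¹

/-- A continuous matrix-valued function of a tuple which is equivariant under conjugation. -/
def EqW (w : (Fin r → Un n) → Matrix (Fin n) (Fin n) ℂ) : Prop :=
  Continuous w ∧ ∀ (g : Un n) A, w (cj g A) = g.1 * w A * g.1ᴴ

theorem EqW.add {w v : (Fin r → Un n) → Matrix (Fin n) (Fin n) ℂ} (hw : EqW w) (hv : EqW v) :
    EqW fun A => w A + v A :=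
  ⟨hw.1.add hv.1, fun g A => by simp only [hw.2, hv.2, mul_add, add_mul]⟩

theorem EqW.mul {w v : (Fin r → Un n) → Matrix (Fin n) (Fin n) ℂ} (hw : EqW w) (hv : EqW v) :
    EqW fun A => w A * v A :=
  ⟨hw.1.mul hv.1, fun g A => by
    simp only [hw.2, hv.2]
    calc g.1 * w A * g.1ᴴ * (g.1 * v A * g.1ᴴ) = g.1 * w A * (g.1ᴴ * g.1) * v A * g.1ᴴ := by
          noncomm_ring
      _ = _ := by rw [un_conj_mul]; noncomm_ring⟩

theorem EqW.const (c : ℂ) : EqW fun _ : Fin r → Un n => c • (1 : Matrix (Fin n) (Fin n) ℂ) :=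
  ⟨continuous_const, fun g A => by rw [mul_smul_comm, mul_one, smul_mul_assoc, un_mul_conj]⟩

theorem EqW.star {w : (Fin r → Un n) → Matrix (Fin n) (Fin n) ℂ} (hw : EqW w) :
    EqW fun A => (w A)ᴴ :=
  ⟨hw.1.matrix_conjTranspose, fun g A => by
    simp only [hw.2, Matrix.conjTranspose_mul, Matrix.conjTranspose_conjTranspose, mul_assoc]⟩

theorem EqW.coord (i : Fin r) : EqW fun A : Fin r → Un n => (A i).1 :=
  ⟨continuous_subtype_val.comp (continuous_apply i), fun _ _ => rfl⟩

/-- Every subspace invariant under the tuple is invariant under the value of `w`. -/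
def PresW (w : (Fin r → Un n) → Matrix (Fin n) (Fin n) ℂ) : Prop :=
  ∀ (A : Fin r → Un n) (p : Submodule ℂ (Fin n → ℂ)),
    (∀ i, ∀ v ∈ p, (A i).1.mulVec v ∈ p) → ∀ v ∈ p, (w A).mulVec v ∈ p

theorem exists_word (hn : 0 < n) {A : Fin r → Un n} (hA : IsIrreducibleTupleU A)
    (T : Matrix (Fin n) (Fin n) ℂ) :
    ∃ w : (Fin r → Un n) → Matrix (Fin n) (Fin n) ℂ, EqW w ∧ PresW w ∧ w A = T := by
  have hT := burnside hn (fun i => (A i).1) hA (Matrix.toLin' T)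
  suffices h : ∀ S ∈ Algebra.adjoin ℂ (Set.range fun i => Matrix.toLin' (A i).1),
      ∃ w : (Fin r → Un n) → Matrix (Fin n) (Fin n) ℂ,
        EqW w ∧ PresW w ∧ Matrix.toLin' (w A) = S by
    obtain ⟨w, hw, hp, he⟩ := h _ hT
    exact ⟨w, hw, hp, Matrix.toLin'.injective he⟩
  intro S hS
  induction hS using Algebra.adjoin_induction with
  | mem x hx =>
    obtain ⟨i, rfl⟩ := hx
    exact ⟨_, EqW.coord i, fun A p hp v hv => hp i v hv, rfl⟩
  | algebraMap c =>
    refine ⟨_, EqW.const c, fun A p hp v hv => ?_, ?_⟩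
    · simp only [Matrix.smul_mulVec, Matrix.one_mulVec]
      exact p.smul_mem c hv
    · rw [map_smul, Matrix.toLin'_one]
      rfl
  | add x y _ _ hx hy =>
    obtain ⟨v, hv, hvp, rfl⟩ := hx
    obtain ⟨w, hw, hwp, rfl⟩ := hy
    refine ⟨_, hv.add hw, fun A p hp u hu => ?_, map_add _ _ _⟩
    simp only [Matrix.add_mulVec]
    exact p.add_mem (hvp A p hp u hu) (hwp A p hp u hu)
  | mul x y _ _ hx hy =>
    obtain ⟨v, hv, hvp, rfl⟩ := hx
    obtain ⟨w, hw, hwp, rfl⟩ := hy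
    refine ⟨_, hv.mul hw, fun A p hp u hu => ?_, Matrix.toLin'_mul _ _⟩
    simp only [← Matrix.mulVec_mulVec]
    exact hvp A p hp _ (hwp A p hp u hu)

/-- Irreducibility is an open condition: words which span the matrix algebra at one tuple span it
at all nearby tuples. -/
theorem irr_open (hn : 0 < n) : IsOpen {A : Fin r → Un n | IsIrreducibleTupleU A} := by
  rw [isOpen_iff_mem_nhds]
  intro A₀ hA₀
  choose w hw hwp hwA using fun q : Fin n × Fin n => exists_word hn hA₀ (Matrix.single q.1 q.2 1)
  let M : (Fin r → Un n) → Matrix (Fin n × Fin n) (Fin n × Fin n) ℂ :=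
    fun A => Matrix.of fun q q' => w q A q'.1 q'.2
  have hM : Continuous fun A => (M A).det :=
    Continuous.matrix_det (continuous_matrix fun q q' => (hw q).1.matrix_elem _ _)
  have hM0 : M A₀ = 1 := by
    ext ⟨i, j⟩ ⟨k, l⟩
    simp only [M, Matrix.of_apply, hwA, Matrix.single_apply, Matrix.one_apply, Prod.mk.injEq]
  have hU : {A | (M A).det ≠ 0} ∈ 𝓝 A₀ :=
    (isOpen_ne.preimage hM).mem_nhds (by
      change (M A₀).det ≠ 0
      rw [hM0, Matrix.det_one]
      exact one_ne_zero)
  refine Filter.mem_of_superset hU fun A hA p hp => ?_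
  have key : ∀ (T : Matrix (Fin n) (Fin n) ℂ), ∀ v ∈ p, T.mulVec v ∈ p := by
    intro T v hv
    let c : Fin n × Fin n → ℂ := Matrix.vecMul (fun q => T q.1 q.2) (M A)⁻¹
    have hc : Matrix.vecMul c (M A) = fun q => T q.1 q.2 := by
      simp only [c]
      rw [Matrix.vecMul_vecMul, Matrix.nonsing_inv_mul _ (isUnit_iff_ne_zero.2 hA),
        Matrix.vecMul_one]
    have hT : T = ∑ q, c q • w q A := by
      ext k l
      have := congrFun hc (k, l)
      simp only [Matrix.vecMul, dotProduct] at this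
      rw [← this, Matrix.sum_apply]
      rfl
    rw [hT, Matrix.sum_mulVec]
    refine p.sum_mem fun q _ => ?_
    rw [Matrix.smul_mulVec]
    exact p.smul_mem _ (hwp q A p hp v hv)
  by_cases hb : p = ⊥
  · exact Or.inl hb
  · right
    obtain ⟨v, hv, hv0⟩ := (Submodule.ne_bot_iff p).1 hb
    obtain ⟨l, hl⟩ := Function.ne_iff.1 hv0
    rw [eq_top_iff]
    intro u _
    have := key (Matrix.vecMulVec u (Pi.single l (v l)⁻¹)) v hv
    rw [Matrix.vecMulVec_mulVec] at this
    simpa [inv_mul_cancel₀ (show v l ≠ 0 from hl)] using this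

end

/-! ### Slices for the conjugation action -/

section
variable {n r : ℕ}

theorem pol_conj (g : Un n) {M : Matrix (Fin n) (Fin n) ℂ} (hM : M.det ≠ 0) :
    pol (g.1 * M * g.1ᴴ) = g * pol M * g⁻¹ := by
  have h1 : (g.1 * M).det ≠ 0 := by
    rw [Matrix.det_mul]; exact mul_ne_zero (un_det_ne g) hM
  exact (pol_mul_right g⁻¹ h1).trans (by rw [pol_mul_left g hM])

open scoped ComplexOrder in
theorem pol_herm {M : Matrix (Fin n) (Fin n) ℂ} (hM : M.det ≠ 0) (hh : Mᴴ = M) :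
    (pol M).1 * (pol M).1 = 1 := by
  have hP := pol_spec hM
  set u := pol M with hu
  have hM2 : M = (u.1ᴴ * M)ᴴ * u.1ᴴ := by
    conv_lhs => rw [← hh, pol_mul_self M, ← hu, Matrix.conjTranspose_mul]
  have h1 : pol M = u⁻¹ := by
    refine pol_eq hM ?_
    have h2 : ((u⁻¹ : Un n).1)ᴴ = u.1 := Matrix.conjTranspose_conjTranspose _
    rw [h2, hM2, ← Matrix.mul_assoc, hP.1.eq]
    exact hP.mul_mul_conjTranspose_same u.1
  have h3 : u.1 = u.1ᴴ := congrArg Subtype.val h1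
  conv_lhs => rw [h3]
  nth_rewrite 2 [← h3]
  exact un_conj_mul u

/-- The scalar unitary matrix `c / |c|`. -/
def scU (n : ℕ) (c : ℂ) (hc : c ≠ 0) : Un n := ⟨(c / ‖c‖) • 1, by
  rw [Matrix.mem_unitaryGroup_iff, star_smul, star_one, smul_mul_smul_comm, mul_one]
  have : c / ‖c‖ * star (c / ‖c‖) = 1 := by
    have hc' : (‖c‖ : ℂ) ≠ 0 := by simpa using hc
    rw [star_div₀]
    simp only [RCLike.star_def, Complex.conj_ofReal]
    field_simp
    rw [Complex.mul_conj, Complex.normSq_eq_norm_sq]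
    push_cast
    rfl
  rw [this, one_smul]⟩

theorem scU_comm (c : ℂ) (hc : c ≠ 0) (g : Un n) : scU n c hc * g = g * scU n c hc := by
  apply Subtype.ext
  change ((c / ‖c‖) • 1) * g.1 = g.1 * ((c / ‖c‖) • 1)
  simp

open scoped ComplexOrder in
theorem pol_smul {c : ℂ} (hc : c ≠ 0) {M : Matrix (Fin n) (Fin n) ℂ} (hM : M.det ≠ 0) :
    pol (c • M) = scU n c hc * pol M := by
  refine pol_eq (by rw [Matrix.det_smul]; exact mul_ne_zero (pow_ne_zero _ hc) hM) ?_
  have h1 : (scU n c hc * pol M : Un n).1 = (c / ‖c‖) • (pol M).1 := by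
    change ((c / ‖c‖) • 1) * (pol M).1 = _
    simp
  have h2 : star (c / ‖c‖) * c = (‖c‖ : ℝ) := by
    have hc' : (‖c‖ : ℂ) ≠ 0 := by simpa using hc
    rw [star_div₀]
    simp only [RCLike.star_def, Complex.conj_ofReal]
    field_simp
    rw [mul_comm, Complex.mul_conj, Complex.normSq_eq_norm_sq]
    push_cast
    rfl
  rw [h1, Matrix.conjTranspose_smul, Matrix.smul_mul, Matrix.mul_smul, smul_smul, h2]
  exact (pol_spec hM).smul (by simp)

/-- An idempotent matrix of trace near `1` has rank one. -/
theorem rank_one {Q : Matrix (Fin n) (Fin n) ℂ} (hQ : Q * Q = Q) (ht : |Q.trace.re - 1| < 1 / 2)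
    (ζ ζ' : Fin n → ℂ) (hζ : Q.mulVec ζ ≠ 0) : ∃ c : ℂ, c • Q.mulVec ζ = Q.mulVec ζ' := by
  set f := Matrix.toLin' Q with hf
  have hp : LinearMap.IsProj (LinearMap.range f) f :=
    ⟨fun x => ⟨x, rfl⟩, by
      rintro _ ⟨y, rfl⟩
      simp [hf, hQ]⟩
  have h1 := hp.trace
  have h2 : LinearMap.trace ℂ (Fin n → ℂ) f = Q.trace := by
    rw [hf]; exact Matrix.trace_toLin'_eq Q
  rw [h2] at h1
  rw [h1, Complex.natCast_re] at ht
  have h3 : Module.finrank ℂ (LinearMap.range f) = 1 := by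
    rw [abs_lt] at ht
    have a1 : (Module.finrank ℂ (LinearMap.range f) : ℝ) < 2 := by linarith
    have a2 : (0 : ℝ) < Module.finrank ℂ (LinearMap.range f) := by linarith
    norm_cast at a1 a2
    omega
  have hv : (⟨f ζ, ⟨ζ, rfl⟩⟩ : LinearMap.range f) ≠ 0 := fun h => hζ (congrArg Subtype.val h)
  obtain ⟨c, hc⟩ := (finrank_eq_one_iff_of_nonzero' _ hv).1 h3 ⟨f ζ', ⟨ζ', rfl⟩⟩
  exact ⟨c, congrArg Subtype.val hc⟩

section Slice
variable (w : Fin n → (Fin r → Un n) → Matrix (Fin n) (Fin n) ℂ) (o : Fin n)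

/-- The Hermitian word whose positive spectral projection is `slQ`. -/
def slX (A : Fin r → Un n) : Matrix (Fin n) (Fin n) ℂ := w o A + (w o A)ᴴ + (-1 : ℂ) • 1

/-- The positive spectral projection of `slX`. -/
def slQ (A : Fin r → Un n) : Matrix (Fin n) (Fin n) ℂ := (1 / 2 : ℂ) • (1 + (pol (slX w o A)).1)

/-- The frame obtained by applying the words `w i` to a vector in the range of `slQ`. -/
def slC (A : Fin r → Un n) (ζ : Fin n → ℂ) : Matrix (Fin n) (Fin n) ℂ :=
  Matrix.of fun k i => ((w i A * slQ w o A).mulVec ζ) k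

/-- The domain of the slice map. -/
def slV : Set (Fin r → Un n) :=
  {A | (slX w o A).det ≠ 0 ∧ |(slQ w o A).trace.re - 1| < 1 / 2 ∧ ∃ ζ, (slC w o A ζ).det ≠ 0}

open Classical in
/-- The slice map, which moves the frame `slC` to the standard one. -/
def slS (A : Fin r → Un n) : Fin r → Un n :=
  if h : ∃ ζ, (slC w o A ζ).det ≠ 0 then cj (pol (slC w o A h.choose))⁻¹ A else A

variable {w o}

theorem cj_cj (g h : Un n) (A : Fin r → Un n) : cj g (cj h A) = cj (g * h) A := by
  funext i
  simp only [cj]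
  group

theorem slQ_idem {A : Fin r → Un n} (h : (slX w o A).det ≠ 0) :
    slQ w o A * slQ w o A = slQ w o A := by
  have hh : (slX w o A)ᴴ = slX w o A := by
    simp only [slX, Matrix.conjTranspose_add, Matrix.conjTranspose_conjTranspose,
      Matrix.conjTranspose_smul, Matrix.conjTranspose_one]
    rw [add_comm (w o A)ᴴ]
    simp
  have := pol_herm h hh
  rw [slQ, smul_mul_smul_comm, mul_add, mul_one, add_mul, one_mul, this]
  module

theorem slS_eq {A : Fin r → Un n} (hA : A ∈ slV w o) {ζ : Fin n → ℂ}
    (hζ : (slC w o A ζ).det ≠ 0) : slS w o A = cj (pol (slC w o A ζ))⁻¹ A := by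
  have hex : ∃ ζ, (slC w o A ζ).det ≠ 0 := ⟨ζ, hζ⟩
  have : Nonempty (Fin n) := ⟨o⟩
  rw [slS, dif_pos hex]
  set ζ' := hex.choose
  have hζ' : (slC w o A ζ').det ≠ 0 := hex.choose_spec
  have hne : (slQ w o A).mulVec ζ ≠ 0 := by
    intro h0
    apply hζ
    have : slC w o A ζ = 0 := by
      ext k i
      simp only [slC, Matrix.of_apply, ← Matrix.mulVec_mulVec, h0, Matrix.mulVec_zero]
      rfl
    rw [this, Matrix.det_zero]
  obtain ⟨c, hc⟩ := rank_one (slQ_idem hA.1) hA.2.1 ζ ζ' hne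
  have hC : slC w o A ζ' = c • slC w o A ζ := by
    ext k i
    simp only [slC, Matrix.of_apply, ← Matrix.mulVec_mulVec, ← hc, Matrix.mulVec_smul]
    rfl
  have hc0 : c ≠ 0 := by
    rintro rfl
    rw [hC, zero_smul, Matrix.det_zero] at hζ'
    exact hζ' rfl
  rw [hC, pol_smul hc0 hζ]
  funext i
  have := scU_comm c hc0 (A i)
  simp only [cj, mul_inv_rev, inv_inv]
  calc (pol (slC w o A ζ))⁻¹ * (scU n c hc0)⁻¹ * A i * (scU n c hc0 * pol (slC w o A ζ))
      = (pol (slC w o A ζ))⁻¹ * ((scU n c hc0)⁻¹ * (A i * scU n c hc0)) * pol (slC w o A ζ) := by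
        group
    _ = _ := by rw [← this]; group

theorem slX_eq (hw : ∀ i, EqW (w i)) : EqW (slX w o) := ((hw o).add (hw o).star).add (EqW.const _)

theorem slQ_cj (hw : ∀ i, EqW (w i)) (g : Un n) {A : Fin r → Un n} (h : (slX w o A).det ≠ 0) :
    slQ w o (cj g A) = g.1 * slQ w o A * g.1ᴴ := by
  have h1 : (g * pol (slX w o A) * g⁻¹ : Un n).1 = g.1 * (pol (slX w o A)).1 * g.1ᴴ := rfl
  rw [slQ, (slX_eq hw).2, pol_conj g h, h1, slQ, mul_smul_comm, smul_mul_assoc, mul_add, add_mul,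
    mul_one, un_mul_conj]

theorem slC_cj (hw : ∀ i, EqW (w i)) (g : Un n) {A : Fin r → Un n} (h : (slX w o A).det ≠ 0)
    (ζ : Fin n → ℂ) : slC w o (cj g A) (g.1.mulVec ζ) = g.1 * slC w o A ζ := by
  ext k i
  have : w i (cj g A) * slQ w o (cj g A) * g.1 = g.1 * (w i A * slQ w o A) := by
    rw [slQ_cj hw g h, (hw i).2]
    calc g.1 * w i A * g.1ᴴ * (g.1 * slQ w o A * g.1ᴴ) * g.1
        = g.1 * w i A * (g.1ᴴ * g.1) * slQ w o A * (g.1ᴴ * g.1) := by noncomm_ring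
      _ = _ := by rw [un_conj_mul]; noncomm_ring
  simp only [slC, Matrix.of_apply, Matrix.mulVec_mulVec, this]
  rw [← Matrix.mulVec_mulVec]
  rfl

theorem slV_cj (hw : ∀ i, EqW (w i)) (g : Un n) {A : Fin r → Un n} (hA : A ∈ slV w o) : cj g A ∈ slV w o := by
  obtain ⟨h1, h2, ζ, hζ⟩ := hA
  have hd : g.1.det * g.1ᴴ.det = 1 := by rw [← Matrix.det_mul, un_mul_conj, Matrix.det_one]
  refine ⟨?_, ?_, g.1.mulVec ζ, ?_⟩
  · rw [(slX_eq hw).2, Matrix.det_mul, Matrix.det_mul, mul_right_comm, hd, one_mul]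
    exact h1
  · rw [slQ_cj hw g h1, Matrix.trace_mul_cycle, un_conj_mul, one_mul]
    exact h2
  · rw [slC_cj hw g h1, Matrix.det_mul]
    exact mul_ne_zero (un_det_ne g) hζ

theorem slS_cj (hw : ∀ i, EqW (w i)) (g : Un n) {A : Fin r → Un n} (hA : A ∈ slV w o) :
    slS w o (cj g A) = slS w o A := by
  obtain ⟨h1, h2, ζ, hζ⟩ := id hA
  have hζ2 : (slC w o (cj g A) (g.1.mulVec ζ)).det ≠ 0 := by
    rw [slC_cj hw g h1, Matrix.det_mul]
    exact mul_ne_zero (un_det_ne g) hζ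
  rw [slS_eq hA hζ, slS_eq (slV_cj hw g hA) hζ2, slC_cj hw g h1, pol_mul_left g hζ, cj_cj]
  congr 1
  group

theorem slQ_cont (hw : ∀ i, EqW (w i)) : ContinuousOn (slQ w o) {A | (slX w o A).det ≠ 0} := by
  have : ContinuousOn (fun A => pol (slX w o A)) {A | (slX w o A).det ≠ 0} :=
    pol_continuousOn.comp (slX_eq hw).1.continuousOn fun A hA => hA
  exact (continuousOn_const.add (continuous_subtype_val.comp_continuousOn this)).const_smul (1 / 2 : ℂ)

theorem slC_cont (hw : ∀ i, EqW (w i)) (ζ : Fin n → ℂ) :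
    ContinuousOn (fun A => slC w o A ζ) {A | (slX w o A).det ≠ 0} := by
  have h : ∀ i, ContinuousOn (fun A => (w i A * slQ w o A).mulVec ζ)
      {A | (slX w o A).det ≠ 0} := fun i => by
    have h1 : Continuous fun M : Matrix (Fin n) (Fin n) ℂ => M.mulVec ζ :=
      Continuous.matrix_mulVec continuous_id continuous_const
    exact h1.comp_continuousOn ((hw i).1.continuousOn.mul (slQ_cont hw))
  exact continuousOn_pi.2 fun k => continuousOn_pi.2 fun i => continuousOn_pi.1 (h i) k

theorem slX_open (hw : ∀ i, EqW (w i)) : IsOpen {A | (slX w o A).det ≠ 0} :=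
  isOpen_ne.preimage ((slX_eq hw).1.matrix_det)

theorem slD_open (hw : ∀ i, EqW (w i)) (ζ : Fin n → ℂ) :
    IsOpen {A | (slX w o A).det ≠ 0 ∧ (slC w o A ζ).det ≠ 0} :=
  (Continuous.comp_continuousOn (g := Matrix.det) (continuous_id.matrix_det)
    (slC_cont hw ζ)).isOpen_inter_preimage (slX_open hw) isOpen_ne

theorem slV_open (hw : ∀ i, EqW (w i)) : IsOpen (slV w o) := by
  have h1 : ContinuousOn (fun A => |(slQ w o A).trace.re - 1|) {A | (slX w o A).det ≠ 0} := by
    have : Continuous fun M : Matrix (Fin n) (Fin n) ℂ => |M.trace.re - 1| := by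
      have := Continuous.matrix_trace (n := Fin n) (R := ℂ) continuous_id
      exact ((Complex.continuous_re.comp this).sub continuous_const).abs
    exact this.comp_continuousOn (slQ_cont hw)
  have h2 := h1.isOpen_inter_preimage (slX_open hw) (isOpen_Iio (a := (1 / 2 : ℝ)))
  have h3 := isOpen_iUnion fun ζ => slD_open (o := o) hw ζ
  convert h2.inter h3 using 1
  ext A
  simp only [slV, Set.mem_inter_iff, Set.mem_iUnion, Set.mem_preimage, Set.mem_Iio,
    Set.mem_ofPred_eq]
  tauto

theorem slS_cont (hw : ∀ i, EqW (w i)) : ContinuousOn (slS w o) (slV w o) := by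
  intro A hA
  obtain ⟨h1, h2, ζ, hζ⟩ := id hA
  have hc : ContinuousOn (fun A => cj (pol (slC w o A ζ))⁻¹ A)
      {A | (slX w o A).det ≠ 0 ∧ (slC w o A ζ).det ≠ 0} := by
    have hp : ContinuousOn (fun A => pol (slC w o A ζ))
        {A | (slX w o A).det ≠ 0 ∧ (slC w o A ζ).det ≠ 0} :=
      pol_continuousOn.comp ((slC_cont hw ζ).mono fun A h => h.1) fun A h => h.2
    refine continuousOn_pi.2 fun i => ?_
    exact (hp.inv.mul (continuous_apply i).continuousOn).mul hp.inv.inv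
  refine ContinuousWithinAt.congr_of_eventuallyEq
    ((hc.continuousAt ((slD_open hw ζ).mem_nhds ⟨h1, hζ⟩)).continuousWithinAt) ?_ (slS_eq hA hζ)
  filter_upwards [self_mem_nhdsWithin, mem_nhdsWithin_of_mem_nhds
    ((slD_open (o := o) hw ζ).mem_nhds ⟨h1, hζ⟩)] with B hB hB2
  exact slS_eq hB hB2.2

end Slice

/-- Local slices for the conjugation action on irreducible tuples. -/
theorem slice (hn : 0 < n) {A₀ : Fin r → Un n} (hA : IsIrreducibleTupleU A₀) :
    ∃ (V : Set (Fin r → Un n)) (s : (Fin r → Un n) → Fin r → Un n), IsOpen V ∧ A₀ ∈ V ∧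
      (∀ g, ∀ A ∈ V, cj g A ∈ V) ∧ ContinuousOn s V ∧ (∀ A ∈ V, ∃ g, s A = cj g A) ∧
      ∀ g, ∀ A ∈ V, s (cj g A) = s A := by
  let o : Fin n := ⟨0, hn⟩
  choose w hw _ hwA using fun i : Fin n => exists_word hn hA (Matrix.single i o 1)
  refine ⟨slV w o, slS w o, slV_open hw, ?_, fun g A h => slV_cj hw g h, slS_cont hw,
    fun A hA => ⟨_, slS_eq hA hA.2.2.choose_spec⟩, fun g A h => slS_cj hw g h⟩
  have hE : (Matrix.single o o (1 : ℂ)) * Matrix.single o o 1 = Matrix.single o o 1 := by simp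
  have hX : slX w o A₀ = Matrix.single o o 1 + Matrix.single o o 1 + (-1 : ℂ) • 1 := by
    rw [slX, hwA, Matrix.conjTranspose_single, star_one]
  have hXX : slX w o A₀ * (slX w o A₀) = 1 := by
    rw [hX]
    simp only [mul_add, add_mul, hE, smul_mul_assoc, mul_smul_comm, mul_one, one_mul]
    module
  have hXh : (slX w o A₀)ᴴ = slX w o A₀ := by
    rw [hX]
    simp [Matrix.conjTranspose_single]
  have hXd : (slX w o A₀).det ≠ 0 := by
    intro h0
    have := congrArg Matrix.det hXX
    rw [Matrix.det_mul, h0, Matrix.det_one] at this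
    simp at this
  have hpol : pol (slX w o A₀) = ⟨slX w o A₀, by
      rw [Matrix.mem_unitaryGroup_iff]
      change slX w o A₀ * (slX w o A₀)ᴴ = 1
      rw [hXh, hXX]⟩ := by
    rw [← pol_unitary ⟨slX w o A₀, _⟩]
  have hQ : slQ w o A₀ = Matrix.single o o 1 := by
    rw [slQ, hpol]
    simp only
    rw [hX]
    module
  have hC : slC w o A₀ (Pi.single o 1) = 1 := by
    ext k i
    simp only [slC, Matrix.of_apply, hQ, hwA, Matrix.single_mul_single_same, mul_one]
    simp [Matrix.single_apply, Matrix.one_apply, eq_comm]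
  refine ⟨hXd, ?_, Pi.single o 1, ?_⟩
  · rw [hQ, Matrix.trace_single_eq_same]
    norm_num
  · rw [hC, Matrix.det_one]
    exact one_ne_zero

end

/-! ### The irreducible loci as bases of principal bundles -/

section
variable {n r : ℕ}

theorem cj_one (A : Fin r → Un n) : cj 1 A = A := by
  funext i; simp [cj]

theorem irr_cj {A : Fin r → Un n} (hA : IsIrreducibleTupleU A) (g : Un n) :
    IsIrreducibleTupleU (cj g A) := by
  have hgg : ∀ v : Fin n → ℂ, g.1.mulVec (g.1ᴴ.mulVec v) = v := fun v => by
    rw [Matrix.mulVec_mulVec, un_mul_conj, Matrix.one_mulVec]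
  intro p hp
  rcases hA (p.comap (Matrix.toLin' g.1)) (fun i v hv => by
    rw [Submodule.mem_comap, Matrix.toLin'_apply] at hv ⊢
    have h := hp i _ hv
    have h2 : (cj g A i).1 * g.1 = g.1 * (A i).1 := by
      change (cj g A i * g).1 = (g * A i).1
      simp [cj]
    rwa [Matrix.mulVec_mulVec, h2, ← Matrix.mulVec_mulVec] at h) with h | h
  · left
    rw [Submodule.eq_bot_iff]
    intro v hv
    have h1 : g.1ᴴ.mulVec v ∈ p.comap (Matrix.toLin' g.1) := by
      rw [Submodule.mem_comap, Matrix.toLin'_apply, hgg]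
      exact hv
    rw [h, Submodule.mem_bot] at h1
    rw [← hgg v, h1, Matrix.mulVec_zero]
  · right
    rw [eq_top_iff]
    intro v _
    have h1 : g.1ᴴ.mulVec v ∈ p.comap (Matrix.toLin' g.1) := by rw [h]; trivial
    rwa [Submodule.mem_comap, Matrix.toLin'_apply, hgg] at h1

/-- Every unitary matrix is a scalar multiple of a special unitary one. -/
theorem exists_su (hn : 0 < n) (g : Un n) :
    ∃ h : SUn n, ∀ V : Un n, g * V * g⁻¹ = h.1 * V * h.1⁻¹ := by
  obtain ⟨c, hc⟩ := IsAlgClosed.exists_pow_nat_eq (detC n g : ℂ)⁻¹ hn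
  have hc0 : c ≠ 0 := by
    rintro rfl
    rw [zero_pow hn.ne'] at hc
    exact inv_ne_zero (Circle.coe_ne_zero _) hc.symm
  have hc1 : ‖c‖ = 1 := by
    have := congrArg norm hc
    rw [norm_pow, norm_inv, Circle.norm_coe, inv_one] at this
    exact (pow_eq_one_iff_of_nonneg (norm_nonneg _) hn.ne').1 this
  refine ⟨⟨scU n c hc0 * g, ?_⟩, fun V => ?_⟩
  · rw [mem_su_iff, map_mul (detC n)]
    apply Circle.ext
    rw [Circle.coe_mul, detC_val]
    change ((c / ‖c‖) • (1 : Matrix (Fin n) (Fin n) ℂ)).det * (detC n g : ℂ) = 1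
    rw [hc1, Matrix.det_smul, Matrix.det_one]
    simp only [Complex.ofReal_one, div_one, Fintype.card_fin, mul_one, hc]
    exact inv_mul_cancel₀ (Circle.coe_ne_zero _)
  · have := scU_comm c hc0 (g * V * g⁻¹)
    calc g * V * g⁻¹ = (g * V * g⁻¹) * scU n c hc0 * (scU n c hc0)⁻¹ := by group
      _ = _ := by rw [← this]; simp only; group

/-- The conjugation action of `SU(n)` on itself. -/
def conjHomS (n : ℕ) : PG n →* MulAut (SUn n) :=
  QuotientGroup.lift (Zs n) MulAut.conj (by
    rintro g ⟨c, hc⟩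
    ext1 V
    apply Subtype.ext
    apply Subtype.ext
    change g.1.1 * V.1.1 * star g.1.1 = V.1.1
    have : g.1.1 * V.1.1 = V.1.1 * g.1.1 := by rw [hc]; simp
    rw [this, mul_assoc, Unitary.mul_star_self_of_mem g.1.2, mul_one])

instance pgActS (n : ℕ) : MulDistribMulAction (PG n) (SUn n) :=
  MulDistribMulAction.compHom (SUn n) (conjHomS n)

theorem pg_smulS (g : SUn n) (V : SUn n) : ((g : PG n) • V) = g * V * g⁻¹ := rfl

theorem pg_smul_val (q : PG n) (V : SUn n) : (q • V).1 = q • V.1 := by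
  obtain ⟨g, rfl⟩ := QuotientGroup.mk_surjective q
  rfl

instance pg_contS (n : ℕ) : ContinuousSMul (PG n) (SUn n) where
  continuous_smul := by
    have h : Continuous fun q : PG n × SUn n => q.1 • q.2.1 := by fun_prop
    exact Continuous.subtype_mk (h.congr fun q => (pg_smul_val q.1 q.2).symm)
      fun q => (q.1 • q.2).2

/-- The irreducible tuples of unitary matrices. -/
abbrev EU (n r : ℕ) : Type := {A : Fin r → Un n // IsIrreducibleTupleU A}

/-- The irreducible tuples of special unitary matrices. -/
abbrev ES (n r : ℕ) : Type := {A : Fin r → SUn n // IsIrreducibleTupleSU A}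

theorem pg_smul_cj (g : SUn n) (A : Fin r → Un n) : (g : PG n) • A = cj g.1 A := rfl

theorem irr_smul (q : PG n) {A : Fin r → Un n} (hA : IsIrreducibleTupleU A) :
    IsIrreducibleTupleU (q • A) := by
  obtain ⟨g, rfl⟩ := QuotientGroup.mk_surjective q
  exact irr_cj hA g.1

instance actEU (n r : ℕ) : MulAction (PG n) (EU n r) where
  smul q A := ⟨q • A.1, irr_smul q A.2⟩
  one_smul A := Subtype.ext (one_smul (PG n) A.1)
  mul_smul a b A := Subtype.ext (mul_smul a b A.1)

theorem smulEU_val (q : PG n) (A : EU n r) : (q • A).1 = q • A.1 := rfl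

instance contEU (n r : ℕ) : ContinuousSMul (PG n) (EU n r) where
  continuous_smul := by
    have h : Continuous fun q : PG n × EU n r => q.1 • q.2.1 := by fun_prop
    exact Continuous.subtype_mk h _

/-- The underlying tuple of unitary matrices. -/
def toU (A : Fin r → SUn n) : Fin r → Un n := fun i => (A i).1

theorem toU_smul (q : PG n) (A : Fin r → SUn n) : toU (q • A) = q • toU A := by
  funext i; exact pg_smul_val q (A i)

theorem toU_emb : IsEmbedding (toU (n := n) (r := r)) :=
  IsEmbedding.piMap fun _ => IsEmbedding.subtypeVal

instance actES (n r : ℕ) : MulAction (PG n) (ES n r) where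
  smul q A := ⟨q • A.1, by
    have : IsIrreducibleTupleU (toU (q • A.1)) := by
      rw [toU_smul]
      exact irr_smul q A.2
    exact this⟩
  one_smul A := Subtype.ext (one_smul (PG n) A.1)
  mul_smul a b A := Subtype.ext (mul_smul a b A.1)

theorem smulES_val (q : PG n) (A : ES n r) : (q • A).1 = q • A.1 := rfl

instance contES (n r : ℕ) : ContinuousSMul (PG n) (ES n r) where
  continuous_smul := by
    have h : Continuous fun q : PG n × ES n r => q.1 • q.2.1 := by fun_prop
    exact Continuous.subtype_mk h _

/-- The inclusion of tuples. -/
def jS (n r : ℕ) : C(ES n r, EU n r) :=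
  ⟨fun A => ⟨toU A.1, A.2⟩, Continuous.subtype_mk (toU_emb.continuous.comp continuous_subtype_val) _⟩

theorem jS_smul (q : PG n) (A : ES n r) : jS n r (q • A) = q • jS n r A :=
  Subtype.ext (toU_smul q A.1)

theorem jS_emb : IsEmbedding (jS n r) :=
  IsEmbedding.of_comp (jS n r).continuous continuous_subtype_val
    (toU_emb.comp IsEmbedding.subtypeVal)

/-- The quotient map onto the irreducible locus. -/
def pU (n r : ℕ) : C(EU n r, irrLocusU n r) :=
  ⟨fun A => ⟨Quotient.mk _ A.1, A.1, A.2, rfl⟩,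
    Continuous.subtype_mk (continuous_quotient_mk'.comp continuous_subtype_val) _⟩

/-- The quotient map onto the irreducible locus. -/
def pS (n r : ℕ) : C(ES n r, irrLocusSU n r) :=
  ⟨fun A => ⟨Quotient.mk _ A.1, A.1, A.2, rfl⟩,
    Continuous.subtype_mk (continuous_quotient_mk'.comp continuous_subtype_val) _⟩

theorem pU_surj : Function.Surjective (pU n r) := by
  rintro ⟨x, A, hA, rfl⟩
  exact ⟨⟨A, hA⟩, rfl⟩

theorem pS_surj : Function.Surjective (pS n r) := by
  rintro ⟨x, A, hA, rfl⟩
  exact ⟨⟨A, hA⟩, rfl⟩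

theorem pU_eq (hn : 0 < n) {A B : EU n r} : pU n r A = pU n r B ↔ ∃ q : PG n, q • A = B := by
  constructor
  · intro h
    obtain ⟨g, hg⟩ := MulAction.orbitRel_apply.1 (Quotient.exact (congrArg Subtype.val h.symm))
    obtain ⟨k, hk⟩ := exists_su hn (ConjAct.ofConjAct g)
    refine ⟨k, Subtype.ext ?_⟩
    rw [← hg]
    funext i
    exact (hk (A.1 i)).symm
  · rintro ⟨q, rfl⟩
    obtain ⟨g, rfl⟩ := QuotientGroup.mk_surjective q
    refine Subtype.ext (Eq.symm (Quotient.sound ?_))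
    exact MulAction.orbitRel_apply.2 ⟨ConjAct.toConjAct g.1, rfl⟩

theorem pS_eq {A B : ES n r} : pS n r A = pS n r B ↔ ∃ q : PG n, q • A = B := by
  constructor
  · intro h
    obtain ⟨g, hg⟩ := MulAction.orbitRel_apply.1 (Quotient.exact (congrArg Subtype.val h.symm))
    exact ⟨(ConjAct.ofConjAct g : SUn n), Subtype.ext hg⟩
  · rintro ⟨q, rfl⟩
    obtain ⟨g, rfl⟩ := QuotientGroup.mk_surjective q
    refine Subtype.ext (Eq.symm (Quotient.sound ?_))
    exact MulAction.orbitRel_apply.2 ⟨ConjAct.toConjAct g, rfl⟩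

theorem pg_free (hn : 0 < n) {a b : PG n} {A : EU n r} (h : a • A = b • A) : a = b := by
  have h2 : (b⁻¹ * a) • A = A := by rw [mul_smul, h, inv_smul_smul]
  obtain ⟨g, hg⟩ := QuotientGroup.mk_surjective (b⁻¹ * a)
  rw [← hg] at h2
  have h3 := congrArg Subtype.val h2
  obtain ⟨c, hc⟩ := schur hn (fun i => (A.1 i).1) A.2 g.1.1 (fun i => by
    have : g.1 * A.1 i * g.1⁻¹ = A.1 i := congrFun h3 i
    exact congrArg Subtype.val (mul_inv_eq_iff_eq_mul.1 this))
  have h4 : (g : PG n) = 1 := (QuotientGroup.eq_one_iff g).2 ⟨c, hc⟩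
  rw [h4] at hg
  exact (inv_mul_eq_one.1 hg.symm).symm

open Classical in
/-- The element of the group carrying `A` to `B`. -/
def dU (A B : EU n r) : PG n := if h : ∃ q : PG n, q • A = B then h.choose else 1

theorem dU_spec {A B : EU n r} (h : ∃ q : PG n, q • A = B) : dU A B • A = B := by
  rw [dU, dif_pos h]; exact h.choose_spec

theorem dU_cont (hn : 0 < n) :
    ContinuousOn (fun q : EU n r × EU n r => dU q.1 q.2) {q | pU n r q.1 = pU n r q.2} := by
  rw [continuousOn_iff_continuous_domRestrict]
  apply continuous_of_closed_graph
  have : {q : {q : EU n r × EU n r | pU n r q.1 = pU n r q.2} × PG n |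
      q.2 = Set.domRestrict {q : EU n r × EU n r | pU n r q.1 = pU n r q.2}
        (fun q => dU q.1 q.2) q.1} = {q | q.2 • q.1.1.1 = q.1.1.2} := by
    ext ⟨⟨⟨A, B⟩, hAB⟩, q⟩
    have hs : dU A B • A = B := dU_spec ((pU_eq hn).1 hAB)
    simp only [Set.mem_ofPred_eq, Set.domRestrict_apply]
    constructor
    · rintro rfl
      exact hs
    · intro h
      exact pg_free hn (h.trans hs.symm)
  rw [this]
  exact isClosed_eq (by fun_prop) (by fun_prop)

theorem pU_open : IsOpenMap (pU n r) := by
  intro N hN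
  obtain ⟨O, hO, rfl⟩ := isOpen_induced_iff.1 hN
  have h1 : IsOpen ((Quotient.mk (MulAction.orbitRel (ConjAct (Un n)) (Fin r → Un n))) '' O) := by
    have hcs : ContinuousConstSMul (ConjAct (Un n)) (Fin r → Un n) :=
      ⟨fun g => continuous_pi fun i => by
        change Continuous fun A : Fin r → Un n =>
          ConjAct.ofConjAct g * A i * (ConjAct.ofConjAct g)⁻¹
        fun_prop⟩
    exact isOpenMap_quotient_mk'_mul O hO
  refine isOpen_induced_iff.2 ⟨_, h1, ?_⟩
  ext ⟨x, hx⟩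
  constructor
  · rintro ⟨A, hA, rfl⟩
    obtain ⟨B, hB, hBA⟩ := hx
    obtain ⟨g, hg⟩ := MulAction.orbitRel_apply.1 (Quotient.exact hBA.symm)
    have hAirr : IsIrreducibleTupleU A := by
      rw [← hg]
      exact irr_cj hB (ConjAct.ofConjAct g)
    exact ⟨⟨A, hAirr⟩, hA, rfl⟩
  · rintro ⟨A, hA, h⟩
    exact ⟨A.1, hA, congrArg Subtype.val h⟩

theorem pU_cj (g : Un n) (A : EU n r) : pU n r ⟨cj g A.1, irr_cj A.2 g⟩ = pU n r A :=
  Subtype.ext (Quotient.sound (MulAction.orbitRel_apply.2 ⟨ConjAct.toConjAct g, rfl⟩))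

theorem pU_sec (hn : 0 < n) (x : irrLocusU n r) :
    ∃ (U : Set (irrLocusU n r)) (s : irrLocusU n r → EU n r), IsOpen U ∧ x ∈ U ∧
      ContinuousOn s U ∧ ∀ u ∈ U, pU n r (s u) = u := by
  obtain ⟨A₀, rfl⟩ := pU_surj x
  obtain ⟨V, t, hV, hA₀, hVc, htc, htj, hti⟩ := slice hn A₀.2
  have hirr : ∀ A : EU n r, A.1 ∈ V → IsIrreducibleTupleU (t A.1) := by
    intro A hA
    obtain ⟨g, hg⟩ := htj _ hA
    rw [hg]
    exact irr_cj A.2 g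
  have hVE : IsOpen {A : EU n r | A.1 ∈ V} := hV.preimage continuous_subtype_val
  have hcong : ∀ A B : EU n r, A.1 ∈ V → pU n r B = pU n r A → B.1 ∈ V ∧ t B.1 = t A.1 := by
    intro A B hA h
    obtain ⟨q, hq⟩ := (pU_eq hn).1 h.symm
    obtain ⟨g, rfl⟩ := QuotientGroup.mk_surjective q
    have : B.1 = cj g.1 A.1 := (congrArg Subtype.val hq).symm
    rw [this]
    exact ⟨hVc _ _ hA, hti _ _ hA⟩
  choose c hc using pU_surj (n := n) (r := r)
  let s : irrLocusU n r → EU n r := fun u =>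
    open Classical in if h : IsIrreducibleTupleU (t (c u).1) then ⟨t (c u).1, h⟩ else A₀
  have hsv : ∀ A : EU n r, A.1 ∈ V → (s (pU n r A)).1 = t A.1 := by
    intro A hA
    obtain ⟨h1, h2⟩ := hcong A _ hA (hc (pU n r A))
    have h3 : IsIrreducibleTupleU (t (c (pU n r A)).1) := hirr _ h1
    simp only [s, dif_pos h3, h2]
  refine ⟨pU n r '' {A | A.1 ∈ V}, s, pU_open _ hVE, ⟨A₀, hA₀, rfl⟩, ?_, ?_⟩
  · refine (IsEmbedding.subtypeVal (p := fun A : Fin r → Un n =>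
      IsIrreducibleTupleU A)).isInducing.continuousOn_iff.2 ?_
    rintro _ ⟨A, hA, rfl⟩
    refine ContinuousAt.continuousWithinAt ?_
    intro N hN
    simp only [Function.comp, hsv A hA] at hN
    have h1 : (fun B : EU n r => t B.1) ⁻¹' N ∈ 𝓝 A :=
      ((htc.continuousAt (hV.mem_nhds hA)).comp continuous_subtype_val.continuousAt) hN
    have h2 := (pU_open (n := n) (r := r)).image_mem_nhds
      (Filter.inter_mem h1 (hVE.mem_nhds hA))
    refine Filter.mem_map.2 (Filter.mem_of_superset h2 ?_)
    rintro _ ⟨B, ⟨hB1, hB2⟩, rfl⟩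
    change (s (pU n r B)).1 ∈ N
    rw [hsv B hB2]
    exact hB1
  · rintro _ ⟨A, hA, rfl⟩
    obtain ⟨g, hg⟩ := htj _ hA
    have : s (pU n r A) = ⟨cj g A.1, irr_cj A.2 g⟩ := Subtype.ext ((hsv A hA).trans hg)
    rw [this, pU_cj]

theorem principalU (hn : 0 < n) (r : ℕ) :
    Principal (pU n r) (dU (n := n) (r := r)) where
  cont := dU_cont hn
  act _ _ h := dU_spec ((pU_eq hn).1 h)
  inv q A := ((pU_eq hn).2 ⟨q, rfl⟩).symm
  free q A := pg_free hn (dU_spec (A := A) (B := q • A) ⟨q, rfl⟩)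
  sec := pU_sec hn

theorem jS_pU_eq (hn : 0 < n) {A B : ES n r} :
    pU n r (jS n r A) = pU n r (jS n r B) ↔ pS n r A = pS n r B := by
  rw [pU_eq hn, pS_eq]
  refine exists_congr fun q => ?_
  rw [← jS_smul]
  exact jS_emb.injective.eq_iff

/-- A unitary tuple conjugate to a special unitary one is special unitary. -/
theorem jS_lift (hn : 0 < n) (A : ES n r) (B : EU n r) (h : pU n r (jS n r A) = pU n r B) :
    ∃ B' : ES n r, jS n r B' = B := by
  obtain ⟨q, rfl⟩ := (pU_eq hn).1 h
  exact ⟨q • A, jS_smul q A⟩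

theorem pS_sec (hn : 0 < n) (x : irrLocusSU n r) :
    ∃ (U : Set (irrLocusSU n r)) (s : irrLocusSU n r → ES n r), IsOpen U ∧ x ∈ U ∧
      ContinuousOn s U ∧ ∀ u ∈ U, pS n r (s u) = u := by
  choose c hc using pS_surj (n := n) (r := r)
  let φ : irrLocusSU n r → irrLocusU n r := fun x => pU n r (jS n r (c x))
  have hφp : ∀ A, φ (pS n r A) = pU n r (jS n r A) := fun A => (jS_pU_eq hn).2 (hc _)
  have hφ : Continuous φ := by
    let ψ : CharVarSU n r → CharVarU n r := Quotient.map' toU (by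
      intro A B h
      obtain ⟨g, hg⟩ := MulAction.orbitRel_apply.1 h
      refine MulAction.orbitRel_apply.2 ⟨ConjAct.toConjAct (ConjAct.ofConjAct g : SUn n).1, ?_⟩
      rw [← hg]
      rfl)
    have hψ : Continuous ψ := toU_emb.continuous.quotient_map' _
    refine Continuous.subtype_mk (f := fun x : irrLocusSU n r => ψ x.1)
      (hψ.comp continuous_subtype_val) ?_ |>.congr fun x => ?_
    · rintro ⟨x, A, hA, rfl⟩
      exact ⟨toU A, hA, rfl⟩
    · obtain ⟨A, rfl⟩ := pS_surj x
      rw [hφp]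
      rfl
  obtain ⟨U, s, hU, hxU, hs, hps⟩ := pU_sec hn (φ x)
  have hl : ∀ u ∈ φ ⁻¹' U, ∃ B : ES n r, jS n r B = s (φ u) := fun u hu =>
    jS_lift hn (c u) _ (hps _ hu).symm
  have : Nonempty (ES n r) := ⟨c x⟩
  choose! s' hs' using hl
  refine ⟨φ ⁻¹' U, s', hU.preimage hφ, hxU, ?_, fun u hu => ?_⟩
  · rw [jS_emb.isInducing.continuousOn_iff]
    exact (hs.comp hφ.continuousOn fun u hu => hu).congr hs'
  · refine Eq.trans ?_ (hc u)
    rw [← jS_pU_eq hn, hs' u hu, hps _ hu]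

theorem principalS (hn : 0 < n) (r : ℕ) :
    Principal (pS n r) (fun A B => dU (jS n r A) (jS n r B)) where
  cont := (dU_cont hn).comp (f := fun q : ES n r × ES n r => (jS n r q.1, jS n r q.2))
    (by fun_prop) fun q hq => (jS_pU_eq hn).2 hq
  act A B h := by
    apply jS_emb.injective
    rw [jS_smul]
    exact dU_spec ((pU_eq hn).1 ((jS_pU_eq hn).2 h))
  inv q A := (pS_eq.2 ⟨q, rfl⟩).symm
  free q A := by
    rw [jS_smul]
    exact pg_free hn (dU_spec ⟨q, rfl⟩)
  sec := pS_sec hn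

end

/-! ### Removing reducible tuples from a family -/

/-- General position relative to a closed set, in a retract `Γ` of an open subset `Dom` of a
vector space: if the part of `Dom` retracting outside `E` is thin, then a family in `Γ` which lies
in `E` over `A` can be deformed into `E` relative to `A`. -/
theorem transv {X Γ V : Type*} [TopologicalSpace X] [CompactSpace X] [T2Space X]
    [TopologicalSpace Γ] [NormedAddCommGroup V] [NormedSpace ℝ V] [FiniteDimensional ℝ V]
    {m : ℕ} (hX : Retr X m) {A : Set X} (hA : IsClosed A) (hV : 0 < Module.finrank ℝ V)
    (ι : C(Γ, V)) {Dom : Set V} (hD : IsOpen Dom) (hι : ∀ x, ι x ∈ Dom) (R : V → Γ)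
    (hR : ContinuousOn R Dom) (hRι : ∀ x, R (ι x) = x) {E : Set Γ} (hE : IsOpen E)
    {Z : Set V} (hZ : Thin m Z) (hEZ : ∀ M ∈ Dom, R M ∉ E → M ∈ Z)
    (f : C(X, Γ)) (hf : ∀ x ∈ A, f x ∈ E) :
    ∃ g : C(X, Γ), (∀ x, g x ∈ E) ∧ f.HomotopicRel g A := by
  let u : C(X, V) := ι.comp f
  have hUE : IsOpen (Dom ∩ R ⁻¹' E) := hR.isOpen_inter_preimage hD hE
  obtain ⟨ε₁, h₁, hs₁⟩ := (isCompact_range u.continuous).exists_thickening_subset_open hD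
    (by rintro _ ⟨x, rfl⟩; exact hι _)
  obtain ⟨ε₂, h₂, hs₂⟩ := (hA.isCompact.image u.continuous).exists_thickening_subset_open hUE
    (by rintro _ ⟨x, hx, rfl⟩; exact ⟨hι _, by simpa [u, hRι] using hf x hx⟩)
  let N : Set X := u ⁻¹' Metric.thickening (ε₂ / 2) (u '' A)
  have hN : IsOpen N := Metric.isOpen_thickening.preimage u.continuous
  have hAN : A ⊆ N := fun x hx =>
    Metric.self_subset_thickening (half_pos h₂) _ ⟨x, hx, rfl⟩
  obtain ⟨χ, hχ0, hχ1, hχ⟩ := exists_continuous_zero_one_of_isClosed hA hN.isClosed_compl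
    (Set.disjoint_left.2 fun x hx hx' => hx' (hAN hx))
  obtain ⟨g, hg, hgZ⟩ := hZ.avoid hX hV u (lt_min h₁ (half_pos h₂))
  let h : I × X → V := fun q => u q.2 + ((q.1 : ℝ) * χ q.2) • (g q.2 - u q.2)
  have hh : Continuous h := by fun_prop
  have hd : ∀ q, dist (h q) (u q.2) < min ε₁ (ε₂ / 2) := by
    intro q
    have h1 : |(q.1 : ℝ) * χ q.2| ≤ 1 := by
      rw [abs_mul, abs_of_nonneg q.1.2.1, abs_of_nonneg (hχ q.2).1]
      exact mul_le_one₀ q.1.2.2 (hχ q.2).1 (hχ q.2).2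
    simp only [h, dist_eq_norm, add_sub_cancel_left, norm_smul, Real.norm_eq_abs]
    exact (mul_le_of_le_one_left (norm_nonneg _) h1).trans_lt (hg _)
  have hDom : ∀ q, h q ∈ Dom := fun q => hs₁ <| Metric.mem_thickening_iff.2
    ⟨_, ⟨q.2, rfl⟩, (hd q).trans_le (min_le_left _ _)⟩
  have hF : Continuous fun q => R (h q) := hR.comp_continuous hh hDom
  refine ⟨⟨fun x => R (h (1, x)), hF.comp (by fun_prop)⟩, fun x => ?_,
    htpy_of (fun q => R (h q)) hF (fun x => by simp [h, u, hRι]) (fun x => rfl)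
      (fun t x hx => ?_)⟩
  · by_cases hx : x ∈ N
    · obtain ⟨_, ⟨a, ha, rfl⟩, hda⟩ := Metric.mem_thickening_iff.1 hx
      refine (hs₂ (Metric.mem_thickening_iff.2 ⟨_, ⟨a, ha, rfl⟩, ?_⟩) : h (1, x) ∈ _).2
      have := (hd (1, x)).trans_le (min_le_right _ _)
      have h3 := dist_triangle (h (1, x)) (u x) (u a)
      simp only at this
      linarith
    · by_contra hc
      refine hgZ x ?_
      have : h (1, x) = g x := by
        have : χ x = 1 := hχ1 hx
        simp [h, this]
      rw [← this]
      exact hEZ _ (hDom _) hc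
  · have : χ x = 0 := hχ0 hx
    simp [h, this, u, hRι]

/-! ### Rational parametrization of the reducible tuples -/

section Param
open scoped ComplexOrder
variable {n r : ℕ}

/-- The coordinate projection of `ℂⁿ` onto the coordinates in `J`. -/
def pr (J : Set (Fin n)) : Matrix (Fin n) (Fin n) ℂ :=
  open Classical in Matrix.diagonal fun i => if i ∈ J then 1 else 0

theorem pr_star (J : Set (Fin n)) : (pr J)ᴴ = pr J := by
  rw [pr, Matrix.diagonal_conjTranspose]
  congr 1
  ext i
  by_cases h : i ∈ J <;> simp [h]

theorem pr_mul (J : Set (Fin n)) : pr J * pr J = pr J := by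
  rw [pr, Matrix.diagonal_mul_diagonal]
  congr 1
  ext i
  by_cases h : i ∈ J <;> simp [h]

/-- Every subspace is the graph of a linear map from a coordinate subspace `ℂ^J` to the
complementary one. -/
theorem exists_graph (p : Submodule ℂ (Fin n → ℂ)) :
    ∃ (J : Set (Fin n)) (X : Matrix (Fin n) (Fin n) ℂ), (∀ i j, ¬ (i ∉ J ∧ j ∈ J) → X i j = 0) ∧
      ∀ v, v ∈ p ↔ ∃ u, v = (1 + X) *ᵥ (pr J *ᵥ u) := by
  obtain ⟨κ, a, ha, hsp, hli⟩ :=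
    exists_linearIndependent' ℂ (fun i : Fin n => p.mkQ (Pi.single i 1))
  have : Finite κ := Finite.of_injective a ha
  have := Fintype.ofFinite κ
  have htop : Submodule.span ℂ (range fun i : Fin n => p.mkQ (Pi.single i 1)) = ⊤ := by
    have h1 := (Pi.basisFun ℂ (Fin n)).span_eq
    have h2 := congrArg (Submodule.map p.mkQ) h1
    rw [Submodule.map_span, Submodule.map_top, Submodule.range_mkQ, ← range_comp] at h2
    simpa [Function.comp_def] using h2
  have hc : ∀ i : Fin n, ∃ c : κ → ℂ,
      p.mkQ (Pi.single i 1) = ∑ k, c k • p.mkQ (Pi.single (a k) 1) := by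
    intro i
    have h1 : p.mkQ (Pi.single i 1) ∈ Submodule.span ℂ
        (range ((fun i : Fin n => p.mkQ (Pi.single i 1)) ∘ a)) := by
      rw [hsp, htop]; trivial
    obtain ⟨c, hc⟩ := (Submodule.mem_span_range_iff_exists_fun ℂ).1 h1
    exact ⟨c, hc.symm⟩
  choose c hc using hc
  let J : Set (Fin n) := (range a)ᶜ
  classical
  let X : Matrix (Fin n) (Fin n) ℂ := Matrix.of fun i j =>
    if j ∈ J then ∑ k, if a k = i then - c j k else 0 else 0
  have hX0 : ∀ i j, ¬ (i ∉ J ∧ j ∈ J) → X i j = 0 := by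
    intro i j h
    by_cases hj : j ∈ J
    · have hi : i ∈ J := by by_contra hi; exact h ⟨hi, hj⟩
      simp only [X, Matrix.of_apply, if_pos hj]
      refine Finset.sum_eq_zero fun k _ => if_neg fun hk => hi ⟨k, hk⟩
    · simp [X, hj]
  have hXcol : ∀ j ∈ J, X *ᵥ Pi.single j 1 = - ∑ k, c j k • Pi.single (a k) (1 : ℂ) := by
    intro j hj
    ext i
    simp only [Matrix.mulVec_single_one, Matrix.col_apply, X, Matrix.of_apply, if_pos hj,
      Pi.neg_apply, Finset.sum_apply, Pi.smul_apply, smul_eq_mul, ← Finset.sum_neg_distrib]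
    refine Finset.sum_congr rfl fun k _ => ?_
    by_cases h : a k = i
    · subst h; simp
    · simp [h, Ne.symm h]
  have hmem : ∀ j, (1 + X) *ᵥ (pr J *ᵥ Pi.single j 1) ∈ p := by
    intro j
    by_cases hj : j ∈ J
    · have h1 : pr J *ᵥ Pi.single j 1 = Pi.single j 1 := by
        simp [pr, hj]
      rw [h1, Matrix.add_mulVec, Matrix.one_mulVec, hXcol j hj, ← sub_eq_add_neg,
        ← Submodule.Quotient.mk_eq_zero, ← Submodule.mkQ_apply, map_sub, map_sum, hc j]
      simp only [map_smul, sub_self]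
    · have h1 : pr J *ᵥ Pi.single j 1 = 0 := by
        simp [pr, hj]
      rw [h1, Matrix.mulVec_zero]
      exact p.zero_mem
  have hall : ∀ u, (1 + X) *ᵥ (pr J *ᵥ u) ∈ p := by
    intro u
    have h1 : u = ∑ j, u j • Pi.single j (1 : ℂ) := by
      ext i; simp [Finset.sum_apply, Pi.single_apply]
    have h2 := congrArg ((1 + X).mulVecLin ∘ₗ (pr J).mulVecLin) h1
    rw [map_sum] at h2
    simp only [map_smul] at h2
    change ((1 + X).mulVecLin ∘ₗ (pr J).mulVecLin) u ∈ p
    rw [h2]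
    exact Submodule.sum_mem _ fun j _ => p.smul_mem _ (hmem j)
  refine ⟨J, X, hX0, fun v => ⟨fun hv => ⟨v, ?_⟩, ?_⟩⟩
  · -- the difference lies in `p` and is supported off `J`, where `p` has no nonzero vectors
    set w := v - (1 + X) *ᵥ (pr J *ᵥ v) with hw
    have hwp : w ∈ p := p.sub_mem hv (hall v)
    have hwJ : ∀ j ∈ J, w j = 0 := by
      intro j hj
      have h2 : (X *ᵥ (pr J *ᵥ v)) j = 0 := by
        rw [Matrix.mulVec, dotProduct]
        refine Finset.sum_eq_zero fun i _ => ?_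
        rw [hX0 j i (fun h => h.1 hj), zero_mul]
      have h3 : (pr J *ᵥ v) j = v j := by simp [pr, Matrix.mulVec_diagonal, hj]
      rw [hw, Pi.sub_apply, Matrix.add_mulVec, Pi.add_apply, h2, Matrix.one_mulVec, h3]
      ring
    have h4 : w = ∑ k, w (a k) • Pi.single (a k) (1 : ℂ) := by
      ext i
      simp only [Finset.sum_apply, Pi.smul_apply, smul_eq_mul]
      by_cases hi : i ∈ J
      · rw [hwJ i hi]
        refine (Finset.sum_eq_zero fun k _ => ?_).symm
        rw [Pi.single_apply, if_neg (fun h => hi ⟨k, h.symm⟩), mul_zero]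
      · obtain ⟨k, rfl⟩ : i ∈ range a := not_not.1 hi
        rw [Finset.sum_eq_single k]
        · simp
        · intro l _ hl
          rw [Pi.single_apply, if_neg (fun h => hl (ha h).symm), mul_zero]
        · simp
    have h5 := (Submodule.Quotient.mk_eq_zero p).2 hwp
    rw [← Submodule.mkQ_apply, h4, map_sum] at h5
    simp only [map_smul] at h5
    have h6 := Fintype.linearIndependent_iff.1 hli _ h5
    have h7 : w = 0 := by
      rw [h4]
      exact Finset.sum_eq_zero fun k _ => by rw [h6 k, zero_smul]
    exact sub_eq_zero.1 h7
  · rintro ⟨u, rfl⟩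
    exact hall u

/-- A Hermitian matrix preserving the graph of `X` becomes block diagonal in the frame
`1 + X - Xᴴ`, which maps `ℂ^J` to the graph and its complement to the orthogonal one. -/
theorem exists_block {J : Set (Fin n)} {X : Matrix (Fin n) (Fin n) ℂ}
    (hX : ∀ i j, ¬ (i ∉ J ∧ j ∈ J) → X i j = 0) {p : Submodule ℂ (Fin n → ℂ)}
    (hp : ∀ v, v ∈ p ↔ ∃ u, v = (1 + X) *ᵥ (pr J *ᵥ u)) {H : Matrix (Fin n) (Fin n) ℂ}
    (hH : Hᴴ = H) (hHp : ∀ v ∈ p, H *ᵥ v ∈ p) :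
    ∃ K : Matrix (Fin n) (Fin n) ℂ, Kᴴ = K ∧ (∀ i j, ¬ (i ∈ J ↔ j ∈ J) → K i j = 0) ∧
      H = (1 + X - Xᴴ) * K * (1 + X - Xᴴ)ᴴ := by
  set P := pr J with hP
  set h := 1 + X - Xᴴ with hh
  have hXP : X * P = X := by
    ext i j
    rw [hP, pr, Matrix.mul_diagonal]
    by_cases hj : j ∈ J
    · simp [hj]
    · simp [hj, hX i j (fun h => hj h.2)]
  have hPX : P * X = 0 := by
    ext i j
    rw [hP, pr, Matrix.diagonal_mul]
    by_cases hi : i ∈ J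
    · simp [hX i j (fun h => h.1 hi)]
    · simp [hi]
  have hPs : Pᴴ = P := pr_star J
  have hPP : P * P = P := pr_mul J
  have hPX' : P * Xᴴ = Xᴴ := by
    have := congrArg Matrix.conjTranspose hXP
    rwa [Matrix.conjTranspose_mul, hPs] at this
  have hXP' : Xᴴ * P = 0 := by
    have := congrArg Matrix.conjTranspose hPX
    rwa [Matrix.conjTranspose_mul, hPs, Matrix.conjTranspose_zero] at this
  have hXX : X * X = 0 := by
    rw [← hXP, Matrix.mul_assoc, ← Matrix.mul_assoc P, hPX, Matrix.zero_mul, Matrix.mul_zero]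
  have hXX' : Xᴴ * Xᴴ = 0 := by
    rw [← Matrix.conjTranspose_mul, hXX, Matrix.conjTranspose_zero]
  have hhs : hᴴ = 1 + Xᴴ - X := by
    simp [hh, Matrix.conjTranspose_sub, Matrix.conjTranspose_add]
  have hD : hᴴ * h = 1 + (X * Xᴴ + Xᴴ * X) := by
    rw [hhs, hh]
    simp only [Matrix.mul_sub, Matrix.mul_add, Matrix.sub_mul, Matrix.add_mul, hXX, hXX',
      Matrix.mul_one, Matrix.one_mul]
    abel
  have hDpos : (hᴴ * h).PosDef := by
    rw [hD]
    exact Matrix.PosDef.one.add_posSemidef ((Matrix.posSemidef_self_mul_conjTranspose X).add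
      (Matrix.posSemidef_conjTranspose_mul_self X))
  have hdet : IsUnit h.det := by
    have := hDpos.det_pos.ne'
    rw [Matrix.det_mul] at this
    exact isUnit_iff_ne_zero.2 (right_ne_zero_of_mul this)
  have hDdet : IsUnit (hᴴ * h).det := isUnit_iff_ne_zero.2 hDpos.det_pos.ne'
  have hDP : (hᴴ * h) * P = P * (hᴴ * h) := by
    rw [hD]
    simp only [Matrix.mul_add, Matrix.add_mul, Matrix.mul_one, Matrix.one_mul, Matrix.mul_assoc,
      hXP', hXP, Matrix.mul_zero]
    rw [← Matrix.mul_assoc P X, hPX, Matrix.zero_mul, ← Matrix.mul_assoc P Xᴴ, hPX']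
  have hi := Matrix.mul_nonsing_inv h hdet
  have hi' := Matrix.nonsing_inv_mul h hdet
  have hiD := Matrix.mul_nonsing_inv _ hDdet
  have hiD' := Matrix.nonsing_inv_mul _ hDdet
  generalize h⁻¹ = g at hi hi'
  generalize (hᴴ * h)⁻¹ = F at hiD hiD'
  have hs : hᴴ * gᴴ = 1 := by rw [← Matrix.conjTranspose_mul, hi', Matrix.conjTranspose_one]
  have hs' : gᴴ * hᴴ = 1 := by rw [← Matrix.conjTranspose_mul, hi, Matrix.conjTranspose_one]
  have hFP : F * P = P * F := by
    calc F * P = F * (P * (hᴴ * h)) * F := by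
          rw [Matrix.mul_assoc, Matrix.mul_assoc, hiD, Matrix.mul_one]
      _ = P * F := by rw [← hDP, ← Matrix.mul_assoc, hiD', Matrix.one_mul]
  obtain ⟨K, hKd⟩ : ∃ K, K = g * H * gᴴ := ⟨_, rfl⟩
  have hK : Kᴴ = K := by
    simp only [hKd, Matrix.conjTranspose_mul, Matrix.conjTranspose_conjTranspose, hH,
      Matrix.mul_assoc]
  have hhP : h * P = (1 + X) * P := by rw [hh, Matrix.sub_mul, hXP', sub_zero]
  have hLP : P * (g * H * h * P) = g * H * h * P := by
    refine Matrix.ext_of_mulVec_single fun j => ?_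
    obtain ⟨w, hw⟩ := (hp _).1 (hHp _ ((hp _).2 ⟨Pi.single j 1, rfl⟩))
    simp only [Matrix.mulVec_mulVec, ← hhP] at hw
    have h1 : (g * H * h * P) *ᵥ Pi.single j 1 = P *ᵥ w := by
      have := congrArg (g *ᵥ ·) hw
      simp only [Matrix.mulVec_mulVec, ← Matrix.mul_assoc, hi', Matrix.one_mul] at this
      exact this
    rw [← Matrix.mulVec_mulVec, h1, Matrix.mulVec_mulVec, hPP]
  have hKL : K = g * H * h * F := by
    calc K = g * H * gᴴ * ((hᴴ * h) * F) := by rw [hiD, Matrix.mul_one, hKd]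
      _ = g * H * (gᴴ * hᴴ) * h * F := by simp only [Matrix.mul_assoc]
      _ = _ := by rw [hs', Matrix.mul_one]
  have hKP' : K * P = P * (K * P) := by
    rw [hKL, Matrix.mul_assoc _ F, hFP, ← Matrix.mul_assoc, ← hLP]
    simp only [← Matrix.mul_assoc, hPP]
  have hKP : K * P = P * K := by
    have h1 := congrArg Matrix.conjTranspose hKP'
    simp only [Matrix.conjTranspose_mul, hK, hPs] at h1
    calc K * P = P * K * P := by rw [Matrix.mul_assoc]; exact hKP'
      _ = P * K := h1.symm
  refine ⟨K, hK, fun i j hij => ?_, ?_⟩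
  · have := congrFun (congrFun hKP i) j
    rw [hP, pr, Matrix.mul_diagonal, Matrix.diagonal_mul] at this
    by_cases hiJ : i ∈ J <;> by_cases hjJ : j ∈ J <;> simp [hiJ, hjJ] at this hij ⊢ <;>
      first | exact this | exact this.symm
  · calc H = (h * g) * H * (gᴴ * hᴴ) := by rw [hi, hs', Matrix.one_mul, Matrix.mul_one]
      _ = _ := by simp only [hKd, Matrix.mul_assoc]

/-- A Cayley transform adapted to the polar decomposition of `M`, whose unitary factor `V` is
assumed to preserve `p`. -/
theorem exists_cayley {M : Matrix (Fin n) (Fin n) ℂ} (hM : M.det ≠ 0)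
    {p : Submodule ℂ (Fin n → ℂ)} (hp : ∀ v ∈ p, (pol M).1 *ᵥ v ∈ p) (z : Circle)
    (hz : (Matrix.scalar (Fin n) (z : ℂ) + (pol M).1).det ≠ 0) :
    ∃ H Y : Matrix (Fin n) (Fin n) ℂ, Hᴴ = H ∧ Yᴴ = Y ∧ (∀ v ∈ p, H *ᵥ v ∈ p) ∧
      M = (z : ℂ) • ((1 - Complex.I • H) * Y * (1 - Complex.I • H)) := by
  have hQ : ((pol M).1ᴴ * M)ᴴ = (pol M).1ᴴ * M := (pol_spec hM).isHermitian
  have hMV := pol_mul_self M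
  have hVV := un_conj_mul (pol M)
  have hVV' := un_mul_conj (pol M)
  generalize (pol M).1 = V at *
  generalize hQd : Vᴴ * M = Q at *
  have hz0 : (z : ℂ) ≠ 0 := z.coe_ne_zero
  have hzz : (z : ℂ) * star (z : ℂ) = 1 := by
    have := Complex.mul_conj (z : ℂ)
    rw [Circle.normSq_coe] at this
    simpa using this
  have hzz' : star (z : ℂ) * (z : ℂ) = 1 := by rw [mul_comm, hzz]
  generalize (z : ℂ) = c at *
  have hsc : Matrix.scalar (Fin n) c = c • (1 : Matrix (Fin n) (Fin n) ℂ) := by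
    ext i j; simp [Matrix.scalar_apply, Matrix.diagonal_apply, Matrix.one_apply]
  rw [hsc] at hz
  have hu : IsUnit (c • (1 : Matrix (Fin n) (Fin n) ℂ) + V).det := isUnit_iff_ne_zero.2 hz
  have hB := Matrix.mul_nonsing_inv _ hu
  have hB' := Matrix.nonsing_inv_mul _ hu
  generalize (c • (1 : Matrix (Fin n) (Fin n) ℂ) + V)⁻¹ = B at hB hB'
  have hVB : V * B = B * V := by
    have h1 : c • B + V * B = 1 := by simpa [Matrix.add_mul] using hB
    have h2 : c • B + B * V = 1 := by simpa [Matrix.mul_add] using hB'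
    exact add_left_cancel (h1.trans h2.symm)
  have hBp : ∀ v ∈ p, B *ᵥ v ∈ p := by
    intro v hv
    have hinj : ∀ w : Fin n → ℂ, B *ᵥ ((c • (1 : Matrix (Fin n) (Fin n) ℂ) + V) *ᵥ w) = w :=
      fun w => by rw [Matrix.mulVec_mulVec, hB', Matrix.one_mulVec]
    let L : p →ₗ[ℂ] p := (c • (1 : Matrix (Fin n) (Fin n) ℂ) + V).mulVecLin.restrict
      fun w hw => by
        rw [Matrix.mulVecLin_apply, Matrix.add_mulVec, Matrix.smul_mulVec, Matrix.one_mulVec]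
        exact p.add_mem (p.smul_mem _ hw) (hp w hw)
    have hL : Function.Injective L := fun w w' hww => by
      have := congrArg (fun q : p => B *ᵥ q.1) hww
      simp only [L, LinearMap.restrict_apply, Matrix.mulVecLin_apply, hinj] at this
      exact Subtype.ext this
    obtain ⟨w, hw⟩ := LinearMap.surjective_of_injective hL ⟨v, hv⟩
    have := congrArg Subtype.val hw
    simp only [L, LinearMap.restrict_apply, Matrix.mulVecLin_apply] at this
    rw [← this, hinj]
    exact w.2
  have hB1 : c • B + V * B = 1 := by simpa [Matrix.add_mul] using hB
  have hBs : star c • Bᴴ = V * B := by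
    have h1 : Bᴴ * (c • (1 : Matrix (Fin n) (Fin n) ℂ) + V)ᴴ = 1 := by
      rw [← Matrix.conjTranspose_mul, hB, Matrix.conjTranspose_one]
    have h2 : (c • (1 : Matrix (Fin n) (Fin n) ℂ) + V)ᴴ * (V * B) = star c • 1 := by
      have h3 : (c • (1 : Matrix (Fin n) (Fin n) ℂ) + V)ᴴ * V =
          star c • (c • (1 : Matrix (Fin n) (Fin n) ℂ) + V) := by
        rw [Matrix.conjTranspose_add, Matrix.conjTranspose_smul, Matrix.conjTranspose_one,
          Matrix.add_mul, hVV, smul_add, smul_smul, hzz', one_smul, Matrix.smul_mul,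
          Matrix.one_mul, add_comm]
      rw [← Matrix.mul_assoc, h3, Matrix.smul_mul, hB]
    calc star c • Bᴴ = Bᴴ * (star c • 1) := by rw [Matrix.mul_smul, Matrix.mul_one]
      _ = V * B := by rw [← h2, ← Matrix.mul_assoc, h1, Matrix.one_mul]
  obtain ⟨H, hHd⟩ : ∃ H, H = (-Complex.I) • ((c • 1 - V) * B) := ⟨_, rfl⟩
  have hIH : Complex.I • H = c • B - V * B := by
    simp only [hHd, smul_smul, mul_neg, Complex.I_mul_I, neg_neg, one_smul, Matrix.sub_mul,
      Matrix.smul_mul, Matrix.one_mul]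
  have hC : 1 - Complex.I • H = (2 : ℂ) • (V * B) := by
    rw [hIH, ← hB1, two_smul]; abel
  have hC' : 1 + Complex.I • H = (2 * c) • B := by
    rw [hIH, ← hB1, mul_smul, two_smul]; abel
  have hH : Hᴴ = H := by
    have h1 := congrArg Matrix.conjTranspose hC
    rw [← hBs, Matrix.conjTranspose_sub, Matrix.conjTranspose_one, Matrix.conjTranspose_smul,
      Matrix.conjTranspose_smul, Matrix.conjTranspose_smul, Matrix.conjTranspose_conjTranspose,
      star_star, smul_smul] at h1
    have h2 : star (2 : ℂ) = 2 := by simp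
    have h3 : star Complex.I = - Complex.I := by simp
    rw [h2, h3, ← hC', neg_smul, sub_neg_eq_add] at h1
    exact smul_right_injective _ Complex.I_ne_zero (add_left_cancel h1)
  refine ⟨H, (1 / 4 : ℂ) • ((c • 1 + V) * Q * (c • 1 + V)ᴴ), hH, ?_, fun v hv => ?_, ?_⟩
  · rw [Matrix.conjTranspose_smul, Matrix.conjTranspose_mul, Matrix.conjTranspose_mul, hQ,
      Matrix.conjTranspose_conjTranspose, Matrix.mul_assoc]
    congr 1
    simp
  · have h1 := hBp v hv
    simp only [hHd, Matrix.smul_mulVec, ← Matrix.mulVec_mulVec, Matrix.sub_mulVec,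
      Matrix.one_mulVec]
    exact p.smul_mem _ (p.sub_mem (p.smul_mem _ h1) (hp _ h1))
  · have h1 : (c • (1 : Matrix (Fin n) (Fin n) ℂ) + V)ᴴ * Bᴴ = 1 := by
      rw [← Matrix.conjTranspose_mul, hB', Matrix.conjTranspose_one]
    rw [hC]
    symm
    calc c • ((2 : ℂ) • (V * B) * ((1 / 4 : ℂ) • ((c • 1 + V) * Q * (c • 1 + V)ᴴ)) *
          (2 : ℂ) • (V * B))
        = V * B * ((c • 1 + V) * Q * (c • 1 + V)ᴴ) * (c • (V * B)) := by
          simp only [Matrix.smul_mul, Matrix.mul_smul, smul_smul]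
          congr 1
          ring
      _ = V * (B * (c • 1 + V)) * Q * ((c • 1 + V)ᴴ * Bᴴ) := by
          have h2 : c • (V * B) = Bᴴ := by rw [← hBs, smul_smul, hzz, one_smul]
          rw [h2]
          simp only [Matrix.mul_assoc]
      _ = M := by rw [hB', h1, Matrix.mul_one, Matrix.mul_one, ← hMV]

end Param

/-! ### The codimension of the reducible tuples -/

section Thinness
variable {n r : ℕ}

/-- Continuously differentiable dependence of a matrix on a parameter, entry by entry. -/
def CD {E : Type*} [NormedAddCommGroup E] [NormedSpace ℝ E]
    (f : E → Matrix (Fin n) (Fin n) ℂ) : Prop := ∀ i j, ContDiff ℝ 1 fun x => f x i j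

section
variable {E : Type*} [NormedAddCommGroup E] [NormedSpace ℝ E]
  {f g : E → Matrix (Fin n) (Fin n) ℂ}

theorem CD.mul (hf : CD f) (hg : CD g) : CD fun x => f x * g x := fun i j => by
  simp only [Matrix.mul_apply]
  exact ContDiff.sum fun k _ => (hf i k).mul (hg k j)

theorem CD.add (hf : CD f) (hg : CD g) : CD fun x => f x + g x := fun i j =>
  (hf i j).add (hg i j)

theorem CD.sub (hf : CD f) (hg : CD g) : CD fun x => f x - g x := fun i j =>
  (hf i j).sub (hg i j)

theorem CD.const (M : Matrix (Fin n) (Fin n) ℂ) : CD fun _ : E => M := fun _ _ => contDiff_const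

theorem CD.smul (c : ℂ) (hf : CD f) : CD fun x => c • f x := fun i j =>
  contDiff_const.mul (hf i j)

theorem CD.conj (hf : CD f) : CD fun x => (f x)ᴴ := fun i j =>
  Complex.conjCLE.contDiff.comp (hf j i)

end

/-- The matrix with entries `x` on `s` and zero elsewhere. -/
def zx {R : Type*} [Zero R] (s : Finset (Fin n × Fin n)) (x : s → R) : Matrix (Fin n) (Fin n) R :=
  Matrix.of fun i j => if h : (i, j) ∈ s then x ⟨(i, j), h⟩ else 0

/-- A linear bijection from real matrices to Hermitian ones. -/
def herm (A : Matrix (Fin n) (Fin n) ℝ) : Matrix (Fin n) (Fin n) ℂ :=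
  Matrix.of fun i j => ((A i j + A j i : ℝ) : ℂ) + ((A i j - A j i : ℝ) : ℂ) * Complex.I

theorem exists_zx {R : Type*} [Zero R] (s : Finset (Fin n × Fin n)) (A : Matrix (Fin n) (Fin n) R)
    (hA : ∀ i j, (i, j) ∉ s → A i j = 0) : ∃ x, zx s x = A := by
  refine ⟨fun q => A q.1.1 q.1.2, ?_⟩
  ext i j
  by_cases h : (i, j) ∈ s
  · simp [zx, h]
  · simp [zx, h, hA i j h]

theorem exists_herm (s : Finset (Fin n × Fin n)) {A : Matrix (Fin n) (Fin n) ℂ} (hA : Aᴴ = A)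
    (hs : ∀ i j, (i, j) ∉ s → A i j = 0) : ∃ x, herm (zx s x) = A := by
  obtain ⟨x, hx⟩ := exists_zx s (Matrix.of fun i j => ((A i j).re + (A i j).im) / 2)
    (fun i j h => by simp [hs i j h])
  refine ⟨x, ?_⟩
  rw [hx]
  ext i j
  have h1 : A j i = star (A i j) := by
    conv_lhs => rw [← hA]
    rfl
  have h2 : (A j i).re = (A i j).re := by rw [h1]; simp
  have h3 : (A j i).im = - (A i j).im := by rw [h1]; simp
  simp only [herm, Matrix.of_apply, h2, h3]
  apply Complex.ext <;> simp <;> ring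

variable (F : Finset (Fin n)) (z : Fin r → Circle)

/-- Parameters for the tuples whose unitary parts preserve a graph over `ℂ^F`. -/
abbrev RPar (r : ℕ) (F : Finset (Fin n)) : Type :=
  ((Fᶜ ×ˢ F : Finset (Fin n × Fin n)) → ℂ) ×
    (Fin r → ((F ×ˢ F ∪ Fᶜ ×ˢ Fᶜ : Finset (Fin n × Fin n)) → ℝ) ×
      (↥(Finset.univ : Finset (Fin n × Fin n)) → ℝ))

/-- The frame adapted to a graph and its orthogonal complement. -/
def parX (e : RPar r F) : Matrix (Fin n) (Fin n) ℂ := 1 + zx _ e.1 - (zx _ e.1)ᴴ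

/-- The numerator of the Cayley transform of a block diagonal Hermitian matrix. -/
def parC (k : Fin r) (e : RPar r F) : Matrix (Fin n) (Fin n) ℂ :=
  1 - Complex.I • (parX F e * herm (zx _ (e.2 k).1) * (parX F e)ᴴ)

/-- The parametrization of the tuples whose unitary parts preserve a graph over `ℂ^F`. -/
def rpar (e : RPar r F) : Fin r → Fin n → Fin n → ℂ := fun k =>
  (z k : ℂ) • (parC F k e * herm (zx _ (e.2 k).2) * parC F k e)

theorem CD.zx {E : Type*} [NormedAddCommGroup E] [NormedSpace ℝ E] (s : Finset (Fin n × Fin n))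
    {x : E → s → ℂ} (hx : ContDiff ℝ 1 x) : CD fun e => zx s (x e) := fun i j => by
  by_cases h : (i, j) ∈ s
  · simp only [IrrLoc.zx, Matrix.of_apply, dif_pos h]
    exact contDiff_pi.1 hx _
  · simp only [IrrLoc.zx, Matrix.of_apply, dif_neg h]
    exact contDiff_const

theorem CD.herm {E : Type*} [NormedAddCommGroup E] [NormedSpace ℝ E]
    (s : Finset (Fin n × Fin n)) {x : E → s → ℝ} (hx : ContDiff ℝ 1 x) :
    CD fun e => herm (IrrLoc.zx s (x e)) := fun i j => by
  have h1 : ∀ i j, ContDiff ℝ 1 fun e => IrrLoc.zx s (x e) i j := fun i j => by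
    by_cases h : (i, j) ∈ s
    · simp only [IrrLoc.zx, Matrix.of_apply, dif_pos h]
      exact contDiff_pi.1 hx _
    · simp only [IrrLoc.zx, Matrix.of_apply, dif_neg h]
      exact contDiff_const
  simp only [IrrLoc.herm, Matrix.of_apply]
  exact (Complex.ofRealCLM.contDiff.comp ((h1 i j).add (h1 j i))).add
    ((Complex.ofRealCLM.contDiff.comp ((h1 i j).sub (h1 j i))).mul contDiff_const)

theorem rpar_contDiff : ContDiff ℝ 1 (rpar F z) := by
  have h2 : ∀ k, ContDiff ℝ 1 fun e : RPar r F => e.2 k := fun k =>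
    (contDiff_apply ℝ _ k).comp contDiff_snd
  have hX : CD (parX (r := r) F) :=
    ((CD.const 1).add (CD.zx _ contDiff_fst)).sub (CD.zx _ contDiff_fst).conj
  have hC : ∀ k, CD (parC (r := r) F k) := fun k =>
    (CD.const 1).sub (((hX.mul (CD.herm _ (h2 k).fst)).mul hX.conj).smul _)
  refine contDiff_pi.2 fun k => contDiff_pi.2 fun i => contDiff_pi.2 fun j => ?_
  exact (((hC k).mul (CD.herm _ (h2 k).snd)).mul (hC k)).smul _ i j

theorem rpar_dim {m : ℕ} (hF : F.Nonempty) (hF' : Fᶜ.Nonempty) (hm : m < 2 * (r - 1) * (n - 1)) :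
    Module.finrank ℝ (RPar r F) + m < Module.finrank ℝ (Fin r → Fin n → Fin n → ℂ) := by
  obtain ⟨r, rfl⟩ : ∃ s, r = s + 1 := ⟨r - 1, by
    rcases r with - | r
    · simp at hm
    · rfl⟩
  have hab : F.card + Fᶜ.card = n := by simp
  have ha := hF.card_pos
  have hb := hF'.card_pos
  have hS : (F ×ˢ F ∪ Fᶜ ×ˢ Fᶜ : Finset (Fin n × Fin n)).card =
      F.card * F.card + Fᶜ.card * Fᶜ.card := by
    rw [Finset.card_union_of_disjoint, Finset.card_product, Finset.card_product]
    exact Finset.disjoint_product.2 (Or.inl disjoint_compl_right)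
  have h1 : Module.finrank ℝ (RPar (r + 1) F) = 2 * (Fᶜ.card * F.card) +
      (r + 1) * (F.card * F.card + Fᶜ.card * Fᶜ.card + n * n) := by
    simp only [Module.finrank_prod, Module.finrank_pi_fintype, Complex.finrank_real_complex,
      Module.finrank_self, Finset.sum_const, Finset.card_univ, Fintype.card_coe,
      Fintype.card_fin, smul_eq_mul, hS, Finset.card_product, Fintype.card_prod]
    ring
  have h2 : Module.finrank ℝ (Fin (r + 1) → Fin n → Fin n → ℂ) = (r + 1) * (n * (n * 2)) := by
    simp [Module.finrank_pi_fintype, Complex.finrank_real_complex]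
  rw [h1, h2]
  generalize F.card = a at *
  generalize Fᶜ.card = b at *
  obtain ⟨a, rfl⟩ : ∃ a', a = a' + 1 := ⟨a - 1, by omega⟩
  obtain ⟨b, rfl⟩ : ∃ b', b = b' + 1 := ⟨b - 1, by omega⟩
  subst hab
  simp only [Nat.add_sub_cancel] at hm
  have h3 : a + 1 + (b + 1) - 1 = a + b + 1 := by omega
  rw [h3] at hm
  have h4 : 2 * r * (a + b + 1) ≤ 2 * r * ((a + 1) * (b + 1)) :=
    Nat.mul_le_mul_left _ (by nlinarith)
  nlinarith

/-- The invertible tuples whose unitary parts form a reducible tuple. -/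
def RedZ (n r : ℕ) : Set (Fin r → Fin n → Fin n → ℂ) :=
  {M | (∀ k, Matrix.det (M k) ≠ 0) ∧ ¬ IsIrreducibleTupleU fun k => pol (M k)}

theorem exists_circle_seq : ∃ z : ℕ → Circle, Function.Injective z := by
  refine ⟨fun k => Circle.exp (1 / ((k : ℝ) + 1)), fun a b h => ?_⟩
  have hpi := Real.pi_gt_three
  have hmem : ∀ k : ℕ, 1 / ((k : ℝ) + 1) ∈ Set.Ioc (-Real.pi) Real.pi := fun k => by
    have h1 : 0 < 1 / ((k : ℝ) + 1) := by positivity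
    have h2 : 1 / ((k : ℝ) + 1) ≤ 1 := by
      rw [div_le_one (by positivity)]
      linarith [(Nat.cast_nonneg k : (0 : ℝ) ≤ k)]
    exact ⟨by linarith, by linarith⟩
  have h1 := congrArg (fun u : Circle => Complex.arg u) h
  simp only [Circle.arg_exp (hmem a).1 (hmem a).2, Circle.arg_exp (hmem b).1 (hmem b).2] at h1
  have h2 : (a : ℝ) + 1 = b + 1 := by
    rwa [one_div, one_div, inv_inj] at h1
  exact_mod_cast add_right_cancel h2

theorem exists_shift {z : ℕ → Circle} (hz : Function.Injective z) (V : Matrix (Fin n) (Fin n) ℂ) :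
    ∃ k, (Matrix.scalar (Fin n) (z k : ℂ) + V).det ≠ 0 := by
  by_contra! h
  have hinf : (Set.range fun k => (z k : ℂ)).Infinite :=
    Set.infinite_range_of_injective (Subtype.val_injective.comp hz)
  refine (Matrix.charpoly_monic (-V)).ne_zero (Polynomial.eq_zero_of_infinite_isRoot _
    (hinf.mono ?_))
  rintro _ ⟨k, rfl⟩
  rw [Set.mem_ofPred_eq, Polynomial.IsRoot.def, Matrix.eval_charpoly, sub_neg_eq_add]
  exact h k

/-- The reducible locus has real codimension at least `2 (r - 1) (n - 1)`. -/
theorem red_thin {m : ℕ} (hm : m < 2 * (r - 1) * (n - 1)) : Thin m (RedZ n r) := by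
  obtain ⟨z, hz⟩ := exists_circle_seq
  refine Thin.mono (Thin.iUnion (fun q : {F : Finset (Fin n) // F.Nonempty ∧ Fᶜ.Nonempty} ×
    (Fin r → ℕ) => Thin.range (rpar q.1.1 fun k => z (q.2 k)) (rpar_contDiff _ _)
      (rpar_dim q.1.1 q.1.2.1 q.1.2.2 hm))) ?_
  rintro M ⟨hM, hred⟩
  obtain ⟨p, hp, hbot, htop⟩ : ∃ p : Submodule ℂ (Fin n → ℂ),
      (∀ k, ∀ v ∈ p, (pol (M k)).1 *ᵥ v ∈ p) ∧ p ≠ ⊥ ∧ p ≠ ⊤ := by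
    simpa [IsIrreducibleTupleU] using hred
  obtain ⟨J, X, hX, hpX⟩ := exists_graph p
  obtain ⟨F, rfl⟩ : ∃ F : Finset (Fin n), (F : Set (Fin n)) = J :=
    ⟨J.toFinite.toFinset, J.toFinite.coe_toFinset⟩
  have hF : F.Nonempty := by
    rw [Finset.nonempty_iff_ne_empty]
    rintro rfl
    refine hbot ((Submodule.eq_bot_iff p).2 fun v hv => ?_)
    obtain ⟨u, rfl⟩ := (hpX v).1 hv
    have : pr ((∅ : Finset (Fin n)) : Set (Fin n)) = 0 := by
      ext i j; simp [pr]
    rw [this, Matrix.zero_mulVec, Matrix.mulVec_zero]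
  have hF' : Fᶜ.Nonempty := by
    rw [Finset.nonempty_iff_ne_empty, Ne, Finset.compl_eq_empty_iff]
    rintro rfl
    refine htop ((Submodule.eq_top_iff').2 fun v => (hpX v).2 ⟨v, ?_⟩)
    have h1 : pr ((Finset.univ : Finset (Fin n)) : Set (Fin n)) = 1 := by
      ext i j; simp [pr, Matrix.one_apply, Matrix.diagonal_apply]
    have h2 : X = 0 := by
      ext i j; exact hX i j (by simp)
    rw [h1, h2, Matrix.one_mulVec, add_zero, Matrix.one_mulVec]
  choose a ha using fun k => exists_shift hz (pol (M k)).1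
  choose H Y hH hY hHp hMk using fun k => exists_cayley (hM k) (hp k) (z (a k)) (ha k)
  choose K hK hK0 hHK using fun k => exists_block hX hpX (hH k) (hHp k)
  obtain ⟨x, hx⟩ := exists_zx (Fᶜ ×ˢ F : Finset (Fin n × Fin n)) X fun i j h =>
    hX i j fun h' => h (Finset.mem_product.2 ⟨Finset.mem_compl.2 h'.1, h'.2⟩)
  choose y hy using fun k => exists_herm (F ×ˢ F ∪ Fᶜ ×ˢ Fᶜ : Finset (Fin n × Fin n)) (hK k)
    fun i j h => hK0 k i j (by
      simp only [Finset.mem_union, Finset.mem_product, Finset.mem_compl] at h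
      simp only [Finset.mem_coe]
      tauto)
  choose w hw using fun k => exists_herm Finset.univ (hY k)
    fun i j h => absurd (Finset.mem_univ _) h
  refine Set.mem_iUnion.2 ⟨(⟨F, hF, hF'⟩, a), (x, fun k => (y k, w k)), ?_⟩
  funext k
  refine Eq.trans ?_ (hMk k).symm
  simp only [rpar, parC, parX, hx, hy, hw, ← hHK]
  rfl

end Thinness

/-! ### The homotopy groups of the irreducible locus -/

/-- Families with `l` parameters can be deformed into `P` relative to any closed set of parameters
over which they are already in `P`. -/
def Avoids {Γ : Type*} [TopologicalSpace Γ] (P : Γ → Prop) (l : ℕ) : Prop :=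
  ∀ (Z : Type) [TopologicalSpace Z] [CompactSpace Z] [T2Space Z], Retr Z l →
    ∀ A : Set Z, IsClosed A → ∀ f : C(Z, Γ), (∀ x ∈ A, P (f x)) →
      ∃ g : C(Z, Γ), (∀ x, P (g x)) ∧ f.HomotopicRel g A

theorem bd_closed (k : ℕ) : IsClosed (Bd k) := by
  have : Bd k = ⋃ i : Fin k, ({y | y i = 0} ∪ {y | y i = 1}) := by
    ext y; simp [Bd, Cube.boundary]
  rw [this]
  exact isClosed_iUnion_of_finite fun i =>
    (isClosed_eq (continuous_apply i) continuous_const).union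
      (isClosed_eq (continuous_apply i) continuous_const)

theorem dI_closed {Z : Type*} [TopologicalSpace Z] {A : Set Z} (hA : IsClosed A) :
    IsClosed (dI A) :=
  (isClosed_eq continuous_fst continuous_const).union
    ((isClosed_eq continuous_fst continuous_const).union (hA.preimage continuous_snd))

section Assemble
variable {Γ : Type} [TopologicalSpace Γ] {P : Γ → Prop} {k : ℕ}

/-- A map into `P` which is null homotopic in the ambient space is null homotopic in `P`: deform
the null homotopy. -/
theorem avoid_null (h : Avoids P (k + 1)) {e₀ : {a // P a}} (f : C(Fin k → I, {a // P a}))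
    (hf : ∀ y ∈ Bd k, f y = e₀)
    (hn : (ContinuousMap.const _ e₀.1).HomotopicRel
      ((⟨Subtype.val, continuous_subtype_val⟩ : C({a // P a}, Γ)).comp f) (Bd k)) :
    (ContinuousMap.const _ e₀).HomotopicRel f (Bd k) := by
  obtain ⟨H, h0, h1, hA⟩ := htpy_data hn
  have h0' : ∀ y, H (0, y) = e₀.1 := h0
  have h1' : ∀ y, H (1, y) = (f y).1 := h1
  have hA' : ∀ t, ∀ y ∈ Bd k, H (t, y) = e₀.1 := hA
  obtain ⟨g, hg, hHg⟩ := h (I × (Fin k → I)) (Retr.cube k).prodI (dI (Bd k))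
    (dI_closed (bd_closed k)) H (by
      rintro ⟨t, y⟩ (ht | ht | ht)
      · obtain rfl : t = 0 := ht
        rw [h0']; exact e₀.2
      · obtain rfl : t = 1 := ht
        rw [h1']; exact (f y).2
      · rw [hA' t y ht]; exact e₀.2)
  have hHg' : ∀ q ∈ dI (Bd k), H q = g q := fun q hq => hHg.fst_eq_snd hq
  refine htpy_of (fun q => ⟨g q, hg q⟩) (by fun_prop) (fun y => ?_) (fun y => ?_)
    (fun t y hy => ?_)
  · exact Subtype.ext ((hHg' _ (Or.inl rfl)).symm.trans (h0' y))
  · exact Subtype.ext ((hHg' _ (Or.inr (Or.inl rfl))).symm.trans (h1' y))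
  · exact Subtype.ext ((hHg' _ (Or.inr (Or.inr hy))).symm.trans (hA' t y hy))

/-- The inclusion of `P` induces an isomorphism on the homotopy group in degree `k + 1`. -/
theorem avoid_bij (h : Avoids P (k + 1)) (h' : Avoids P (k + 2)) (e₀ : {a // P a}) :
    Function.Bijective (hgMap (Fin (k + 1))
      (⟨Subtype.val, continuous_subtype_val⟩ : C({a // P a}, Γ)) e₀) := by
  refine hgMap_bijective _ _ (fun g => ?_) fun p hp => avoid_null h' p.1 p.2 hp
  obtain ⟨f, hf, hgf⟩ := h _ (Retr.cube (k + 1)) (Bd (k + 1)) (bd_closed _) g.1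
    (fun y hy => by rw [g.2 y hy]; exact e₀.2)
  refine ⟨⟨⟨fun y => ⟨f y, hf y⟩, by fun_prop⟩, fun y hy => Subtype.ext ?_⟩, hgf⟩
  exact (hgf.fst_eq_snd hy).symm.trans (g.2 y hy)

variable {G X : Type} [Group G] [TopologicalSpace G] [IsTopologicalGroup G] [CompactSpace G]
  [TopologicalSpace X] [MulAction G {a // P a}] [ContinuousSMul G {a // P a}]
  {p : C({a // P a}, X)} {d : {a // P a} → {a // P a} → G}

/-- The projection of a principal bundle whose total space is `P` is an isomorphism on homotopy
groups in degree `k + 1`. Surjectivity comes from lifting cubes and `π_k(G) = 1`. For injectivity,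
a null homotopy of the image of `f` exhibits `f`, up to homotopy, as the orbit map of a map into `G`;
the orbit map of `e₀` is null homotopic in `Γ` because `G` fixes `1`, which a path joins to `e₀`. -/
theorem proj_bij [Group Γ] [IsTopologicalGroup Γ] [MulDistribMulAction G Γ] [ContinuousSMul G Γ]
    (hp : Principal p d) (hsm : ∀ (g : G) (e : {a // P a}), (g • e).1 = g • e.1)
    [Subsingleton (Pi (Bd k) G)] (h' : Avoids P (k + 2)) (e₀ : {a // P a})
    (hγ : Joined (1 : Γ) e₀.1) : Function.Bijective (hgMap (Fin (k + 1)) p e₀) := by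
  refine hgMap_bijective _ _ (fun g => ?_) fun f hf => avoid_null h' f.1 f.2 ?_
  · obtain ⟨F, hF, hF0⟩ := bundle_surj hp e₀
      (g.1.comp ⟨consHomeo k, (consHomeo k).continuous⟩) fun q hq =>
        g.2 _ ((consHomeo_mem q).2 hq)
    refine ⟨⟨F.comp ⟨(consHomeo k).symm, (consHomeo k).symm.continuous⟩, fun y hy => ?_⟩, ?_⟩
    · refine hF0 _ ((consHomeo_mem _).1 ?_)
      change consHomeo k ((consHomeo k).symm y) ∈ _
      rwa [Homeomorph.apply_symm_apply]
    · have : g.1 = p.comp (F.comp ⟨(consHomeo k).symm, (consHomeo k).symm.continuous⟩) := by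
        ext y
        refine Eq.trans ?_ (hF _).symm
        exact congrArg g.1 ((consHomeo k).apply_symm_apply y).symm
      exact this ▸ ContinuousMap.HomotopicRel.refl _
  · exact bundle_inj hp ⟨Subtype.val, continuous_subtype_val⟩ hsm e₀ hγ f.1 f.2 hf

end Assemble

/-! ### Unitary and special unitary tuples -/

section General
variable {n r : ℕ}

/-- The matrix entries of a tuple of unitary matrices. -/
def entU (n r : ℕ) : C(Fin r → Un n, Fin r → Fin n → Fin n → ℂ) :=
  ⟨fun A k => (A k).1, continuous_pi fun k => continuous_subtype_val.comp (continuous_apply k)⟩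

theorem dom_open : IsOpen {M : Fin r → Fin n → Fin n → ℂ | ∀ k, Matrix.det (M k) ≠ 0} := by
  rw [show {M : Fin r → Fin n → Fin n → ℂ | ∀ k, Matrix.det (M k) ≠ 0} =
    ⋂ k, {M | Matrix.det (M k) ≠ 0} by ext; simp]
  refine isOpen_iInter_of_finite fun k => isOpen_ne_fun ?_ continuous_const
  exact Continuous.matrix_det (continuous_apply k)

theorem polr_cont : ContinuousOn (fun (M : Fin r → Fin n → Fin n → ℂ) k => pol (ι := Fin n) (M k))
    {M | ∀ k, Matrix.det (M k) ≠ 0} :=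
  continuousOn_pi.2 fun k => pol_continuousOn.comp (continuous_apply k).continuousOn fun _ h => h k

theorem ent_dim (hn : 0 < n) (hr : 0 < r) :
    0 < Module.finrank ℝ (Fin r → Fin n → Fin n → ℂ) := by
  have : Nonempty (Fin n) := ⟨⟨0, hn⟩⟩
  have : Nonempty (Fin r) := ⟨⟨0, hr⟩⟩
  exact Module.finrank_pos

/-- Reducible tuples of unitary matrices are avoided by families with few parameters. -/
theorem avoidU (hn : 0 < n) (hr : 0 < r) {l : ℕ} (hl : l < 2 * (r - 1) * (n - 1)) :
    Avoids (IsIrreducibleTupleU (n := n) (r := r)) l := by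
  intro Z _ _ _ hZ A hA f hf
  exact transv hZ hA (ent_dim hn hr) (entU n r) dom_open (fun A k => un_det_ne (A k))
    (fun M k => pol (ι := Fin n) (M k)) polr_cont (fun A => funext fun k => pol_unitary (A k))
    (irr_open hn) (red_thin hl) (fun M hM h => ⟨hM, h⟩) f hf

/-- The scalar unitary matrix `e^{-iθ/n}`, where `θ` is the argument of `det W`. -/
def rootC (n : ℕ) (W : Un n) : Un n :=
  scU n (Circle.exp (-(Complex.arg (detC n W) / n))) (Circle.coe_ne_zero _)

theorem rootC_val (W : Un n) :
    (rootC n W).1 = (Circle.exp (-(Complex.arg (detC n W) / n)) : ℂ) • 1 := by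
  have h (c : Circle) : (scU n c (Circle.coe_ne_zero c)).1 = (c : ℂ) • 1 := by
    change ((c : ℂ) / ‖(c : ℂ)‖) • (1 : Matrix (Fin n) (Fin n) ℂ) = _
    rw [Circle.norm_coe, Complex.ofReal_one, div_one]
  exact h _

/-- A unitary matrix divided by an `n`-th root of its determinant. The root is discontinuous where
the determinant is `-1`, hence the slit plane in `suR_cont`. -/
def suR (hn : 0 < n) (W : Un n) : SUn n := ⟨rootC n W * W, by
  rw [mem_su_iff, map_mul (detC n)]
  have h : detC n (rootC n W) = Circle.exp (-(Complex.arg (detC n W))) := by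
    apply Subtype.ext
    change (rootC n W).1.det = _
    rw [rootC_val, Matrix.det_smul, Matrix.det_one, mul_one, Fintype.card_fin, ← Circle.coe_pow,
      ← Circle.exp_natCast_mul]
    have : (n : ℝ) ≠ 0 := by exact_mod_cast hn.ne'
    rw [mul_neg, mul_div_cancel₀ _ this]
  rw [h, Circle.exp_neg, Circle.exp_arg, inv_mul_cancel]⟩

theorem suR_su (hn : 0 < n) (V : SUn n) : suR hn V.1 = V := by
  apply Subtype.ext
  apply Subtype.ext
  change (rootC n V.1).1 * V.1.1 = V.1.1
  rw [rootC_val, mem_su_iff.1 V.2]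
  simp

theorem suR_cont (hn : 0 < n) :
    ContinuousOn (suR hn) {W | ((detC n W : Circle) : ℂ) ∈ Complex.slitPlane} := by
  rw [IsInducing.subtypeVal.continuousOn_iff]
  refine ContinuousOn.mul ?_ continuousOn_id
  rw [IsInducing.subtypeVal.continuousOn_iff]
  suffices h : ContinuousOn (fun W : Un n => (Circle.exp (-(Complex.arg (detC n W) / n)) : ℂ))
      {W | ((detC n W : Circle) : ℂ) ∈ Complex.slitPlane} from
    (h.smul (continuousOn_const (c := (1 : Matrix (Fin n) (Fin n) ℂ)))).congr
      fun W _ => rootC_val W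
  refine (continuous_subtype_val.comp Circle.exp.continuous).comp_continuousOn ?_
  refine (ContinuousOn.div_const ?_ _).neg
  intro W hW
  have hd : Continuous fun W : Un n => ((detC n W : Circle) : ℂ) :=
    continuous_subtype_val.comp (detC n).continuous_toFun
  exact (ContinuousAt.comp (f := fun W : Un n => ((detC n W : Circle) : ℂ))
    (Complex.continuousAt_arg hW) hd.continuousAt).continuousWithinAt

theorem suR_mulVec (hn : 0 < n) (W : Un n) : ∃ c : ℂ, c ≠ 0 ∧
    ∀ v, (suR hn W).1.1.mulVec v = c • W.1.mulVec v := by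
  refine ⟨Circle.exp (-(Complex.arg (detC n W) / n)), Circle.coe_ne_zero _, fun v => ?_⟩
  change ((rootC n W).1 * W.1).mulVec v = _
  rw [rootC_val, Matrix.smul_mul, one_mul, Matrix.smul_mulVec]

/-- Rescaling does not change the invariant subspaces. -/
theorem suR_irr (hn : 0 < n) (A : Fin r → Un n) (hA : IsIrreducibleTupleU A) :
    IsIrreducibleTupleSU fun k => suR hn (A k) := by
  refine fun p hp => hA p fun i v hv => ?_
  obtain ⟨c, hc, h⟩ := suR_mulVec hn (A i)
  have := hp i v hv
  rw [h] at this
  simpa [smul_smul, hc] using p.smul_mem c⁻¹ this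

/-- Reducible tuples of special unitary matrices are avoided by families with few parameters. -/
theorem avoidS (hn : 0 < n) (hr : 0 < r) {l : ℕ} (hl : l < 2 * (r - 1) * (n - 1)) :
    Avoids (IsIrreducibleTupleSU (n := n) (r := r)) l := by
  intro Z _ _ _ hZ A hA f hf
  let S : Set (Fin r → Un n) := {W | ∀ k, ((detC n (W k) : Circle) : ℂ) ∈ Complex.slitPlane}
  have hS : IsOpen S := by
    rw [show S = ⋂ k, {W | ((detC n (W k) : Circle) : ℂ) ∈ Complex.slitPlane} by
      ext; simp [S]]
    refine isOpen_iInter_of_finite fun k => Complex.isOpen_slitPlane.preimage ?_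
    exact continuous_subtype_val.comp ((detC n).continuous_toFun.comp (continuous_apply k))
  have hRS : ContinuousOn (fun (W : Fin r → Un n) k => suR hn (W k)) S :=
    continuousOn_pi.2 fun k => (suR_cont hn).comp (continuous_apply k).continuousOn fun _ h => h k
  have hι : ∀ B : Fin r → SUn n, (fun k => pol (ι := Fin n) (B k).1.1) = toU B :=
    fun B => funext fun k => pol_unitary (B k).1
  refine transv hZ hA (ent_dim hn hr) ((entU n r).comp ⟨toU, toU_emb.continuous⟩)
    (polr_cont.isOpen_inter_preimage dom_open hS) (fun B => ⟨fun k => un_det_ne (B k).1, ?_⟩)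
    (fun M k => suR hn (pol (ι := Fin n) (M k)))
    (hRS.comp (polr_cont.mono inter_subset_left) fun M hM => hM.2)
    (fun B => funext fun k => ?_)
    (E := {B | IsIrreducibleTupleSU B}) ((irr_open hn).preimage toU_emb.continuous)
    (red_thin hl) (fun M hM h => ⟨hM.1, fun h' => h (suR_irr hn _ h')⟩) f hf
  · change (fun k => pol (ι := Fin n) (B k).1.1) ∈ S
    rw [hι]
    intro k
    change ((detC n (B k).1 : Circle) : ℂ) ∈ _
    rw [mem_su_iff.1 (B k).2]
    exact Complex.one_mem_slitPlane
  · change suR hn (pol (ι := Fin n) (B k).1.1) = B k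
    rw [pol_unitary, suR_su]

theorem un_joined (hn : 0 < n) (V : Un n) : Joined 1 V := by
  have h0 : Bd 0 = ∅ := Bd_zero
  have hs := pi_un_even n 0 (by omega)
  let f : Om (Bd (2 * 0)) (Un n) := ⟨ContinuousMap.const _ V, fun a ha => by
    have : a ∈ Bd 0 := ha
    rw [h0] at this; exact this.elim⟩
  have : Pi.mk _ f = 1 := Subsingleton.elim _ _
  obtain ⟨H, h0, h1, -⟩ := htpy_data (Pi.mk_eq_one.1 this)
  exact ⟨⟨⟨fun t => H (t, 0), by fun_prop⟩, h0 0, h1 0⟩⟩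

theorem sun_joined (hn : 0 < n) (V : SUn n) : Joined 1 V := by
  have := (un_joined hn V.1).map (suN_cont ⟨0, hn⟩)
  rwa [suN_su, show (1 : Un n) = (1 : SUn n).1 from rfl, suN_su] at this

theorem joined_pow {Γ : Type*} [TopologicalSpace Γ] [Group Γ] (h : ∀ x : Γ, Joined 1 x)
    (A : Fin r → Γ) : Joined 1 A :=
  ⟨Path.pi fun i => (h (A i)).somePath⟩

theorem pi_tuple {Γ : Type} [Group Γ] [TopologicalSpace Γ] [IsTopologicalGroup Γ] {k : ℕ}
    (e : Nonempty (Pi (Bd (k + 1)) Γ ≃* Multiplicative ℤ)) (A : Fin r → Γ) :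
    Nonempty (HomotopyGroup (Fin (k + 1)) (Fin r → Γ) A ≃* Multiplicative (Fin r → ℤ)) := by
  obtain ⟨e⟩ := e
  obtain ⟨e₁⟩ := hg_equiv_pi (N := Fin (k + 1)) A
  obtain ⟨e₂⟩ := pi_pow_equiv (Γ := Γ) (Bd (k + 1)) r
  let e₃ : (Fin r → Multiplicative ℤ) ≃* Multiplicative (Fin r → ℤ) :=
    { toFun := fun a => Multiplicative.ofAdd fun i => (a i).toAdd
      invFun := fun a i => Multiplicative.ofAdd (a.toAdd i)
      left_inv := fun _ => rfl
      right_inv := fun _ => rfl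
      map_mul' := fun _ _ => rfl }
  exact ⟨(e₁.trans e₂).trans ((MulEquiv.piCongrRight fun _ => e).trans e₃)⟩

theorem main_U {j : ℕ} (hj : 1 ≤ j) (hk2n : 2 * j + 1 < 2 * n)
    (hc : 2 * j + 2 < 2 * (r - 1) * (n - 1)) (x : irrLocusU n r) :
    Nonempty (HomotopyGroup (Fin (2 * j + 1)) ↥(irrLocusU n r) x ≃*
        Multiplicative (Fin r → ℤ)) := by
  obtain ⟨j, rfl⟩ : ∃ i, j = i + 1 := ⟨j - 1, by omega⟩
  have hn : 0 < n := by omega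
  have hr : 0 < r := by
    rcases Nat.eq_zero_or_pos r with rfl | h
    · simp at hc
    · exact h
  obtain ⟨e₀, rfl⟩ := pU_surj x
  have : Subsingleton (Pi (Bd (2 * (j + 1))) (PG n)) := pi_pg_even n j (by omega)
  have hs := avoidU hn hr hc
  have hb₁ := avoid_bij (avoidU hn hr (by omega)) hs e₀
  have hb₂ := proj_bij (principalU hn r) smulEU_val hs e₀ (joined_pow (un_joined hn) e₀.1)
  obtain ⟨e⟩ := pi_tuple (pi_un_odd n (j + 1) hk2n) e₀.1
  exact ⟨(MulEquiv.ofBijective _ hb₂).symm.trans ((MulEquiv.ofBijective _ hb₁).trans e)⟩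

theorem main_SU {j : ℕ} (hj : 1 ≤ j) (hk2n : 2 * j + 1 < 2 * n)
    (hc : 2 * j + 2 < 2 * (r - 1) * (n - 1)) (x : irrLocusSU n r) :
    Nonempty (HomotopyGroup (Fin (2 * j + 1)) ↥(irrLocusSU n r) x ≃*
        Multiplicative (Fin r → ℤ)) := by
  obtain ⟨j, rfl⟩ : ∃ i, j = i + 1 := ⟨j - 1, by omega⟩
  have hn : 0 < n := by omega
  have hr : 0 < r := by
    rcases Nat.eq_zero_or_pos r with rfl | h
    · simp at hc
    · exact h
  obtain ⟨e₀, rfl⟩ := pS_surj x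
  have : Subsingleton (Pi (Bd (2 * (j + 1))) (PG n)) := pi_pg_even n j (by omega)
  have hs := avoidS hn hr hc
  have hb₁ := avoid_bij (avoidS hn hr (by omega)) hs e₀
  have hb₂ := proj_bij (principalS hn r) smulES_val hs e₀ (joined_pow (sun_joined hn) e₀.1)
  obtain ⟨e⟩ := pi_tuple (pi_sun_odd n j hk2n) e₀.1
  exact ⟨(MulEquiv.ofBijective _ hb₂).symm.trans ((MulEquiv.ofBijective _ hb₁).trans e)⟩

end General

end

end IrrLoc

theorem piOdd_irrLocus_unitary_and_specialUnitary (n r j : ℕ) (hj : 1 ≤ j)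
    (hk2n : 2 * j + 1 < 2 * n) (hkcodim : 2 * j + 1 < 2 * (r - 1) * (n - 1) - 1) :
    (∀ x : ↥(irrLocusU n r),
      Nonempty (HomotopyGroup (Fin (2 * j + 1)) ↥(irrLocusU n r) x ≃*
        Multiplicative (Fin r → ℤ))) ∧
    (∀ y : ↥(irrLocusSU n r),
      Nonempty (HomotopyGroup (Fin (2 * j + 1)) ↥(irrLocusSU n r) y ≃*
        Multiplicative (Fin r → ℤ))) :=
  ⟨IrrLoc.main_U hj hk2n (by omega), IrrLoc.main_SU hj hk2n (by omega)⟩
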